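/- Let d ≥ 5, let Q be a non-degenerate d-dimensional quadratic form of block-type which is irrational, let a < b be real numbers and M ∈ ℝ^d. Then Δ(r,M) = o(1), i.e. Δ(r,M) → 0 as r → ∞. -/

import Mathlib

/-!
Write `S(t)` and `V(t)` for the sum over `m ∈ ℤ^d`, respectively the integral over `x ∈ ℝ^d`, of
`e^{itQ[x - M]}` times a smooth weight living on `|x|_∞ ≲ r` (`Ssum` and `Vint`).

*Reduction to exponential sums.* The volume of `H_{r,M}` has exact order `r^{d-2}`, and the part of
the hyperbolic shell within relative distance `ε` of the boundary of the cube has volume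
`O(ε r^{d-2})` (`volume_bounds`; for block-type forms this follows by slicing, since the slices are
ellipsoid shells). Hence the indicator of the cube may be sandwiched between smooth cut-offs
(`exists_bump`), and it is enough that the smoothly weighted lattice point count of the shell
differs from the weighted volume by `o(r^{d-2})` (`smooth_count`). A smoothing inequality with the
Fejér kernel (`esseen`) bounds this difference by `ε ∫ |V| + C ∫_{|t| ≤ T} |S - V|`. As
`|V(t)| ≪ min(r^d, |t|^{-d/2})` (`Vint_decay`), the first term is `O(ε r^{d-2})`. For
`|t| ≤ K / r²` the difference `S - V` is a Riemann sum error (`riemann`), and for larger `|t|`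
the integral of `|V|` is small. What is left is the mean value of `|S|` over
`K / r² ≤ |t| ≤ T` (`S_tail`).

*Minor arcs.* Put `B = π⁻¹ Q`. Weyl differencing (`weyl`) gives `|S(t)|² ≪ r^d N(t)`, where `N(t)`
is the number of integer vectors `|h| ≤ c r` such that `t B h` lies within `c / r` of an integer
vector (`Hs`). By the geometry of numbers (`count_le_covol`), `N(t)` is, up to a constant, at most
the reciprocal of the smallest covolume of a sublattice of `g_{r,t} Λ`, where `Λ` is the lattice of the
`(m, B h)` and `g_{r,t}` is a diagonal flow times a unipotent shear (`gmat`). The functions `alph`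
collect these covolumes. For a single sublattice the average over `|t| ≤ 1` of the `b`-th
negative power of the squared covolume, `b > 1/d`, grows under the flow at most by the factor
`C R^{2db-2}`, two powers of `R` less than the trivial bound (`volume_average`): a suitable minor
is a polynomial in `t` of controlled degree, and negative powers of polynomials have controlled
averages. In the manner of Eskin, Margulis and Mozes, competing sublattices are replaced by
their intersection and sum, with Koteljanskii's inequality for the covolumes (`koteljanskii`,
`meet_join`), so that a weighted sum of the `alph` (`hgt`) grows no faster. Iteration
(`alph_average`) gives `∫_{|t| ≤ T} N^{2b} ≪ r^{2db-2+ε}` (`minor`). If `1/d < b < 1/4`, which is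
possible because `d ≥ 5`, this makes the part of the integral of `|S|` with `N(t) ≤ r^{d-1/2}`
smaller than `r^{d-2}` by a power of `r`.

*Major arcs.* If `N(t) > r^{d-1/2}`, the vectors counted by `N(t)` span a lattice of full rank, and
`tB` is close to a symmetric rational matrix `A` of small denominator `q` (`major`), with
`|S(t)| ≪ r^d q^{-1/2} det(1 + WᵀW)^{-1/4}`, `W = r² (A - tB)` (`major_bound`). Each
`A` contributes `O(q^{-1/2} r^{d-2})` (`dfun_integral`). Because `B` is invertible, the parameters
`t` belonging to different `A` are well separated (`separation`), so that at most `O(Y^{2/d})` of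
the `A` have denominator at most `Y` (`fam_count`). As `2/d < 1/2`, the sum of `q^{-1/2}` over
large denominators is small (`fam_tail`). A nonzero `A` of bounded denominator cannot occur at
arbitrarily large scales, as otherwise a nonzero multiple of `Q` would be a rational matrix
(`fam_irr`). Finally, the arc around `A = 0` contributes `O(K^{1-d/2} r^{d-2})` on `|t| ≥ K / r²`
(`dfun_integral_zero`), which is small for large `K`.
-/

open MeasureTheory Filter

/-- The quadratic form `Q[x] = ⟨Qx, x⟩` associated to a matrix `Q`. -/
noncomputable def quadForm {d : ℕ} (Q : Matrix (Fin d) (Fin d) ℝ) (x : Fin d → ℝ) : ℝ :=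
  ∑ i, Q.mulVec x i * x i

/-- `Q` is of block-type: `Q = diag(Q⁺, −Q⁻)` with `Q⁺, Q⁻` positive definite. -/
def IsBlockType {d : ℕ} (Q : Matrix (Fin d) (Fin d) ℝ) : Prop :=
  ∃ (d₁ d₂ : ℕ) (h : d₁ + d₂ = d) (Qp : Matrix (Fin d₁) (Fin d₁) ℝ)
    (Qm : Matrix (Fin d₂) (Fin d₂) ℝ),
    1 ≤ d₁ ∧ 1 ≤ d₂ ∧ Qp.PosDef ∧ Qm.PosDef ∧
    Q = (Matrix.fromBlocks Qp 0 0 (-Qm)).submatrix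
      (fun i => finSumFinEquiv.symm (Fin.cast h.symm i))
      (fun i => finSumFinEquiv.symm (Fin.cast h.symm i))

/-- Casting an integer vector to a real vector. -/
def intVec {d : ℕ} (m : Fin d → ℤ) : Fin d → ℝ := fun i => (m i : ℝ)

/-- Number of lattice points in a set `B ⊆ ℝ^d`. -/
noncomputable def latticeCount {d : ℕ} (B : Set (Fin d → ℝ)) : ℕ :=
  (B ∩ Set.range intVec).ncard

/-- The hyperbolic shell intersected with the cube:
`H_{r,M} = {x : a ≤ Q[x−M] ≤ b} ∩ {x : |x|_∞ ≤ r}` (the sup-norm is the norm of `Fin d → ℝ`). -/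
noncomputable def Hset {d : ℕ} (Q : Matrix (Fin d) (Fin d) ℝ) (a b : ℝ) (M : Fin d → ℝ)
    (r : ℝ) : Set (Fin d → ℝ) :=
  {x | (a ≤ quadForm Q (x - M) ∧ quadForm Q (x - M) ≤ b) ∧ ‖x‖ ≤ r}

/-- Relative lattice point remainder `Δ(r,M)`. -/
noncomputable def DeltaRel {d : ℕ} (Q : Matrix (Fin d) (Fin d) ℝ) (a b : ℝ) (M : Fin d → ℝ)
    (r : ℝ) : ℝ :=
  |((latticeCount (Hset Q a b M r) : ℝ) - (volume (Hset Q a b M r)).toReal) /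
    (volume (Hset Q a b M r)).toReal|


/-- `Q` is rational if `λ·Q` has integer entries for some real `λ ≠ 0`. -/
def IsRationalMat {d : ℕ} (Q : Matrix (Fin d) (Fin d) ℝ) : Prop :=
  ∃ lam : ℝ, lam ≠ 0 ∧ ∀ i j, ∃ m : ℤ, lam * Q i j = (m : ℝ)

set_option linter.unusedSectionVars false

/-! ### Gram determinants -/

namespace LPR
open Matrix MeasureTheory Filter
open scoped MatrixOrder

/-- The Gram determinant `det (Wᵀ W)`: the squared volume of the parallelepiped spanned by the
columns of `W`. -/
noncomputable def gdet {m κ : Type} [Fintype m] [Fintype κ] [DecidableEq κ]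
    (W : Matrix m κ ℝ) : ℝ := (Wᵀ * W).det

section gram
variable {m m' κ l l' : Type} [Fintype m] [Fintype m'] [Fintype κ] [DecidableEq κ]
  [Fintype l] [DecidableEq l] [Fintype l'] [DecidableEq l']

lemma gram_posSemidef (W : Matrix m κ ℝ) : (Wᵀ * W).PosSemidef := by
  simpa [conjTranspose_eq_transpose_of_trivial] using posSemidef_conjTranspose_mul_self W

lemma gdet_nonneg (W : Matrix m κ ℝ) : 0 ≤ gdet W := (gram_posSemidef W).det_nonneg

/-- Gram–Schmidt: nondegenerate columns are an orthonormal system times a square matrix. -/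
lemma qr (W : Matrix m κ ℝ) (h : gdet W ≠ 0) :
    ∃ (W0 : Matrix m κ ℝ) (S : Matrix κ κ ℝ), W = W0 * S ∧ W0ᵀ * W0 = 1 ∧ S.det ^ 2 = gdet W := by
  obtain ⟨S, hS⟩ := CStarAlgebra.nonneg_iff_eq_star_mul_self.1
    (nonneg_iff_posSemidef.2 (gram_posSemidef W))
  rw [star_eq_conjTranspose, conjTranspose_eq_transpose_of_trivial] at hS
  have hd : S.det ^ 2 = gdet W := by
    unfold gdet; rw [hS, det_mul, det_transpose]; ring
  have hu : IsUnit S.det := by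
    rw [isUnit_iff_ne_zero]; rintro h0; rw [h0] at hd; exact h (by rw [← hd]; simp)
  refine ⟨W * S⁻¹, S, ?_, ?_, hd⟩
  · rw [Matrix.mul_assoc, nonsing_inv_mul _ hu, Matrix.mul_one]
  · rw [transpose_mul, Matrix.mul_assoc, ← Matrix.mul_assoc Wᵀ, hS, ← Matrix.mul_assoc,
      ← Matrix.mul_assoc, ← transpose_mul, mul_nonsing_inv _ hu, transpose_one, Matrix.one_mul,
      mul_nonsing_inv _ hu]

lemma abs_le_one_of_orth (W : Matrix m κ ℝ) (h : Wᵀ * W = 1) (a : m) (k : κ) : |W a k| ≤ 1 := by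
  have h1 := congrFun (congrFun h k) k
  simp only [mul_apply, transpose_apply, one_apply_eq] at h1
  have h2 : W a k * W a k ≤ 1 := by
    rw [← h1]
    exact Finset.single_le_sum (f := fun a => W a k * W a k) (fun i _ => mul_self_nonneg _)
      (Finset.mem_univ a)
  exact abs_le_one_iff_mul_self_le_one.2 h2

lemma abs_det_le (A : Matrix κ κ ℝ) (x : ℝ) (h : ∀ i j, |A i j| ≤ x) :
    |A.det| ≤ (Fintype.card κ).factorial * x ^ Fintype.card κ := by
  have := det_le (abv := AbsoluteValue.abs) (A := A) (x := x) h
  simpa [nsmul_eq_mul] using this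

lemma abs_mul_le {p q m : Type} [Fintype m] (A : Matrix p m ℝ) (B : Matrix m q ℝ) (x y : ℝ) (hx : ∀ i j, |A i j| ≤ x)
    (hy : ∀ i j, |B i j| ≤ y) (i : p) (j : q) : |(A * B) i j| ≤ Fintype.card m * (x * y) := by
  rw [Matrix.mul_apply]
  refine (Finset.abs_sum_le_sum_abs _ _).trans ?_
  have : ∀ k ∈ Finset.univ, |A i k * B k j| ≤ x * y := by
    intro k _
    rw [abs_mul]
    exact mul_le_mul (hx i k) (hy k j) (abs_nonneg _) ((abs_nonneg _).trans (hx i k))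
  simpa using Finset.sum_le_card_nsmul Finset.univ _ _ this

/-- Gram determinants of matrices with bounded entries are bounded. -/
lemma gdet_le_of_bdd (W : Matrix m κ ℝ) (x : ℝ) (h : ∀ i j, |W i j| ≤ x) :
    gdet W ≤ (Fintype.card κ).factorial * (Fintype.card m * (x * x)) ^ Fintype.card κ := by
  refine (le_abs_self _).trans ?_
  exact abs_det_le _ _ (abs_mul_le _ _ _ _ (fun i j => h j i) h)

lemma gdet_mul_sq (W : Matrix m κ ℝ) (S : Matrix κ κ ℝ) : gdet (W * S) = gdet W * S.det ^ 2 := by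
  unfold gdet
  rw [transpose_mul, Matrix.mul_assoc, ← Matrix.mul_assoc Wᵀ, det_mul, det_mul, det_transpose]
  ring

lemma gdet_square (W : Matrix κ κ ℝ) : gdet W = W.det ^ 2 := by
  unfold gdet; rw [det_mul, det_transpose]; ring

lemma exists_mulVec_of_gdet_zero (W : Matrix m κ ℝ) (h : gdet W = 0) :
    ∃ v, v ≠ 0 ∧ W *ᵥ v = 0 := by
  obtain ⟨v, hv, h⟩ := exists_mulVec_eq_zero_iff.2 h
  refine ⟨v, hv, ?_⟩
  rwa [← conjTranspose_eq_transpose_of_trivial, conjTranspose_mul_self_mulVec_eq_zero] at h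

lemma gdet_zero_of_mulVec (W : Matrix m κ ℝ) (v : κ → ℝ) (hv : v ≠ 0) (h : W *ᵥ v = 0) :
    gdet W = 0 := by
  refine exists_mulVec_eq_zero_iff.1 ⟨v, hv, ?_⟩
  rw [← mulVec_mulVec, h, mulVec_zero]

/-- Applying a matrix with bounded entries distorts volumes by a bounded factor. -/
lemma gdet_mul_le (T : Matrix m' m ℝ) (W : Matrix m κ ℝ) (x : ℝ) (h : ∀ i j, |T i j| ≤ x) :
    gdet (T * W) ≤ ((Fintype.card κ).factorial *
      (Fintype.card m' * ((Fintype.card m * x) * (Fintype.card m * x))) ^ Fintype.card κ) *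
      gdet W := by
  by_cases h0 : gdet W = 0
  · obtain ⟨v, hv, hW⟩ := exists_mulVec_of_gdet_zero W h0
    rw [h0, mul_zero, gdet_zero_of_mulVec _ v hv]
    rw [← mulVec_mulVec, hW, mulVec_zero]
  · obtain ⟨W0, S, hWS, h1, hS⟩ := qr W h0
    have hb := abs_mul_le T W0 x 1 h (abs_le_one_of_orth W0 h1)
    rw [mul_one] at hb
    rw [← hS]
    conv_lhs => rw [hWS]
    rw [← Matrix.mul_assoc, gdet_mul_sq]
    exact mul_le_mul_of_nonneg_right (gdet_le_of_bdd _ _ hb) (sq_nonneg _)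

lemma gdet_reindex (W : Matrix m κ ℝ) (e : l ≃ κ) : gdet (W.submatrix id e) = gdet W := by
  unfold gdet
  rw [transpose_submatrix]
  have : Wᵀ.submatrix e id * W.submatrix id e = (Wᵀ * W).submatrix e e := by
    ext i j; simp [Matrix.mul_apply]
  rw [this, det_submatrix_equiv_self]

lemma gdet_fromCols_orth (K : Matrix m κ ℝ) (L : Matrix m l ℝ) (h : Kᵀ * L = 0) :
    gdet (fromCols K L) = gdet K * gdet L := by
  unfold gdet
  have h' : Lᵀ * K = 0 := by
    have := congrArg transpose h
    simpa using this
  rw [transpose_fromCols, fromRows_mul_fromCols, h, h', det_fromBlocks_zero₂₁]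

lemma gdet_fromCols_eq_zero_left (K : Matrix m κ ℝ) (L : Matrix m l ℝ) (h : gdet K = 0) :
    gdet (fromCols K L) = 0 := by
  obtain ⟨v, hv, hK⟩ := exists_mulVec_of_gdet_zero K h
  refine gdet_zero_of_mulVec _ (Sum.elim v 0) ?_ ?_
  · intro h0; apply hv; ext i; simpa using congrFun h0 (Sum.inl i)
  · simp [fromCols_mulVec, hK]

lemma gdet_fromCols_eq_zero_right (K : Matrix m κ ℝ) (L : Matrix m l ℝ) (h : gdet L = 0) :
    gdet (fromCols K L) = 0 := by
  obtain ⟨v, hv, hK⟩ := exists_mulVec_of_gdet_zero L h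
  refine gdet_zero_of_mulVec _ (Sum.elim 0 v) ?_ ?_
  · intro h0; apply hv; ext i; simpa using congrFun h0 (Sum.inr i)
  · simp [fromCols_mulVec, hK]

/-- Fischer's inequality up to a constant. -/
lemma gdet_fromCols_le (L : Matrix m l ℝ) (L' : Matrix m l' ℝ) :
    gdet (fromCols L L') ≤ ((Fintype.card (l ⊕ l')).factorial *
      (Fintype.card m : ℝ) ^ Fintype.card (l ⊕ l')) * (gdet L * gdet L') := by
  by_cases h : gdet L = 0
  · rw [gdet_fromCols_eq_zero_left _ _ h, h]; simp
  by_cases h' : gdet L' = 0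
  · rw [gdet_fromCols_eq_zero_right _ _ h', h']; simp
  obtain ⟨W, S, hL, h1, hS⟩ := qr L h
  obtain ⟨W', S', hL', h1', hS'⟩ := qr L' h'
  have : fromCols L L' = fromCols W W' * fromBlocks S 0 0 S' := by
    rw [fromCols_mul_fromBlocks]; simp [← hL, ← hL']
  rw [this, gdet_mul_sq, det_fromBlocks_zero₂₁, mul_pow, hS, hS']
  refine mul_le_mul_of_nonneg_right ?_ (mul_nonneg (gdet_nonneg _) (gdet_nonneg _))
  have := gdet_le_of_bdd (fromCols W W') 1 (by
    rintro i (j | j)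
    · simpa using abs_le_one_of_orth W h1 i j
    · simpa using abs_le_one_of_orth W' h1' i j)
  simpa using this

/-- Koteljanskii's inequality up to a constant. -/
lemma koteljanskii (K : Matrix m κ ℝ) (L : Matrix m l ℝ) (L' : Matrix m l' ℝ) :
    gdet K * gdet (fromCols K (fromCols L L')) ≤ ((Fintype.card (l ⊕ l')).factorial *
      (Fintype.card m : ℝ) ^ Fintype.card (l ⊕ l')) *
      (gdet (fromCols K L) * gdet (fromCols K L')) := by
  by_cases h : gdet K = 0
  · rw [h, zero_mul]
    exact mul_nonneg (by positivity) (mul_nonneg (gdet_nonneg _) (gdet_nonneg _))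
  have hu : IsUnit (Kᵀ * K).det := isUnit_iff_ne_zero.2 h
  -- every block of columns can be made orthogonal to `K` by unimodular column operations
  have key : ∀ {p : Type} [Fintype p] [DecidableEq p] (L : Matrix m p ℝ),
      Kᵀ * (L - K * ((Kᵀ * K)⁻¹ * (Kᵀ * L))) = 0 ∧
      gdet (fromCols K L) = gdet K * gdet (L - K * ((Kᵀ * K)⁻¹ * (Kᵀ * L))) := by
    intro p _ _ L
    have h1 : Kᵀ * (L - K * ((Kᵀ * K)⁻¹ * (Kᵀ * L))) = 0 := by
      rw [Matrix.mul_sub, ← Matrix.mul_assoc, ← Matrix.mul_assoc (Kᵀ * K), mul_nonsing_inv _ hu]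
      simp
    refine ⟨h1, ?_⟩
    rw [← gdet_fromCols_orth _ _ h1]
    have : fromCols K L = fromCols K (L - K * ((Kᵀ * K)⁻¹ * (Kᵀ * L))) *
        (fromBlocks 1 ((Kᵀ * K)⁻¹ * (Kᵀ * L)) 0 1 : Matrix (κ ⊕ p) (κ ⊕ p) ℝ) := by
      rw [fromCols_mul_fromBlocks]; simp
    rw [this, gdet_mul_sq, det_fromBlocks_zero₂₁]; simp
  have e1 := (key L).2
  have e2 := (key L').2
  have e3 := (key (fromCols L L')).2
  have e4 : fromCols L L' - K * ((Kᵀ * K)⁻¹ * (Kᵀ * fromCols L L')) =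
      fromCols (L - K * ((Kᵀ * K)⁻¹ * (Kᵀ * L))) (L' - K * ((Kᵀ * K)⁻¹ * (Kᵀ * L'))) := by
    rw [mul_fromCols, mul_fromCols, mul_fromCols]
    ext i (j | j) <;> simp
  rw [e4] at e3
  rw [e1, e2, e3]
  have := mul_le_mul_of_nonneg_left (gdet_fromCols_le (L - K * ((Kᵀ * K)⁻¹ * (Kᵀ * L)))
    (L' - K * ((Kᵀ * K)⁻¹ * (Kᵀ * L')))) (mul_nonneg (gdet_nonneg K) (gdet_nonneg K))
  linarith

end gram
end LPR

/-! ### Averages of negative powers of polynomials -/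

namespace LPR
open Matrix MeasureTheory Filter
open scoped ENNReal

section polys

/-- Factorisation of a real polynomial over its complex roots, on the level of absolute values. -/
lemma poly_roots (p : Polynomial ℝ) : ∃ z : Fin p.natDegree → ℂ,
    ∀ x : ℝ, |p.eval x| = |p.leadingCoeff| * ∏ l, ‖(x : ℂ) - z l‖ := by
  set q := p.map (algebraMap ℝ ℂ) with hq
  have hs : q.Splits := IsAlgClosed.splits q
  have hcard : q.roots.toList.length = p.natDegree := by
    rw [Multiset.length_toList, ← hs.natDegree_eq_card_roots, hq, Polynomial.natDegree_map]
  refine ⟨fun l => q.roots.toList.get (Fin.cast hcard.symm l), fun x => ?_⟩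
  have h1 : q.eval (x : ℂ) = ((p.eval x : ℝ) : ℂ) := by
    have := Polynomial.eval_map_algebraMap (B := ℂ) p (x : ℂ)
    rw [hq, this]
    exact Polynomial.aeval_algebraMap_apply_eq_algebraMap_eval (A := ℂ) x p
  have h2 := hs.eval_eq_prod_roots (x : ℂ)
  have h3 : (q.roots.map (fun a => (x : ℂ) - a)).prod
      = ∏ l : Fin p.natDegree, ((x : ℂ) - q.roots.toList.get (Fin.cast hcard.symm l)) := by
    conv_lhs => rw [← Multiset.coe_toList q.roots]
    rw [Multiset.map_coe, Multiset.prod_coe, ← Fin.prod_univ_fun_getElem]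
    exact (Fintype.prod_equiv (finCongr hcard) _ _ (fun i => by simp)) 
  rw [h3] at h2
  have h4 := congrArg norm h2
  rw [h1, norm_mul, norm_prod] at h4
  simpa [hq] using h4

/-- Near every `τ`, at scale `y`, there is a real point that is far from finitely many given
complex numbers. -/
lemma exists_far (n : ℕ) (z : Fin n → ℂ) (τ y : ℝ) (hy : 0 < y) :
    ∃ x : ℝ, |x - τ| ≤ y ∧ ∀ l, max ‖(τ : ℂ) - z l‖ y ≤ (2 * n + 3) * ‖(x : ℂ) - z l‖ := by
  have hn : (0 : ℝ) < n + 1 := by positivity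
  set X : Fin (n + 1) → ℝ := fun j => τ + j * (y / (n + 1)) with hX
  have main : ∃ j, ∀ l, y / (2 * (n + 1)) ≤ ‖(X j : ℂ) - z l‖ := by
    by_contra! hcon
    choose f hf using hcon
    obtain ⟨i, j, hij, hfij⟩ := Fintype.exists_ne_map_eq_of_card_lt f (by simp)
    have h1 := hf i
    have h2 := hf j
    rw [hfij] at h1
    have h3 : ‖(X i : ℂ) - X j‖ < y / (n + 1) := by
      calc ‖(X i : ℂ) - X j‖ = ‖((X i : ℂ) - z (f j)) - (X j - z (f j))‖ := by congr 1; ring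
        _ ≤ ‖(X i : ℂ) - z (f j)‖ + ‖(X j : ℂ) - z (f j)‖ := norm_sub_le _ _
        _ < y / (2 * (n + 1)) + y / (2 * (n + 1)) := by linarith
        _ = y / (n + 1) := by field_simp; ring
    have h4 : ‖(X i : ℂ) - X j‖ = |((i : ℕ) : ℝ) - (j : ℕ)| * (y / (n + 1)) := by
      rw [← Complex.ofReal_sub, Complex.norm_real, Real.norm_eq_abs]
      simp only [hX]
      rw [show τ + (i : ℕ) * (y / (n + 1)) - (τ + (j : ℕ) * (y / (n + 1)))
        = (((i : ℕ) : ℝ) - (j : ℕ)) * (y / (n + 1)) by ring, abs_mul, abs_of_pos (by positivity :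
          0 < y / ((n : ℝ) + 1))]
    have h5 : (1 : ℝ) ≤ |((i : ℕ) : ℝ) - (j : ℕ)| := by
      have : ((i : ℕ) : ℤ) - (j : ℕ) ≠ 0 := by
        intro h; apply hij; ext; omega
      have := Int.one_le_abs this
      exact_mod_cast this
    have h6 : 0 < y / (n + 1) := by positivity
    nlinarith
  obtain ⟨j, hj⟩ := main
  have hjy : |X j - τ| ≤ y := by
    simp only [hX, add_sub_cancel_left]
    rw [abs_of_nonneg (by positivity)]
    have : ((j : ℕ) : ℝ) ≤ n + 1 := by exact_mod_cast j.2.le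
    calc ((j : ℕ) : ℝ) * (y / (n + 1)) ≤ (n + 1) * (y / (n + 1)) := by gcongr
      _ = y := by field_simp
  refine ⟨X j, hjy, fun l => ?_⟩
  have h1 : y ≤ 2 * (n + 1) * ‖(X j : ℂ) - z l‖ := by
    have := hj l
    rw [div_le_iff₀ (by positivity)] at this
    linarith
  have h2 : ‖(τ : ℂ) - z l‖ ≤ y + ‖(X j : ℂ) - z l‖ := by
    calc ‖(τ : ℂ) - z l‖ = ‖((X j : ℂ) - z l) - ((X j : ℂ) - τ)‖ := by congr 1; ring
      _ ≤ ‖(X j : ℂ) - z l‖ + ‖(X j : ℂ) - τ‖ := norm_sub_le _ _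
      _ ≤ _ := by
        rw [← Complex.ofReal_sub, Complex.norm_real, Real.norm_eq_abs]; linarith
  have h3 := norm_nonneg ((X j : ℂ) - z l)
  apply max_le <;> linarith

/-- A polynomial of degree at most `N` is, at a suitable point within `y` of `τ`, at least as
large as its factorisation suggests. -/
lemma poly_lower (p : Polynomial ℝ) (N : ℕ) (hN : p.natDegree ≤ N) :
    ∃ z : Fin p.natDegree → ℂ, (∀ x : ℝ, |p.eval x| = |p.leadingCoeff| * ∏ l, ‖(x : ℂ) - z l‖) ∧
      ∀ τ y : ℝ, 0 < y → ∃ x : ℝ, |x - τ| ≤ y ∧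
        |p.leadingCoeff| * ∏ l, max ‖(τ : ℂ) - z l‖ y ≤ (2 * N + 3) ^ N * |p.eval x| := by
  obtain ⟨z, hz⟩ := poly_roots p
  refine ⟨z, hz, fun τ y hy => ?_⟩
  obtain ⟨x, hx, h⟩ := exists_far _ z τ y hy
  refine ⟨x, hx, ?_⟩
  have h1 : ∏ l, max ‖(τ : ℂ) - z l‖ y ≤ ∏ l, ((2 * p.natDegree + 3) * ‖(x : ℂ) - z l‖) :=
    Finset.prod_le_prod (fun _ _ => le_max_of_le_right hy.le) (fun l _ => h l)
  rw [Finset.prod_mul_distrib, Finset.prod_const, Finset.card_univ, Fintype.card_fin] at h1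
  have h2 : ((2 : ℝ) * p.natDegree + 3) ^ p.natDegree ≤ (2 * N + 3) ^ N := by
    calc ((2 : ℝ) * p.natDegree + 3) ^ p.natDegree ≤ (2 * N + 3) ^ p.natDegree := by gcongr
      _ ≤ _ := pow_le_pow_right₀ (by nlinarith [Nat.cast_nonneg (α := ℝ) N]) hN
  rw [hz x]
  have h3 : 0 ≤ ∏ l, ‖(x : ℂ) - z l‖ := Finset.prod_nonneg fun _ _ => norm_nonneg _
  calc |p.leadingCoeff| * ∏ l, max ‖(τ : ℂ) - z l‖ y
      ≤ |p.leadingCoeff| * ((2 * N + 3) ^ N * ∏ l, ‖(x : ℂ) - z l‖) := by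
        refine mul_le_mul_of_nonneg_left (h1.trans ?_) (abs_nonneg _)
        exact mul_le_mul_of_nonneg_right h2 h3
    _ = _ := by ring

/-- Products of few factors `≥ 1` are bounded by the sum of high powers. -/
lemma prod_rpow_le (n : ℕ) (a : Fin n → ℝ) (ha : ∀ l, 1 ≤ a l) (β s : ℝ) (hβ : 0 ≤ β)
    (hs : n * β ≤ s) : ∏ l, a l ^ β ≤ 1 + ∑ l, a l ^ s := by
  have hpos : ∀ l, 0 ≤ a l ^ s := fun l => Real.rpow_nonneg (zero_le_one.trans (ha l)) _
  rcases Nat.eq_zero_or_pos n with rfl | hn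
  · simp
  have : Nonempty (Fin n) := ⟨⟨0, hn⟩⟩
  obtain ⟨l0, hl0⟩ := Finite.exists_max a
  have h0 : 0 ≤ a l0 := zero_le_one.trans (ha l0)
  calc ∏ l, a l ^ β ≤ ∏ _l : Fin n, a l0 ^ β :=
        Finset.prod_le_prod (fun l _ => Real.rpow_nonneg (zero_le_one.trans (ha l)) _)
          (fun l _ => Real.rpow_le_rpow (zero_le_one.trans (ha l)) (hl0 l) hβ)
    _ = a l0 ^ (n * β) := by
        rw [Finset.prod_const, Finset.card_univ, Fintype.card_fin, ← Real.rpow_natCast,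
          ← Real.rpow_mul h0, mul_comm]
    _ ≤ a l0 ^ s := Real.rpow_le_rpow_of_exponent_le (ha l0) hs
    _ ≤ ∑ l, a l ^ s := Finset.single_le_sum (fun l _ => hpos l) (Finset.mem_univ l0)
    _ ≤ _ := by linarith

lemma lintegral_Ioi_rpow (s y : ℝ) (hs : 1 < s) (hy : 0 < y) :
    ∫⁻ u in Set.Ioi y, ENNReal.ofReal (u ^ (-s)) = ENNReal.ofReal (y ^ (1 - s) / (s - 1)) := by
  rw [← ofReal_integral_eq_lintegral_ofReal (integrableOn_Ioi_rpow_of_lt (by linarith) hy),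
    integral_Ioi_rpow_of_lt (by linarith) hy]
  · congr 1
    rw [show -s + 1 = -(s - 1) by ring, show 1 - s = -(s - 1) by ring, neg_div_neg_eq]
  · filter_upwards [ae_restrict_mem measurableSet_Ioi] with u hu
    exact Real.rpow_nonneg (hy.trans hu).le _

/-- The integral of `max(|τ - ξ|, y)^{-s}` over the line is of order `y^{1-s}`. -/
lemma lintegral_max_rpow (s y ξ : ℝ) (hs : 1 < s) (hy : 0 < y) :
    ∫⁻ τ, ENNReal.ofReal ((max |τ - ξ| y) ^ (-s)) ≤
      ENNReal.ofReal ((2 + 2 / (s - 1)) * y ^ (1 - s)) := by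
  have h0 : ∫⁻ τ, ENNReal.ofReal ((max |τ - ξ| y) ^ (-s)) =
      ∫⁻ τ, ENNReal.ofReal ((max |τ| y) ^ (-s)) :=
    lintegral_sub_right_eq_self (fun τ : ℝ => ENNReal.ofReal ((max |τ| y) ^ (-s))) ξ
  rw [h0]
  have hy1 : 0 < y ^ (1 - s) := Real.rpow_pos_of_pos hy _
  have hcov : (Set.univ : Set ℝ) ⊆ Set.Icc (-y) y ∪ (Set.Ioi y ∪ Set.Iio (-y)) := by
    intro x _
    simp only [Set.mem_union, Set.mem_Icc, Set.mem_Ioi, Set.mem_Iio]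
    by_cases h1 : -y ≤ x <;> by_cases h2 : x ≤ y
    · exact Or.inl ⟨h1, h2⟩
    · exact Or.inr (Or.inl (not_le.1 h2))
    · exact Or.inr (Or.inr (not_le.1 h1))
    · exact Or.inr (Or.inr (not_le.1 h1))
  have hA : ∫⁻ τ in Set.Icc (-y) y, ENNReal.ofReal ((max |τ| y) ^ (-s)) ≤
      ENNReal.ofReal (2 * y ^ (1 - s)) := by
    calc ∫⁻ τ in Set.Icc (-y) y, ENNReal.ofReal ((max |τ| y) ^ (-s))
        ≤ ∫⁻ _τ in Set.Icc (-y) y, ENNReal.ofReal (y ^ (-s)) := by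
          refine lintegral_mono fun τ => ENNReal.ofReal_le_ofReal ?_
          exact Real.rpow_le_rpow_of_nonpos hy (le_max_right _ _) (by linarith)
      _ = ENNReal.ofReal (2 * y ^ (1 - s)) := by
          rw [setLIntegral_const, Real.volume_Icc, ← ENNReal.ofReal_mul (by positivity)]
          congr 1
          rw [show 1 - s = 1 + -s by ring, Real.rpow_add hy, Real.rpow_one]; ring
  have hB : ∫⁻ τ in Set.Ioi y, ENNReal.ofReal ((max |τ| y) ^ (-s)) =
      ENNReal.ofReal (y ^ (1 - s) / (s - 1)) := by
    rw [← lintegral_Ioi_rpow s y hs hy]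
    refine setLIntegral_congr_fun measurableSet_Ioi fun u hu => ?_
    have hu' : y < u := hu
    rw [abs_of_pos (hy.trans hu'), max_eq_left hu'.le]
  have hC : ∫⁻ τ in Set.Iio (-y), ENNReal.ofReal ((max |τ| y) ^ (-s)) =
      ENNReal.ofReal (y ^ (1 - s) / (s - 1)) := by
    rw [← hB, ← lintegral_indicator measurableSet_Iio, ← lintegral_indicator measurableSet_Ioi,
      ← lintegral_neg_eq_self]
    congr 1
    ext τ
    simp only [Set.indicator, Set.mem_Iio, Set.mem_Ioi, neg_lt_neg_iff, abs_neg]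
  calc ∫⁻ τ, ENNReal.ofReal ((max |τ| y) ^ (-s))
      = ∫⁻ τ in Set.univ, ENNReal.ofReal ((max |τ| y) ^ (-s)) := by simp
    _ ≤ ∫⁻ τ in Set.Icc (-y) y ∪ (Set.Ioi y ∪ Set.Iio (-y)),
          ENNReal.ofReal ((max |τ| y) ^ (-s)) := lintegral_mono_set hcov
    _ ≤ _ + (_ + _) := (lintegral_union_le _ _ _).trans
          (add_le_add le_rfl (lintegral_union_le _ _ _))
    _ ≤ ENNReal.ofReal (2 * y ^ (1 - s)) + (ENNReal.ofReal (y ^ (1 - s) / (s - 1)) +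
          ENNReal.ofReal (y ^ (1 - s) / (s - 1))) := by rw [hB, hC]; gcongr
    _ = _ := by
        have : 0 ≤ y ^ (1 - s) / (s - 1) := div_nonneg hy1.le (by linarith)
        rw [← ENNReal.ofReal_add this this, ← ENNReal.ofReal_add (by positivity) (by positivity)]
        congr 1; ring

/-- The contribution of one root of a polynomial: `|τ - ξ|` stands for the distance of `τ` to the
root, cut off from below at `y`. -/
lemma lintegral_ratio_rpow (s y ξ : ℝ) (hs : 1 < s) (hy : 0 < y) (hy1 : y ≤ 1) :
    ∫⁻ τ in Set.Icc (-1 : ℝ) 1,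
      ENNReal.ofReal (((max |τ - ξ| y + 2) / max |τ - ξ| y) ^ s) ≤
      ENNReal.ofReal ((4 ^ s * (2 + 2 / (s - 1)) + 2 * 2 ^ s) * y ^ (1 - s)) := by
  have hs1 : 0 < s - 1 := by linarith
  have hyp : 1 ≤ y ^ (1 - s) := Real.one_le_rpow_of_pos_of_le_one_of_nonpos hy hy1 (by linarith)
  have hpt : ∀ τ : ℝ, ENNReal.ofReal (((max |τ - ξ| y + 2) / max |τ - ξ| y) ^ s) ≤
      ENNReal.ofReal (4 ^ s) * ENNReal.ofReal ((max |τ - ξ| y) ^ (-s)) +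
        ENNReal.ofReal (2 ^ s) := by
    intro τ
    set v := max |τ - ξ| y with hv
    have hv0 : 0 < v := lt_max_of_lt_right hy
    rw [← ENNReal.ofReal_mul (by positivity), ← ENNReal.ofReal_add (by positivity) (by positivity)]
    refine ENNReal.ofReal_le_ofReal ?_
    rcases le_total v 2 with h | h
    · have : ((v + 2) / v) ^ s ≤ 4 ^ s * v ^ (-s) := by
        rw [Real.rpow_neg hv0.le, ← div_eq_mul_inv, ← Real.div_rpow (by norm_num) hv0.le]
        exact Real.rpow_le_rpow (by positivity) (by gcongr; linarith) (by linarith)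
      have h2 : (0 : ℝ) ≤ 2 ^ s := by positivity
      linarith
    · have : ((v + 2) / v) ^ s ≤ 2 ^ s :=
        Real.rpow_le_rpow (by positivity) (by rw [div_le_iff₀ hv0]; linarith) (by linarith)
      have h2 : (0 : ℝ) ≤ 4 ^ s * v ^ (-s) := by positivity
      linarith
  refine (lintegral_mono fun τ => hpt τ).trans ?_
  rw [lintegral_add_right _ measurable_const, lintegral_const_mul' _ _ ENNReal.ofReal_ne_top,
    setLIntegral_const, Real.volume_Icc]
  calc _ ≤ ENNReal.ofReal (4 ^ s) * ENNReal.ofReal ((2 + 2 / (s - 1)) * y ^ (1 - s)) +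
        ENNReal.ofReal (2 ^ s) * ENNReal.ofReal (1 - -1) := by
        gcongr
        exact (setLIntegral_le_lintegral _ _).trans (lintegral_max_rpow s y ξ hs hy)
    _ = ENNReal.ofReal (4 ^ s * ((2 + 2 / (s - 1)) * y ^ (1 - s)) + 2 ^ s * (1 - -1)) := by
        rw [← ENNReal.ofReal_mul (by positivity), ← ENNReal.ofReal_mul (by positivity),
          ← ENNReal.ofReal_add (by positivity) (by positivity)]
    _ ≤ _ := by
        refine ENNReal.ofReal_le_ofReal ?_
        have h2 : (0 : ℝ) ≤ 2 ^ s := by positivity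
        nlinarith

/-- Average of the inverse power of a polynomial, replaced by its maximum at scale `y`. -/
lemma poly_average (N : ℕ) (β s : ℝ) (hβ : 0 ≤ β) (hs : 1 < s) (hNs : N * β ≤ s) :
    ∃ C : ℝ, 0 < C ∧ ∀ (p : Polynomial ℝ) (τ0 y : ℝ) (G : ℝ → ℝ), p.natDegree ≤ N →
      |τ0| ≤ 1 → p.eval τ0 ≠ 0 → 0 < y → y ≤ 1 → (∀ τ, 0 ≤ G τ) →
      (∀ τ x, |x - τ| ≤ y → G τ * |p.eval x| ^ β ≤ 1) →
      ∫⁻ τ in Set.Icc (-1 : ℝ) 1, ENNReal.ofReal (G τ) ≤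
        ENNReal.ofReal (C * |p.eval τ0| ^ (-β) * y ^ (1 - s)) := by
  set D : ℝ := (4 ^ s * (2 + 2 / (s - 1)) + 2 * 2 ^ s) with hD
  have hs1 : 0 < s - 1 := by linarith
  have hD0 : 0 < D := by positivity
  refine ⟨((2 * N + 3) ^ N : ℝ) ^ β * (2 + N * D), by positivity, ?_⟩
  intro p τ0 y G hN hτ0 hp hy hy1 hG0 hG
  obtain ⟨z, hz, hlow⟩ := poly_lower p N hN
  have hyp : 1 ≤ y ^ (1 - s) := Real.one_le_rpow_of_pos_of_le_one_of_nonpos hy hy1 (by linarith)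
  set v : Fin p.natDegree → ℝ → ℝ := fun l τ => max |τ - (z l).re| y with hv
  have hv0 : ∀ l τ, 0 < v l τ := fun l τ => lt_max_of_lt_right hy
  have hP0 : 0 < |p.eval τ0| := abs_pos.2 hp
  set K : ℝ := (2 * N + 3) ^ N with hK
  have hK0 : 0 < K := by positivity
  have hpt : ∀ τ ∈ Set.Icc (-1 : ℝ) 1, G τ ≤ K ^ β * |p.eval τ0| ^ (-β) *
      (1 + ∑ l, ((v l τ + 2) / v l τ) ^ s) := by
    intro τ hτ
    obtain ⟨x, hx, hxl⟩ := hlow τ y hy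
    -- the ratio `|p(τ0)| / |p(x)|` is controlled factor by factor
    have h1 : |p.eval τ0| ≤ K * |p.eval x| * ∏ l, ((v l τ + 2) / v l τ) := by
      have h2 : ∏ l, ‖(τ0 : ℂ) - z l‖ ≤
          ∏ l, (max ‖(τ : ℂ) - z l‖ y * ((v l τ + 2) / v l τ)) := by
        refine Finset.prod_le_prod (fun _ _ => norm_nonneg _) fun l _ => ?_
        have h3 : ‖(τ0 : ℂ) - z l‖ ≤ ‖(τ : ℂ) - z l‖ + 2 := by
          calc ‖(τ0 : ℂ) - z l‖ = ‖((τ : ℂ) - z l) + ((τ0 : ℂ) - τ)‖ := by congr 1; ring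
            _ ≤ ‖(τ : ℂ) - z l‖ + ‖(τ0 : ℂ) - τ‖ := norm_add_le _ _
            _ ≤ _ := by
              rw [← Complex.ofReal_sub, Complex.norm_real, Real.norm_eq_abs]
              have := abs_sub τ0 τ
              have := abs_le.2 hτ
              linarith
        have h4 : v l τ ≤ max ‖(τ : ℂ) - z l‖ y := by
          refine max_le_max ?_ le_rfl
          have := Complex.abs_re_le_norm ((τ : ℂ) - z l)
          simpa using this
        rw [mul_div_assoc', le_div_iff₀ (hv0 l τ)]
        have h5 : ‖(τ : ℂ) - z l‖ ≤ max ‖(τ : ℂ) - z l‖ y := le_max_left _ _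
        have := hv0 l τ
        nlinarith
      rw [Finset.prod_mul_distrib] at h2
      rw [hz τ0]
      have h6 : 0 ≤ ∏ l, ((v l τ + 2) / v l τ) :=
        Finset.prod_nonneg fun l _ => by have := hv0 l τ; positivity
      calc _ ≤ |p.leadingCoeff| * ((∏ l, max ‖(τ : ℂ) - z l‖ y) * ∏ l, ((v l τ + 2) / v l τ)) :=
            mul_le_mul_of_nonneg_left h2 (abs_nonneg _)
        _ = (|p.leadingCoeff| * ∏ l, max ‖(τ : ℂ) - z l‖ y) * ∏ l, ((v l τ + 2) / v l τ) := by ring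
        _ ≤ _ := mul_le_mul_of_nonneg_right hxl h6
    have h7 : ∏ l, ((v l τ + 2) / v l τ) ^ β ≤ 1 + ∑ l, ((v l τ + 2) / v l τ) ^ s := by
      refine prod_rpow_le _ _ (fun l => ?_) β s hβ (le_trans ?_ hNs)
      · rw [le_div_iff₀ (hv0 l τ)]; linarith
      · gcongr
    have h8 : 0 ≤ ∏ l, ((v l τ + 2) / v l τ) :=
      Finset.prod_nonneg fun l _ => by have := hv0 l τ; positivity
    have h9 : |p.eval τ0| ^ β ≤ K ^ β * |p.eval x| ^ β * ∏ l, ((v l τ + 2) / v l τ) ^ β := by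
      have := Real.rpow_le_rpow (abs_nonneg _) h1 hβ
      rwa [Real.mul_rpow (by positivity) h8, Real.mul_rpow hK0.le (abs_nonneg _),
        ← Real.finsetProd_rpow _ _ (fun l _ => by have := hv0 l τ; positivity)] at this
    have hGx := hG τ x hx
    have h10 : G τ * |p.eval τ0| ^ β ≤ K ^ β * (1 + ∑ l, ((v l τ + 2) / v l τ) ^ s) := by
      have e1 : 0 ≤ ∏ l, ((v l τ + 2) / v l τ) ^ β :=
        Finset.prod_nonneg fun l _ => by have := hv0 l τ; positivity
      have e2 : 0 ≤ K ^ β := by positivity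
      calc G τ * |p.eval τ0| ^ β ≤
            G τ * (K ^ β * |p.eval x| ^ β * ∏ l, ((v l τ + 2) / v l τ) ^ β) :=
            mul_le_mul_of_nonneg_left h9 (hG0 τ)
        _ = (G τ * |p.eval x| ^ β) * (K ^ β * ∏ l, ((v l τ + 2) / v l τ) ^ β) := by ring
        _ ≤ 1 * (K ^ β * ∏ l, ((v l τ + 2) / v l τ) ^ β) :=
            mul_le_mul_of_nonneg_right hGx (mul_nonneg e2 e1)
        _ ≤ _ := by rw [one_mul]; exact mul_le_mul_of_nonneg_left h7 e2
    rw [Real.rpow_neg hP0.le]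
    have h11 : 0 < |p.eval τ0| ^ β := Real.rpow_pos_of_pos hP0 _
    rw [← le_div_iff₀ h11] at h10
    refine h10.trans (le_of_eq ?_)
    field_simp
  set A : ℝ := K ^ β * |p.eval τ0| ^ (-β) with hA
  have hA0 : 0 ≤ A := by positivity
  calc ∫⁻ τ in Set.Icc (-1 : ℝ) 1, ENNReal.ofReal (G τ)
      ≤ ∫⁻ τ in Set.Icc (-1 : ℝ) 1, ENNReal.ofReal A *
          (1 + ∑ l, ENNReal.ofReal (((v l τ + 2) / v l τ) ^ s)) := by
        refine setLIntegral_mono' measurableSet_Icc fun τ hτ => ?_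
        refine (ENNReal.ofReal_le_ofReal (hpt τ hτ)).trans (le_of_eq ?_)
        have hnn : ∀ l ∈ Finset.univ, 0 ≤ ((v l τ + 2) / v l τ) ^ s := fun l _ => by
          have := hv0 l τ; positivity
        rw [ENNReal.ofReal_mul hA0, ENNReal.ofReal_add zero_le_one (Finset.sum_nonneg hnn),
          ENNReal.ofReal_one, ENNReal.ofReal_sum_of_nonneg hnn]
    _ = ENNReal.ofReal A * ((∫⁻ _τ in Set.Icc (-1 : ℝ) 1, 1) +
          ∑ l, ∫⁻ τ in Set.Icc (-1 : ℝ) 1, ENNReal.ofReal (((v l τ + 2) / v l τ) ^ s)) := by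
        have hm : ∀ l, Measurable fun τ => ENNReal.ofReal (((v l τ + 2) / v l τ) ^ s) := by
          intro l; simp only [hv]; fun_prop
        rw [lintegral_const_mul' _ _ ENNReal.ofReal_ne_top, lintegral_add_left measurable_const,
          lintegral_finsetSum _ fun l _ => hm l]
    _ ≤ ENNReal.ofReal A * (ENNReal.ofReal 2 + ∑ _l : Fin p.natDegree,
          ENNReal.ofReal (D * y ^ (1 - s))) := by
        gcongr with l
        · rw [setLIntegral_const, Real.volume_Icc]; norm_num
        · exact lintegral_ratio_rpow s y _ hs hy hy1
    _ = ENNReal.ofReal (A * (2 + p.natDegree * (D * y ^ (1 - s)))) := by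
        rw [Finset.sum_const, Finset.card_univ, Fintype.card_fin, nsmul_eq_mul,
          ENNReal.ofReal_mul hA0, ENNReal.ofReal_add (by norm_num) (by positivity),
          ENNReal.ofReal_mul (p := (p.natDegree : ℝ)) (by positivity), ENNReal.ofReal_natCast]
    _ ≤ _ := by
        refine ENNReal.ofReal_le_ofReal ?_
        have h1 : (2 + p.natDegree * (D * y ^ (1 - s)) : ℝ) ≤ (2 + N * D) * y ^ (1 - s) := by
          have : (p.natDegree : ℝ) ≤ N := by exact_mod_cast hN
          have h2 : (p.natDegree : ℝ) * (D * y ^ (1 - s)) ≤ N * (D * y ^ (1 - s)) := by gcongr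
          nlinarith
        calc A * (2 + p.natDegree * (D * y ^ (1 - s))) ≤ A * ((2 + N * D) * y ^ (1 - s)) :=
              mul_le_mul_of_nonneg_left h1 hA0
          _ = _ := by rw [hA]; ring

end polys
end LPR

/-! ### Choice of a large minor -/

namespace LPR
open Matrix MeasureTheory Filter
open scoped ENNReal

/-- The linear map `(u, v) ↦ (R (u - τ v), R⁻¹ v)` on `ℝ^d × ℝ^d`. -/
noncomputable def gmat (d : ℕ) (R τ : ℝ) : Matrix (Fin d ⊕ Fin d) (Fin d ⊕ Fin d) ℝ :=
  fromBlocks (R • 1) (-(R * τ) • 1) 0 (R⁻¹ • 1)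

section sel
variable {d i : ℕ}

lemma gmat_mul_inl (R τ : ℝ) {κ : Type} (W : Matrix (Fin d ⊕ Fin d) κ ℝ) (a : Fin d) (k : κ) :
    (gmat d R τ * W) (Sum.inl a) k = R * (W (Sum.inl a) k - τ * W (Sum.inr a) k) := by
  simp [gmat, Matrix.mul_apply, Matrix.one_apply, Fintype.sum_sum_type, Finset.sum_ite_eq]
  ring

lemma gmat_mul_inr (R τ : ℝ) {κ : Type} (W : Matrix (Fin d ⊕ Fin d) κ ℝ) (a : Fin d) (k : κ) :
    (gmat d R τ * W) (Sum.inr a) k = R⁻¹ * W (Sum.inr a) k := by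
  simp [gmat, Matrix.mul_apply, Matrix.one_apply, Fintype.sum_sum_type, Finset.sum_ite_eq]

lemma det_gmat (R τ : ℝ) (hR : R ≠ 0) : (gmat d R τ).det = 1 := by
  rw [gmat, det_fromBlocks_zero₂₁, det_smul, det_smul]
  simp [hR]

lemma gdet_mul_ne_zero {m κ : Type} [Fintype m] [DecidableEq m] [Fintype κ] [DecidableEq κ]
    (T : Matrix m m ℝ) (W : Matrix m κ ℝ) (hT : IsUnit T.det) (hW : gdet W ≠ 0) :
    gdet (T * W) ≠ 0 := by
  intro h
  obtain ⟨v, hv, h⟩ := exists_mulVec_of_gdet_zero _ h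
  refine hW (gdet_zero_of_mulVec W v hv ?_)
  have := congrArg (T⁻¹ *ᵥ ·) h
  simpa [← Matrix.mul_assoc, nonsing_inv_mul _ hT] using this

/-- The number of selected rows in the upper block. -/
def nL (σ : Fin i → Fin d ⊕ Fin d) : ℕ := (Finset.univ.filter fun k => (σ k).isLeft = true).card
/-- The number of selected rows in the lower block. -/
def nR (σ : Fin i → Fin d ⊕ Fin d) : ℕ := (Finset.univ.filter fun k => ¬ (σ k).isLeft = true).card

lemma nL_add_nR (σ : Fin i → Fin d ⊕ Fin d) : nL σ + nR σ = i := by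
  have := Finset.card_filter_add_card_filter_not (s := (Finset.univ : Finset (Fin i)))
    (fun k => (σ k).isLeft = true)
  simpa [nL, nR] using this

/-- If the upper block has rank at least `i/2`, some nonvanishing maximal minor uses at least as
many rows of the upper block as of the lower one. -/
lemma select_rows (M : Matrix (Fin d ⊕ Fin d) (Fin i) ℝ) (hM : gdet M ≠ 0)
    (hr : i ≤ 2 * (M.submatrix Sum.inl id).rank) :
    ∃ σ : Fin i → Fin d ⊕ Fin d, Function.Injective σ ∧ nR σ ≤ nL σ ∧
      (M.submatrix σ id).det ≠ 0 := by
  classical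
  obtain ⟨b0, hb0, -, hsp0, hli0⟩ := exists_linearIndepOn_extension
    (linearIndepOn_empty ℝ M.row) (Set.empty_subset (Set.range (Sum.inl : Fin d → _)))
  obtain ⟨b, -, hb0b, hsp, hli⟩ := exists_linearIndepOn_extension hli0 (Set.subset_univ b0)
  have hspan0 : Submodule.span ℝ (M.row '' b0)
      = Submodule.span ℝ (Set.range (M.submatrix Sum.inl id).row) := by
    apply le_antisymm
    · refine Submodule.span_mono ?_
      rintro _ ⟨x, hx, rfl⟩
      obtain ⟨a, rfl⟩ := hb0 hx
      exact ⟨a, rfl⟩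
    · rw [Submodule.span_le]
      rintro _ ⟨a, rfl⟩
      exact hsp0 ⟨Sum.inl a, ⟨a, rfl⟩, rfl⟩
  have hcard0 : (M.submatrix Sum.inl id).rank = b0.toFinset.card := by
    rw [rank_eq_finrank_span_row, ← hspan0, Set.image_eq_range,
      finrank_span_eq_card (b := fun x : b0 => M.row x) hli0, Set.toFinset_card]
  have hspan : Submodule.span ℝ (M.row '' b) = Submodule.span ℝ (Set.range M.row) := by
    apply le_antisymm
    · exact Submodule.span_mono (Set.image_subset_range _ _)
    · rw [Submodule.span_le]
      rintro _ ⟨a, rfl⟩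
      exact hsp ⟨a, trivial, rfl⟩
  have hrank : M.rank = i := by
    have h1 := LinearMap.finrank_range_add_finrank_ker M.mulVecLin
    have h2 : M.mulVecLin.ker = ⊥ := by
      rw [LinearMap.ker_eq_bot']
      intro v hv
      by_contra hv0
      exact hM (gdet_zero_of_mulVec M v hv0 (by simpa using hv))
    rw [h2, finrank_bot] at h1
    have h3 : M.rank = Module.finrank ℝ M.mulVecLin.range := rfl
    rw [h3]; simpa using h1
  have hcard : Fintype.card b = i := by
    have : M.rank = Fintype.card b := by
      rw [rank_eq_finrank_span_row, ← hspan, Set.image_eq_range,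
        finrank_span_eq_card (b := fun x : b => M.row x) hli]
    rw [← this, hrank]
  let e : Fin i ≃ b := (Fintype.equivFinOfCardEq hcard).symm
  refine ⟨fun k => (e k : Fin d ⊕ Fin d), fun x y h => e.injective (Subtype.ext h), ?_, ?_⟩
  · have h1 : b0.toFinset.card ≤ nL (fun k => (e k : Fin d ⊕ Fin d)) := by
      unfold nL
      have : b0.toFinset ⊆ (Finset.univ.filter fun k : Fin i =>
          (e k : Fin d ⊕ Fin d).isLeft = true).image (fun k => (e k : Fin d ⊕ Fin d)) := by
        intro x hx
        rw [Set.mem_toFinset] at hx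
        obtain ⟨a, rfl⟩ := hb0 hx
        simp only [Finset.mem_image, Finset.mem_filter, Finset.mem_univ, true_and]
        exact ⟨e.symm ⟨Sum.inl a, hb0b hx⟩, by simp, by simp⟩
      exact (Finset.card_le_card this).trans Finset.card_image_le
    have h2 := nL_add_nR (fun k => (e k : Fin d ⊕ Fin d))
    omega
  · have hrows : LinearIndependent ℝ (M.submatrix (fun k => (e k : Fin d ⊕ Fin d)) id).row :=
      LinearIndependent.comp hli e e.injective
    have := linearIndependent_rows_iff_isUnit.1 hrows
    rw [isUnit_iff_isUnit_det] at this
    exact this.ne_zero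

/-- For one of the two shears `τ0 = 0, 1` the upper block has rank at least `i / 2`, since a vector
killed by both upper blocks is killed by `W`. -/
lemma half_rank (W : Matrix (Fin d ⊕ Fin d) (Fin i) ℝ) (hW : gdet W ≠ 0) :
    ∃ τ0 : Fin 2, i ≤ 2 * ((gmat d 1 ((τ0 : ℕ) : ℝ) * W).submatrix Sum.inl id).rank := by
  by_contra! hcon
  have h0 := hcon 0
  have h1 := hcon 1
  set A := (gmat d 1 (((0 : Fin 2) : ℕ) : ℝ) * W).submatrix Sum.inl id with hA
  set B := (gmat d 1 (((1 : Fin 2) : ℕ) : ℝ) * W).submatrix Sum.inl id with hB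
  have hd : Disjoint A.mulVecLin.ker B.mulVecLin.ker := by
    rw [Submodule.disjoint_def]
    intro v hv1 hv2
    by_contra hv0
    refine hW (gdet_zero_of_mulVec W v hv0 ?_)
    rw [LinearMap.mem_ker, mulVecLin_apply] at hv1 hv2
    have e1 : ∀ a, ∑ k, W (Sum.inl a) k * v k = 0 := by
      intro a
      have := congrFun hv1 a
      simpa [hA, mulVec, dotProduct, gmat_mul_inl] using this
    have e2 : ∀ a, ∑ k, W (Sum.inr a) k * v k = 0 := by
      intro a
      have := congrFun hv2 a
      have h3 : ∑ k, (W (Sum.inl a) k * v k - W (Sum.inr a) k * v k) = 0 := by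
        simpa [hB, mulVec, dotProduct, gmat_mul_inl, sub_mul] using this
      rw [Finset.sum_sub_distrib, e1 a] at h3
      linarith
    ext (a | a)
    · exact e1 a
    · exact e2 a
  have hk := Submodule.finrank_add_finrank_le_of_disjoint hd
  have ha := LinearMap.finrank_range_add_finrank_ker A.mulVecLin
  have hb := LinearMap.finrank_range_add_finrank_ker B.mulVecLin
  simp only [Module.finrank_fin_fun] at hk ha hb
  have ha' : A.rank = Module.finrank ℝ A.mulVecLin.range := rfl
  have hb' : B.rank = Module.finrank ℝ B.mulVecLin.range := rfl
  omega

/-- A compactness argument makes the choice of a large minor uniform. -/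
lemma selection (d i : ℕ) : ∃ c : ℝ, 0 < c ∧ ∀ W : Matrix (Fin d ⊕ Fin d) (Fin i) ℝ, gdet W ≠ 0 →
    ∃ σ : Fin i → Fin d ⊕ Fin d, Function.Injective σ ∧ nR σ ≤ nL σ ∧ ∃ τ0 : Fin 2,
      c * gdet W ≤ ((gmat d 1 ((τ0 : ℕ) : ℝ) * W).submatrix σ id).det ^ 2 := by
  classical
  set I : Finset ((Fin i → Fin d ⊕ Fin d) × Fin 2) :=
    Finset.univ.filter fun q => Function.Injective q.1 ∧ nR q.1 ≤ nL q.1 with hI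
  set F : Matrix (Fin d ⊕ Fin d) (Fin i) ℝ → ℝ := fun W =>
    ∑ q ∈ I, ((gmat d 1 ((q.2 : ℕ) : ℝ) * W).submatrix q.1 id).det ^ 2 with hF
  have hFc : Continuous F := by
    refine continuous_finsetSum _ fun q _ => Continuous.pow ?_ 2
    exact Continuous.matrix_det ((continuous_const.matrix_mul continuous_id).matrix_submatrix _ _)
  have hFpos : ∀ W, gdet W ≠ 0 → 0 < F W := by
    intro W hW
    obtain ⟨τ0, hτ⟩ := half_rank W hW
    obtain ⟨σ, hσ, hn, hdet⟩ := select_rows _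
      (gdet_mul_ne_zero _ W (by rw [det_gmat _ _ one_ne_zero]; exact isUnit_one) hW) hτ
    refine Finset.sum_pos' (fun q _ => sq_nonneg _) ⟨(σ, τ0), ?_, ?_⟩
    · simp [hI, hσ, hn]
    · positivity
  set K : Set (Matrix (Fin d ⊕ Fin d) (Fin i) ℝ) := {W | Wᵀ * W = 1} with hK
  have hKc : IsCompact K := by
    have hcl : IsClosed K := isClosed_eq
      (continuous_id.matrix_transpose.matrix_mul continuous_id) continuous_const
    have hbox : IsCompact (Set.pi Set.univ fun _ : Fin d ⊕ Fin d => Set.pi Set.univ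
        fun _ : Fin i => Set.Icc (-1 : ℝ) 1) :=
      isCompact_univ_pi fun _ => isCompact_univ_pi fun _ => isCompact_Icc
    refine IsCompact.of_isClosed_subset hbox hcl ?_
    intro W hW a _ k _
    exact abs_le.1 (abs_le_one_of_orth W hW a k)
  have hKd : ∀ W ∈ K, gdet W ≠ 0 := by
    intro W hW
    have : Wᵀ * W = 1 := hW
    simp [gdet, this]
  obtain ⟨c, hc, hcK⟩ : ∃ c : ℝ, 0 < c ∧ ∀ W ∈ K, c ≤ F W := by
    rcases K.eq_empty_or_nonempty with h | h
    · exact ⟨1, one_pos, by simp [h]⟩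
    · obtain ⟨W1, hW1, hmin⟩ := hKc.exists_isMinOn h hFc.continuousOn
      exact ⟨F W1, hFpos _ (hKd _ hW1), fun W hW => hmin hW⟩
  refine ⟨c / (I.card + 1), by positivity, fun W hW => ?_⟩
  obtain ⟨W0, S, rfl, h1, hS⟩ := qr W hW
  have hle : c * gdet (W0 * S) ≤ F (W0 * S) := by
    have : F (W0 * S) = gdet (W0 * S) * F W0 := by
      simp only [hF, Finset.mul_sum]
      refine Finset.sum_congr rfl fun q _ => ?_
      have : (gmat d 1 ((q.2 : ℕ) : ℝ) * (W0 * S)).submatrix q.1 id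
          = (gmat d 1 ((q.2 : ℕ) : ℝ) * W0).submatrix q.1 id * S := by
        rw [← Matrix.mul_assoc]; rfl
      rw [this, det_mul, ← hS]; ring
    rw [this, mul_comm]
    exact mul_le_mul_of_nonneg_left (hcK W0 h1) (gdet_nonneg _)
  by_contra! hcon
  have hlt : F (W0 * S) ≤ ∑ _q ∈ I, c / (I.card + 1) * gdet (W0 * S) := by
    refine Finset.sum_le_sum fun q hq => ?_
    have hq' : Function.Injective q.1 ∧ nR q.1 ≤ nL q.1 := by simpa [hI] using hq
    exact (hcon q.1 hq'.1 hq'.2 q.2).le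
  rw [Finset.sum_const, nsmul_eq_mul] at hlt
  have hg : 0 < gdet (W0 * S) := lt_of_le_of_ne (gdet_nonneg _) (Ne.symm hW)
  have : (I.card : ℝ) * (c / (I.card + 1) * gdet (W0 * S)) < c * gdet (W0 * S) := by
    have h2 : (I.card : ℝ) * (c / (I.card + 1) * gdet (W0 * S))
      = (I.card / (I.card + 1)) * (c * gdet (W0 * S)) := by field_simp
    rw [h2]
    have h3 : (I.card : ℝ) / (I.card + 1) < 1 := by rw [div_lt_one (by positivity)]; linarith
    have h4 : 0 < c * gdet (W0 * S) := by positivity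
    nlinarith
  linarith

end sel
end LPR

/-! ### The average of a single volume along the flow -/

namespace LPR
open Matrix MeasureTheory Filter
open scoped ENNReal

section star
variable {d i : ℕ}

lemma natDegree_det_le {n : ℕ} (P : Matrix (Fin n) (Fin n) (Polynomial ℝ)) (f : Fin n → ℕ)
    (h : ∀ k l, (P k l).natDegree ≤ f k) : P.det.natDegree ≤ ∑ k, f k := by
  rw [← det_transpose, det_apply]
  refine Polynomial.natDegree_sum_le_of_forall_le _ _ fun s _ => ?_
  refine (Polynomial.natDegree_smul_le _ _).trans ?_
  refine (Polynomial.natDegree_prod_le _ _).trans ?_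
  exact Finset.sum_le_sum fun k _ => h _ _

/-- A selected upper row is unpaired when the lower row with the same index is not selected. -/
def Unpaired (σ : Fin i → Fin d ⊕ Fin d) (k : Fin i) : Prop :=
  ∃ a, σ k = Sum.inl a ∧ ∀ l, σ l ≠ Sum.inr a

open Classical in
/-- The number of unpaired upper rows. -/
noncomputable def nU (σ : Fin i → Fin d ⊕ Fin d) : ℕ := (Finset.univ.filter (Unpaired σ)).card

lemma nU_le_nL (σ : Fin i → Fin d ⊕ Fin d) : nU σ ≤ nL σ := by
  classical
  refine Finset.card_le_card fun k hk => ?_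
  simp only [Finset.mem_filter, Finset.mem_univ, true_and] at hk ⊢
  obtain ⟨a, ha, -⟩ := hk
  simp [ha]

lemma nU_add_nR_le (σ : Fin i → Fin d ⊕ Fin d) (hσ : Function.Injective σ) : nU σ + nR σ ≤ d := by
  classical
  unfold nU nR
  rw [← Finset.card_union_of_disjoint]
  · refine (Finset.card_le_card_of_injOn (fun k => Sum.elim id id (σ k))
      (t := (Finset.univ : Finset (Fin d))) (fun _ _ => Finset.mem_coe.2 (Finset.mem_univ _)) ?_).trans (by simp)
    intro k hk l hl hkl
    apply hσ
    simp only [Finset.coe_union, Finset.coe_filter, Finset.mem_univ, true_and, Set.mem_union,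
      Set.mem_ofPred_eq] at hk hl
    simp only at hkl
    rcases hk with ⟨a, ha, ha'⟩ | hk
    · rcases hl with ⟨c, hc, hc'⟩ | hl
      · rw [ha, hc] at hkl ⊢; simpa using hkl
      · rcases h : σ l with c | c
        · simp [h] at hl
        · rw [ha, h] at hkl
          have : a = c := by simpa using hkl
          exact absurd (this ▸ h) (ha' l)
    · rcases hl with ⟨c, hc, hc'⟩ | hl
      · rcases h : σ k with a | a
        · simp [h] at hk
        · rw [hc, h] at hkl
          have : a = c := by simpa using hkl
          exact absurd (this ▸ h) (hc' k)
      · rcases h : σ k with a | a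
        · simp [h] at hk
        · rcases h' : σ l with c | c
          · simp [h'] at hl
          · rw [h, h'] at hkl; simpa using hkl
  · rw [Finset.disjoint_left]
    intro k hk hk'
    simp only [Finset.mem_filter, Finset.mem_univ, true_and] at hk hk'
    obtain ⟨a, ha, -⟩ := hk
    simp [ha] at hk'

/-- The minor of `gmat 1 x * W` on the rows `σ` is a polynomial in `x` whose degree is at most the
number of unpaired upper rows: a lower row can be used to clear `x` from its partner. -/
lemma minor_poly (σ : Fin i → Fin d ⊕ Fin d) (hσ : Function.Injective σ)
    (W : Matrix (Fin d ⊕ Fin d) (Fin i) ℝ) : ∃ p : Polynomial ℝ, p.natDegree ≤ nU σ ∧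
      ∀ x, p.eval x = ((gmat d 1 x * W).submatrix σ id).det := by
  classical
  set P : Matrix (Fin i) (Fin i) (Polynomial ℝ) := Matrix.of fun k l =>
    Polynomial.C (W (σ k) l) - if Unpaired σ k then
      Polynomial.X * Polynomial.C (W (Sum.inr (Sum.elim id id (σ k))) l) else 0 with hP
  refine ⟨P.det, ?_, fun x => ?_⟩
  · have := natDegree_det_le P (fun k => if Unpaired σ k then 1 else 0) ?_
    · refine this.trans (le_of_eq ?_)
      rw [Finset.sum_boole]; rfl
    · intro k l
      simp only [hP, Matrix.of_apply]
      split_ifs with h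
      · refine (Polynomial.natDegree_sub_le _ _).trans ?_
        rw [max_le_iff]
        refine ⟨by simp, ?_⟩
        refine (Polynomial.natDegree_mul_le).trans ?_
        simp
      · simp
  · set Px : Matrix (Fin i) (Fin i) ℝ := Matrix.of fun k l => W (σ k) l - if Unpaired σ k then
      x * W (Sum.inr (Sum.elim id id (σ k))) l else 0 with hPx
    have h1 : P.det.eval x = Px.det := by
      have := RingHom.map_det (Polynomial.evalRingHom x) P
      rw [Polynomial.coe_evalRingHom] at this
      rw [this]
      congr 1
      ext k l
      simp only [hP, hPx, RingHom.mapMatrix_apply, Matrix.map_apply, Matrix.of_apply,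
        Polynomial.coe_evalRingHom]
      split_ifs
      · simp only [Polynomial.eval_sub, Polynomial.eval_mul, Polynomial.eval_C, Polynomial.eval_X]
      · simp
    set U : Matrix (Fin i) (Fin i) ℝ := Matrix.of fun k l => (if k = l then 1 else 0) -
      if ∃ a, σ k = Sum.inl a ∧ σ l = Sum.inr a then x else 0 with hU
    have hUdet : U.det = 1 := by
      rw [twoBlockTriangular_det U (fun k => (σ k).isLeft = true)]
      · have e1 : U.toSquareBlockProp (fun k => (σ k).isLeft = true) = 1 := by
          ext ⟨k, hk⟩ ⟨l, hl⟩
          have : ¬ ∃ a, σ k = Sum.inl a ∧ σ l = Sum.inr a := by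
            rintro ⟨a, -, h⟩; simp [h] at hl
          simp [toSquareBlockProp, hU, this, Matrix.one_apply]
        have e2 : U.toSquareBlockProp (fun k => ¬ (σ k).isLeft = true) = 1 := by
          ext ⟨k, hk⟩ ⟨l, hl⟩
          have : ¬ ∃ a, σ k = Sum.inl a ∧ σ l = Sum.inr a := by
            rintro ⟨a, h, -⟩; simp [h] at hk
          simp [toSquareBlockProp, hU, this, Matrix.one_apply]
        rw [e1, e2, det_one, det_one, one_mul]
      · intro k hk l hl
        have h1 : ¬ ∃ a, σ k = Sum.inl a ∧ σ l = Sum.inr a := by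
          rintro ⟨a, h, -⟩; simp [h] at hk
        have h2 : k ≠ l := by rintro rfl; exact hk hl
        simp [hU, h1, h2]
    have h2 : (gmat d 1 x * W).submatrix σ id = U * Px := by
      ext k l
      rw [Matrix.mul_apply]
      simp only [submatrix_apply, id, hU, Matrix.of_apply, sub_mul, ite_mul, one_mul, zero_mul,
        Finset.sum_sub_distrib, Finset.sum_ite_eq, Finset.mem_univ, if_true]
      by_cases hk : Unpaired σ k
      · obtain ⟨a, ha, ha'⟩ := hk
        have hz : ∑ j, (if ∃ a, σ k = Sum.inl a ∧ σ j = Sum.inr a then x * Px j l else 0) = 0 := by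
          refine Finset.sum_eq_zero fun j _ => if_neg ?_
          rintro ⟨c, hc, hc'⟩
          rw [ha] at hc
          exact ha' j (by rw [hc']; congr 1; simpa using hc.symm)
        rw [hz, sub_zero, ha, gmat_mul_inl]
        simp only [hPx, Matrix.of_apply]
        rw [if_pos ⟨a, ha, ha'⟩, ha]; simp
      · rcases h : σ k with a | a
        · have : ∃ j, σ j = Sum.inr a := by
            by_contra! hcon; exact hk ⟨a, h, hcon⟩
          obtain ⟨j0, hj0⟩ := this
          have hz : ∑ j, (if ∃ c, σ k = Sum.inl c ∧ σ j = Sum.inr c then x * Px j l else 0)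
              = x * Px j0 l := by
            rw [Finset.sum_eq_single j0]
            · rw [if_pos ⟨a, h, hj0⟩]
            · intro j _ hj
              refine if_neg ?_
              rintro ⟨c, hc, hc'⟩
              rw [h] at hc
              apply hj; apply hσ; rw [hj0, hc']; congr 1; simpa using hc.symm
            · simp
          have hun : ¬ Unpaired σ j0 := by rintro ⟨c, hc, -⟩; rw [hj0] at hc; simp at hc
          rw [h] at hz
          rw [hz, gmat_mul_inl]
          simp only [hPx, Matrix.of_apply]
          rw [if_neg hk, if_neg hun, h, hj0]; ring
        · have hz : ∑ j, (if ∃ c, (Sum.inr a : Fin d ⊕ Fin d) = Sum.inl c ∧ σ j = Sum.inr c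
              then x * Px j l else 0) = 0 := by
            refine Finset.sum_eq_zero fun j _ => if_neg ?_
            rintro ⟨c, hc, -⟩; simp at hc
          rw [hz, gmat_mul_inr]
          simp only [hPx, Matrix.of_apply]
          rw [if_neg hk, h]; simp
    rw [h1, h2, det_mul, hUdet, one_mul]

/-- The selected minor at `x` is bounded by the volume at any `τ` with `|x - τ| ≤ R⁻²`. -/
lemma minor_le (d i : ℕ) : ∃ C : ℝ, 0 < C ∧ ∀ (σ : Fin i → Fin d ⊕ Fin d),
    nR σ ≤ nL σ → ∀ (W : Matrix (Fin d ⊕ Fin d) (Fin i) ℝ) (R τ x : ℝ), 1 ≤ R →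
      |x - τ| ≤ (R ^ 2)⁻¹ →
      (R ^ (nL σ - nR σ) * ((gmat d 1 x * W).submatrix σ id).det) ^ 2 ≤
        C * gdet (gmat d R τ * W) := by
  refine ⟨(i.factorial * (i * (((d + d : ℕ) * 1) * ((d + d : ℕ) * 1))) ^ i : ℝ) + 1,
    by positivity, ?_⟩
  intro σ hn W R τ x hR hx
  have hR0 : 0 < R := by linarith
  set V := gmat d R τ * W with hV
  -- the rescaled selected rows are obtained from `V` by a matrix with entries at most one
  set D : Fin i → ℝ := fun k => if (σ k).isLeft = true then R else R⁻¹ with hD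
  set T : Matrix (Fin i) (Fin d ⊕ Fin d) ℝ := Matrix.of fun k => Sum.elim
    (fun a => if σ k = Sum.inl a then 1 else 0)
    (fun a => if σ k = Sum.inl a then -(R ^ 2 * (x - τ)) else if σ k = Sum.inr a then 1 else 0)
    with hT
  have hTb : ∀ k j, |T k j| ≤ 1 := by
    have h1 : |R ^ 2 * (x - τ)| ≤ 1 := by
      rw [abs_mul, abs_of_pos (by positivity)]
      calc R ^ 2 * |x - τ| ≤ R ^ 2 * (R ^ 2)⁻¹ := by gcongr
        _ = 1 := by field_simp
    rintro k (a | a)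
    · simp only [hT, Matrix.of_apply, Sum.elim_inl]; split_ifs <;> simp
    · simp only [hT, Matrix.of_apply, Sum.elim_inr]
      split_ifs
      · rw [abs_neg]; exact h1
      · simp
      · simp
  have hTV : diagonal D * (gmat d 1 x * W).submatrix σ id = T * V := by
    ext k l
    rw [diagonal_mul, submatrix_apply, id, Matrix.mul_apply (M := T) (N := V), Fintype.sum_sum_type]
    rcases h : σ k with a | a
    · simp only [hD, hT, h, Matrix.of_apply, Sum.elim_inl, Sum.elim_inr, Sum.inl.injEq,
        reduceCtorEq, if_false, ite_mul, one_mul, zero_mul, Finset.sum_ite_eq, Finset.mem_univ,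
        if_true, Sum.isLeft_inl]
      rw [gmat_mul_inl, hV, gmat_mul_inl, gmat_mul_inr]
      field_simp; ring
    · simp only [hD, hT, h, Matrix.of_apply, Sum.elim_inl, Sum.elim_inr, Sum.inr.injEq,
        reduceCtorEq, if_false, ite_mul, one_mul, zero_mul, Finset.sum_ite_eq, Finset.mem_univ,
        if_true, Sum.isLeft_inr, Finset.sum_const_zero, zero_add]
      rw [gmat_mul_inr, hV, gmat_mul_inr]
      simp
  have hDdet : (diagonal D).det = R ^ (nL σ - nR σ) := by
    rw [det_diagonal, Finset.prod_ite, Finset.prod_const, Finset.prod_const]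
    change R ^ nL σ * R⁻¹ ^ nR σ = _
    rw [inv_pow, pow_sub₀ _ hR0.ne' hn]
  have h1 := gdet_mul_le T V 1 hTb
  rw [← hTV, gdet_square, det_mul, hDdet] at h1
  refine h1.trans (mul_le_mul_of_nonneg_right ?_ (gdet_nonneg _))
  simp

/-- The basic averaging estimate for a single volume. The exponent `2db - 2` is the key gain. -/
lemma volume_average (d i : ℕ) (b : ℝ) (hb : 0 < b) (hdb : 1 < d * b) :
    ∃ C : ℝ, 0 < C ∧ ∀ (R : ℝ) (W : Matrix (Fin d ⊕ Fin d) (Fin i) ℝ), 1 ≤ R → gdet W ≠ 0 →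
      ∫⁻ τ in Set.Icc (-1 : ℝ) 1, ENNReal.ofReal (gdet (gmat d R τ * W) ^ (-b)) ≤
        ENNReal.ofReal (C * R ^ (2 * d * b - 2) * gdet W ^ (-b)) := by
  classical
  obtain ⟨c0, hc0, hsel⟩ := selection d i
  obtain ⟨C1, hC1, hmin⟩ := minor_le d i
  have key : ∀ σ : Fin i → Fin d ⊕ Fin d, ∃ C : ℝ, 0 < C ∧ (Function.Injective σ → nR σ ≤ nL σ →
      ∀ (R : ℝ) (W : Matrix (Fin d ⊕ Fin d) (Fin i) ℝ) (τ0 : Fin 2), 1 ≤ R → gdet W ≠ 0 →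
      c0 * gdet W ≤ ((gmat d 1 ((τ0 : ℕ) : ℝ) * W).submatrix σ id).det ^ 2 →
      ∫⁻ τ in Set.Icc (-1 : ℝ) 1, ENNReal.ofReal (gdet (gmat d R τ * W) ^ (-b)) ≤
        ENNReal.ofReal (C * R ^ (2 * d * b - 2) * gdet W ^ (-b))) := by
    intro σ
    by_cases hσ : Function.Injective σ ∧ nR σ ≤ nL σ
    swap
    · exact ⟨1, one_pos, fun h1 h2 => absurd ⟨h1, h2⟩ hσ⟩
    obtain ⟨hσ, hn⟩ := hσ
    set n : ℕ := nL σ - nR σ with hndef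
    set N : ℕ := nU σ with hN
    have hNn : 2 * N ≤ d + n := by
      have h1 := nU_le_nL σ
      have h2 := nU_add_nR_le σ hσ
      omega
    have hNnR : (2 : ℝ) * N ≤ d + n := by exact_mod_cast hNn
    set s : ℝ := (d + n) * b with hs
    have hs1 : 1 < s := by
      have : (0 : ℝ) ≤ n * b := by positivity
      rw [hs, add_mul]; linarith
    obtain ⟨C, hC, hav⟩ := poly_average N (2 * b) s (by positivity) hs1 (by
      rw [hs]; nlinarith)
    refine ⟨C1 ^ b * C * c0 ^ (-b), by positivity, fun _ _ R W τ0 hR hW hdet => ?_⟩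
    have hR0 : 0 < R := by linarith
    obtain ⟨p, hpdeg, hp⟩ := minor_poly σ hσ W
    have hWpos : 0 < gdet W := lt_of_le_of_ne (gdet_nonneg _) (Ne.symm hW)
    rw [← hp] at hdet
    have hp0 : p.eval ((τ0 : ℕ) : ℝ) ≠ 0 := by
      intro h; rw [h] at hdet; have : 0 < c0 * gdet W := by positivity
      simp at hdet; linarith
    have hv := hav p ((τ0 : ℕ) : ℝ) ((R ^ 2)⁻¹)
      (fun τ => C1 ^ (-b) * R ^ (n * (2 * b)) * gdet (gmat d R τ * W) ^ (-b)) hpdeg (by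
        have : ((τ0 : ℕ) : ℝ) ≤ 1 := by exact_mod_cast Nat.le_of_lt_succ τ0.2
        rwa [abs_of_nonneg (by positivity)]) hp0 (by positivity)
      (inv_le_one_of_one_le₀ (one_le_pow₀ hR))
      (fun τ => by have := gdet_nonneg (gmat d R τ * W); positivity) (by
        intro τ x hx
        have h1 := hmin σ hn W R τ x hR hx
        rw [← hp, ← hndef] at h1
        have hg : 0 < gdet (gmat d R τ * W) := by
          refine lt_of_le_of_ne (gdet_nonneg _) (Ne.symm (gdet_mul_ne_zero _ _ ?_ hW))
          rw [det_gmat _ _ hR0.ne']; exact isUnit_one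
        have h2 : (R ^ (n * (2 * b)) * |p.eval x| ^ (2 * b)) ≤
            C1 ^ b * gdet (gmat d R τ * W) ^ b := by
          have h3 := Real.rpow_le_rpow (sq_nonneg _) h1 hb.le
          rw [Real.mul_rpow hC1.le hg.le] at h3
          refine le_trans (le_of_eq ?_) h3
          rw [← sq_abs, abs_mul, abs_of_pos (by positivity : 0 < R ^ n), mul_pow,
            Real.mul_rpow (by positivity) (by positivity), ← Real.rpow_natCast (|p.eval x|) 2,
            ← Real.rpow_mul (abs_nonneg _), ← pow_mul, ← Real.rpow_natCast R (n * 2),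
            ← Real.rpow_mul hR0.le]
          push_cast
          congr 2; ring
        rw [Real.rpow_neg hC1.le, Real.rpow_neg hg.le]
        have h4 : 0 < C1 ^ b := by positivity
        have h5 : 0 < gdet (gmat d R τ * W) ^ b := by positivity
        calc _ = (R ^ (n * (2 * b)) * |p.eval x| ^ (2 * b)) /
              (C1 ^ b * gdet (gmat d R τ * W) ^ b) := by field_simp
          _ ≤ 1 := by rw [div_le_one (by positivity)]; exact h2)
    have hA0 : 0 < C1 ^ b * R ^ (-(n * (2 * b))) := by positivity
    have e0 : ∀ τ, ENNReal.ofReal (gdet (gmat d R τ * W) ^ (-b)) =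
        ENNReal.ofReal (C1 ^ b * R ^ (-(n * (2 * b)))) *
        ENNReal.ofReal (C1 ^ (-b) * R ^ (n * (2 * b)) * gdet (gmat d R τ * W) ^ (-b)) := by
      intro τ
      rw [← ENNReal.ofReal_mul hA0.le]
      congr 1
      rw [Real.rpow_neg hC1.le, Real.rpow_neg hR0.le]
      have h4 : 0 < C1 ^ b := by positivity
      have h5 : 0 < R ^ (n * (2 * b)) := by positivity
      field_simp
    simp_rw [e0]
    rw [lintegral_const_mul' _ _ ENNReal.ofReal_ne_top]
    refine (mul_le_mul_right hv _).trans ?_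
    rw [← ENNReal.ofReal_mul hA0.le]
    refine ENNReal.ofReal_le_ofReal ?_
    have h6 : |p.eval ((τ0 : ℕ) : ℝ)| ^ (-(2 * b)) ≤ c0 ^ (-b) * gdet W ^ (-b) := by
      rw [← Real.mul_rpow hc0.le hWpos.le]
      have : |p.eval ((τ0 : ℕ) : ℝ)| ^ (-(2 * b)) = (p.eval ((τ0 : ℕ) : ℝ) ^ 2) ^ (-b) := by
        rw [← sq_abs, ← Real.rpow_natCast, ← Real.rpow_mul (abs_nonneg _)]
        congr 1; push_cast; ring
      rw [this]
      exact Real.rpow_le_rpow_of_nonpos (by positivity) hdet (by linarith)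
    have h7 : ((R ^ 2)⁻¹) ^ (1 - s) = R ^ (2 * s - 2) := by
      rw [← Real.rpow_natCast, ← Real.rpow_neg hR0.le, ← Real.rpow_mul hR0.le]
      congr 1; push_cast; ring
    rw [h7]
    have h8 : R ^ (-(n * (2 * b))) * R ^ (2 * s - 2) = R ^ (2 * d * b - 2) := by
      rw [← Real.rpow_add hR0]; congr 1; rw [hs]; ring
    calc _ = C1 ^ b * C * (R ^ (-(n * (2 * b))) * R ^ (2 * s - 2)) *
          |p.eval ((τ0 : ℕ) : ℝ)| ^ (-(2 * b)) := by ring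
      _ ≤ C1 ^ b * C * (R ^ (-(n * (2 * b))) * R ^ (2 * s - 2)) *
          (c0 ^ (-b) * gdet W ^ (-b)) := by gcongr
      _ = _ := by rw [h8]; ring
  choose C hC hCσ using key
  refine ⟨∑ σ, C σ, Finset.sum_pos (fun σ _ => hC σ) ?_, fun R W hR hW => ?_⟩
  · by_cases h : ∃ W : Matrix (Fin d ⊕ Fin d) (Fin i) ℝ, gdet W ≠ 0
    · obtain ⟨W, hW⟩ := h
      obtain ⟨σ, -⟩ := hsel W hW
      exact ⟨σ, Finset.mem_univ _⟩
    · have hd : 0 < d := by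
        rcases Nat.eq_zero_or_pos d with rfl | h
        · simp at hdb; linarith
        · exact h
      exact ⟨fun _ => Sum.inl ⟨0, hd⟩, Finset.mem_univ _⟩
  · obtain ⟨σ, hσ, hn, τ0, hdet⟩ := hsel W hW
    refine (hCσ σ hσ hn R W τ0 hR hW hdet).trans (ENNReal.ofReal_le_ofReal ?_)
    have h1 : C σ ≤ ∑ σ, C σ :=
      Finset.single_le_sum (fun σ _ => (hC σ).le) (Finset.mem_univ σ)
    have := gdet_nonneg W
    gcongr

end star
end LPR

/-! ### Lattices, their intersections and sums -/

namespace LPR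
open Matrix MeasureTheory Filter
open scoped ENNReal

/-- The real matrix with the same entries as an integer matrix. -/
def zr {m κ : Type} (Z : Matrix m κ ℤ) : Matrix m κ ℝ := Z.map (Int.cast : ℤ → ℝ)

section lattice
variable {m κ l : Type} [Fintype m] [Fintype κ] [DecidableEq κ] [Fintype l] [DecidableEq l]

lemma zr_mul (Z : Matrix m κ ℤ) (S : Matrix κ l ℤ) : zr (Z * S) = zr Z * zr S := by
  ext i j; simp [zr, Matrix.mul_apply]

lemma zr_fromCols (Z : Matrix m κ ℤ) (S : Matrix m l ℤ) :
    zr (fromCols Z S) = fromCols (zr Z) (zr S) := by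
  ext i (j | j) <;> simp [zr]

lemma zr_mulVec (Z : Matrix m κ ℤ) (v : κ → ℤ) :
    zr Z *ᵥ (fun j => (v j : ℝ)) = fun i => ((Z *ᵥ v) i : ℝ) := by
  ext i; simp [zr, Matrix.mulVec, dotProduct]

lemma gdet_zr (Z : Matrix m κ ℤ) : gdet (zr Z) = ((Zᵀ * Z).det : ℝ) := by
  unfold gdet
  have : (zr Z)ᵀ * zr Z = zr (Zᵀ * Z) := by
    ext i j; simp [zr, Matrix.mul_apply]
  rw [this]
  exact (Int.cast_det _).symm

lemma det_zr (Z : Matrix κ κ ℤ) : (zr Z).det = (Z.det : ℝ) := (Int.cast_det _).symm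

lemma one_le_gdet_zr (Z : Matrix m κ ℤ) (h : gdet (zr Z) ≠ 0) : 1 ≤ gdet (zr Z) := by
  have h1 := gdet_nonneg (zr Z)
  rw [gdet_zr] at *
  have h2 : 0 < ((Zᵀ * Z).det : ℝ) := lt_of_le_of_ne h1 (Ne.symm h)
  exact_mod_cast h2

/-- Integer vectors independent over `ℤ` are independent over `ℝ`. -/
lemma gdet_zr_ne_zero (Z : Matrix m κ ℤ) (h : ∀ v, Z *ᵥ v = 0 → v = 0) : gdet (zr Z) ≠ 0 := by
  rw [gdet_zr]
  intro h0
  have h0' : (Zᵀ * Z).det = 0 := by exact_mod_cast h0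
  obtain ⟨v, hv, hz⟩ := exists_mulVec_eq_zero_iff.2 h0'
  refine hv (h v ?_)
  rw [← mulVec_mulVec] at hz
  have : (Z *ᵥ v) ⬝ᵥ (Z *ᵥ v) = 0 := by
    have h2 : v ⬝ᵥ (Zᵀ *ᵥ (Z *ᵥ v)) = 0 := by rw [hz, dotProduct_zero]
    rwa [dotProduct_mulVec, vecMul_transpose] at h2
  exact dotProduct_self_eq_zero.1 this

lemma eq_zero_of_gdet_zr (Z : Matrix m κ ℤ) (h : gdet (zr Z) ≠ 0) (v : κ → ℤ)
    (hv : Z *ᵥ v = 0) : v = 0 := by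
  by_contra hne
  refine h (gdet_zero_of_mulVec _ (fun j => (v j : ℝ)) ?_ ?_)
  · intro h0; apply hne; ext j; have := congrFun h0 j; simpa using this
  · rw [zr_mulVec, hv]; ext; simp

lemma card_le_of_gdet (W : Matrix m κ ℝ) (h : gdet W ≠ 0) : Fintype.card κ ≤ Fintype.card m := by
  have hinj : Function.Injective W.mulVecLin := by
    rw [← LinearMap.ker_eq_bot, LinearMap.ker_eq_bot']
    intro v hv
    by_contra hne
    exact h (gdet_zero_of_mulVec W v hne hv)
  have := LinearMap.finrank_le_finrank_of_injective hinj
  simpa using this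

lemma card_le_of_factor (W : Matrix m κ ℝ) (V : Matrix m l ℝ) (S : Matrix l κ ℝ)
    (hW : W = V * S) (h : gdet W ≠ 0) : Fintype.card κ ≤ Fintype.card l := by
  refine card_le_of_gdet S fun h0 => ?_
  obtain ⟨v, hv, hS⟩ := exists_mulVec_of_gdet_zero S h0
  refine h (gdet_zero_of_mulVec W v hv ?_)
  rw [hW, ← mulVec_mulVec, hS, mulVec_zero]

/-- The lattice of integer vectors in the real column span of `W`. -/
def satLat (W : Matrix m κ ℝ) : Submodule ℤ (m → ℤ) where
  carrier := {v | ∃ s : κ → ℝ, (fun a => (v a : ℝ)) = W *ᵥ s}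
  zero_mem' := ⟨0, by ext; simp⟩
  add_mem' := by
    rintro v w ⟨s, hs⟩ ⟨t, ht⟩
    refine ⟨s + t, ?_⟩
    rw [mulVec_add, ← hs, ← ht]; ext; simp
  smul_mem' := by
    rintro c v ⟨s, hs⟩
    refine ⟨(c : ℝ) • s, ?_⟩
    rw [mulVec_smul, ← hs]; ext; simp

lemma satLat_sat (W : Matrix m κ ℝ) (n : ℤ) (v : m → ℤ) (hn : n ≠ 0) (h : n • v ∈ satLat W) :
    v ∈ satLat W := by
  obtain ⟨s, hs⟩ := h
  refine ⟨(n : ℝ)⁻¹ • s, ?_⟩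
  rw [mulVec_smul, ← hs]
  have : (n : ℝ) ≠ 0 := by exact_mod_cast hn
  ext a; simp [this]

/-- A lattice `L` splits over its intersection with a saturated lattice `L'`. -/
lemma split_basis (L L' : Submodule ℤ (m → ℤ))
    (sat : ∀ (n : ℤ) v, n ≠ 0 → n • v ∈ L' → v ∈ L') :
    ∃ (q : ℕ) (C : Matrix m (Fin q) ℤ), (∀ v ∈ L, ∃ b, v - C *ᵥ b ∈ L ⊓ L') ∧
      (∀ b, C *ᵥ b ∈ L) ∧ (∀ b, C *ᵥ b ∈ L' → b = 0) := by
  classical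
  set W : Submodule ℤ L := L'.comap L.subtype with hW
  haveI : Module.IsTorsionFree ℤ (L ⧸ W) := by
    refine Module.isTorsionFree_iff_smul_eq_zero.2 ?_
    intro r x hrx
    by_contra! hcon
    obtain ⟨v, rfl⟩ := Submodule.Quotient.mk_surjective W x
    rw [← Submodule.Quotient.mk_smul, Submodule.Quotient.mk_eq_zero] at hrx
    refine hcon.2 ((Submodule.Quotient.mk_eq_zero _).2 ?_)
    exact sat r v hcon.1 hrx
  obtain ⟨q, bQ⟩ := Module.basisOfFiniteTypeTorsionFree' (R := ℤ) (M := L ⧸ W)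
  choose f hf using fun j => Submodule.Quotient.mk_surjective W (bQ j)
  have hsum : ∀ b : Fin q → ℤ, (Matrix.of fun a j => (f j : m → ℤ) a) *ᵥ b =
      ((∑ j, b j • f j : L) : m → ℤ) := by
    intro b; ext a
    simp [Matrix.mulVec, dotProduct, mul_comm]
  have hmk : ∀ b : Fin q → ℤ, Submodule.Quotient.mk (p := W) (∑ j, b j • f j) = ∑ j, b j • bQ j := by
    intro b
    rw [← Submodule.mkQ_apply, map_sum]
    refine Finset.sum_congr rfl fun j _ => ?_
    rw [map_smul, Submodule.mkQ_apply, hf]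
  refine ⟨q, Matrix.of fun a j => (f j : m → ℤ) a, ?_, ?_, ?_⟩
  · intro v hv
    refine ⟨fun j => bQ.repr (Submodule.Quotient.mk ⟨v, hv⟩) j, ?_⟩
    have h1 := hmk (fun j => bQ.repr (Submodule.Quotient.mk ⟨v, hv⟩) j)
    rw [bQ.sum_repr, Submodule.Quotient.eq] at h1
    rw [hsum]
    refine ⟨L.sub_mem hv (Subtype.property _), ?_⟩
    have h2 := W.neg_mem h1
    rw [neg_sub] at h2
    exact h2
  · intro b; rw [hsum]; exact Subtype.property _
  · intro b hb
    rw [hsum] at hb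
    have h1 : (∑ j, b j • f j : L) ∈ W := hb
    rw [← Submodule.Quotient.mk_eq_zero, hmk] at h1
    ext j
    exact Fintype.linearIndependent_iff.1 bQ.linearIndependent b h1 j

lemma exists_latBasis (L : Submodule ℤ (m → ℤ)) :
    ∃ (p : ℕ) (K : Matrix m (Fin p) ℤ), (∀ v, v ∈ L ↔ ∃ a, v = K *ᵥ a) ∧
      ∀ a, K *ᵥ a = 0 → a = 0 := by
  classical
  obtain ⟨p, b⟩ := Module.basisOfFiniteTypeTorsionFree' (R := ℤ) (M := L)
  have hsum : ∀ a : Fin p → ℤ, (Matrix.of fun x j => (b j : m → ℤ) x) *ᵥ a =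
      ((∑ j, a j • b j : L) : m → ℤ) := by
    intro a; ext x
    simp [Matrix.mulVec, dotProduct, mul_comm]
  refine ⟨p, Matrix.of fun x j => (b j : m → ℤ) x, ?_, ?_⟩
  · intro v
    constructor
    · intro hv
      refine ⟨b.repr ⟨v, hv⟩, ?_⟩
      rw [hsum, b.sum_repr]
    · rintro ⟨a, rfl⟩
      rw [hsum]; exact Subtype.property _
  · intro a ha
    rw [hsum] at ha
    have h1 : (∑ j, a j • b j : L) = 0 := Subtype.ext ha
    ext j
    exact Fintype.linearIndependent_iff.1 b.linearIndependent a h1 j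

lemma exists_factor {n : Type} [Fintype n] (V : Matrix m l ℝ) (Z : Matrix m n ℤ)
    (h : ∀ j, (fun a => Z a j) ∈ satLat V) :
    ∃ S : Matrix l n ℝ, zr Z = V * S := by
  choose s hs using h
  refine ⟨Matrix.of fun a j => s j a, ?_⟩
  ext a j
  have := congrFun (hs j) a
  simp only [zr, Matrix.map_apply, Matrix.mul_apply, Matrix.of_apply]
  rw [this]; rfl

/-- Replacing an integer family by a basis of a lattice containing it does not increase
volumes. -/
lemma gdet_basis_le {m' : Type} [Fintype m'] (Z : Matrix m κ ℤ) (F : Matrix m l ℤ)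
    (M : Matrix l κ ℤ) (hZ : Z = F * M)
    (h : gdet (zr Z) ≠ 0) (e : κ ≃ l) (E : Matrix m' m ℝ) :
    gdet (E * zr F) ≤ gdet (E * zr Z) := by
  have h1 : ∀ {m' : Type} [Fintype m'] (E : Matrix m' m ℝ),
      gdet (E * zr Z) = gdet (E * zr F) * ((M.submatrix id e.symm).det : ℝ) ^ 2 := by
    intro m' _ E
    rw [← gdet_reindex _ e.symm, ← det_zr, ← gdet_mul_sq, hZ, zr_mul]
    congr 1
    rw [← Matrix.mul_assoc]
    ext a j
    simp only [zr, Matrix.mul_apply, Matrix.submatrix_apply, Matrix.map_apply, id]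
  rw [h1]
  have h2 : (M.submatrix id e.symm).det ≠ 0 := by
    classical
    intro h0
    have := h1 (1 : Matrix m m ℝ)
    rw [h0, Matrix.one_mul] at this
    simp at this; exact h this
  have h3 : (1 : ℝ) ≤ ((M.submatrix id e.symm).det : ℝ) ^ 2 := by
    rw [one_le_sq_iff_one_le_abs]
    exact_mod_cast Int.one_le_abs h2
  exact le_mul_of_one_le_right (gdet_nonneg _) h3

/-- Two integer families of the same rank spanning different subspaces can be replaced by
families of ranks `i - j` and `i + j` (intersection and sum), with control of volumes. -/
lemma meet_join {i : ℕ} (Z Z' : Matrix m (Fin i) ℤ) (hZ : gdet (zr Z) ≠ 0)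
    (hZ' : gdet (zr Z') ≠ 0) (hne : ¬ ∃ S : Matrix (Fin i) (Fin i) ℝ, zr Z' = zr Z * S) :
    ∃ (j : ℕ) (K : Matrix m (Fin (i - j)) ℤ) (F : Matrix m (Fin (i + j)) ℤ),
      1 ≤ j ∧ j ≤ i ∧ i + j ≤ Fintype.card m ∧ gdet (zr K) ≠ 0 ∧ gdet (zr F) ≠ 0 ∧
      ∀ E : Matrix m m ℝ, gdet (E * zr K) * gdet (E * zr F) ≤
        ((2 * Fintype.card m).factorial * (Fintype.card m + 1 : ℝ) ^ (2 * Fintype.card m)) *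
        (gdet (E * zr Z) * gdet (E * zr Z')) := by
  classical
  set L := satLat (zr Z)
  set L' := satLat (zr Z')
  obtain ⟨p, K, hK, hK0⟩ := exists_latBasis (L ⊓ L')
  have main : ∀ (L L' : Submodule ℤ (m → ℤ)) (Z : Matrix m (Fin i) ℤ),
      (∀ n : ℤ, ∀ v, n ≠ 0 → n • v ∈ L' → v ∈ L') → L = satLat (zr Z) →
      gdet (zr Z) ≠ 0 → (∀ v, v ∈ L ⊓ L' ↔ ∃ a, v = K *ᵥ a) →
      ∃ (q : ℕ) (C : Matrix m (Fin q) ℤ), p + q = i ∧ (∀ v ∈ L, ∃ a b, v = K *ᵥ a + C *ᵥ b) ∧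
      (∀ b, C *ᵥ b ∈ L) ∧ (∀ b, C *ᵥ b ∈ L' → b = 0) ∧
      ∀ E : Matrix m m ℝ, gdet (E * zr (fromCols K C)) ≤ gdet (E * zr Z) := by
    intro L L' Z sat hLdef hZ hK
    obtain ⟨q, C, h1, h2, h3⟩ := split_basis L L' sat
    have h1' : ∀ v ∈ L, ∃ a b, v = K *ᵥ a + C *ᵥ b := by
      intro v hv
      obtain ⟨b, hb⟩ := h1 v hv
      obtain ⟨a, ha⟩ := (hK _).1 hb
      exact ⟨a, b, by rw [← ha]; abel⟩
    have hKL : ∀ a, K *ᵥ a ∈ L ⊓ L' := fun a => (hK _).2 ⟨a, rfl⟩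
    have hFmul : ∀ v, fromCols K C *ᵥ v = K *ᵥ (v ∘ Sum.inl) + C *ᵥ (v ∘ Sum.inr) := by
      intro v; rw [fromCols_mulVec]
    have hFind : gdet (zr (fromCols K C)) ≠ 0 := by
      refine gdet_zr_ne_zero _ fun v hv => ?_
      rw [hFmul] at hv
      have hr : v ∘ Sum.inr = 0 := by
        apply h3
        have : C *ᵥ (v ∘ Sum.inr) = -(K *ᵥ (v ∘ Sum.inl)) := eq_neg_of_add_eq_zero_right hv
        rw [this]
        exact L'.neg_mem (hKL _).2
      rw [hr, mulVec_zero, add_zero] at hv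
      have hl := hK0 _ hv
      ext (j | j)
      · exact congrFun hl j
      · exact congrFun hr j
    -- `Z` factors through the basis of `L`, and conversely over the reals
    have hZF : ∃ M : Matrix (Fin p ⊕ Fin q) (Fin i) ℤ, Z = fromCols K C * M := by
      have : ∀ j, (fun a => Z a j) ∈ L := by
        intro j; rw [hLdef]
        refine ⟨Pi.single j 1, ?_⟩
        ext a; simp [zr]
      choose a b hab using fun j => h1' _ (this j)
      refine ⟨Matrix.of fun x j => Sum.elim (a j) (b j) x, ?_⟩
      ext x j
      have := congrFun (hab j) x
      rw [this, Matrix.mul_apply, Fintype.sum_sum_type]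
      rfl
    obtain ⟨M, hM⟩ := hZF
    have hFS : ∃ S : Matrix (Fin i) (Fin p ⊕ Fin q) ℝ, zr (fromCols K C) = zr Z * S := by
      refine exists_factor _ _ fun j => ?_
      rw [← hLdef]
      have : (fun a => fromCols K C a j) = fromCols K C *ᵥ Pi.single j 1 := by ext a; simp
      rw [this, hFmul]
      exact L.add_mem (hKL _).1 (h2 _)
    obtain ⟨S, hS⟩ := hFS
    have c1 := card_le_of_factor _ _ S hS hFind
    have c2 := card_le_of_factor _ _ (zr M) (by rw [← zr_mul, ← hM]) hZ
    simp only [Fintype.card_sum, Fintype.card_fin] at c1 c2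
    have hpq : p + q = i := le_antisymm c1 c2
    refine ⟨q, C, hpq, h1', h2, h3, fun E => ?_⟩
    refine gdet_basis_le Z _ M hM hZ (Fintype.equivOfCardEq ?_) E
    simp [hpq]
  obtain ⟨q, C, hpq, hC1, hC2, hC3, hC4⟩ := main L L' Z (satLat_sat _) rfl hZ hK
  obtain ⟨q', C', hpq', hC1', hC2', hC3', hC4'⟩ := main L' L Z' (satLat_sat _) rfl hZ'
    (by rwa [inf_comm])
  have hqq : q' = q := by omega
  subst hqq
  have hKL : ∀ a, K *ᵥ a ∈ L ⊓ L' := fun a => (hK _).2 ⟨a, rfl⟩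
  have hq1 : 1 ≤ q' := by
    by_contra h0
    have h0 : q' = 0 := by omega
    subst h0
    refine hne (exists_factor _ _ fun j => ?_)
    have hj : (fun a => Z' a j) ∈ L' := by
      refine ⟨Pi.single j 1, ?_⟩
      ext a; simp [zr]
    obtain ⟨a, b, hab⟩ := hC1' _ hj
    rw [hab, show b = 0 from Subsingleton.elim _ _, mulVec_zero, add_zero]
    exact (hKL a).1
  have hjoin : gdet (zr (fromCols K (fromCols C C'))) ≠ 0 := by
    refine gdet_zr_ne_zero _ fun v hv => ?_
    rw [fromCols_mulVec, fromCols_mulVec] at hv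
    set a := v ∘ Sum.inl
    set b := (v ∘ Sum.inr) ∘ Sum.inl
    set c := (v ∘ Sum.inr) ∘ Sum.inr
    have hc : c = 0 := by
      apply hC3'
      have : C' *ᵥ c = -(K *ᵥ a + C *ᵥ b) := by
        rw [← add_assoc] at hv
        exact eq_neg_of_add_eq_zero_right hv
      rw [this]
      exact L.neg_mem (L.add_mem (hKL _).1 (hC2 _))
    rw [hc, mulVec_zero, add_zero] at hv
    have hb : b = 0 := by
      apply hC3
      rw [eq_neg_of_add_eq_zero_right hv]
      exact L'.neg_mem (hKL _).2
    rw [hb, mulVec_zero, add_zero] at hv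
    have ha := hK0 _ hv
    ext (j | j | j)
    · exact congrFun ha j
    · exact congrFun hb j
    · exact congrFun hc j
  have hcard := card_le_of_gdet _ hjoin
  simp only [Fintype.card_sum, Fintype.card_fin] at hcard
  have e1 : Fin (i - q') ≃ Fin p := finCongr (by omega)
  have e2 : Fin (i + q') ≃ Fin p ⊕ (Fin q' ⊕ Fin q') := Fintype.equivOfCardEq (by simp; omega)
  have hzs : ∀ {n n' : Type} (X : Matrix m n ℤ) (e : n' → n),
      zr (X.submatrix id e) = (zr X).submatrix id e := fun X e => rfl
  have hms : ∀ {n n' : Type} (E : Matrix m m ℝ) (X : Matrix m n ℝ) (e : n' → n),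
      E * X.submatrix id e = (E * X).submatrix id e := fun E X e => by
    ext; simp [Matrix.mul_apply]
  have hmf : ∀ {n n' : Type} (E : Matrix m m ℝ) (X : Matrix m n ℝ) (Y : Matrix m n' ℝ),
      E * fromCols X Y = fromCols (E * X) (E * Y) := fun E X Y => Matrix.mul_fromCols ..
  refine ⟨q', K.submatrix id e1, (fromCols K (fromCols C C')).submatrix id e2, hq1, by omega,
    by omega, ?_, ?_, ?_⟩
  · rw [hzs, gdet_reindex]
    exact gdet_zr_ne_zero _ hK0
  · rwa [hzs, gdet_reindex]
  · intro E
    rw [hzs, hzs, hms, hms, gdet_reindex, gdet_reindex, zr_fromCols, zr_fromCols, hmf, hmf]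
    refine (koteljanskii _ _ _).trans ?_
    have g1 := hC4 E
    have g2 := hC4' E
    rw [zr_fromCols, hmf] at g1 g2
    have hn : Fintype.card (Fin q' ⊕ Fin q') ≤ 2 * Fintype.card m := by
      simp only [Fintype.card_sum, Fintype.card_fin]; omega
    gcongr
    · exact mul_nonneg (gdet_nonneg _) (gdet_nonneg _)
    · calc (Fintype.card m : ℝ) ^ _ ≤ (Fintype.card m + 1 : ℝ) ^ Fintype.card (Fin q' ⊕ Fin q') := by
            gcongr; linarith
        _ ≤ _ := by
            gcongr
            have : (0 : ℝ) ≤ Fintype.card m := by positivity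
            linarith
    · exact gdet_nonneg _
    · exact gdet_nonneg _

end lattice
end LPR

/-! ### Smallest covolumes of sublattices -/

namespace LPR
open Matrix MeasureTheory Filter
open scoped ENNReal

section alpha
variable {ι : Type} [Fintype ι] [DecidableEq ι]

/-- The `b`-th negative power of the smallest squared covolume of a rank `i` sublattice of the
lattice `E ℤ^ι`. -/
noncomputable def alph (b : ℝ) (i : ℕ) (E : Matrix ι ι ℝ) : ℝ≥0∞ :=
  ⨆ Z : {Z : Matrix ι (Fin i) ℤ // gdet (zr Z) ≠ 0}, ENNReal.ofReal (gdet (E * zr Z.1) ^ (-b))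

lemma le_alph (b : ℝ) (i : ℕ) (E : Matrix ι ι ℝ) (Z : Matrix ι (Fin i) ℤ) (h : gdet (zr Z) ≠ 0) :
    ENNReal.ofReal (gdet (E * zr Z) ^ (-b)) ≤ alph b i E :=
  le_iSup (fun Z : {Z : Matrix ι (Fin i) ℤ // gdet (zr Z) ≠ 0} =>
    ENNReal.ofReal (gdet (E * zr Z.1) ^ (-b))) ⟨Z, h⟩

/-- The distortion bound with one constant for all ranks. -/
lemma gdet_mul_le_unif (x : ℝ) : ∃ K : ℝ, 1 ≤ K ∧ ∀ i ≤ Fintype.card ι,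
    ∀ T : Matrix ι ι ℝ, (∀ a c, |T a c| ≤ x) → ∀ W : Matrix ι (Fin i) ℝ,
      gdet (T * W) ≤ K * gdet W := by
  set c : ℕ → ℝ := fun i => i.factorial *
      (Fintype.card ι * ((Fintype.card ι * x) * (Fintype.card ι * x))) ^ i with hc
  have hc0 : ∀ i, 0 ≤ c i := fun i => by
    have : 0 ≤ (Fintype.card ι * x) * (Fintype.card ι * x) := mul_self_nonneg _
    positivity
  refine ⟨1 + ∑ i ∈ Finset.range (Fintype.card ι + 1), c i, ?_, ?_⟩
  · have := Finset.sum_nonneg (fun i (_ : i ∈ Finset.range (Fintype.card ι + 1)) => hc0 i)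
    linarith
  · intro i hi T hT W
    refine (gdet_mul_le T W x hT).trans (mul_le_mul_of_nonneg_right ?_ (gdet_nonneg _))
    have := Finset.single_le_sum (fun i (_ : i ∈ Finset.range (Fintype.card ι + 1)) => hc0 i)
      (Finset.mem_range.2 (Nat.lt_succ_of_le hi))
    simp only [Fintype.card_fin]
    change c i ≤ _
    linarith

lemma rpow_neg_le {x y K b : ℝ} (hx : 0 < x) (hK : 0 < K) (hy : 0 < y) (hb : 0 < b)
    (h : x ≤ K * y) : y ^ (-b) ≤ K ^ b * x ^ (-b) := by
  calc y ^ (-b) = K ^ b * (K * y) ^ (-b) := by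
        rw [Real.mul_rpow hK.le hy.le, ← mul_assoc, ← Real.rpow_add hK]; simp
    _ ≤ K ^ b * x ^ (-b) := by
        gcongr ?_ * ?_
        exact Real.rpow_le_rpow_of_nonpos hx h (by linarith)

lemma gdet_E_pos {i : ℕ} (E : Matrix ι ι ℝ) (hE : IsUnit E.det) (Z : Matrix ι (Fin i) ℤ)
    (h : gdet (zr Z) ≠ 0) : 0 < gdet (E * zr Z) :=
  lt_of_le_of_ne (gdet_nonneg _) (Ne.symm (gdet_mul_ne_zero E _ hE h))

lemma alph_mul_le (b : ℝ) (hb : 0 < b) (i : ℕ) (E T : Matrix ι ι ℝ) (hE : IsUnit E.det)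
    (hT : IsUnit T.det) (K : ℝ) (hK : 0 < K)
    (h : ∀ W : Matrix ι (Fin i) ℝ, gdet W ≤ K * gdet (T * W)) :
    alph b i (T * E) ≤ ENNReal.ofReal (K ^ b) * alph b i E := by
  refine iSup_le fun ⟨Z, hZ⟩ => ?_
  refine le_trans ?_ (mul_le_mul_right (le_alph b i E Z hZ) _)
  rw [← ENNReal.ofReal_mul (by positivity)]
  apply ENNReal.ofReal_le_ofReal
  have h1 := gdet_E_pos E hE Z hZ
  have h2 := gdet_E_pos (T * E) (by rw [det_mul]; exact hT.mul hE) Z hZ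
  refine rpow_neg_le h1 hK h2 hb ?_
  rw [Matrix.mul_assoc]
  exact h _

lemma alph_ne_top (b : ℝ) (hb : 0 < b) (i : ℕ) (hi : i ≤ Fintype.card ι) (E : Matrix ι ι ℝ)
    (hE : IsUnit E.det) : alph b i E ≠ ⊤ := by
  obtain ⟨K, hK, h⟩ := gdet_mul_le_unif (ι := ι) (∑ a, ∑ c, |E⁻¹ a c|)
  have h1 : alph b i E ≤ ENNReal.ofReal (K ^ b) := by
    refine iSup_le fun ⟨Z, hZ⟩ => ?_
    apply ENNReal.ofReal_le_ofReal
    have h2 := h i hi E⁻¹ (fun a c => (Finset.single_le_sum (f := fun c => |E⁻¹ a c|)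
      (fun _ _ => abs_nonneg _) (Finset.mem_univ c)).trans
      (Finset.single_le_sum (f := fun a => ∑ c, |E⁻¹ a c|)
      (fun _ _ => Finset.sum_nonneg fun _ _ => abs_nonneg _) (Finset.mem_univ a))) (E * zr Z)
    rw [← Matrix.mul_assoc, nonsing_inv_mul _ hE, Matrix.one_mul] at h2
    have h3 := rpow_neg_le one_pos (by linarith) (gdet_E_pos E hE Z hZ) hb
      ((one_le_gdet_zr Z hZ).trans h2)
    simpa using h3
  exact ne_top_of_le_ne_top ENNReal.ofReal_ne_top h1

/-- A family nearly attaining the supremum in `alph`. -/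
lemma exists_near_min {i : ℕ} (hi : i ≤ Fintype.card ι) (E : Matrix ι ι ℝ)
    (hE : IsUnit E.det) (hne : ∃ Z : Matrix ι (Fin i) ℤ, gdet (zr Z) ≠ 0) :
    ∃ Z : Matrix ι (Fin i) ℤ, gdet (zr Z) ≠ 0 ∧ ∀ Z' : Matrix ι (Fin i) ℤ, gdet (zr Z') ≠ 0 →
      gdet (E * zr Z) ≤ 2 * gdet (E * zr Z') := by
  obtain ⟨K, hK, h⟩ := gdet_mul_le_unif (ι := ι) (∑ a, ∑ c, |E⁻¹ a c|)
  have hlow : ∀ Z : Matrix ι (Fin i) ℤ, gdet (zr Z) ≠ 0 → K⁻¹ ≤ gdet (E * zr Z) := by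
    intro Z hZ
    have h2 := h i hi E⁻¹ (fun a c => (Finset.single_le_sum (f := fun c => |E⁻¹ a c|)
      (fun _ _ => abs_nonneg _) (Finset.mem_univ c)).trans
      (Finset.single_le_sum (f := fun a => ∑ c, |E⁻¹ a c|)
      (fun _ _ => Finset.sum_nonneg fun _ _ => abs_nonneg _) (Finset.mem_univ a))) (E * zr Z)
    rw [← Matrix.mul_assoc, nonsing_inv_mul _ hE, Matrix.one_mul] at h2
    have h3 := (one_le_gdet_zr Z hZ).trans h2
    have : 0 < K := by linarith
    rw [inv_le_iff_one_le_mul₀ this]; linarith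
  set S : Set ℝ := {x | ∃ Z : Matrix ι (Fin i) ℤ, gdet (zr Z) ≠ 0 ∧ x = gdet (E * zr Z)} with hS
  have hSne : S.Nonempty := by obtain ⟨Z, hZ⟩ := hne; exact ⟨_, Z, hZ, rfl⟩
  have hbd : BddBelow S := ⟨K⁻¹, by rintro _ ⟨Z, hZ, rfl⟩; exact hlow Z hZ⟩
  have hpos : 0 < sInf S := by
    have : K⁻¹ ≤ sInf S := le_csInf hSne (by rintro _ ⟨Z, hZ, rfl⟩; exact hlow Z hZ)
    have : 0 < K⁻¹ := by positivity
    linarith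
  obtain ⟨x, ⟨Z, hZ, rfl⟩, hx⟩ := exists_lt_of_csInf_lt hSne (by linarith : sInf S < 2 * sInf S)
  refine ⟨Z, hZ, fun Z' hZ' => ?_⟩
  have : sInf S ≤ gdet (E * zr Z') := csInf_le hbd ⟨Z', hZ', rfl⟩
  linarith

end alpha

lemma gmat_entry_le (d : ℕ) (R τ x : ℝ) (hR : 0 < R) (h1 : R ≤ x) (h2 : R⁻¹ ≤ x)
    (h3 : R * |τ| ≤ x) (a c : Fin d ⊕ Fin d) : |gmat d R τ a c| ≤ x := by
  have hx : 0 ≤ x := hR.le.trans h1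
  rcases a with a | a <;> rcases c with c | c <;>
    simp only [gmat, fromBlocks_apply₁₁, fromBlocks_apply₁₂, fromBlocks_apply₂₁,
      fromBlocks_apply₂₂, Matrix.smul_apply, one_apply, Matrix.zero_apply, abs_zero, smul_eq_mul] <;>
    first | exact hx | skip
  · split_ifs
    · rw [mul_one, abs_of_pos hR]; exact h1
    · simpa
  · split_ifs
    · rw [mul_one, abs_neg, abs_mul, abs_of_pos hR]; exact h3
    · simpa
  · split_ifs
    · rw [mul_one, abs_of_pos (by positivity)]; exact h2
    · simpa

lemma gmat_mul_gmat (d : ℕ) (R τ r t : ℝ) (hR : R ≠ 0) (hr : r ≠ 0) :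
    gmat d R τ * gmat d r t = gmat d (R * r) (t + τ / r ^ 2) := by
  simp only [gmat, fromBlocks_multiply, Matrix.mul_zero, Matrix.zero_mul, add_zero, zero_add,
    smul_mul_smul_comm, Matrix.mul_one, ← add_smul]
  congr 2
  · field_simp; ring
  · rw [mul_inv]

lemma gmat_inv_mul (d : ℕ) (R τ : ℝ) (hR : R ≠ 0) :
    gmat d R⁻¹ (-(R ^ 2 * τ)) * gmat d R τ = 1 := by
  rw [gmat_mul_gmat _ _ _ _ _ (inv_ne_zero hR) hR]
  have : τ + -(R ^ 2 * τ) / R ^ 2 = 0 := by field_simp; ring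
  rw [this, inv_mul_cancel₀ hR, gmat]
  simp

/-- Uniform distortion of volumes under `gmat d R τ`. -/
lemma gmat_distort (d : ℕ) (R x : ℝ) (hR : 1 ≤ R) : ∃ K : ℝ, 1 ≤ K ∧ ∀ i ≤ 2 * d, ∀ r τ : ℝ,
    1 ≤ r → r ≤ R → |τ| ≤ x → ∀ W : Matrix (Fin d ⊕ Fin d) (Fin i) ℝ,
      gdet (gmat d r τ * W) ≤ K * gdet W ∧ gdet W ≤ K * gdet (gmat d r τ * W) := by
  obtain ⟨K, hK, h⟩ := gdet_mul_le_unif (ι := Fin d ⊕ Fin d) (R * (1 + |x|))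
  refine ⟨K, hK, fun i hi r τ hr hrR hτ W => ?_⟩
  have hi' : i ≤ Fintype.card (Fin d ⊕ Fin d) := by simp; omega
  have hr0 : 0 < r := by linarith
  have hx : 0 ≤ |x| := abs_nonneg _
  have hτ' : |τ| ≤ |x| := hτ.trans (le_abs_self _)
  have hxx : R ≤ R * (1 + |x|) := by nlinarith
  have hri : r⁻¹ ≤ 1 := inv_le_one_of_one_le₀ hr
  have hrt : r * |τ| ≤ R * (1 + |x|) := by
    have := abs_nonneg τ
    nlinarith
  constructor
  · refine h i hi' _ (fun a c => gmat_entry_le d r τ _ hr0 ?_ ?_ hrt a c) W <;> linarith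
  · have h2 := h i hi' (gmat d r⁻¹ (-(r ^ 2 * τ))) (fun a c => gmat_entry_le d _ _ _
      (by positivity) ?_ ?_ ?_ a c) (gmat d r τ * W)
    · rwa [← Matrix.mul_assoc, gmat_inv_mul d r τ hr0.ne', Matrix.one_mul] at h2
    · linarith
    · rw [inv_inv]; linarith
    · rw [abs_neg, abs_mul, abs_of_pos (by positivity : 0 < r ^ 2)]
      calc r⁻¹ * (r ^ 2 * |τ|) = r * |τ| := by field_simp
        _ ≤ _ := hrt

lemma isUnit_gmat (d : ℕ) (R τ : ℝ) (hR : R ≠ 0) : IsUnit (gmat d R τ).det := by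
  rw [det_gmat _ _ hR]; exact isUnit_one

/-- Either the averaged value of `alph` grows at most by the exponent of a single volume, or
`alph` is controlled by neighbouring ranks. -/
lemma alph_step (d : ℕ) (b : ℝ) (hb : 0 < b) (hdb : 1 < d * b) :
    ∃ C1 : ℝ, 1 ≤ C1 ∧ ∀ R : ℝ, 1 ≤ R → ∃ K : ℝ, 1 ≤ K ∧
      ∀ E : Matrix (Fin d ⊕ Fin d) (Fin d ⊕ Fin d) ℝ, IsUnit E.det → ∀ i ≤ 2 * d,
      (∫⁻ τ in Set.Icc (-1 : ℝ) 1, alph b i (gmat d R τ * E) ≤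
        ENNReal.ofReal (C1 * R ^ (2 * d * b - 2)) * alph b i E) ∨
      ((∃ j, 1 ≤ j ∧ j ≤ i ∧ i + j ≤ 2 * d ∧
        alph b i E ^ 2 ≤ ENNReal.ofReal K * (alph b (i - j) E * alph b (i + j) E)) ∧
        ∀ τ ∈ Set.Icc (-1 : ℝ) 1, alph b i (gmat d R τ * E) ≤ ENNReal.ofReal K * alph b i E) := by
  classical
  choose C hC hav using fun i => volume_average d i b hb hdb
  set Ct := 1 + ∑ i ∈ Finset.range (2 * d + 1), C i with hCt
  have hCi : ∀ i ≤ 2 * d, C i ≤ Ct := by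
    intro i hi
    have := Finset.single_le_sum (fun i (_ : i ∈ Finset.range (2 * d + 1)) => (hC i).le)
      (Finset.mem_range.2 (Nat.lt_succ_of_le hi))
    linarith
  have hCt1 : 1 ≤ Ct := by
    have := Finset.sum_nonneg (fun i (_ : i ∈ Finset.range (2 * d + 1)) => (hC i).le)
    linarith
  refine ⟨2 ^ b * Ct, ?_, fun R hR => ?_⟩
  · have : (1 : ℝ) ≤ 2 ^ b := Real.one_le_rpow (by norm_num) hb.le
    nlinarith
  obtain ⟨K0, hK0, hdist⟩ := gmat_distort d R 1 hR
  set n := Fintype.card (Fin d ⊕ Fin d) with hn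
  set Cd : ℝ := ((2 * n).factorial * (n + 1 : ℝ) ^ (2 * n)) with hCd
  have hCd1 : 0 < Cd := by positivity
  have hK00 : 0 < K0 := by linarith
  set K : ℝ := K0 ^ b + (2 ^ b * 2 ^ b) * (Cd * (K0 * K0)) ^ b with hK
  have hKge : K0 ^ b ≤ K := by
    have : 0 ≤ (2 ^ b * 2 ^ b) * (Cd * (K0 * K0)) ^ b := by positivity
    linarith
  refine ⟨K, (Real.one_le_rpow hK0 hb.le).trans hKge, fun E hE i hi => ?_⟩
  have hin : i ≤ n := by rw [hn]; simp; omega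
  have hgu : ∀ τ, IsUnit (gmat d R τ).det := fun τ => isUnit_gmat d R τ (by linarith)
  by_cases hne : ∃ Z : Matrix (Fin d ⊕ Fin d) (Fin i) ℤ, gdet (zr Z) ≠ 0
  swap
  · left
    have : ∀ E : Matrix (Fin d ⊕ Fin d) (Fin d ⊕ Fin d) ℝ, alph b i E = 0 := by
      intro E
      haveI : IsEmpty {Z : Matrix (Fin d ⊕ Fin d) (Fin i) ℤ // gdet (zr Z) ≠ 0} :=
        ⟨fun ⟨Z, hZ⟩ => hne ⟨Z, hZ⟩⟩
      rw [alph, iSup_of_empty]; rfl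
    simp [this]
  obtain ⟨Z, hZ, hmin⟩ := exists_near_min hin E hE hne
  have hZpos := gdet_E_pos E hE Z hZ
  have hgpos : ∀ τ, ∀ Z : Matrix (Fin d ⊕ Fin d) (Fin i) ℤ, gdet (zr Z) ≠ 0 →
      0 < gdet (gmat d R τ * E * zr Z) := fun τ Z hZ =>
    gdet_E_pos _ (by rw [det_mul]; exact (hgu τ).mul hE) Z hZ
  by_cases hcase : ∀ Z' : Matrix (Fin d ⊕ Fin d) (Fin i) ℤ, gdet (zr Z') ≠ 0 →
      gdet (E * zr Z') ≤ K0 * K0 * gdet (E * zr Z) → ∃ S : Matrix (Fin i) (Fin i) ℝ, zr Z' = zr Z * S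
  · left
    have h1 : ∀ τ ∈ Set.Icc (-1 : ℝ) 1, alph b i (gmat d R τ * E) ≤
        ENNReal.ofReal (2 ^ b) * ENNReal.ofReal (gdet (gmat d R τ * (E * zr Z)) ^ (-b)) := by
      intro τ hτ
      have hτ' : |τ| ≤ 1 := abs_le.2 hτ
      refine iSup_le fun ⟨Z', hZ'⟩ => ?_
      rw [← ENNReal.ofReal_mul (by positivity)]
      apply ENNReal.ofReal_le_ofReal
      rw [← Matrix.mul_assoc]
      refine rpow_neg_le (hgpos τ Z hZ) two_pos (hgpos τ Z' hZ') hb ?_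
      by_cases hs : gdet (E * zr Z') ≤ K0 * K0 * gdet (E * zr Z)
      · obtain ⟨S, hS⟩ := hcase Z' hZ' hs
        have h2 := hmin Z' hZ'
        rw [hS, ← Matrix.mul_assoc, gdet_mul_sq] at h2
        rw [hS, ← Matrix.mul_assoc, gdet_mul_sq]
        have h3 : 1 ≤ 2 * S.det ^ 2 := by
          by_contra! h
          nlinarith
        have := hgpos τ Z hZ
        nlinarith
      · push Not at hs
        have h2 := (hdist i hi R τ hR le_rfl hτ' (E * zr Z)).1
        have h3 := (hdist i hi R τ hR le_rfl hτ' (E * zr Z')).2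
        rw [← Matrix.mul_assoc] at h2 h3
        have h4 : K0 * gdet (gmat d R τ * E * zr Z) ≤ K0 * gdet (gmat d R τ * E * zr Z') := by
          nlinarith
        have h5 := le_of_mul_le_mul_left h4 hK00
        have := hgpos τ Z' hZ'
        linarith
    calc ∫⁻ τ in Set.Icc (-1 : ℝ) 1, alph b i (gmat d R τ * E)
        ≤ ∫⁻ τ in Set.Icc (-1 : ℝ) 1, ENNReal.ofReal (2 ^ b) *
          ENNReal.ofReal (gdet (gmat d R τ * (E * zr Z)) ^ (-b)) :=
          setLIntegral_mono' measurableSet_Icc h1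
      _ = ENNReal.ofReal (2 ^ b) * ∫⁻ τ in Set.Icc (-1 : ℝ) 1,
          ENNReal.ofReal (gdet (gmat d R τ * (E * zr Z)) ^ (-b)) :=
          lintegral_const_mul' _ _ ENNReal.ofReal_ne_top
      _ ≤ ENNReal.ofReal (2 ^ b) * ENNReal.ofReal (C i * R ^ (2 * d * b - 2) *
          gdet (E * zr Z) ^ (-b)) := by
          exact mul_le_mul_right (hav i R _ hR hZpos.ne') _
      _ = ENNReal.ofReal (2 ^ b * C i * R ^ (2 * d * b - 2)) *
          ENNReal.ofReal (gdet (E * zr Z) ^ (-b)) := by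
          have := hC i
          rw [← ENNReal.ofReal_mul (by positivity), ← ENNReal.ofReal_mul (by positivity)]
          ring_nf
      _ ≤ _ := by
          refine mul_le_mul' (ENNReal.ofReal_le_ofReal ?_) (le_alph b i E Z hZ)
          have := hCi i hi
          gcongr
  · right
    push Not at hcase
    obtain ⟨Z', hZ', hle, hS⟩ := hcase
    constructor
    · obtain ⟨j, Km, F, hj1, hj2, hj3, hKm, hF, hvol⟩ := meet_join Z Z' hZ hZ' (by
        rintro ⟨S, h⟩; exact hS S h)
      refine ⟨j, hj1, hj2, by simp at hj3; omega, ?_⟩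
      have hKpos := gdet_E_pos E hE Km hKm
      have hFpos := gdet_E_pos E hE F hF
      have h1 : alph b i E ≤ ENNReal.ofReal (2 ^ b * gdet (E * zr Z) ^ (-b)) := by
        refine iSup_le fun ⟨Y, hY⟩ => ENNReal.ofReal_le_ofReal ?_
        exact rpow_neg_le hZpos two_pos (gdet_E_pos E hE Y hY) hb (hmin Y hY)
      have h2 : gdet (E * zr Km) * gdet (E * zr F) ≤
          (Cd * (K0 * K0)) * (gdet (E * zr Z) * gdet (E * zr Z)) := by
        refine (hvol E).trans ?_
        rw [mul_assoc Cd]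
        change Cd * _ ≤ _
        refine mul_le_mul_of_nonneg_left ?_ hCd1.le
        calc gdet (E * zr Z) * gdet (E * zr Z') ≤ gdet (E * zr Z) * (K0 * K0 * gdet (E * zr Z)) := by
              gcongr
          _ = _ := by ring
      have h3 := rpow_neg_le (mul_pos hKpos hFpos) (by positivity) (mul_pos hZpos hZpos) hb h2
      rw [Real.mul_rpow hZpos.le hZpos.le, Real.mul_rpow hKpos.le hFpos.le] at h3
      calc alph b i E ^ 2 ≤ ENNReal.ofReal (2 ^ b * gdet (E * zr Z) ^ (-b)) ^ 2 := by gcongr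
        _ = ENNReal.ofReal ((2 ^ b * 2 ^ b) * (gdet (E * zr Z) ^ (-b) * gdet (E * zr Z) ^ (-b))) := by
            rw [← ENNReal.ofReal_pow (by positivity)]; ring_nf
        _ ≤ ENNReal.ofReal (K * (gdet (E * zr Km) ^ (-b) * gdet (E * zr F) ^ (-b))) := by
            apply ENNReal.ofReal_le_ofReal
            calc (2 ^ b * 2 ^ b) * (gdet (E * zr Z) ^ (-b) * gdet (E * zr Z) ^ (-b))
                ≤ (2 ^ b * 2 ^ b) * ((Cd * (K0 * K0)) ^ b *
                  (gdet (E * zr Km) ^ (-b) * gdet (E * zr F) ^ (-b))) := by gcongr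
              _ = ((2 ^ b * 2 ^ b) * (Cd * (K0 * K0)) ^ b) *
                  (gdet (E * zr Km) ^ (-b) * gdet (E * zr F) ^ (-b)) := by ring
              _ ≤ _ := by
                  gcongr
                  have : 0 ≤ K0 ^ b := by positivity
                  linarith
        _ ≤ _ := by
            rw [ENNReal.ofReal_mul (by positivity), ENNReal.ofReal_mul (by positivity)]
            gcongr
            · exact le_alph b _ E Km hKm
            · exact le_alph b _ E F hF
    · intro τ hτ
      have hτ' : |τ| ≤ 1 := abs_le.2 hτ
      refine (alph_mul_le b hb i E _ hE (hgu τ) K0 hK00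
        fun W => (hdist i hi R τ hR le_rfl hτ' W).2).trans ?_
      gcongr

end LPR

/-! ### The height function and its average -/

namespace LPR
open Matrix MeasureTheory Filter
open scoped ENNReal

lemma continuous_gmat (d : ℕ) (R : ℝ) : Continuous fun τ => gmat d R τ := by
  unfold gmat
  refine Continuous.matrix_fromBlocks ?_ ?_ ?_ ?_ <;> fun_prop

lemma continuous_gdet_gmat (d : ℕ) {i : ℕ} (R : ℝ)
    (W : Matrix (Fin d ⊕ Fin d) (Fin i) ℝ) : Continuous fun τ => gdet (gmat d R τ * W) := by
  have := continuous_gmat d R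
  unfold gdet
  fun_prop

lemma measurable_alph (d : ℕ) (b : ℝ) (i : ℕ) (R : ℝ)
    (E : Matrix (Fin d ⊕ Fin d) (Fin d ⊕ Fin d) ℝ) :
    Measurable fun τ => alph b i (gmat d R τ * E) := by
  unfold alph
  haveI : Countable (Matrix (Fin d ⊕ Fin d) (Fin i) ℤ) :=
    inferInstanceAs (Countable (Fin d ⊕ Fin d → Fin i → ℤ))
  refine Measurable.iSup fun Z => ?_
  refine ENNReal.measurable_ofReal.comp ?_
  have := (continuous_gdet_gmat d R (E * zr Z.1)).measurable
  simp only [Matrix.mul_assoc]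
  exact this.pow_const _

/-- The height function: weighted sum of all `alph b i`. The weights decay so that the mixed terms
created by `meet_join` are negligible. -/
noncomputable def hgt (d : ℕ) (b η : ℝ) (E : Matrix (Fin d ⊕ Fin d) (Fin d ⊕ Fin d) ℝ) : ℝ≥0∞ :=
  ∑ i ∈ Finset.range (2 * d + 1), ENNReal.ofReal (η ^ (i * (2 * d - i))) * alph b i E

lemma le_hgt (d : ℕ) (b η : ℝ) (E : Matrix (Fin d ⊕ Fin d) (Fin d ⊕ Fin d) ℝ) (i : ℕ)
    (hi : i ≤ 2 * d) : ENNReal.ofReal (η ^ (i * (2 * d - i))) * alph b i E ≤ hgt d b η E :=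
  Finset.single_le_sum (f := fun i => ENNReal.ofReal (η ^ (i * (2 * d - i))) * alph b i E)
    (fun _ _ => zero_le) (Finset.mem_range.2 (Nat.lt_succ_of_le hi))

/-- The concavity of `i ↦ i (n - i)`, with the gain `2 j²` that makes mixed terms negligible. -/
lemma weight_identity (n i j : ℕ) (hj : j ≤ i) (hij : i + j ≤ n) :
    2 * (i * (n - i)) = 2 * j ^ 2 + (i - j) * (n - (i - j)) + (i + j) * (n - (i + j)) := by
  zify [hj, hij, (by omega : i ≤ n), (by omega : i - j ≤ n)]
  ring

/-- One step of the growth estimate. The weight `η` is so small in terms of `R` that the mixed terms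
are absorbed; the constant `C1` does not depend on `R`. -/
lemma hgt_step (d : ℕ) (b : ℝ) (hb : 0 < b) (hdb : 1 < d * b) :
    ∃ C1 : ℝ, 1 ≤ C1 ∧ ∀ R : ℝ, 1 ≤ R → ∃ η : ℝ, 0 < η ∧
      ∀ E : Matrix (Fin d ⊕ Fin d) (Fin d ⊕ Fin d) ℝ, IsUnit E.det →
      ∫⁻ τ in Set.Icc (-1 : ℝ) 1, hgt d b η (gmat d R τ * E) ≤
        ENNReal.ofReal (C1 * R ^ (2 * d * b - 2)) * hgt d b η E := by
  obtain ⟨C1, hC1, hstep⟩ := alph_step d b hb hdb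
  refine ⟨(2 * d + 1) * C1, by nlinarith, fun R hR => ?_⟩
  obtain ⟨K, hK, hE⟩ := hstep R hR
  have hK0 : 0 < K := by linarith
  refine ⟨(2 * K * K)⁻¹, by positivity, fun E hEu => ?_⟩
  set η := (2 * K * K)⁻¹ with hη
  have hη0 : 0 < η := by positivity
  have hη1 : η ≤ 1 := by
    rw [hη]; apply inv_le_one_of_one_le₀; nlinarith
  have hηK : 2 * K * (η * K) = 1 := by rw [hη]; field_simp
  have hRc : 1 ≤ C1 * R ^ (2 * d * b - 2) := by
    have : 1 ≤ R ^ (2 * d * b - 2) := Real.one_le_rpow hR (by linarith)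
    nlinarith
  have hterm : ∀ i ≤ 2 * d, ENNReal.ofReal (η ^ (i * (2 * d - i))) *
      ∫⁻ τ in Set.Icc (-1 : ℝ) 1, alph b i (gmat d R τ * E) ≤
      ENNReal.ofReal (C1 * R ^ (2 * d * b - 2)) * hgt d b η E := by
    intro i hi
    rcases hE E hEu i hi with h | ⟨⟨j, hj1, hji, hij, hsq⟩, h⟩
    · calc _ ≤ ENNReal.ofReal (η ^ (i * (2 * d - i))) *
            (ENNReal.ofReal (C1 * R ^ (2 * d * b - 2)) * alph b i E) := mul_le_mul_right h _
        _ = ENNReal.ofReal (C1 * R ^ (2 * d * b - 2)) *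
            (ENNReal.ofReal (η ^ (i * (2 * d - i))) * alph b i E) := by ring
        _ ≤ _ := mul_le_mul_right (le_hgt d b η E i hi) _
    · have h1 : ∫⁻ τ in Set.Icc (-1 : ℝ) 1, alph b i (gmat d R τ * E) ≤
          ENNReal.ofReal (2 * K) * alph b i E := by
        calc _ ≤ ∫⁻ τ in Set.Icc (-1 : ℝ) 1, ENNReal.ofReal K * alph b i E :=
              setLIntegral_mono' measurableSet_Icc h
          _ = ENNReal.ofReal (2 * K) * alph b i E := by
              rw [setLIntegral_const, Real.volume_Icc, ENNReal.ofReal_mul (by norm_num)]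
              rw [mul_comm, ← mul_assoc]
              norm_num
      have h2 : (ENNReal.ofReal (η ^ (i * (2 * d - i))) * alph b i E) ^ 2 ≤
          (ENNReal.ofReal (η * K) * hgt d b η E) ^ 2 := by
        calc (ENNReal.ofReal (η ^ (i * (2 * d - i))) * alph b i E) ^ 2
            = ENNReal.ofReal (η ^ (2 * (i * (2 * d - i)))) * alph b i E ^ 2 := by
              rw [mul_pow, ← ENNReal.ofReal_pow (by positivity), ← pow_mul, mul_comm 2 (i * _)]
          _ ≤ ENNReal.ofReal (η ^ (2 * (i * (2 * d - i)))) *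
              (ENNReal.ofReal K * (alph b (i - j) E * alph b (i + j) E)) := mul_le_mul_right hsq _
          _ = ENNReal.ofReal (η ^ (2 * j ^ 2) * K) *
              ((ENNReal.ofReal (η ^ ((i - j) * (2 * d - (i - j)))) * alph b (i - j) E) *
              (ENNReal.ofReal (η ^ ((i + j) * (2 * d - (i + j)))) * alph b (i + j) E)) := by
              rw [weight_identity _ _ _ hji hij, pow_add, pow_add,
                ENNReal.ofReal_mul (by positivity), ENNReal.ofReal_mul (by positivity),
                ENNReal.ofReal_mul (by positivity)]
              ring
          _ ≤ ENNReal.ofReal (η ^ 2 * K ^ 2) * (hgt d b η E * hgt d b η E) := by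
              refine mul_le_mul' (ENNReal.ofReal_le_ofReal (mul_le_mul ?_ (by nlinarith) hK0.le
                (by positivity))) (mul_le_mul' (le_hgt d b η E _ (by omega)) (le_hgt d b η E _ hij))
              apply pow_le_pow_of_le_one hη0.le hη1
              nlinarith
          _ = (ENNReal.ofReal (η * K) * hgt d b η E) ^ 2 := by
              rw [mul_pow, ← ENNReal.ofReal_pow (by positivity), mul_pow, sq (hgt d b η E)]
      have h3 : ENNReal.ofReal (η ^ (i * (2 * d - i))) * alph b i E ≤
          ENNReal.ofReal (η * K) * hgt d b η E :=
        (ENNReal.pow_le_pow_left_iff two_ne_zero).1 h2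
      calc _ ≤ ENNReal.ofReal (η ^ (i * (2 * d - i))) * (ENNReal.ofReal (2 * K) * alph b i E) :=
            mul_le_mul_right h1 _
        _ = ENNReal.ofReal (2 * K) * (ENNReal.ofReal (η ^ (i * (2 * d - i))) * alph b i E) := by
            ring
        _ ≤ ENNReal.ofReal (2 * K) * (ENNReal.ofReal (η * K) * hgt d b η E) :=
            mul_le_mul_right h3 _
        _ = hgt d b η E := by
            rw [← mul_assoc, ← ENNReal.ofReal_mul (by positivity), hηK]; simp
        _ ≤ _ := by
            refine le_mul_of_one_le_left (zero_le) ?_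
            rw [← ENNReal.ofReal_one]
            exact ENNReal.ofReal_le_ofReal hRc
  unfold hgt at hterm ⊢
  rw [lintegral_finsetSum _ fun i _ => (measurable_alph d b i R E).const_mul _]
  calc _ ≤ ∑ i ∈ Finset.range (2 * d + 1), ENNReal.ofReal (C1 * R ^ (2 * d * b - 2)) *
        ∑ i ∈ Finset.range (2 * d + 1), ENNReal.ofReal (η ^ (i * (2 * d - i))) * alph b i E := by
        refine Finset.sum_le_sum fun i hi => ?_
        rw [lintegral_const_mul' _ _ ENNReal.ofReal_ne_top]
        exact hterm i (Nat.le_of_lt_succ (Finset.mem_range.1 hi))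
    _ = _ := by
        rw [Finset.sum_const, Finset.card_range, nsmul_eq_mul, ← mul_assoc, mul_assoc _ C1,
          ENNReal.ofReal_mul (by positivity : (0 : ℝ) ≤ 2 * d + 1)]
        congr 2
        rw [show (2 * d + 1 : ℝ) = ((2 * d + 1 : ℕ) : ℝ) by push_cast; ring, ENNReal.ofReal_natCast]

/-- Averaging over windows of length `2δ` only enlarges the domain by `δ`. -/
lemma lintegral_window (F : ℝ → ℝ≥0∞) (hF : Measurable F) (T δ : ℝ) (hδ : 0 < δ) :
    ENNReal.ofReal 2 * ∫⁻ t in Set.Icc (-T) T, F t ≤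
      ∫⁻ t in Set.Icc (-(T + δ)) (T + δ), ∫⁻ τ in Set.Icc (-1 : ℝ) 1, F (t + δ * τ) := by
  rw [lintegral_lintegral_swap (by
    apply Measurable.aemeasurable
    fun_prop)]
  have : ∀ τ ∈ Set.Icc (-1 : ℝ) 1, ∫⁻ t in Set.Icc (-T) T, F t ≤
      ∫⁻ t in Set.Icc (-(T + δ)) (T + δ), F (t + δ * τ) := by
    intro τ hτ
    rw [← lintegral_indicator measurableSet_Icc, ← lintegral_indicator measurableSet_Icc,
      ← lintegral_add_right_eq_self _ (δ * τ)]
    refine lintegral_mono fun t => ?_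
    simp only [Set.indicator_apply]
    split_ifs with h1 h2
    · exact le_rfl
    · exfalso; apply h2
      obtain ⟨h3, h4⟩ := hτ
      have : δ * τ ≤ δ := by nlinarith
      have : -δ ≤ δ * τ := by nlinarith
      constructor <;> linarith [h1.1, h1.2]
    · exact zero_le
    · exact zero_le
  calc _ = ∫⁻ τ in Set.Icc (-1 : ℝ) 1, ∫⁻ t in Set.Icc (-T) T, F t := by
        rw [setLIntegral_const, Real.volume_Icc, mul_comm]; norm_num
    _ ≤ _ := setLIntegral_mono' measurableSet_Icc this

lemma measurable_hgt (d : ℕ) (b η : ℝ) (R : ℝ)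
    (E : Matrix (Fin d ⊕ Fin d) (Fin d ⊕ Fin d) ℝ) :
    Measurable fun τ => hgt d b η (gmat d R τ * E) := by
  unfold hgt
  exact Finset.measurable_fun_sum _ fun i _ => (measurable_alph d b i R E).const_mul _

/-- Upper bound for the average of the Margulis-type function along the unipotent flow. -/
theorem alph_average (d : ℕ) (b : ℝ) (hb : 0 < b) (hdb : 1 < d * b)
    (E : Matrix (Fin d ⊕ Fin d) (Fin d ⊕ Fin d) ℝ) (hE : IsUnit E.det) (T ε : ℝ)
    (hε : 0 < ε) :
    ∃ C : ℝ, 0 ≤ C ∧ ∀ r : ℝ, 1 ≤ r → ∀ i ≤ 2 * d,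
      ∫⁻ t in Set.Icc (-T) T, alph b i (gmat d r t * E) ≤
        ENNReal.ofReal (C * r ^ (2 * d * b - 2 + ε)) := by
  obtain ⟨C1, hC1, hstep⟩ := hgt_step d b hb hdb
  obtain ⟨R, hR2, hRC⟩ : ∃ R : ℝ, 2 ≤ R ∧ C1 ≤ R ^ ε := by
    have := (tendsto_rpow_atTop hε).eventually_ge_atTop C1
    obtain ⟨R, h1, h2⟩ := (this.and (eventually_ge_atTop 2)).exists
    exact ⟨R, h2, h1⟩
  have hR1 : 1 ≤ R := by linarith
  have hR0 : 0 < R := by linarith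
  obtain ⟨η, hη, hav⟩ := hstep R hR1
  set c := 2 * d * b - 2 with hc
  have hc0 : 0 ≤ c := by rw [hc]; linarith
  set A : ℝ≥0∞ := ENNReal.ofReal (R ^ (c + ε)) with hA
  have hCA : ENNReal.ofReal (C1 * R ^ c) ≤ A := by
    apply ENNReal.ofReal_le_ofReal
    rw [Real.rpow_add hR0, mul_comm]
    gcongr
  have iter : ∀ n : ℕ, ∀ r0 : ℝ, 1 ≤ r0 → ∀ S : ℝ,
      ∫⁻ t in Set.Icc (-(S + 2 * (4 : ℝ)⁻¹ ^ n)) (S + 2 * (4 : ℝ)⁻¹ ^ n),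
        hgt d b η (gmat d (R ^ n * r0) t * E) ≤
      A ^ n * ∫⁻ t in Set.Icc (-(S + 2)) (S + 2), hgt d b η (gmat d r0 t * E) := by
    intro n
    induction n with
    | zero => intro r0 _ S; simp
    | succ n ih =>
      intro r0 hr0 S
      set r := R ^ n * r0 with hr
      have hr1 : (2 : ℝ) ^ n ≤ r := by
        calc (2 : ℝ) ^ n ≤ R ^ n := by gcongr
          _ ≤ r := le_mul_of_one_le_right (by positivity) hr0
      have hrpos : 0 < r := by positivity
      set δ := (r ^ 2)⁻¹ with hδ
      have hδ0 : 0 < δ := by positivity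
      have hδ1 : δ ≤ (4 : ℝ)⁻¹ ^ n := by
        rw [hδ, inv_pow]
        gcongr
        calc (4 : ℝ) ^ n = (2 ^ n) ^ 2 := by rw [← pow_mul, mul_comm, pow_mul]; norm_num
          _ ≤ r ^ 2 := by gcongr
      have hRr : R ^ (n + 1) * r0 = R * r := by rw [hr, pow_succ]; ring
      rw [hRr]
      have hw := lintegral_window (fun t => hgt d b η (gmat d (R * r) t * E))
        (measurable_hgt d b η _ E) (S + 2 * (4 : ℝ)⁻¹ ^ (n + 1)) δ hδ0
      have hin : ∀ t : ℝ, ∫⁻ τ in Set.Icc (-1 : ℝ) 1, hgt d b η (gmat d (R * r) (t + δ * τ) * E) ≤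
          A * hgt d b η (gmat d r t * E) := by
        intro t
        have h1 := hav (gmat d r t * E) (by
          rw [det_mul]; exact (isUnit_gmat d r t hrpos.ne').mul hE)
        refine le_trans (le_of_eq ?_) (h1.trans (mul_le_mul_left hCA _))
        congr 1; ext τ
        rw [← Matrix.mul_assoc, gmat_mul_gmat _ _ _ _ _ hR0.ne' hrpos.ne']
        congr 3
        rw [hδ]; field_simp
      calc _ ≤ ENNReal.ofReal 2 * ∫⁻ t in Set.Icc (-(S + 2 * (4 : ℝ)⁻¹ ^ (n + 1)))
            (S + 2 * (4 : ℝ)⁻¹ ^ (n + 1)), hgt d b η (gmat d (R * r) t * E) := by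
            refine le_mul_of_one_le_left (zero_le) ?_
            rw [← ENNReal.ofReal_one]
            exact ENNReal.ofReal_le_ofReal (by norm_num)
        _ ≤ _ := hw
        _ ≤ ∫⁻ t in Set.Icc (-(S + 2 * (4 : ℝ)⁻¹ ^ (n + 1) + δ))
            (S + 2 * (4 : ℝ)⁻¹ ^ (n + 1) + δ), A * hgt d b η (gmat d r t * E) :=
            lintegral_mono fun t => hin t
        _ ≤ ∫⁻ t in Set.Icc (-(S + 2 * (4 : ℝ)⁻¹ ^ n))
            (S + 2 * (4 : ℝ)⁻¹ ^ n), A * hgt d b η (gmat d r t * E) := by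
            refine lintegral_mono_set (Set.Icc_subset_Icc ?_ ?_) <;>
            · rw [pow_succ]
              have : (0 : ℝ) < (4 : ℝ)⁻¹ ^ n := by positivity
              linarith
        _ = A * ∫⁻ t in Set.Icc (-(S + 2 * (4 : ℝ)⁻¹ ^ n))
            (S + 2 * (4 : ℝ)⁻¹ ^ n), hgt d b η (gmat d r t * E) :=
            lintegral_const_mul' _ _ ENNReal.ofReal_ne_top
        _ ≤ A * (A ^ n * ∫⁻ t in Set.Icc (-(S + 2)) (S + 2), hgt d b η (gmat d r0 t * E)) :=
            mul_le_mul_right (ih r0 hr0 S) _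
        _ = _ := by rw [pow_succ]; ring
  -- the height is bounded on compact ranges of the parameters
  obtain ⟨K, hK, hdist⟩ := gmat_distort d R (T + 2) hR1
  set H0 : ℝ≥0∞ := ENNReal.ofReal (K ^ b) * hgt d b η E with hH0
  have hH0top : H0 ≠ ⊤ := by
    refine ENNReal.mul_ne_top ENNReal.ofReal_ne_top ?_
    unfold hgt
    refine ENNReal.sum_ne_top.2 fun i hi => ENNReal.mul_ne_top ENNReal.ofReal_ne_top ?_
    refine alph_ne_top b hb i ?_ E hE
    have := Finset.mem_range.1 hi
    simp; omega
  have hbase : ∀ r0 : ℝ, 1 ≤ r0 → r0 ≤ R → ∀ t ∈ Set.Icc (-(T + 2)) (T + 2),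
      hgt d b η (gmat d r0 t * E) ≤ H0 := by
    intro r0 h1 h2 t ht
    rw [hH0]; unfold hgt
    rw [Finset.mul_sum]
    refine Finset.sum_le_sum fun i hi => ?_
    have h3 := alph_mul_le b hb i E (gmat d r0 t) hE (isUnit_gmat d r0 t (by linarith)) K
      (by linarith) fun W =>
        (hdist i (Nat.le_of_lt_succ (Finset.mem_range.1 hi)) r0 t h1 h2 (abs_le.2 ht) W).2
    calc _ ≤ ENNReal.ofReal (η ^ (i * (2 * d - i))) * (ENNReal.ofReal (K ^ b) * alph b i E) :=
          mul_le_mul_right h3 _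
      _ = _ := by ring
  obtain ⟨m, hm0, hm⟩ : ∃ m : ℝ, 0 < m ∧ ∀ i ≤ 2 * d, m ≤ η ^ (i * (2 * d - i)) := by
    refine ⟨(min η 1) ^ (2 * d * (2 * d)), by positivity, fun i hi => ?_⟩
    calc (min η 1) ^ (2 * d * (2 * d)) ≤ (min η 1) ^ (i * (2 * d - i)) := by
          apply pow_le_pow_of_le_one (by positivity) (min_le_right _ _)
          exact Nat.mul_le_mul hi (Nat.sub_le _ _)
      _ ≤ _ := by gcongr; exact min_le_left _ _
  set V : ℝ≥0∞ := H0 * ENNReal.ofReal (2 * (T + 2)) with hV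
  have hVtop : V ≠ ⊤ := ENNReal.mul_ne_top hH0top ENNReal.ofReal_ne_top
  refine ⟨m⁻¹ * V.toReal, by positivity, fun r hr i hi => ?_⟩
  obtain ⟨n, hn1, hn2⟩ := exists_nat_pow_near hr (by linarith : 1 < R)
  set r0 := r / R ^ n with hr0
  have hRn : 0 < R ^ n := by positivity
  have hr01 : 1 ≤ r0 := by rw [hr0, le_div_iff₀ hRn]; linarith
  have hr0R : r0 ≤ R := by
    rw [hr0, div_le_iff₀ hRn]; rw [pow_succ] at hn2; linarith
  have hrr : R ^ n * r0 = r := by rw [hr0]; field_simp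
  have hit := iter n r0 hr01 T
  rw [hrr] at hit
  have hAn : A ^ n ≤ ENNReal.ofReal (r ^ (c + ε)) := by
    rw [hA, ← ENNReal.ofReal_pow (by positivity)]
    apply ENNReal.ofReal_le_ofReal
    rw [← Real.rpow_natCast, ← Real.rpow_mul hR0.le, mul_comm, Real.rpow_mul hR0.le,
      Real.rpow_natCast]
    gcongr
  have hmain : ∫⁻ t in Set.Icc (-T) T, hgt d b η (gmat d r t * E) ≤
      ENNReal.ofReal (r ^ (c + ε)) * V := by
    calc _ ≤ ∫⁻ t in Set.Icc (-(T + 2 * (4 : ℝ)⁻¹ ^ n)) (T + 2 * (4 : ℝ)⁻¹ ^ n),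
          hgt d b η (gmat d r t * E) := by
          refine lintegral_mono_set (Set.Icc_subset_Icc ?_ ?_) <;>
          · have : (0 : ℝ) < (4 : ℝ)⁻¹ ^ n := by positivity
            linarith
      _ ≤ _ := hit
      _ ≤ ENNReal.ofReal (r ^ (c + ε)) * ∫⁻ t in Set.Icc (-(T + 2)) (T + 2), H0 :=
          mul_le_mul' hAn (setLIntegral_mono' measurableSet_Icc (hbase r0 hr01 hr0R))
      _ = _ := by
          rw [setLIntegral_const, Real.volume_Icc, hV]
          congr 3; ring
  have hfin : ENNReal.ofReal m * ∫⁻ t in Set.Icc (-T) T, alph b i (gmat d r t * E) ≤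
      ENNReal.ofReal (r ^ (c + ε)) * V := by
    refine le_trans ?_ hmain
    rw [← lintegral_const_mul' _ _ ENNReal.ofReal_ne_top]
    refine lintegral_mono fun t => ?_
    refine le_trans ?_ (le_hgt d b η _ i hi)
    exact mul_le_mul_left (ENNReal.ofReal_le_ofReal (hm i hi)) _
  calc _ = ENNReal.ofReal m⁻¹ * (ENNReal.ofReal m *
        ∫⁻ t in Set.Icc (-T) T, alph b i (gmat d r t * E)) := by
        rw [← mul_assoc, ← ENNReal.ofReal_mul (by positivity), inv_mul_cancel₀ hm0.ne']; simp
    _ ≤ ENNReal.ofReal m⁻¹ * (ENNReal.ofReal (r ^ (c + ε)) * V) := mul_le_mul_right hfin _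
    _ = _ := by
        rw [← ENNReal.ofReal_toReal hVtop, ← ENNReal.ofReal_mul (by positivity),
          ← ENNReal.ofReal_mul (by positivity), ENNReal.toReal_ofReal (by positivity)]
        ring_nf

end LPR

/-! ### Counting lattice points by covolume -/

namespace LPR
open Matrix MeasureTheory Filter
open scoped ENNReal

/-- A matrix with independent columns has a nonsingular square block of rows. -/
lemma exists_rows {m : Type} [Fintype m] {i : ℕ} (M : Matrix m (Fin i) ℝ) (hM : gdet M ≠ 0) :
    ∃ σ : Fin i → m, (M.submatrix σ id).det ≠ 0 := by
  classical
  obtain ⟨b, -, -, hsp, hli⟩ := exists_linearIndepOn_extension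
    (linearIndepOn_empty ℝ M.row) (Set.empty_subset Set.univ)
  have hspan : Submodule.span ℝ (M.row '' b) = Submodule.span ℝ (Set.range M.row) := by
    apply le_antisymm
    · exact Submodule.span_mono (Set.image_subset_range _ _)
    · rw [Submodule.span_le]
      rintro _ ⟨a, rfl⟩
      exact hsp ⟨a, trivial, rfl⟩
  have hrank : M.rank = i := by
    have h1 := LinearMap.finrank_range_add_finrank_ker M.mulVecLin
    have h2 : M.mulVecLin.ker = ⊥ := by
      rw [LinearMap.ker_eq_bot']
      intro v hv
      by_contra hv0
      exact hM (gdet_zero_of_mulVec M v hv0 (by simpa using hv))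
    rw [h2, finrank_bot] at h1
    have h3 : M.rank = Module.finrank ℝ M.mulVecLin.range := rfl
    rw [h3]; simpa using h1
  have hcard : Fintype.card b = i := by
    have : M.rank = Fintype.card b := by
      rw [rank_eq_finrank_span_row, ← hspan, Set.image_eq_range,
        finrank_span_eq_card (b := fun x : b => M.row x) hli]
    rw [← this, hrank]
  let e : Fin i ≃ b := (Fintype.equivFinOfCardEq hcard).symm
  refine ⟨fun k => (e k : m), ?_⟩
  have hrows : LinearIndependent ℝ (M.submatrix (fun k => (e k : m)) id).row :=
    LinearIndependent.comp hli e e.injective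
  have := linearIndependent_rows_iff_isUnit.1 hrows
  rw [isUnit_iff_isUnit_det] at this
  exact this.ne_zero

/-- A set of integer vectors whose Cramer coordinates with respect to `V` are bounded by `1` has at
most `5 ^ i * |det V|` elements: it meets every class modulo `V ℤ^i` in at most `5 ^ i` points. -/
lemma card_le_index {i : ℕ} (V : Matrix (Fin i) (Fin i) ℤ) (hV : V.det ≠ 0)
    (F : Finset (Fin i → ℤ)) (h : ∀ v ∈ F, ∀ j, |(V.updateCol j v).det| ≤ |V.det|) :
    F.card ≤ 5 ^ i * V.det.natAbs := by
  classical
  have hinj : Function.Injective V.mulVecLin := by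
    rw [← LinearMap.ker_eq_bot, LinearMap.ker_eq_bot']
    intro v hv
    by_contra hne
    exact hV (exists_mulVec_eq_zero_iff.1 ⟨v, hne, by simpa using hv⟩)
  set N : Submodule ℤ (Fin i → ℤ) := LinearMap.range V.mulVecLin with hN
  have hidx : Nat.card ((Fin i → ℤ) ⧸ N) = V.det.natAbs := by
    rw [← Submodule.natAbs_det_equiv N (LinearEquiv.ofInjective V.mulVecLin hinj)]
    congr 1
    rw [← LinearMap.det_toLin' V]
    rfl
  have hpos : 0 < Nat.card ((Fin i → ℤ) ⧸ N) := by rw [hidx]; omega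
  haveI : Finite ((Fin i → ℤ) ⧸ N) := Nat.finite_of_card_ne_zero hpos.ne'
  haveI := Fintype.ofFinite ((Fin i → ℤ) ⧸ N)
  have key : F.card ≤ 5 ^ i * (Finset.univ : Finset ((Fin i → ℤ) ⧸ N)).card := by
    refine Finset.card_le_mul_card_image_of_maps_to (f := N.mkQ) (fun _ _ => Finset.mem_univ _) _ ?_
    intro q _
    by_cases hne : (F.filter fun v => N.mkQ v = q).Nonempty
    · obtain ⟨x, hx⟩ := hne
      rw [Finset.mem_filter] at hx
      have hk : ∀ y ∈ F.filter fun v => N.mkQ v = q, ∃ k, V *ᵥ k = y - x := by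
        intro y hy
        rw [Finset.mem_filter] at hy
        have : N.mkQ y = N.mkQ x := by rw [hy.2, hx.2]
        rw [Submodule.mkQ_apply, Submodule.mkQ_apply, Submodule.Quotient.eq] at this
        obtain ⟨k, hk⟩ := this
        exact ⟨k, by simpa using hk⟩
      choose! k hk using hk
      have hmap : ∀ y ∈ F.filter fun v => N.mkQ v = q,
          k y ∈ Fintype.piFinset fun _ : Fin i => Finset.Icc (-2 : ℤ) 2 := by
        intro y hy
        rw [Fintype.mem_piFinset]
        intro j
        have hy' := (Finset.mem_filter.1 hy).1
        have e1 : V.det * k y j = (V.updateCol j y).det - (V.updateCol j x).det := by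
          have e2 : cramer V (V *ᵥ k y) = V.det • k y := by
            rw [cramer_eq_adjugate_mulVec, mulVec_mulVec, adjugate_mul, smul_mulVec, one_mulVec]
          rw [hk y hy, map_sub] at e2
          have := congrFun e2 j
          rw [Pi.sub_apply, cramer_apply, cramer_apply, Pi.smul_apply, smul_eq_mul] at this
          exact this.symm
        have e3 : |V.det| * |k y j| ≤ |V.det| * 2 := by
          rw [← abs_mul, e1]
          have := abs_sub (V.updateCol j y).det (V.updateCol j x).det
          have h1 := h y hy' j
          have h2 := h x hx.1 j
          linarith
        have e4 : |k y j| ≤ 2 := le_of_mul_le_mul_left e3 (abs_pos.2 hV)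
        rw [Finset.mem_Icc]; exact abs_le.1 e4
      calc _ ≤ (Fintype.piFinset fun _ : Fin i => Finset.Icc (-2 : ℤ) 2).card := by
            refine Finset.card_le_card_of_injOn k hmap ?_
            intro y hy z hz hyz
            have h1 := hk y hy
            have h2 := hk z hz
            rw [hyz, h2] at h1
            exact (sub_left_injective h1).symm
        _ = 5 ^ i := by rw [Fintype.card_piFinset]; simp
    · rw [Finset.not_nonempty_iff_eq_empty.1 hne]; simp
  rw [Finset.card_univ, ← Nat.card_eq_fintype_card, hidx] at key
  exact key

/-- Counting lattice points by covolume: the integer vectors in `F` generate a lattice with basis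
`ℓ`, and whenever `Φ` maps `F` into the unit cube, `#F` is bounded by the reciprocal of the
covolume of `Φ ℓ`. -/
theorem count_le_covol {n : Type} [Fintype n] (F : Finset (n → ℤ)) :
    ∃ i ≤ Fintype.card n, ∃ ℓ : Matrix n (Fin i) ℤ, gdet (zr ℓ) ≠ 0 ∧
      (∀ j, (fun a => ℓ a j) ∈ Submodule.span ℤ (F : Set (n → ℤ))) ∧
      (∀ v ∈ F, ∃ a, v = ℓ *ᵥ a) ∧
      ∀ (m : Type) [Fintype m] (Φ : Matrix m n ℝ),
        (∀ v ∈ F, ∀ a, |(Φ *ᵥ fun j => (v j : ℝ)) a| ≤ 1) →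
        (F.card : ℝ) ^ 2 * gdet (Φ * zr ℓ) ≤
          25 ^ Fintype.card n * ((Fintype.card n).factorial *
            (Fintype.card m + 1 : ℝ) ^ Fintype.card n) := by
  classical
  obtain ⟨i, ℓ, hℓ, hinj⟩ := exists_latBasis (Submodule.span ℤ (F : Set (n → ℤ)))
  have hg := gdet_zr_ne_zero ℓ hinj
  have hF : ∀ v ∈ F, ∃ a, v = ℓ *ᵥ a := fun v hv => (hℓ v).1 (Submodule.subset_span hv)
  have hi : i ≤ Fintype.card n := by simpa using card_le_of_gdet _ hg
  refine ⟨i, hi, ℓ, hg, ?_, hF, ?_⟩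
  · intro j
    rw [hℓ]
    refine ⟨Pi.single j 1, ?_⟩
    rw [mulVec_single_one]; rfl
  intro m _ Φ hΦ
  choose! a ha using hF
  set A : Matrix F (Fin i) ℤ := Matrix.of fun v j => a v j with hA
  have hAg : gdet (zr A) ≠ 0 := by
    refine gdet_zr_ne_zero A fun c hc => ?_
    have hc' : ∀ v ∈ F, a v ⬝ᵥ c = 0 := fun v hv => congrFun hc ⟨v, hv⟩
    have hall : ∀ w ∈ Submodule.span ℤ (F : Set (n → ℤ)), ∃ b, w = ℓ *ᵥ b ∧ b ⬝ᵥ c = 0 := by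
      intro w hw
      induction hw using Submodule.span_induction with
      | mem x hx => exact ⟨a x, ha x hx, hc' x hx⟩
      | zero => exact ⟨0, by simp, by simp⟩
      | add x y _ _ hx hy =>
        obtain ⟨b, rfl, hb⟩ := hx
        obtain ⟨b', rfl, hb'⟩ := hy
        exact ⟨b + b', by rw [mulVec_add], by rw [add_dotProduct, hb, hb', add_zero]⟩
      | smul k x _ hx =>
        obtain ⟨b, rfl, hb⟩ := hx
        exact ⟨k • b, by rw [mulVec_smul], by rw [smul_dotProduct, hb, smul_zero]⟩
    obtain ⟨b, hb, hbc⟩ := hall (ℓ *ᵥ c) ((hℓ _).2 ⟨c, rfl⟩)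
    have : c - b = 0 := hinj _ (by rw [mulVec_sub, ← hb, sub_self])
    rw [← sub_eq_zero.1 this] at hbc
    exact dotProduct_self_eq_zero.1 hbc
  obtain ⟨σ0, hσ0⟩ := exists_rows (zr A) hAg
  have hdetσ : ∀ σ : Fin i → F, ((zr A).submatrix σ id).det = ((A.submatrix σ id).det : ℝ) :=
    fun σ => det_zr (A.submatrix σ id)
  obtain ⟨σ, -, hσ⟩ := Finset.exists_max_image (Finset.univ : Finset (Fin i → F))
    (fun σ => |(A.submatrix σ id).det|) ⟨σ0, Finset.mem_univ _⟩
  set V : Matrix (Fin i) (Fin i) ℤ := (A.submatrix σ id)ᵀ with hV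
  have hVdet : V.det = (A.submatrix σ id).det := det_transpose _
  have hV0 : V.det ≠ 0 := by
    intro h0
    have := hσ σ0 (Finset.mem_univ _)
    rw [← hVdet, h0, abs_zero, abs_nonpos_iff] at this
    rw [hdetσ, this] at hσ0
    exact hσ0 Int.cast_zero
  have hainj : Set.InjOn a F := by
    intro v hv w hw hvw
    rw [ha v hv, ha w hw, hvw]
  have hcard : F.card ≤ 5 ^ i * V.det.natAbs := by
    rw [← Finset.card_image_of_injOn hainj]
    refine card_le_index V hV0 _ ?_
    intro v hv j
    obtain ⟨x, hx, rfl⟩ := Finset.mem_image.1 hv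
    have e : V.updateCol j (a x) = (A.submatrix (Function.update σ j ⟨x, hx⟩) id)ᵀ := by
      ext p q
      rw [updateCol_apply, transpose_apply, submatrix_apply, hV, transpose_apply, submatrix_apply,
        Function.update_apply]
      split_ifs <;> rfl
    rw [e, det_transpose, hVdet]
    exact hσ _ (Finset.mem_univ _)
  have hbd : gdet (Φ * zr ℓ * zr V) ≤ (Nat.factorial i) * (Fintype.card m : ℝ) ^ i := by
    have := gdet_le_of_bdd (Φ * zr ℓ * zr V) 1 ?_
    · simpa using this
    · intro p q
      have e : (Φ * zr ℓ * zr V) p q = (Φ *ᵥ fun j => ((σ q : n → ℤ) j : ℝ)) p := by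
        have h1 : (fun j => ((σ q : n → ℤ) j : ℝ)) = fun j => zr (ℓ * V) j q := by
          ext j
          have : (ℓ * V) j q = (ℓ *ᵥ a (σ q)) j := rfl
          rw [← ha _ (σ q).2] at this
          show _ = (((ℓ * V) j q : ℤ) : ℝ)
          rw [this]
        rw [h1, Matrix.mul_assoc, ← zr_mul]; rfl
      rw [e]; exact hΦ _ (σ q).2 p
  rw [gdet_mul_sq, det_zr] at hbd
  have hcard' : (F.card : ℝ) ≤ 5 ^ i * |(V.det : ℝ)| := by
    have : (F.card : ℝ) ≤ ((5 ^ i * V.det.natAbs : ℕ) : ℝ) := by exact_mod_cast hcard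
    rw [Nat.cast_mul, Nat.cast_natAbs] at this
    simpa using this
  calc (F.card : ℝ) ^ 2 * gdet (Φ * zr ℓ)
      ≤ (5 ^ i * |(V.det : ℝ)|) ^ 2 * gdet (Φ * zr ℓ) := by
        have := gdet_nonneg (Φ * zr ℓ)
        gcongr
    _ = 25 ^ i * (gdet (Φ * zr ℓ) * (V.det : ℝ) ^ 2) := by
        rw [mul_pow, sq_abs, ← pow_mul, mul_comm i 2, pow_mul]; norm_num; ring
    _ ≤ 25 ^ i * ((Nat.factorial i) * (Fintype.card m : ℝ) ^ i) := by gcongr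
    _ ≤ _ := by
        have h1 : (Fintype.card m : ℝ) ^ i ≤ (Fintype.card m + 1 : ℝ) ^ Fintype.card n :=
          (pow_le_pow_left₀ (by positivity) (by linarith) i).trans
            (pow_le_pow_right₀ (by linarith [(Nat.cast_nonneg (Fintype.card m) : (0:ℝ) ≤ _)]) hi)
        have h2 : (i.factorial : ℝ) ≤ (Fintype.card n).factorial := by
          exact_mod_cast Nat.factorial_le hi
        have h3 : (25 : ℝ) ^ i ≤ 25 ^ Fintype.card n := pow_le_pow_right₀ (by norm_num) hi
        gcongr

end LPR

/-! ### One-dimensional exponential sums -/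

namespace LPR
open Matrix MeasureTheory Filter
open scoped ENNReal

/-- The unimodular number `e^{ix}`. -/
noncomputable def ex (x : ℝ) : ℂ := Complex.exp (x * Complex.I)

lemma norm_ex (x : ℝ) : ‖ex x‖ = 1 := Complex.norm_exp_ofReal_mul_I x

lemma ex_add (x y : ℝ) : ex (x + y) = ex x * ex y := by
  unfold ex; rw [← Complex.exp_add]; push_cast; ring_nf

lemma ex_zero : ex 0 = 1 := by simp [ex]

lemma ex_int (k : ℤ) : ex (2 * Real.pi * k) = 1 := by
  unfold ex
  rw [← Complex.exp_int_mul_two_pi_mul_I k]; congr 1; push_cast; ring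

lemma ex_sum {ι : Type} (s : Finset ι) (f : ι → ℝ) : ex (∑ i ∈ s, f i) = ∏ i ∈ s, ex (f i) := by
  unfold ex; rw [← Complex.exp_sum, ← Finset.sum_mul]; push_cast; rfl

lemma conj_ex (x : ℝ) : (starRingEnd ℂ) (ex x) = ex (-x) := by
  unfold ex; rw [← Complex.exp_conj]; simp

lemma norm_one_sub_ex (s : ℝ) (hs : |s| ≤ 1 / 2) : 4 * |s| ≤ ‖1 - ex (2 * Real.pi * s)‖ := by
  have h1 := Complex.norm_exp_I_mul_ofReal_sub_one (2 * Real.pi * s)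
  rw [norm_sub_rev]
  have e : ex (2 * Real.pi * s) = Complex.exp (Complex.I * ((2 * Real.pi * s : ℝ) : ℂ)) := by
    unfold ex; rw [mul_comm]
  rw [e, h1, show 2 * Real.pi * s / 2 = Real.pi * s by ring, Real.norm_eq_abs, abs_mul, abs_two]
  have h2 : |Real.sin (Real.pi * s)| = Real.sin (Real.pi * |s|) := by
    have hpi := Real.pi_pos
    rcases le_total 0 s with h | h
    · rw [abs_of_nonneg h, abs_of_nonneg]
      rw [abs_of_nonneg h] at hs
      exact Real.sin_nonneg_of_nonneg_of_le_pi (by positivity) (by nlinarith)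
    · rw [abs_of_nonpos h]
      rw [abs_of_nonpos h] at hs
      rw [mul_neg, Real.sin_neg, abs_of_nonpos]
      exact Real.sin_nonpos_of_nonpos_of_neg_pi_le (by nlinarith) (by nlinarith)
  rw [h2]
  have := Real.mul_le_sin (x := Real.pi * |s|) (by positivity)
    (by have := Real.pi_pos; nlinarith)
  have hpi : Real.pi ≠ 0 := Real.pi_ne_zero
  have e2 : 2 / Real.pi * (Real.pi * |s|) = 2 * |s| := by field_simp
  linarith

/-- Multiplication by `e^{ijx}` shifts the coefficients; the range is extended by `2` on the right to
hold all shifts `0 ≤ j ≤ 2`. -/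
lemma shift_sum (N : ℕ) (a : ℤ → ℝ) (ha : ∀ k, (N : ℤ) < |k| → a k = 0) (x : ℝ) (j : ℤ)
    (hj0 : 0 ≤ j) (hj : j ≤ 2) :
    ex (x * j) * ∑ k ∈ Finset.Icc (-(N : ℤ)) N, (a k : ℂ) * ex (x * k) =
      ∑ k ∈ Finset.Icc (-(N : ℤ)) (N + 2), (a (k - j) : ℂ) * ex (x * k) := by
  have h1 : ∑ k ∈ Finset.Icc (-(N : ℤ)) (N + 2), (a (k - j) : ℂ) * ex (x * k) =
      ∑' k : ℤ, (a (k - j) : ℂ) * ex (x * k) := by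
    refine (tsum_eq_sum fun k hk => ?_).symm
    rw [ha, Complex.ofReal_zero, zero_mul]
    rw [Finset.mem_Icc, not_and_or, not_le, not_le] at hk
    rw [lt_abs]; omega
  have h2 : ∑ k ∈ Finset.Icc (-(N : ℤ)) N, (a k : ℂ) * ex (x * (k + j)) =
      ∑' k : ℤ, (a k : ℂ) * ex (x * (k + j)) := by
    refine (tsum_eq_sum fun k hk => ?_).symm
    rw [ha, Complex.ofReal_zero, zero_mul]
    rw [Finset.mem_Icc, not_and_or, not_le, not_le] at hk
    rw [lt_abs]; omega
  rw [h1, ← (Equiv.addRight j).tsum_eq]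
  simp only [Equiv.coe_addRight, add_sub_cancel_right, Int.cast_add]
  rw [← h2, Finset.mul_sum]
  refine Finset.sum_congr rfl fun k _ => ?_
  rw [mul_add, ex_add]; ring

/-- Double summation by parts. -/
lemma sum_osc (N : ℕ) (a : ℤ → ℝ) (ha : ∀ k, (N : ℤ) < |k| → a k = 0) (D : ℝ)
    (hD : ∀ k, |a k - 2 * a (k - 1) + a (k - 2)| ≤ D) (x : ℝ) :
    ‖∑ k ∈ Finset.Icc (-(N : ℤ)) N, (a k : ℂ) * ex (x * k)‖ * ‖1 - ex x‖ ^ 2 ≤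
      (2 * N + 3) * D := by
  have h0 := shift_sum N a ha x 0 le_rfl (by norm_num)
  have h1 := shift_sum N a ha x 1 (by norm_num) (by norm_num)
  have h2 := shift_sum N a ha x 2 (by norm_num) le_rfl
  rw [← norm_pow, ← norm_mul]
  set S := ∑ k ∈ Finset.Icc (-(N : ℤ)) N, (a k : ℂ) * ex (x * k) with hS
  have e2 : ex (x * ((2 : ℤ) : ℝ)) = ex x ^ 2 := by
    rw [pow_two, ← ex_add]; congr 1; push_cast; ring
  have e1 : ex (x * ((1 : ℤ) : ℝ)) = ex x := by simp
  have e0 : ex (x * ((0 : ℤ) : ℝ)) = 1 := by simp [ex_zero]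
  rw [e0] at h0; rw [e1] at h1; rw [e2] at h2
  have key : S * (1 - ex x) ^ 2 = ∑ k ∈ Finset.Icc (-(N : ℤ)) (N + 2),
      ((a k - 2 * a (k - 1) + a (k - 2) : ℝ) : ℂ) * ex (x * k) := by
    have : S * (1 - ex x) ^ 2 = 1 * S - 2 * (ex x * S) + ex x ^ 2 * S := by ring
    rw [this, h0, h1, h2, Finset.mul_sum, ← Finset.sum_sub_distrib, ← Finset.sum_add_distrib]
    refine Finset.sum_congr rfl fun k _ => ?_
    push_cast; rw [sub_zero]; ring
  rw [key]
  refine (norm_sum_le _ _).trans ?_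
  have : ∀ k ∈ Finset.Icc (-(N : ℤ)) (N + 2),
      ‖((a k - 2 * a (k - 1) + a (k - 2) : ℝ) : ℂ) * ex (x * k)‖ ≤ D := by
    intro k _
    rw [norm_mul, norm_ex, mul_one, Complex.norm_real]; exact hD k
  refine (Finset.sum_le_card_nsmul _ _ _ this).trans ?_
  rw [Int.card_Icc, nsmul_eq_mul]
  have : (((N : ℤ) + 2 + 1 - -(N : ℤ)).toNat : ℝ) = 2 * N + 3 := by
    have : ((N : ℤ) + 2 + 1 - -(N : ℤ)).toNat = 2 * N + 3 := by omega
    rw [this]; push_cast; ring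
  rw [this]

/-- A cut-off function: values in `[0,1]`, supported in `[-2,2]`, with first and second
differences of the size a bounded second derivative would give. -/
structure IsBump (ψ : ℝ → ℝ) (L : ℝ) : Prop where
  nonneg : ∀ x, 0 ≤ ψ x
  le_one : ∀ x, ψ x ≤ 1
  supp : ∀ x, 2 ≤ |x| → ψ x = 0
  lip : ∀ x y, |ψ x - ψ y| ≤ L * |x - y|
  diff2 : ∀ x u, |ψ (x + u) - 2 * ψ x + ψ (x - u)| ≤ L * u ^ 2

lemma IsBump.L_nonneg {ψ : ℝ → ℝ} {L : ℝ} (h : IsBump ψ L) : 0 ≤ L := by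
  have := (abs_nonneg _).trans (h.lip 1 0); simpa using this

lemma IsBump.continuous {ψ : ℝ → ℝ} {L : ℝ} (h : IsBump ψ L) : Continuous ψ := by
  have : LipschitzWith ⟨L, h.L_nonneg⟩ ψ := LipschitzWith.of_dist_le_mul fun x y => by
    rw [Real.dist_eq, Real.dist_eq]; exact h.lip x y
  exact this.continuous

/-- The signed distance to the nearest integer. -/
noncomputable def sfr (θ : ℝ) : ℝ := θ - round θ

lemma abs_sfr (θ : ℝ) : |sfr θ| ≤ 1 / 2 := abs_sub_round θ

/-- The one-dimensional bound for smoothly weighted exponential sums. -/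
lemma sum_bump {ψ : ℝ → ℝ} {L : ℝ} (hψ : IsBump ψ L) (r : ℝ) (hr : 1 ≤ r) (h : ℤ) (θ : ℝ) :
    ‖∑ k ∈ Finset.Icc (-(⌈2 * r⌉₊ : ℤ)) ⌈2 * r⌉₊, ((ψ (k / r) * ψ ((k + h) / r) : ℝ) : ℂ) *
      ex (2 * Real.pi * θ * k)‖ ≤ (7 + 2 * L + 2 * L ^ 2) * r / (1 + (r * sfr θ) ^ 2) := by
  set N := ⌈2 * r⌉₊ with hN
  have hr0 : 0 < r := by linarith
  have hN1 : 2 * r ≤ N := Nat.le_ceil _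
  have hN2 : (N : ℝ) ≤ 3 * r := by
    have := Nat.ceil_lt_add_one (a := 2 * r) (by positivity)
    linarith
  have hL := hψ.L_nonneg
  set a : ℤ → ℝ := fun k => ψ (k / r) * ψ ((k + h) / r) with ha
  have ha1 : ∀ k, |a k| ≤ 1 := by
    intro k
    have h1 := hψ.nonneg (k / r); have h2 := hψ.nonneg ((k + h) / r)
    rw [abs_of_nonneg (mul_nonneg h1 h2)]
    exact mul_le_one₀ (hψ.le_one _) h2 (hψ.le_one _)
  have ha0 : ∀ k, (N : ℤ) < |k| → a k = 0 := by
    intro k hk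
    have : ψ (k / r) = 0 := by
      apply hψ.supp
      rw [abs_div, abs_of_pos hr0, le_div_iff₀ hr0]
      have : (N : ℝ) < |(k : ℝ)| := by exact_mod_cast hk
      linarith
    rw [ha]; simp only; rw [this, zero_mul]
  have hs : ∑ k ∈ Finset.Icc (-(N : ℤ)) N, (a k : ℂ) * ex (2 * Real.pi * θ * k) =
      ∑ k ∈ Finset.Icc (-(N : ℤ)) N, (a k : ℂ) * ex (2 * Real.pi * sfr θ * k) := by
    refine Finset.sum_congr rfl fun k _ => ?_
    have : 2 * Real.pi * θ * k = 2 * Real.pi * sfr θ * k + 2 * Real.pi * ((round θ * k : ℤ) : ℝ) := by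
      unfold sfr; push_cast; ring
    rw [this, ex_add, ex_int, mul_one]
  have hD : ∀ k : ℤ, |a k - 2 * a (k - 1) + a (k - 2)| ≤ (2 * L + 2 * L ^ 2) / r ^ 2 := by
    have gen : ∀ x y : ℝ, |ψ (x + 1 / r) * ψ (y + 1 / r) - 2 * (ψ x * ψ y)
        + ψ (x - 1 / r) * ψ (y - 1 / r)| ≤ (2 * L + 2 * L ^ 2) / r ^ 2 := by
      intro x y
      have p2 := hψ.diff2 x (1 / r)
      have q2 := hψ.diff2 y (1 / r)
      have p1 := hψ.lip (x + 1 / r) (x - 1 / r)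
      have q1 := hψ.lip y (y - 1 / r)
      have hu : |1 / r| = 1 / r := abs_of_pos (by positivity)
      have e1 : x + 1 / r - (x - 1 / r) = 2 * (1 / r) := by ring
      have e2 : y - (y - 1 / r) = 1 / r := by ring
      rw [e1, abs_mul, hu, abs_two] at p1
      rw [e2, hu] at q1
      have hid : ψ (x + 1 / r) * ψ (y + 1 / r) - 2 * (ψ x * ψ y)
          + ψ (x - 1 / r) * ψ (y - 1 / r) =
          (ψ (x + 1 / r) - 2 * ψ x + ψ (x - 1 / r)) * ψ y +
          ψ (x + 1 / r) * (ψ (y + 1 / r) - 2 * ψ y + ψ (y - 1 / r)) +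
          (ψ (x + 1 / r) - ψ (x - 1 / r)) * (ψ y - ψ (y - 1 / r)) := by ring
      rw [hid]
      have b1 : |(ψ (x + 1 / r) - 2 * ψ x + ψ (x - 1 / r)) * ψ y| ≤ L * (1 / r) ^ 2 * 1 := by
        rw [abs_mul]
        exact mul_le_mul p2 (by rw [abs_of_nonneg (hψ.nonneg _)]; exact hψ.le_one _)
          (abs_nonneg _) (by positivity)
      have b2 : |ψ (x + 1 / r) * (ψ (y + 1 / r) - 2 * ψ y + ψ (y - 1 / r))| ≤
          1 * (L * (1 / r) ^ 2) := by
        rw [abs_mul]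
        exact mul_le_mul (by rw [abs_of_nonneg (hψ.nonneg _)]; exact hψ.le_one _) q2
          (abs_nonneg _) zero_le_one
      have b3 : |(ψ (x + 1 / r) - ψ (x - 1 / r)) * (ψ y - ψ (y - 1 / r))| ≤
          (L * (2 * (1 / r))) * (L * (1 / r)) := by
        rw [abs_mul]
        exact mul_le_mul p1 q1 (abs_nonneg _) (by positivity)
      refine (abs_add_three _ _ _).trans ((add_le_add (add_le_add b1 b2) b3).trans (le_of_eq ?_))
      field_simp; ring
    intro k
    have := gen ((k - 1) / r) ((k - 1 + h) / r)
    have e1 : ((k : ℝ) - 1) / r + 1 / r = k / r := by ring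
    have e2 : ((k : ℝ) - 1 + h) / r + 1 / r = (k + h) / r := by ring
    have e3 : ((k : ℝ) - 1) / r - 1 / r = (k - 2) / r := by ring
    have e4 : ((k : ℝ) - 1 + h) / r - 1 / r = (k - 2 + h) / r := by ring
    rw [e1, e2, e3, e4] at this
    simpa [ha] using this
  have main1 := sum_osc N a ha0 _ hD (2 * Real.pi * sfr θ)
  have main2 : ‖∑ k ∈ Finset.Icc (-(N : ℤ)) N, (a k : ℂ) * ex (2 * Real.pi * sfr θ * k)‖
      ≤ 7 * r := by
    refine (norm_sum_le _ _).trans ?_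
    have : ∀ k ∈ Finset.Icc (-(N : ℤ)) N, ‖(a k : ℂ) * ex (2 * Real.pi * sfr θ * k)‖ ≤ 1 := by
      intro k _
      rw [norm_mul, norm_ex, mul_one, Complex.norm_real]; exact ha1 k
    refine (Finset.sum_le_card_nsmul _ _ _ this).trans ?_
    rw [Int.card_Icc, nsmul_eq_mul]
    have : (((N : ℤ) + 1 - -(N : ℤ)).toNat : ℝ) = 2 * N + 1 := by
      have : ((N : ℤ) + 1 - -(N : ℤ)).toNat = 2 * N + 1 := by omega
      rw [this]; push_cast; ring
    rw [this]; linarith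
  change ‖∑ k ∈ Finset.Icc (-(N : ℤ)) N, (a k : ℂ) * ex (2 * Real.pi * θ * k)‖ ≤ _
  rw [hs]
  set S := ‖∑ k ∈ Finset.Icc (-(N : ℤ)) N, (a k : ℂ) * ex (2 * Real.pi * sfr θ * k)‖ with hS
  have hS0 : 0 ≤ S := norm_nonneg _
  have h4 := norm_one_sub_ex (sfr θ) (abs_sfr θ)
  have h5 : S * (16 * sfr θ ^ 2) ≤ (2 * N + 3) * ((2 * L + 2 * L ^ 2) / r ^ 2) := by
    refine le_trans ?_ main1
    refine mul_le_mul_of_nonneg_left ?_ hS0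
    calc 16 * sfr θ ^ 2 = (4 * |sfr θ|) ^ 2 := by rw [mul_pow, sq_abs]; norm_num
      _ ≤ _ := pow_le_pow_left₀ (by positivity) h4 2
  have h6 : S * (16 * (r * sfr θ) ^ 2) ≤ 9 * r * (2 * L + 2 * L ^ 2) := by
    calc S * (16 * (r * sfr θ) ^ 2) = S * (16 * sfr θ ^ 2) * r ^ 2 := by ring
      _ ≤ (2 * N + 3) * ((2 * L + 2 * L ^ 2) / r ^ 2) * r ^ 2 := by gcongr
      _ = (2 * N + 3) * (2 * L + 2 * L ^ 2) := by field_simp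
      _ ≤ 9 * r * (2 * L + 2 * L ^ 2) := by
        refine mul_le_mul_of_nonneg_right (by linarith) (by positivity)
  rw [le_div_iff₀ (by positivity)]
  have : 0 ≤ r * (2 * L + 2 * L ^ 2) := by positivity
  nlinarith

end LPR

/-! ### Weyl differencing -/

namespace LPR
open Matrix MeasureTheory Filter
open scoped ENNReal

variable {d : ℕ}

/-- The integer points of the cube `[-N, N]^d`. -/
noncomputable def boxZ (d N : ℕ) : Finset (Fin d → ℤ) :=
  Fintype.piFinset fun _ : Fin d => Finset.Icc (-(N : ℤ)) N

lemma mem_boxZ {N : ℕ} {m : Fin d → ℤ} : m ∈ boxZ d N ↔ ∀ i, |m i| ≤ N := by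
  simp [boxZ, abs_le]

/-- The smoothly weighted exponential sum `∑ w(m/r) e^{itQ[m-M]}`, `w(x) = ∏ ψ(x_i)`. -/
noncomputable def Ssum (Q : Matrix (Fin d) (Fin d) ℝ) (M : Fin d → ℝ) (ψ : ℝ → ℝ) (r t : ℝ) : ℂ :=
  ∑ m ∈ boxZ d ⌈2 * r⌉₊, ((∏ i, ψ (m i / r) : ℝ) : ℂ) * ex (t * quadForm Q (intVec m - M))

lemma quadForm_add (Q : Matrix (Fin d) (Fin d) ℝ) (hQ : Q.IsSymm) (x h : Fin d → ℝ) :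
    quadForm Q (x + h) = quadForm Q x + 2 * (Q *ᵥ h ⬝ᵥ x) + quadForm Q h := by
  have e : ∀ y, quadForm Q y = Q *ᵥ y ⬝ᵥ y := fun y => rfl
  have hs : Q *ᵥ x ⬝ᵥ h = Q *ᵥ h ⬝ᵥ x := by
    rw [dotProduct_comm, dotProduct_mulVec, ← mulVec_transpose, hQ.eq]
  rw [e, e, e, mulVec_add, add_dotProduct, dotProduct_add, dotProduct_add, hs]; ring

/-- The vector `t B h`, `B = π⁻¹ Q`: the linear frequencies, in units of `2π`, that remain after
differencing `e^{itQ[x]}` with shift `h`. -/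
noncomputable def phase (Q : Matrix (Fin d) (Fin d) ℝ) (t : ℝ) (h : Fin d → ℤ) (i : Fin d) : ℝ :=
  t * ((Real.pi⁻¹ • Q) *ᵥ intVec h) i

lemma phase_sub (Q : Matrix (Fin d) (Fin d) ℝ) (t : ℝ) (h h' : Fin d → ℤ) (i : Fin d) :
    phase Q t (h - h') i = phase Q t h i - phase Q t h' i := by
  unfold phase
  have : intVec (h - h') = intVec h - intVec h' := by ext; simp [intVec]
  rw [this, mulVec_sub, Pi.sub_apply]; ring

/-- Weyl differencing. -/
lemma weyl_diff {ψ : ℝ → ℝ} {L : ℝ} (hψ : IsBump ψ L) (Q : Matrix (Fin d) (Fin d) ℝ)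
    (hQ : Q.IsSymm) (M : Fin d → ℝ) (r t : ℝ) (hr : 1 ≤ r) :
    ‖Ssum Q M ψ r t‖ ^ 2 ≤ ∑ h ∈ boxZ d (2 * ⌈2 * r⌉₊),
      ∏ i, ((7 + 2 * L + 2 * L ^ 2) * r / (1 + (r * sfr (phase Q t h i)) ^ 2)) := by
  set N := ⌈2 * r⌉₊ with hN
  have hr0 : 0 < r := by linarith
  have hN1 : 2 * r ≤ N := Nat.le_ceil _
  set w : (Fin d → ℤ) → ℝ := fun m => ∏ i, ψ (m i / r) with hw
  have hw0 : ∀ m, m ∉ boxZ d N → w m = 0 := by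
    intro m hm
    rw [mem_boxZ] at hm
    push Not at hm
    obtain ⟨i, hi⟩ := hm
    refine Finset.prod_eq_zero (Finset.mem_univ i) (hψ.supp _ ?_)
    rw [abs_div, abs_of_pos hr0, le_div_iff₀ hr0]
    have : (N : ℝ) < |(m i : ℝ)| := by exact_mod_cast hi
    linarith
  set q : (Fin d → ℤ) → ℝ := fun m => quadForm Q (intVec m - M) with hq
  have e1 : ((‖Ssum Q M ψ r t‖ ^ 2 : ℝ) : ℂ) = ∑ m ∈ boxZ d N, ∑ m' ∈ boxZ d N,
      ((w m * w m' : ℝ) : ℂ) * ex (t * q m' - t * q m) := by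
    rw [Complex.ofReal_pow, ← Complex.conj_mul']
    unfold Ssum
    rw [map_sum, Finset.sum_mul_sum]
    refine Finset.sum_congr rfl fun m _ => Finset.sum_congr rfl fun m' _ => ?_
    rw [map_mul, Complex.conj_ofReal, conj_ex, sub_eq_neg_add (t * q m'), ex_add]
    push_cast [hw, hq]; ring
  have e2 : ∀ m ∈ boxZ d N, ∑ m' ∈ boxZ d N, ((w m * w m' : ℝ) : ℂ) * ex (t * q m' - t * q m) =
      ∑ h ∈ boxZ d (2 * N), ((w m * w (m + h) : ℝ) : ℂ) * ex (t * q (m + h) - t * q m) := by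
    intro m hm
    have h1 : ∑ m' ∈ boxZ d N, ((w m * w m' : ℝ) : ℂ) * ex (t * q m' - t * q m) =
        ∑' m', ((w m * w m' : ℝ) : ℂ) * ex (t * q m' - t * q m) := by
      refine (tsum_eq_sum fun m' hm' => ?_).symm
      rw [hw0 m' hm']; simp
    rw [h1, ← (Equiv.addLeft m).tsum_eq]
    refine tsum_eq_sum fun h hh => ?_
    rw [Equiv.coe_addLeft, hw0 (m + h)]
    · simp
    · intro hmem
      apply hh
      rw [mem_boxZ] at *
      intro i
      have a1 := hm i; have a2 := hmem i
      rw [Pi.add_apply] at a2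
      rw [abs_le] at *
      push_cast
      constructor <;> omega
  rw [Finset.sum_congr rfl e2, Finset.sum_comm] at e1
  have e3 : ‖Ssum Q M ψ r t‖ ^ 2 = ‖((‖Ssum Q M ψ r t‖ ^ 2 : ℝ) : ℂ)‖ := by
    rw [Complex.norm_real, Real.norm_of_nonneg (by positivity)]
  rw [e3, e1]
  refine (norm_sum_le _ _).trans (Finset.sum_le_sum fun h _ => ?_)
  have e4 : ∑ m ∈ boxZ d N, ((w m * w (m + h) : ℝ) : ℂ) * ex (t * q (m + h) - t * q m) =
      ex (t * (quadForm Q (intVec h) - 2 * (Q *ᵥ intVec h ⬝ᵥ M))) *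
      ∏ i, ∑ k ∈ Finset.Icc (-(N : ℤ)) N, ((ψ (k / r) * ψ ((k + h i) / r) : ℝ) : ℂ) *
        ex (2 * Real.pi * phase Q t h i * k) := by
    rw [Finset.prod_univ_sum, Finset.mul_sum]
    refine Finset.sum_congr rfl fun m _ => ?_
    rw [Finset.prod_mul_distrib, ← ex_sum, mul_left_comm, ← ex_add]
    congr 1
    · rw [hw, ← Complex.ofReal_prod, Finset.prod_mul_distrib]
      simp
    · congr 1
      have a1 : intVec (m + h) - M = (intVec m - M) + intVec h := by
        ext i; simp [intVec]; ring
      rw [hq]; simp only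
      rw [a1, quadForm_add Q hQ, dotProduct_sub]
      have a2 : ∑ i, 2 * Real.pi * phase Q t h i * (m i : ℝ) =
          2 * t * (Q *ᵥ intVec h ⬝ᵥ intVec m) := by
        unfold phase dotProduct
        rw [Finset.mul_sum]
        refine Finset.sum_congr rfl fun i _ => ?_
        rw [smul_mulVec, Pi.smul_apply, smul_eq_mul]
        have hpi : Real.pi ≠ 0 := Real.pi_ne_zero
        unfold intVec
        field_simp
      rw [a2]; ring
  rw [e4, norm_mul, norm_ex, one_mul, norm_prod]
  exact Finset.prod_le_prod (fun _ _ => norm_nonneg _) fun i _ => sum_bump hψ r hr (h i) _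

/-- The shifts `h` of size at most `c r` for which all phases are within `c / r` of integers. -/
noncomputable def Hs (Q : Matrix (Fin d) (Fin d) ℝ) (c r t : ℝ) : Finset (Fin d → ℤ) :=
  (boxZ d ⌈c * r⌉₊).filter fun h => ∀ i, |(h i : ℝ)| ≤ c * r ∧ |sfr (phase Q t h i)| ≤ c / r

lemma mem_Hs (Q : Matrix (Fin d) (Fin d) ℝ) (c r t : ℝ) (h : Fin d → ℤ) :
    h ∈ Hs Q c r t ↔ ∀ i, |(h i : ℝ)| ≤ c * r ∧ |sfr (phase Q t h i)| ≤ c / r := by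
  unfold Hs
  rw [Finset.mem_filter, and_iff_right_iff_imp, mem_boxZ]
  intro H i
  have := (H i).1.trans (Nat.le_ceil (c * r))
  exact_mod_cast this

lemma sfr_sub (x y : ℝ) : |sfr (x - y)| ≤ |sfr x - sfr y| := by
  have := round_le (x - y) (round x - round y)
  unfold sfr
  refine this.trans (le_of_eq ?_)
  congr 1; push_cast; ring

lemma summable_inv_sq : Summable fun k : ℤ => 1 / (1 + (k : ℝ) ^ 2) := by
  have h : Summable fun k : ℤ => 1 / |(k : ℝ)| ^ (2 : ℝ) + if k = 0 then (1 : ℝ) else 0 := by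
    refine Summable.add ?_ ?_
    · exact (Real.summable_one_div_int_pow (p := 2)).2 one_lt_two |>.congr fun k => by
        rw [Real.rpow_two, sq_abs]
    · exact summable_of_ne_finset_zero (s := {0}) fun k hk => by simp at hk; simp [hk]
  refine Summable.of_nonneg_of_le (fun k => by positivity) (fun k => ?_) h
  by_cases hk : k = 0
  · simp [hk]
  · simp only [hk, if_false, add_zero]
    rw [Real.rpow_two, sq_abs]
    have : 0 < (k : ℝ) ^ 2 := by positivity
    gcongr; linarith

/-- Weyl's inequality in the averaged form `|S|² ≤ C r^d #{h}`, uniformly in the shift `M`. -/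
theorem weyl (d : ℕ) (L c : ℝ) (hL : 0 ≤ L) (hc : 0 < c) (hc1 : c ≤ 1) :
    ∃ C : ℝ, 0 ≤ C ∧ ∀ (ψ : ℝ → ℝ), IsBump ψ L → ∀ (Q : Matrix (Fin d) (Fin d) ℝ), Q.IsSymm →
      ∀ (M : Fin d → ℝ) (r t : ℝ), 1 ≤ r →
        ‖Ssum Q M ψ r t‖ ^ 2 ≤ C * r ^ d * (Hs Q c r t).card := by
  set Z : ℝ := ∑' k : ℤ, 1 / (1 + (k : ℝ) ^ 2) with hZ
  have hZ0 : 0 ≤ Z := tsum_nonneg fun k => by positivity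
  set A : ℝ := 7 + 2 * L + 2 * L ^ 2 with hA
  have hA0 : 0 ≤ A := by positivity
  set P1 := boxZ d (⌈6 / c⌉₊ + 1) with hP1
  refine ⟨(P1.card : ℝ) * ((A * (3 / c ^ 2)) * Z) ^ d, by positivity, ?_⟩
  intro ψ hψ Q hQ M r t hr
  have hr0 : 0 < r := by linarith
  refine (weyl_diff hψ Q hQ M r t hr).trans ?_
  set N := ⌈2 * r⌉₊ with hN
  have hN2 : (N : ℝ) ≤ 3 * r := by
    have := Nat.ceil_lt_add_one (a := 2 * r) (by positivity)
    linarith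
  set P2 := boxZ d (⌈r / c⌉₊ + 1) with hP2
  set s : (Fin d → ℤ) → Fin d → ℝ := fun h i => sfr (phase Q t h i) with hs
  set key : (Fin d → ℤ) → (Fin d → ℤ) × (Fin d → ℤ) := fun h =>
    (fun i => ⌊(h i : ℝ) / (c * r)⌋, fun i => ⌊r * s h i / c⌋) with hkey
  have hfl : ∀ (x : ℝ) (K : ℕ), |x| ≤ K → |⌊x⌋| ≤ ((K + 1 : ℕ) : ℤ) := by
    intro x K hx
    rw [abs_le] at hx ⊢
    constructor
    · rw [Int.le_floor]; push_cast; linarith [hx.1]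
    · have : ⌊x⌋ ≤ (K : ℤ) := Int.floor_le_iff.2 (by push_cast; linarith [hx.2])
      push_cast; linarith
  have hmaps : ∀ h ∈ boxZ d (2 * N), key h ∈ P1 ×ˢ P2 := by
    intro h hh
    rw [mem_boxZ] at hh
    rw [Finset.mem_product, hP1, hP2, mem_boxZ, mem_boxZ]
    constructor
    · intro i
      apply hfl
      refine le_trans ?_ (Nat.le_ceil (6 / c))
      rw [abs_div, abs_of_pos (mul_pos hc hr0), div_le_div_iff₀ (by positivity) hc]
      have : |(h i : ℝ)| ≤ ((2 * N : ℕ) : ℝ) := by exact_mod_cast hh i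
      push_cast at this
      nlinarith
    · intro i
      apply hfl
      refine le_trans ?_ (Nat.le_ceil (r / c))
      rw [abs_div, abs_of_pos hc, abs_mul, abs_of_pos hr0]
      have := abs_sfr (phase Q t h i)
      gcongr
      change r * |sfr (phase Q t h i)| ≤ r
      nlinarith
  rw [← Finset.sum_fiberwise_of_maps_to hmaps]
  set g : (Fin d → ℤ) → ℝ := fun j => ∏ i, (A * (3 / c ^ 2)) * (1 / (1 + (j i : ℝ) ^ 2)) with hg
  have hg0 : ∀ j, 0 ≤ g j := fun j => Finset.prod_nonneg fun i _ => by positivity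
  have hfib : ∀ p ∈ P1 ×ˢ P2, ∑ h ∈ boxZ d (2 * N) with key h = p,
      ∏ i, (A * r / (1 + (r * s h i) ^ 2)) ≤ (Hs Q c r t).card * (r ^ d * g p.2) := by
    intro p _
    have h1 : ∀ h ∈ (boxZ d (2 * N)).filter (fun h => key h = p),
        ∏ i, (A * r / (1 + (r * s h i) ^ 2)) ≤ r ^ d * g p.2 := by
      intro h hh
      have hk := (Finset.mem_filter.1 hh).2
      have : r ^ d * g p.2 = ∏ i, (r * ((A * (3 / c ^ 2)) * (1 / (1 + (p.2 i : ℝ) ^ 2)))) := by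
        rw [Finset.prod_mul_distrib]; simp [hg]
      rw [this]
      refine Finset.prod_le_prod (fun i _ => by positivity) fun i _ => ?_
      have hj : (p.2 i : ℤ) = ⌊r * s h i / c⌋ := by rw [← hk]
      have b1 : (p.2 i : ℝ) ≤ r * s h i / c := by rw [hj]; exact Int.floor_le _
      have b2 : r * s h i / c < p.2 i + 1 := by rw [hj]; exact Int.lt_floor_add_one _
      set x := r * s h i / c with hx
      have hxs : r * s h i = c * x := by rw [hx]; field_simp
      have b3 : 1 + (p.2 i : ℝ) ^ 2 ≤ 3 * (1 + x ^ 2) := by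
        have : |(p.2 i : ℝ)| ≤ |x| + 1 := by
          rw [abs_le]; constructor
          · have := neg_abs_le x; linarith
          · have := le_abs_self x; linarith
        have h4 : (p.2 i : ℝ) ^ 2 ≤ (|x| + 1) ^ 2 := by
          rw [← sq_abs]; exact pow_le_pow_left₀ (abs_nonneg _) this 2
        nlinarith [sq_abs x, sq_nonneg (|x| - 1)]
      have b4 : 1 + x ^ 2 ≤ (1 + (c * x) ^ 2) / c ^ 2 := by
        rw [le_div_iff₀ (by positivity)]
        have : c ^ 2 ≤ 1 := pow_le_one₀ hc.le hc1
        nlinarith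
      rw [hxs]
      have b5 : 1 / (1 + (c * x) ^ 2) ≤ 3 / c ^ 2 * (1 / (1 + (p.2 i : ℝ) ^ 2)) := by
        rw [div_mul_div_comm, mul_one, div_le_div_iff₀ (by positivity) (by positivity), one_mul]
        calc c ^ 2 * (1 + (p.2 i : ℝ) ^ 2) ≤ c ^ 2 * (3 * ((1 + (c * x) ^ 2) / c ^ 2)) := by
              gcongr; linarith
          _ = 3 * (1 + (c * x) ^ 2) := by field_simp
      calc A * r / (1 + (c * x) ^ 2) = (A * r) * (1 / (1 + (c * x) ^ 2)) := by ring
        _ ≤ (A * r) * (3 / c ^ 2 * (1 / (1 + (p.2 i : ℝ) ^ 2))) := by gcongr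
        _ = _ := by ring
    refine (Finset.sum_le_card_nsmul _ _ _ h1).trans ?_
    rw [nsmul_eq_mul]
    have hnn : 0 ≤ r ^ d * g p.2 := mul_nonneg (by positivity) (hg0 _)
    refine mul_le_mul_of_nonneg_right ?_ hnn
    rw [Nat.cast_le]
    by_cases hne : ((boxZ d (2 * N)).filter fun h => key h = p).Nonempty
    · obtain ⟨h0, hh0⟩ := hne
      refine Finset.card_le_card_of_injOn (fun h => h - h0) ?_ fun x _ y _ hxy =>
        sub_left_injective hxy
      intro h hh
      have k0 := (Finset.mem_filter.1 hh0).2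
      have k1 := (Finset.mem_filter.1 hh).2
      rw [Finset.mem_coe, mem_Hs]
      have fl : ∀ x y : ℝ, ⌊x⌋ = ⌊y⌋ → |x - y| ≤ 1 := fun x y hxy =>
        (Int.abs_sub_lt_one_of_floor_eq_floor hxy).le
      intro i
      constructor
      · have := fl ((h i : ℝ) / (c * r)) ((h0 i : ℝ) / (c * r))
          (congrFun (congrArg Prod.fst (k1.trans k0.symm)) i)
        rw [← sub_div, abs_div, abs_of_pos (mul_pos hc hr0), div_le_one (by positivity)] at this
        simpa using this
      · have := fl (r * s h i / c) (r * s h0 i / c)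
          (congrFun (congrArg Prod.snd (k1.trans k0.symm)) i)
        rw [← sub_div, ← mul_sub, abs_div, abs_mul, abs_of_pos hr0, abs_of_pos hc,
          div_le_one hc] at this
        rw [phase_sub]
        refine (sfr_sub _ _).trans ?_
        rw [le_div_iff₀ hr0]; linarith
    · rw [Finset.not_nonempty_iff_eq_empty.1 hne]; simp
  refine (Finset.sum_le_sum hfib).trans ?_
  rw [Finset.sum_product]
  simp only []
  rw [Finset.sum_const, nsmul_eq_mul, ← Finset.mul_sum, ← Finset.mul_sum]
  have hgs : ∑ j ∈ P2, g j ≤ ((A * (3 / c ^ 2)) * Z) ^ d := by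
    rw [hg, hP2]; unfold boxZ
    rw [← Finset.prod_univ_sum (fun _ : Fin d => Finset.Icc (-((⌈r / c⌉₊ + 1 : ℕ) : ℤ))
      ((⌈r / c⌉₊ + 1 : ℕ) : ℤ)) (fun _ k => (A * (3 / c ^ 2)) * (1 / (1 + (k : ℝ) ^ 2)))]
    rw [Finset.prod_const, Finset.card_univ, Fintype.card_fin, ← Finset.mul_sum]
    have : ∑ k ∈ Finset.Icc (-((⌈r / c⌉₊ + 1 : ℕ) : ℤ)) ((⌈r / c⌉₊ + 1 : ℕ) : ℤ),
        1 / (1 + (k : ℝ) ^ 2) ≤ Z :=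
      summable_inv_sq.sum_le_tsum _ fun k _ => by positivity
    have h0 : 0 ≤ ∑ k ∈ Finset.Icc (-((⌈r / c⌉₊ + 1 : ℕ) : ℤ)) ((⌈r / c⌉₊ + 1 : ℕ) : ℤ),
        1 / (1 + (k : ℝ) ^ 2) := Finset.sum_nonneg fun k _ => by positivity
    gcongr
  calc (P1.card : ℝ) * ((Hs Q c r t).card * (r ^ d * ∑ j ∈ P2, g j))
      ≤ (P1.card : ℝ) * ((Hs Q c r t).card * (r ^ d * ((A * (3 / c ^ 2)) * Z) ^ d)) := by gcongr
    _ = _ := by ring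

end LPR

/-! ### Minor arcs -/

namespace LPR
open Matrix MeasureTheory Filter
open scoped ENNReal

variable {d : ℕ}

lemma gdet_smul {m κ : Type} [Fintype m] [Fintype κ] [DecidableEq κ] (k : ℝ) (W : Matrix m κ ℝ) :
    gdet (k • W) = (k ^ 2) ^ Fintype.card κ * gdet W := by
  unfold gdet
  rw [transpose_smul, Matrix.smul_mul, Matrix.mul_smul, smul_smul, ← pow_two, det_smul]

/-- The pairs `(m, h)`, `m` the nearest integer vector to the phases of `h`. -/
noncomputable def liftH (Q : Matrix (Fin d) (Fin d) ℝ) (t : ℝ) (h : Fin d → ℤ) :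
    Fin d ⊕ Fin d → ℤ := Sum.elim (fun i => round (phase Q t h i)) h

/-- The number of near-coincidences is controlled by the functions `alph` along the orbit of the
lattice `{(m, Bh)}` under `gmat`. -/
theorem minor (hd : 1 ≤ d) (b : ℝ) (hb : 0 < b) (hdb : 1 < d * b) (Q : Matrix (Fin d) (Fin d) ℝ)
    (hQ : IsUnit Q.det) (c : ℝ) (hc : 0 < c) (hc1 : c ≤ 1) (T ε : ℝ) (hε : 0 < ε) :
    ∃ (C : ℝ) (f : ℝ → ℝ → ℝ≥0∞), 0 ≤ C ∧ (∀ r, Measurable (f r)) ∧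
      (∀ r ≥ 1, ∀ t, ENNReal.ofReal ((Hs Q c r t).card ^ (2 * b) : ℝ) ≤ f r t) ∧
      ∀ r ≥ 1, ∫⁻ t in Set.Icc (-T) T, f r t ≤ ENNReal.ofReal (C * r ^ (2 * d * b - 2 + ε)) := by
  classical
  set B : Matrix (Fin d) (Fin d) ℝ := Real.pi⁻¹ • Q with hB
  have hBdet : IsUnit B.det := by
    rw [hB, det_smul]
    exact IsUnit.mul (isUnit_iff_ne_zero.2 (pow_ne_zero _ (inv_ne_zero Real.pi_ne_zero))) hQ
  set E : Matrix (Fin d ⊕ Fin d) (Fin d ⊕ Fin d) ℝ := fromBlocks 1 0 0 B with hE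
  have hEdet : IsUnit E.det := by
    rw [hE, det_fromBlocks_zero₂₁, det_one, one_mul]; exact hBdet
  obtain ⟨C0, hC0, hav⟩ := alph_average d b hb hdb E hEdet T ε hε
  set K : ℝ := 1 + ∑ i, ∑ j, |B i j| with hK
  have hK1 : 1 ≤ K := by
    have : 0 ≤ ∑ i, ∑ j, |B i j| := Finset.sum_nonneg fun _ _ => Finset.sum_nonneg fun _ _ =>
      abs_nonneg _
    linarith
  have hK0 : 0 < K := by linarith
  set C5 : ℝ := 25 ^ (2 * d) * ((2 * d).factorial * ((2 * d : ℕ) + 1 : ℝ) ^ (2 * d)) with hC5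
  have hC50 : 0 ≤ C5 := by positivity
  set C1 : ℝ := C5 * (K ^ 2) ^ (2 * d) with hC1
  have hC10 : 0 ≤ C1 := by positivity
  refine ⟨C1 ^ b * ((2 * d + 1) * C0), fun r t => ENNReal.ofReal (C1 ^ b) *
    ∑ i ∈ Finset.range (2 * d + 1), alph b i (gmat d r t * E), by positivity, ?_, ?_, ?_⟩
  · intro r
    exact (Finset.measurable_fun_sum _ fun i _ => measurable_alph d b i r E).const_mul _
  · intro r hr t
    have hr0 : 0 < r := by linarith
    set F := (Hs Q c r t).image (liftH Q t) with hF
    have hcard : F.card = (Hs Q c r t).card := by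
      refine Finset.card_image_of_injective _ fun x y hxy => ?_
      ext i; exact congrFun hxy (Sum.inr i)
    obtain ⟨i, hi, ℓ, hℓ, -, -, hcov⟩ := count_le_covol F
    have hi' : i ≤ 2 * d := by simpa [two_mul] using hi
    have h1 := hcov (Fin d ⊕ Fin d) (K⁻¹ • (gmat d r t * E)) ?_
    · rw [Matrix.smul_mul, gdet_smul, Fintype.card_fin, hcard] at h1
      have hc2 : Fintype.card (Fin d ⊕ Fin d) = 2 * d := by simp [two_mul]
      have hc2' : ((Fintype.card (Fin d ⊕ Fin d) : ℕ) : ℝ) = ((2 * d : ℕ) : ℝ) := by rw [hc2]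
      rw [hc2, ← hC5] at h1
      set N : ℝ := ((Hs Q c r t).card : ℝ) with hN
      have hN0 : 0 ≤ N := Nat.cast_nonneg _
      have hunit : IsUnit (gmat d r t * E).det := by
        rw [det_mul]; exact (isUnit_gmat d r t hr0.ne').mul hEdet
      set g := gdet (gmat d r t * E * zr ℓ) with hg
      have hg0 : 0 < g := lt_of_le_of_ne (gdet_nonneg _)
        (Ne.symm (gdet_mul_ne_zero _ _ hunit hℓ))
      have h2 : N ^ 2 * g ≤ C1 := by
        calc N ^ 2 * g = (N ^ 2 * ((K⁻¹ ^ 2) ^ i * g)) * (K ^ 2) ^ i := by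
              rw [inv_pow, inv_pow]; field_simp
          _ ≤ C5 * (K ^ 2) ^ i := by gcongr
          _ ≤ C5 * (K ^ 2) ^ (2 * d) := by
              gcongr
              exact one_le_pow₀ hK1
      have h3 : N ^ (2 * b) ≤ C1 ^ b * g ^ (-b) := by
        rw [Real.rpow_mul hN0, Real.rpow_neg hg0.le, ← div_eq_mul_inv, ← Real.div_rpow hC10 hg0.le]
        refine Real.rpow_le_rpow (by positivity) ?_ hb.le
        rw [le_div_iff₀ hg0, Real.rpow_two]; exact h2
      refine (ENNReal.ofReal_le_ofReal h3).trans ?_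
      rw [ENNReal.ofReal_mul (by positivity)]
      refine mul_le_mul_right ?_ _
      refine (le_alph b i _ ℓ hℓ).trans ?_
      exact Finset.single_le_sum (f := fun i => alph b i (gmat d r t * E)) (fun _ _ => zero_le)
        (Finset.mem_range.2 (by omega))
    · intro v hv a
      obtain ⟨h, hh, rfl⟩ := Finset.mem_image.1 hv
      rw [mem_Hs] at hh
      have hEv : E *ᵥ (fun j => (liftH Q t h j : ℝ)) =
          Sum.elim (fun i => ((round (phase Q t h i) : ℤ) : ℝ)) (B *ᵥ intVec h) := by
        rw [hE, fromBlocks_mulVec]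
        ext (j | j)
        · simp [liftH, Function.comp_def]
        · simp [liftH, Function.comp_def]; rfl
      have hBh : ∀ j, |(B *ᵥ intVec h) j| ≤ K * r := by
        intro j
        calc |(B *ᵥ intVec h) j| ≤ ∑ k, |B j k| * (c * r) := by
              change |∑ k, B j k * (h k : ℝ)| ≤ _
              refine (Finset.abs_sum_le_sum_abs _ _).trans (Finset.sum_le_sum fun k _ => ?_)
              rw [abs_mul]
              exact mul_le_mul_of_nonneg_left (hh k).1 (abs_nonneg _)
          _ = (∑ k, |B j k|) * (c * r) := by rw [Finset.sum_mul]
          _ ≤ K * r := by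
              have h1 : ∑ k, |B j k| ≤ K := by
                have := Finset.single_le_sum (f := fun i => ∑ k, |B i k|)
                  (fun i _ => Finset.sum_nonneg fun k _ => abs_nonneg _) (Finset.mem_univ j)
                linarith
              refine mul_le_mul h1 ?_ (by positivity) hK0.le
              nlinarith
      rw [smul_mulVec, Pi.smul_apply, smul_eq_mul, abs_mul, abs_inv, abs_of_pos hK0,
        inv_mul_le_iff₀ hK0, mul_one, ← mulVec_mulVec, hEv, gmat, fromBlocks_mulVec]
      rcases a with a | a
      · have e : phase Q t h a = t * (B *ᵥ intVec h) a := rfl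
        have h2 := (hh a).2
        unfold sfr at h2
        simp only [Sum.elim_inl, Sum.elim_comp_inl, Sum.elim_comp_inr]
        rw [Pi.add_apply, smul_mulVec, smul_mulVec, one_mulVec, one_mulVec, Pi.smul_apply,
          Pi.smul_apply, smul_eq_mul, smul_eq_mul]
        have e2 : r * ((round (phase Q t h a) : ℤ) : ℝ) + -(r * t) * (B *ᵥ intVec h) a =
            -(r * (phase Q t h a - round (phase Q t h a))) := by rw [e]; ring
        rw [e2, abs_neg, abs_mul, abs_of_pos hr0]
        calc r * |phase Q t h a - round (phase Q t h a)| ≤ r * (c / r) := by gcongr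
          _ = c := by field_simp
          _ ≤ K := by linarith
      · simp only [Sum.elim_inr, Sum.elim_comp_inl, Sum.elim_comp_inr]
        rw [Pi.add_apply, smul_mulVec, zero_mulVec, one_mulVec, Pi.zero_apply, zero_add,
          Pi.smul_apply, smul_eq_mul, abs_mul, abs_inv, abs_of_pos hr0, inv_mul_le_iff₀ hr0,
          mul_comm r K]
        exact hBh a
  · intro r hr
    have hr0 : 0 < r := by linarith
    rw [lintegral_const_mul _ (Finset.measurable_fun_sum _ fun i _ => measurable_alph d b i r E),
      lintegral_finsetSum _ fun i _ => measurable_alph d b i r E]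
    calc _ ≤ ENNReal.ofReal (C1 ^ b) * ∑ i ∈ Finset.range (2 * d + 1),
          ENNReal.ofReal (C0 * r ^ (2 * d * b - 2 + ε)) := by
          refine mul_le_mul_right (Finset.sum_le_sum fun i hi => ?_) _
          exact hav r hr i (by have := Finset.mem_range.1 hi; omega)
      _ = _ := by
          rw [Finset.sum_const, Finset.card_range, nsmul_eq_mul, ← ENNReal.ofReal_natCast,
            ← ENNReal.ofReal_mul (by positivity), ← ENNReal.ofReal_mul (by positivity)]
          congr 1; push_cast; ring

end LPR

/-! ### Parameters near rational matrices -/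

namespace LPR
open Matrix MeasureTheory Filter
open scoped ENNReal

variable {d : ℕ}

/-- The Gram determinant `det (1 + WᵀW)`. -/
noncomputable def dfun (W : Matrix (Fin d) (Fin d) ℝ) : ℝ := 
  gdet (fromRows (1 : Matrix (Fin d) (Fin d) ℝ) W)

/-- The nearest integer vectors to the phases pair symmetrically with the shifts. -/
lemma isotropy (Q : Matrix (Fin d) (Fin d) ℝ) (hQ : Q.IsSymm) (c r t : ℝ) (hr : 0 < r)
    (hc : 0 ≤ c) (hc2 : 2 * d * c ^ 2 < 1) (h h' : Fin d → ℤ) (hh : h ∈ Hs Q c r t)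
    (hh' : h' ∈ Hs Q c r t) :
    (fun i => round (phase Q t h i)) ⬝ᵥ h' = h ⬝ᵥ fun i => round (phase Q t h' i) := by
  rw [mem_Hs] at hh hh'
  set B : Matrix (Fin d) (Fin d) ℝ := Real.pi⁻¹ • Q with hB
  have hBs : Bᵀ = B := by rw [hB, transpose_smul, hQ.eq]
  have hsym : ∑ i, phase Q t h i * (h' i : ℝ) = ∑ i, (h i : ℝ) * phase Q t h' i := by
    have h1 : ∑ i, phase Q t h i * (h' i : ℝ) = t * (B *ᵥ intVec h ⬝ᵥ intVec h') := by
      rw [dotProduct, Finset.mul_sum]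
      exact Finset.sum_congr rfl fun i _ => by unfold phase intVec; ring
    have h2 : ∑ i, (h i : ℝ) * phase Q t h' i = t * (intVec h ⬝ᵥ B *ᵥ intVec h') := by
      rw [dotProduct, Finset.mul_sum]
      exact Finset.sum_congr rfl fun i _ => by unfold phase intVec; ring
    rw [h1, h2, dotProduct_mulVec, ← mulVec_transpose, hBs]
  have key : (((((fun i => round (phase Q t h i)) ⬝ᵥ h') -
      (h ⬝ᵥ fun i => round (phase Q t h' i)) : ℤ)) : ℝ) =
      ∑ i, ((h i : ℝ) * sfr (phase Q t h' i) - sfr (phase Q t h i) * h' i) := by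
    rw [Finset.sum_sub_distrib]
    unfold sfr
    simp only [mul_sub, sub_mul, Finset.sum_sub_distrib]
    rw [← hsym]
    unfold dotProduct
    push_cast; ring
  have hb : |(((((fun i => round (phase Q t h i)) ⬝ᵥ h') -
      (h ⬝ᵥ fun i => round (phase Q t h' i)) : ℤ)) : ℝ)| < 1 := by
    rw [key]
    calc _ ≤ ∑ i : Fin d, (2 * c ^ 2) := by
          refine (Finset.abs_sum_le_sum_abs _ _).trans (Finset.sum_le_sum fun i _ => ?_)
          refine (abs_sub _ _).trans ?_
          rw [abs_mul, abs_mul]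
          have a1 := mul_le_mul (hh i).1 (hh' i).2 (abs_nonneg _) (by positivity)
          have a2 := mul_le_mul (hh i).2 (hh' i).1 (abs_nonneg _) (by positivity)
          have e1 : c * r * (c / r) = c ^ 2 := by field_simp
          have e2 : c / r * (c * r) = c ^ 2 := by field_simp
          linarith
      _ = 2 * d * c ^ 2 := by rw [Finset.sum_const]; simp; ring
      _ < 1 := hc2
  have : |((fun i => round (phase Q t h i)) ⬝ᵥ h') -
      (h ⬝ᵥ fun i => round (phase Q t h' i))| < 1 := by exact_mod_cast hb
  have := Int.abs_lt_one_iff.1 this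
  linarith

/-- If there are many near-coincidences at `t`, then `tB` is close to a symmetric rational matrix
`A` whose denominator and distance to `tB` are controlled by the number of coincidences. -/
theorem major (d : ℕ) : ∃ C : ℝ, 1 ≤ C ∧ ∀ (Q : Matrix (Fin d) (Fin d) ℝ), Q.IsSymm →
    ∀ c r t : ℝ, 0 < c → c ≤ 1 → 2 * d * c ^ 2 < 1 → 1 ≤ r →
    C * r ^ (2 * d) < ((Hs Q c r t).card * r) ^ 2 →
    ∃ (A : Matrix (Fin d) (Fin d) ℝ) (H Z : Matrix (Fin d) (Fin d) ℤ), A.IsSymm ∧ H.det ≠ 0 ∧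
      A * zr H = zr Z ∧
      ((Hs Q c r t).card : ℝ) ^ 2 * (H.det : ℝ) ^ 2 *
        dfun (r ^ 2 • (A - t • (Real.pi⁻¹ • Q))) ≤ C * r ^ (2 * d) := by
  classical
  refine ⟨25 ^ d * (d.factorial * ((d + d : ℕ) + 1 : ℝ) ^ d), ?_, ?_⟩
  · have h1 : (1 : ℝ) ≤ 25 ^ d := one_le_pow₀ (by norm_num)
    have h2 : (1 : ℝ) ≤ d.factorial := by exact_mod_cast Nat.factorial_pos d
    have h3 : (1 : ℝ) ≤ ((d + d : ℕ) + 1 : ℝ) ^ d := one_le_pow₀ (by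
      have : (0 : ℝ) ≤ (d + d : ℕ) := Nat.cast_nonneg _
      linarith)
    exact one_le_mul_of_one_le_of_one_le h1 (one_le_mul_of_one_le_of_one_le h2 h3)
  intro Q hQ c r t hc hc1 hc2 hr hN
  have hr0 : 0 < r := by linarith
  set B : Matrix (Fin d) (Fin d) ℝ := Real.pi⁻¹ • Q with hB
  set F := Hs Q c r t with hF
  set C : ℝ := 25 ^ d * (d.factorial * ((d + d : ℕ) + 1 : ℝ) ^ d) with hC
  obtain ⟨i, hi, ℓ, hℓ, hspan, hbasis, hcov⟩ := count_le_covol F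
  rw [Fintype.card_fin] at hi hcov
  have hid : i = d := by
    by_contra hne
    have hlt : i + 1 ≤ d := by omega
    have h1 := hcov (Fin d) (r⁻¹ • 1) (by
      intro h hh a
      rw [hF, mem_Hs] at hh
      rw [smul_mulVec, one_mulVec, Pi.smul_apply, smul_eq_mul, abs_mul, abs_inv, abs_of_pos hr0,
        inv_mul_le_iff₀ hr0]
      have := (hh a).1; nlinarith)
    rw [Fintype.card_fin, Matrix.smul_mul, Matrix.one_mul, gdet_smul, Fintype.card_fin] at h1
    have h2 := one_le_gdet_zr ℓ hℓ
    have h3 : (F.card : ℝ) ^ 2 * (r⁻¹ ^ 2) ^ i ≤ C := by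
      calc (F.card : ℝ) ^ 2 * (r⁻¹ ^ 2) ^ i ≤ (F.card : ℝ) ^ 2 * ((r⁻¹ ^ 2) ^ i * gdet (zr ℓ)) := by
            refine mul_le_mul_of_nonneg_left ?_ (by positivity)
            exact le_mul_of_one_le_right (by positivity) h2
        _ ≤ _ := h1
        _ ≤ C := by rw [hC]; push_cast; gcongr; linarith [(Nat.cast_nonneg d : (0:ℝ) ≤ d)]
    have h4 : (F.card : ℝ) ^ 2 ≤ C * (r ^ 2) ^ i := by
      rw [inv_pow, inv_pow, ← div_eq_mul_inv, div_le_iff₀ (by positivity)] at h3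
      exact h3
    have h5 : ((F.card : ℝ) * r) ^ 2 ≤ C * r ^ (2 * d) := by
      calc ((F.card : ℝ) * r) ^ 2 = (F.card : ℝ) ^ 2 * r ^ 2 := by ring
        _ ≤ C * (r ^ 2) ^ i * r ^ 2 := by gcongr
        _ = C * (r ^ 2) ^ (i + 1) := by ring
        _ ≤ C * (r ^ 2) ^ d := by
            have : (1:ℝ) ≤ r ^ 2 := one_le_pow₀ hr
            gcongr
        _ = _ := by rw [← pow_mul]
    linarith
  subst hid
  have hHdet : ℓ.det ≠ 0 := by
    rw [gdet_square, det_zr] at hℓ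
    intro h0; apply hℓ; rw [h0]; simp
  -- a basis of `ℝ^d` among the shifts
  set R : Matrix F (Fin i) ℤ := Matrix.of fun v j => (v : Fin i → ℤ) j with hR
  have hRg : gdet (zr R) ≠ 0 := by
    refine gdet_zr_ne_zero R fun x hx => ?_
    have hx' : ∀ v ∈ F, v ⬝ᵥ x = 0 := fun v hv => congrFun hx ⟨v, hv⟩
    have hall : ∀ w ∈ Submodule.span ℤ (F : Set (Fin i → ℤ)), w ⬝ᵥ x = 0 := by
      intro w hw
      induction hw using Submodule.span_induction with
      | mem y hy => exact hx' y hy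
      | zero => simp
      | add y z _ _ hy hz => rw [add_dotProduct, hy, hz, add_zero]
      | smul k y _ hy => rw [smul_dotProduct, hy, smul_zero]
    have hT : ℓᵀ *ᵥ x = 0 := by
      ext j; exact hall _ (hspan j)
    by_contra hne
    have := exists_mulVec_eq_zero_iff.1 ⟨x, hne, hT⟩
    rw [det_transpose] at this
    exact hHdet this
  obtain ⟨σ, hσ⟩ := exists_rows (zr R) hRg
  set V : Matrix (Fin i) (Fin i) ℝ := ((zr R).submatrix σ id)ᵀ with hV
  have hVdet : IsUnit V.det := by
    rw [hV, det_transpose]; exact isUnit_iff_ne_zero.2 hσ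
  set mr : (Fin i → ℤ) → Fin i → ℤ := fun h a => round (phase Q t h a) with hmr
  set W : Matrix (Fin i) (Fin i) ℝ := Matrix.of fun a j => (mr (σ j) a : ℝ) with hW
  have hiso : ∀ h ∈ F, Vᵀ *ᵥ intVec (mr h) = Wᵀ *ᵥ intVec h := by
    intro h hh
    ext j
    have h1 := isotropy Q hQ c r t hr0 hc.le hc2 h (σ j) hh (σ j).2
    have h2 : ((σ j : Fin i → ℤ) ⬝ᵥ mr h) = mr (σ j) ⬝ᵥ h := by
      rw [dotProduct_comm, dotProduct_comm _ h]; exact h1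
    have h3 : (((σ j : Fin i → ℤ) ⬝ᵥ mr h : ℤ) : ℝ) = ((mr (σ j) ⬝ᵥ h : ℤ) : ℝ) := by rw [h2]
    simp only [dotProduct, Int.cast_sum, Int.cast_mul] at h3
    exact h3
  set A : Matrix (Fin i) (Fin i) ℝ := (W * V⁻¹)ᵀ with hA
  have hAh : ∀ h ∈ F, A *ᵥ intVec h = intVec (mr h) := by
    intro h hh
    have hVT : IsUnit Vᵀ.det := by rw [det_transpose]; exact hVdet
    rw [hA, transpose_mul, ← mulVec_mulVec, ← hiso h hh, mulVec_mulVec, transpose_nonsing_inv,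
      nonsing_inv_mul _ hVT, one_mulVec]
  have hAV : A * V = W := by
    ext a j
    have := congrFun (hAh (σ j) (σ j).2) a
    exact this
  have hAsymm : A.IsSymm := by
    have : A = W * V⁻¹ := by rw [← hAV, Matrix.mul_assoc, mul_nonsing_inv _ hVdet, Matrix.mul_one]
    unfold Matrix.IsSymm
    conv_lhs => rw [this]
  have hspanint : ∀ w ∈ Submodule.span ℤ (F : Set (Fin i → ℤ)), ∃ z : Fin i → ℤ,
      A *ᵥ intVec w = intVec z := by
    intro w hw
    induction hw using Submodule.span_induction with
    | mem y hy => exact ⟨mr y, hAh y hy⟩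
    | zero => exact ⟨0, by have : intVec (0 : Fin i → ℤ) = 0 := by ext; simp [intVec]
                           rw [this, mulVec_zero]⟩
    | add y z _ _ hy hz =>
      obtain ⟨y', hy'⟩ := hy
      obtain ⟨z', hz'⟩ := hz
      refine ⟨y' + z', ?_⟩
      have e : ∀ u v : Fin i → ℤ, intVec (u + v) = intVec u + intVec v := by
        intro u v; ext; simp [intVec]
      rw [e, e, mulVec_add, hy', hz']
    | smul k y _ hy =>
      obtain ⟨y', hy'⟩ := hy
      refine ⟨k • y', ?_⟩
      have e : ∀ u : Fin i → ℤ, intVec (k • u) = (k : ℝ) • intVec u := by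
        intro u; ext; simp [intVec]
      rw [e, e, mulVec_smul, hy']
  choose z hz using fun j => hspanint _ (hspan j)
  refine ⟨A, ℓ, Matrix.of fun a j => z j a, hAsymm, hHdet, ?_, ?_⟩
  · ext a j
    exact congrFun (hz j) a
  have h1 := hcov (Fin i ⊕ Fin i) (r⁻¹ • fromRows (1 : Matrix (Fin i) (Fin i) ℝ) (r ^ 2 • (A - t • B))) (by
    intro h hh a
    have hh' := hh
    rw [hF, mem_Hs] at hh'
    rw [smul_mulVec, fromRows_mulVec, Pi.smul_apply, smul_eq_mul, abs_mul, abs_inv,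
      abs_of_pos hr0, inv_mul_le_iff₀ hr0, mul_one]
    rcases a with a | a
    · rw [Sum.elim_inl, one_mulVec]
      have := (hh' a).1; nlinarith
    · rw [Sum.elim_inr, smul_mulVec, Pi.smul_apply, smul_eq_mul]
      have e : ((A - t • B) *ᵥ fun j => (h j : ℝ)) a = -sfr (phase Q t h a) := by
        have e1 : ((A - t • B) *ᵥ intVec h) a = (A *ᵥ intVec h) a - t * (B *ᵥ intVec h) a := by
          rw [sub_mulVec, smul_mulVec]; rfl
        change ((A - t • B) *ᵥ intVec h) a = _
        rw [e1, hAh h hh]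
        change ((round (phase Q t h a) : ℤ) : ℝ) - phase Q t h a = _
        unfold sfr; ring
      rw [e, abs_mul, abs_neg, abs_of_pos (by positivity : 0 < r ^ 2)]
      calc r ^ 2 * |sfr (phase Q t h a)| ≤ r ^ 2 * (c / r) := by gcongr; exact (hh' a).2
        _ = c * r := by field_simp
        _ ≤ r := by nlinarith)
  rw [gdet_mul_sq, gdet_smul, Fintype.card_fin, det_zr, Fintype.card_sum, Fintype.card_fin] at h1
  change (F.card : ℝ) ^ 2 * ((r⁻¹ ^ 2) ^ i * dfun (r ^ 2 • (A - t • B)) * (ℓ.det : ℝ) ^ 2) ≤ C at h1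
  calc (F.card : ℝ) ^ 2 * (ℓ.det : ℝ) ^ 2 * dfun (r ^ 2 • (A - t • B))
      = (F.card : ℝ) ^ 2 * ((r⁻¹ ^ 2) ^ i * dfun (r ^ 2 • (A - t • B)) * (ℓ.det : ℝ) ^ 2) *
        r ^ (2 * i) := by rw [pow_mul, inv_pow, inv_pow]; field_simp
    _ ≤ C * r ^ (2 * i) := by gcongr

end LPR

/-! ### Integrals over major arcs -/

namespace LPR
open Matrix MeasureTheory Filter
open scoped ENNReal

variable {d : ℕ}

lemma dfun_eq (W : Matrix (Fin d) (Fin d) ℝ) : dfun W = (1 + Wᵀ * W).det := by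
  unfold dfun gdet
  rw [transpose_fromRows, fromCols_mul_fromRows, transpose_one, Matrix.one_mul]

lemma continuous_dfun (r : ℝ) (A B : Matrix (Fin d) (Fin d) ℝ) :
    Continuous fun t : ℝ => dfun (r ^ 2 • (A - t • B)) := by
  simp only [dfun_eq]
  fun_prop

/-- Any matrix obtained from `(1, W)` by a bounded row transformation has determinant at most
a constant times `dfun W ^ (1/2)`. -/
lemma dfun_row (x : ℝ) (hx : 0 ≤ x) : ∃ C : ℝ, 1 ≤ C ∧ ∀ (T : Matrix (Fin d) (Fin d ⊕ Fin d) ℝ)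
    (W : Matrix (Fin d) (Fin d) ℝ), (∀ i j, |T i j| ≤ x) →
    (T * fromRows (1 : Matrix (Fin d) (Fin d) ℝ) W).det ^ 2 ≤ C * dfun W := by
  refine ⟨max 1 ((Fintype.card (Fin d)).factorial * (Fintype.card (Fin d) *
    (Fintype.card (Fin d ⊕ Fin d) * x * (Fintype.card (Fin d ⊕ Fin d) * x))) ^
    Fintype.card (Fin d)), le_max_left _ _, fun T W hT => ?_⟩
  rw [← gdet_square]
  refine (gdet_mul_le T _ x hT).trans ?_
  exact mul_le_mul_of_nonneg_right (le_max_right _ _) (gdet_nonneg _)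

lemma one_le_dfun : ∃ C : ℝ, 1 ≤ C ∧ ∀ W : Matrix (Fin d) (Fin d) ℝ, 1 ≤ C * dfun W := by
  obtain ⟨C, hC, h⟩ := dfun_row (d := d) 1 zero_le_one
  refine ⟨C, hC, fun W => ?_⟩
  have := h (fromCols 1 0) W (by
    rintro i (j | j)
    · rw [fromCols_apply_inl, one_apply]; split_ifs <;> simp
    · simp)
  rw [fromCols_mul_fromRows, Matrix.one_mul, Matrix.zero_mul, add_zero, det_one] at this
  linarith

lemma det_le_dfun : ∃ C : ℝ, 1 ≤ C ∧ ∀ W : Matrix (Fin d) (Fin d) ℝ, W.det ^ 2 ≤ C * dfun W := by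
  obtain ⟨C, hC, h⟩ := dfun_row (d := d) 1 zero_le_one
  refine ⟨C, hC, fun W => ?_⟩
  have := h (fromCols 0 1) W (by
    rintro i (j | j)
    · simp
    · rw [fromCols_apply_inr, one_apply]; split_ifs <;> simp)
  rwa [fromCols_mul_fromRows, Matrix.one_mul, Matrix.zero_mul, zero_add] at this

lemma entry_le_dfun : ∃ C : ℝ, 1 ≤ C ∧ ∀ (W : Matrix (Fin d) (Fin d) ℝ) a b,
    W a b ^ 2 ≤ C * dfun W := by
  obtain ⟨C, hC, h⟩ := dfun_row (d := d) 1 zero_le_one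
  refine ⟨C, hC, fun W a b => ?_⟩
  have := h (fromCols (updateRow 1 b 0) (updateRow 0 b (Pi.single a 1))) W (by
    rintro i (j | j)
    · rw [fromCols_apply_inl, updateRow_apply]
      split_ifs
      · simp
      · rw [one_apply]; split_ifs <;> simp
    · rw [fromCols_apply_inr, updateRow_apply]
      split_ifs
      · rw [Pi.single_apply]; split_ifs <;> simp
      · simp)
  have e : fromCols (updateRow (1 : Matrix (Fin d) (Fin d) ℝ) b 0)
      (updateRow (0 : Matrix (Fin d) (Fin d) ℝ) b (Pi.single a 1)) *
      fromRows (1 : Matrix (Fin d) (Fin d) ℝ) W = updateRow 1 b (W a) := by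
    rw [fromCols_mul_fromRows, Matrix.mul_one]
    ext i j
    rw [Matrix.add_apply, updateRow_apply, updateRow_apply, Matrix.mul_apply]
    simp only [updateRow_apply]
    split_ifs with h1
    · simp [Pi.single_apply]
    · simp
  rw [e, ← cramer_transpose_apply, transpose_one, cramer_one] at this
  exact this

/-- `dfun` at `t` dominates the determinant on the whole interval of radius `r⁻²` about `t`. -/
lemma det_near_le_dfun (B : Matrix (Fin d) (Fin d) ℝ) : ∃ C : ℝ, 1 ≤ C ∧
    ∀ (A : Matrix (Fin d) (Fin d) ℝ) (r t x : ℝ), 0 < r → |x - t| ≤ (r ^ 2)⁻¹ →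
    (r ^ (2 * d) * (A - x • B).det) ^ 2 ≤ C * dfun (r ^ 2 • (A - t • B)) := by
  obtain ⟨b, hb⟩ : ∃ b : ℝ, ∀ i j, |B i j| ≤ b := by
    refine ⟨∑ i, ∑ j, |B i j|, fun i j => ?_⟩
    exact (Finset.single_le_sum (f := fun j => |B i j|) (fun _ _ => abs_nonneg _)
      (Finset.mem_univ j)).trans (Finset.single_le_sum (f := fun i => ∑ j, |B i j|)
      (fun _ _ => Finset.sum_nonneg fun _ _ => abs_nonneg _) (Finset.mem_univ i))
  obtain ⟨C, hC, h⟩ := dfun_row (d := d) (max 1 b) (by positivity)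
  refine ⟨C, hC, fun A r t x hr hx => ?_⟩
  have hr2 : 0 < r ^ 2 := by positivity
  have := h (fromCols (-(r ^ 2 * (x - t)) • B) 1) (r ^ 2 • (A - t • B)) (by
    rintro i (j | j)
    · rw [fromCols_apply_inl, Matrix.smul_apply, smul_eq_mul, abs_mul, abs_neg, abs_mul,
        abs_of_pos hr2]
      have h1 : r ^ 2 * |x - t| ≤ 1 := by
        calc _ ≤ r ^ 2 * (r ^ 2)⁻¹ := by gcongr
          _ = 1 := mul_inv_cancel₀ hr2.ne'
      calc _ ≤ 1 * |B i j| := by gcongr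
        _ ≤ b := by rw [one_mul]; exact hb i j
        _ ≤ _ := le_max_right _ _
    · rw [fromCols_apply_inr, one_apply]
      split_ifs
      · simp
      · simp)
  rw [fromCols_mul_fromRows, Matrix.one_mul, Matrix.mul_one] at this
  have e : -(r ^ 2 * (x - t)) • B + r ^ 2 • (A - t • B) = r ^ 2 • (A - x • B) := by
    ext i j
    simp only [Matrix.add_apply, Matrix.smul_apply, Matrix.sub_apply, smul_eq_mul]; ring
  rwa [e, det_smul, Fintype.card_fin, ← pow_mul] at this

lemma prod_sqrt_le {n : ℕ} (hn : 1 ≤ n) (a : Fin n → ℝ) (ha : ∀ l, 0 < a l) :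
    (∏ l, a l) ^ (-(1 / 2 : ℝ)) ≤ ∑ l, a l ^ (-((n : ℝ) / 2)) := by
  haveI : Nonempty (Fin n) := ⟨⟨0, hn⟩⟩
  obtain ⟨l0, -, hl0⟩ := Finset.exists_min_image Finset.univ a Finset.univ_nonempty
  have h1 : a l0 ^ n ≤ ∏ l, a l := by
    calc a l0 ^ n = ∏ _l : Fin n, a l0 := by simp
      _ ≤ _ := Finset.prod_le_prod (fun _ _ => (ha l0).le) fun l _ => hl0 l (Finset.mem_univ l)
  calc (∏ l, a l) ^ (-(1 / 2 : ℝ)) ≤ (a l0 ^ n) ^ (-(1 / 2 : ℝ)) :=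
        Real.rpow_le_rpow_of_nonpos (pow_pos (ha l0) n) h1 (by norm_num)
    _ = a l0 ^ (-((n : ℝ) / 2)) := by
        rw [← Real.rpow_natCast, ← Real.rpow_mul (ha l0).le]; congr 1; ring
    _ ≤ _ := Finset.single_le_sum (f := fun l => a l ^ (-((n : ℝ) / 2)))
        (fun l _ => (Real.rpow_pos_of_pos (ha l) _).le) (Finset.mem_univ l0)

/-- The major arc around a rational matrix `A` contributes `O(r⁻²)`. -/
lemma dfun_integral (hd : 3 ≤ d) (B : Matrix (Fin d) (Fin d) ℝ) (hB : B.det ≠ 0) :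
    ∃ C : ℝ, 0 ≤ C ∧ ∀ (A : Matrix (Fin d) (Fin d) ℝ) (r : ℝ), 1 ≤ r →
    ∫⁻ t : ℝ, ENNReal.ofReal (dfun (r ^ 2 • (A - t • B)) ^ (-(1 / 4 : ℝ))) ≤
      ENNReal.ofReal (C * (r ^ 2)⁻¹) := by
  obtain ⟨C0, hC0, h0⟩ := det_near_le_dfun B
  obtain ⟨C1, hC1, h1⟩ := one_le_dfun (d := d)
  set D : ℝ := |B.det| / ((2 * d + 3) ^ d * Real.sqrt C0) with hD
  have hDpos : 0 < D := by
    have : 0 < |B.det| := abs_pos.2 hB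
    positivity
  refine ⟨D ^ (-(1 / 2 : ℝ)) * (d * (2 + 2 / ((d : ℝ) / 2 - 1))), ?_, fun A r hr => ?_⟩
  · have : (3 : ℝ) ≤ d := by exact_mod_cast hd
    have : (0 : ℝ) < (d : ℝ) / 2 - 1 := by linarith
    positivity
  have hr0 : 0 < r := by linarith
  set p : Polynomial ℝ :=
    ((Polynomial.X : Polynomial ℝ) • (-B).map Polynomial.C + A.map Polynomial.C).det with hp
  have hdeg : p.natDegree ≤ d := by
    simpa using Polynomial.natDegree_det_X_add_C_le (-B) A
  have hcoef : p.coeff d = (-B).det := by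
    simpa using Polynomial.coeff_det_X_add_C_card (-B) A
  have hcoef0 : p.coeff d ≠ 0 := by
    rw [hcoef, det_neg]; exact mul_ne_zero (by simp) hB
  have hnat : p.natDegree = d :=
    le_antisymm hdeg (Polynomial.le_natDegree_of_ne_zero hcoef0)
  have hlead : |p.leadingCoeff| = |B.det| := by
    rw [Polynomial.leadingCoeff, hnat, hcoef, det_neg, abs_mul]; simp
  have heval : ∀ x : ℝ, p.eval x = (A - x • B).det := by
    intro x
    rw [hp, ← Polynomial.coe_evalRingHom, RingHom.map_det]
    congr 1
    ext i j
    simp [RingHom.mapMatrix_apply, Matrix.smul_apply]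
    ring
  obtain ⟨z, -, hz⟩ := poly_lower p d hdeg
  have hd3 : (3 : ℝ) ≤ d := by exact_mod_cast hd
  have hy : 0 < (r ^ 2)⁻¹ := by positivity
  set a : ℝ → Fin p.natDegree → ℝ := fun t l => max |t - (z l).re| (r ^ 2)⁻¹ with ha
  have hapos : ∀ t l, 0 < a t l := fun t l => lt_max_of_lt_right hy
  have hpt : ∀ t, dfun (r ^ 2 • (A - t • B)) ^ (-(1 / 4 : ℝ)) ≤
      D ^ (-(1 / 2 : ℝ)) * (r ^ d)⁻¹ * ∑ l, a t l ^ (-((d : ℝ) / 2)) := by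
    intro t
    set X := dfun (r ^ 2 • (A - t • B)) with hX
    have hXpos : 0 < X := by
      have := h1 (r ^ 2 • (A - t • B))
      by_contra hneg
      push Not at hneg
      nlinarith
    obtain ⟨x, hx, hx2⟩ := hz t (r ^ 2)⁻¹ hy
    rw [hlead] at hx2
    have h3 := h0 A r t x hr0 hx
    have h4 : r ^ (2 * d) * |(A - x • B).det| ≤ Real.sqrt C0 * Real.sqrt X := by
      rw [← Real.sqrt_mul (by linarith), ← abs_of_pos (by positivity : 0 < r ^ (2 * d)), ← abs_mul]
      exact Real.abs_le_sqrt h3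
    rw [heval] at hx2
    have h5 : |B.det| * ∏ l, a t l ≤ (2 * d + 3) ^ d * |(A - x • B).det| := by
      refine le_trans ?_ hx2
      refine mul_le_mul_of_nonneg_left ?_ (abs_nonneg _)
      refine Finset.prod_le_prod (fun l _ => (hapos t l).le) fun l _ => ?_
      refine max_le_max ?_ le_rfl
      have := Complex.abs_re_le_norm ((t : ℂ) - z l)
      simpa using this
    have h6 : D * r ^ (2 * d) * ∏ l, a t l ≤ Real.sqrt X := by
      have hs : 0 < Real.sqrt C0 := Real.sqrt_pos.2 (by linarith)
      rw [hD, div_mul_eq_mul_div, div_mul_eq_mul_div, div_le_iff₀ (by positivity)]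
      calc |B.det| * r ^ (2 * d) * ∏ l, a t l = r ^ (2 * d) * (|B.det| * ∏ l, a t l) := by ring
        _ ≤ r ^ (2 * d) * ((2 * d + 3) ^ d * |(A - x • B).det|) := by gcongr
        _ = (2 * d + 3) ^ d * (r ^ (2 * d) * |(A - x • B).det|) := by ring
        _ ≤ (2 * d + 3) ^ d * (Real.sqrt C0 * Real.sqrt X) := by gcongr
        _ = _ := by ring
    have hP : 0 < ∏ l, a t l := Finset.prod_pos fun l _ => hapos t l
    have h7 := prod_sqrt_le (by rw [hnat]; omega) (a t) (hapos t)
    have hn' : ((p.natDegree : ℕ) : ℝ) = d := by rw [hnat]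
    rw [hn'] at h7
    calc X ^ (-(1 / 4 : ℝ)) = (Real.sqrt X) ^ (-(1 / 2 : ℝ)) := by
          rw [Real.sqrt_eq_rpow, ← Real.rpow_mul hXpos.le]; norm_num
      _ ≤ (D * r ^ (2 * d) * ∏ l, a t l) ^ (-(1 / 2 : ℝ)) :=
          Real.rpow_le_rpow_of_nonpos (by positivity) h6 (by norm_num)
      _ = D ^ (-(1 / 2 : ℝ)) * (r ^ d)⁻¹ * (∏ l, a t l) ^ (-(1 / 2 : ℝ)) := by
          rw [Real.mul_rpow (by positivity) hP.le, Real.mul_rpow hDpos.le (by positivity)]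
          congr 2
          rw [pow_mul, ← Real.rpow_natCast, ← Real.rpow_natCast, ← Real.rpow_natCast,
            ← Real.rpow_mul hr0.le, ← Real.rpow_mul hr0.le, ← Real.rpow_neg hr0.le]
          congr 1; push_cast; ring
      _ ≤ _ := by gcongr
  calc ∫⁻ t, ENNReal.ofReal (dfun (r ^ 2 • (A - t • B)) ^ (-(1 / 4 : ℝ)))
      ≤ ∫⁻ t, ENNReal.ofReal (D ^ (-(1 / 2 : ℝ)) * (r ^ d)⁻¹) *
          ∑ l, ENNReal.ofReal (a t l ^ (-((d : ℝ) / 2))) := by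
        refine lintegral_mono fun t => ?_
        rw [← ENNReal.ofReal_sum_of_nonneg fun l _ => (Real.rpow_pos_of_pos (hapos t l) _).le,
          ← ENNReal.ofReal_mul (by positivity)]
        exact ENNReal.ofReal_le_ofReal (hpt t)
    _ = ENNReal.ofReal (D ^ (-(1 / 2 : ℝ)) * (r ^ d)⁻¹) *
          ∑ l, ∫⁻ t, ENNReal.ofReal (a t l ^ (-((d : ℝ) / 2))) := by
        have hm : ∀ l, Measurable fun t => ENNReal.ofReal (a t l ^ (-((d : ℝ) / 2))) := by
          intro l; simp only [ha]; fun_prop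
        rw [lintegral_const_mul _ (Finset.measurable_fun_sum _ fun l _ => hm l),
          lintegral_finsetSum _ fun l _ => hm l]
    _ ≤ ENNReal.ofReal (D ^ (-(1 / 2 : ℝ)) * (r ^ d)⁻¹) *
          ∑ _l : Fin p.natDegree,
            ENNReal.ofReal ((2 + 2 / ((d : ℝ) / 2 - 1)) * (r ^ 2)⁻¹ ^ (1 - (d : ℝ) / 2)) := by
        gcongr with l
        exact lintegral_max_rpow _ _ _ (by linarith) hy
    _ = ENNReal.ofReal (D ^ (-(1 / 2 : ℝ)) * (d * (2 + 2 / ((d : ℝ) / 2 - 1))) * (r ^ 2)⁻¹) := by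
        have hpos : (0 : ℝ) < (d : ℝ) / 2 - 1 := by linarith
        rw [Finset.sum_const, Finset.card_univ, Fintype.card_fin, hnat, nsmul_eq_mul,
          ← ENNReal.ofReal_natCast, ← ENNReal.ofReal_mul (by positivity),
          ← ENNReal.ofReal_mul (by positivity)]
        congr 1
        have e : (r ^ 2)⁻¹ ^ (1 - (d : ℝ) / 2) = r ^ d * (r ^ 2)⁻¹ := by
          rw [Real.inv_rpow (by positivity), ← Real.rpow_natCast, ← Real.rpow_natCast,
            ← Real.rpow_mul hr0.le, ← Real.rpow_neg hr0.le, ← Real.rpow_neg hr0.le,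
            ← Real.rpow_add hr0]
          congr 1; push_cast; ring
        rw [e]
        field_simp

/-- Decay of the major arc at `A = 0`. -/
lemma dfun_integral_zero (hd : 3 ≤ d) (B : Matrix (Fin d) (Fin d) ℝ) (hB : B.det ≠ 0) :
    ∃ C : ℝ, 0 ≤ C ∧ ∀ (r K : ℝ), 1 ≤ r → 1 ≤ K →
    ∫⁻ t in {t : ℝ | K / r ^ 2 ≤ |t|},
      ENNReal.ofReal (dfun (r ^ 2 • ((0 : Matrix (Fin d) (Fin d) ℝ) - t • B)) ^ (-(1 / 4 : ℝ))) ≤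
      ENNReal.ofReal (C * K ^ (1 - (d : ℝ) / 2) * (r ^ 2)⁻¹) := by
  obtain ⟨C0, hC0, h0⟩ := det_le_dfun (d := d)
  have hd3 : (3 : ℝ) ≤ d := by exact_mod_cast hd
  set D : ℝ := |B.det| ^ 2 / C0 with hD
  have hDpos : 0 < D := by
    have : 0 < |B.det| := abs_pos.2 hB
    positivity
  have hpos : (0 : ℝ) < (d : ℝ) / 2 - 1 := by linarith
  refine ⟨D ^ (-(1 / 4 : ℝ)) * (2 + 2 / ((d : ℝ) / 2 - 1)), by positivity, fun r K hr hK => ?_⟩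
  have hr0 : 0 < r := by linarith
  have hy : 0 < K / r ^ 2 := by positivity
  calc _ ≤ ∫⁻ t in {t : ℝ | K / r ^ 2 ≤ |t|}, ENNReal.ofReal (D ^ (-(1 / 4 : ℝ)) * (r ^ d)⁻¹) *
          ENNReal.ofReal (max |t - 0| (K / r ^ 2) ^ (-((d : ℝ) / 2))) := by
        refine setLIntegral_mono' (measurableSet_le measurable_const (by fun_prop)) fun t ht => ?_
        have ht' : K / r ^ 2 ≤ |t| := ht
        have htpos : 0 < |t| := lt_of_lt_of_le hy ht'
        rw [← ENNReal.ofReal_mul (by positivity)]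
        refine ENNReal.ofReal_le_ofReal ?_
        rw [sub_zero, max_eq_left ht']
        have h1 := h0 (r ^ 2 • ((0 : Matrix (Fin d) (Fin d) ℝ) - t • B))
        have h2 : D * ((r ^ 2) * |t|) ^ (2 * d) ≤
            dfun (r ^ 2 • ((0 : Matrix (Fin d) (Fin d) ℝ) - t • B)) := by
          rw [hD, div_mul_eq_mul_div, div_le_iff₀ (by linarith), mul_comm (dfun _)]
          refine le_trans (le_of_eq ?_) h1
          rw [zero_sub, det_smul, det_neg, det_smul, Fintype.card_fin, ← sq_abs (_ * _)]
          rw [abs_mul, abs_mul, abs_mul, abs_pow, abs_pow, abs_pow, abs_pow]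
          simp only [abs_neg, abs_one, one_pow, one_mul, abs_abs, abs_of_pos hr0]
          ring
        calc _ ≤ (D * ((r ^ 2) * |t|) ^ (2 * d)) ^ (-(1 / 4 : ℝ)) :=
              Real.rpow_le_rpow_of_nonpos (by positivity) h2 (by norm_num)
          _ = _ := by
              rw [Real.mul_rpow hDpos.le (by positivity), mul_assoc]
              congr 1
              rw [← Real.rpow_natCast, ← Real.rpow_mul (by positivity),
                Real.mul_rpow (by positivity) htpos.le, ← Real.rpow_natCast, ← Real.rpow_natCast,
                ← Real.rpow_mul hr0.le, ← Real.rpow_neg hr0.le]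
              congr 2 <;> · push_cast; ring
    _ ≤ ∫⁻ t, ENNReal.ofReal (D ^ (-(1 / 4 : ℝ)) * (r ^ d)⁻¹) *
          ENNReal.ofReal (max |t - 0| (K / r ^ 2) ^ (-((d : ℝ) / 2))) :=
        setLIntegral_le_lintegral _ _
    _ ≤ ENNReal.ofReal (D ^ (-(1 / 4 : ℝ)) * (r ^ d)⁻¹) *
          ENNReal.ofReal ((2 + 2 / ((d : ℝ) / 2 - 1)) * (K / r ^ 2) ^ (1 - (d : ℝ) / 2)) := by
        rw [lintegral_const_mul _ (by fun_prop)]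
        gcongr
        exact lintegral_max_rpow _ _ _ (by linarith) hy
    _ = _ := by
        rw [← ENNReal.ofReal_mul (by positivity)]
        congr 1
        have e : (K / r ^ 2) ^ (1 - (d : ℝ) / 2) = K ^ (1 - (d : ℝ) / 2) * (r ^ d * (r ^ 2)⁻¹) := by
          rw [div_eq_mul_inv, Real.mul_rpow (by linarith) (by positivity)]
          congr 1
          rw [Real.inv_rpow (by positivity), ← Real.rpow_natCast, ← Real.rpow_natCast,
            ← Real.rpow_mul hr0.le, ← Real.rpow_neg hr0.le, ← Real.rpow_neg hr0.le,
            ← Real.rpow_add hr0]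
          congr 1; push_cast; ring
        rw [e]
        field_simp

end LPR

/-! ### Denominators and the number of major arcs -/

namespace LPR
open Matrix MeasureTheory Filter
open scoped ENNReal

variable {d : ℕ}

/-- `A` maps a sublattice of `ℤ^d` of index `q` into `ℤ^d`. -/
def HasIndex (A : Matrix (Fin d) (Fin d) ℝ) (q : ℕ) : Prop :=
  0 < q ∧ ∃ H Z : Matrix (Fin d) (Fin d) ℤ, H.det.natAbs = q ∧ A * zr H = zr Z

/-- The denominator of `A`: the least index of a sublattice of `ℤ^d` that `A` maps into `ℤ^d`
(and `0` if there is none). -/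
noncomputable def den (A : Matrix (Fin d) (Fin d) ℝ) : ℕ := sInf {q | HasIndex A q}

/-- The rational matrices close to `tB` for some `|t| ≤ T`, at scale `r`. -/
def Fam (B : Matrix (Fin d) (Fin d) ℝ) (C T r : ℝ) : Set (Matrix (Fin d) (Fin d) ℝ) :=
  {A | A.IsSymm ∧ HasIndex A (den A) ∧ (den A : ℝ) ^ 2 ≤ C * r ∧
    ∃ t ∈ Set.Icc (-T) T, ∀ i j, |(A - t • B) i j| ≤ C * r ^ (-(3 / 2 : ℝ))}

lemma HasIndex.den_spec {A : Matrix (Fin d) (Fin d) ℝ} {q : ℕ} (h : HasIndex A q) :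
    HasIndex A (den A) ∧ den A ≤ q :=
  ⟨Nat.sInf_mem (s := {q | HasIndex A q}) ⟨q, h⟩, Nat.sInf_le h⟩

lemma HasIndex.int {A : Matrix (Fin d) (Fin d) ℝ} {q : ℕ} (h : HasIndex A q) :
    ∃ Z : Matrix (Fin d) (Fin d) ℤ, (q : ℝ) • A = zr Z := by
  obtain ⟨hq, H, Z, hH, hA⟩ := h
  have h1 : (H.det : ℝ) • A = zr (Z * H.adjugate) := by
    have e : zr (H.det • (1 : Matrix (Fin d) (Fin d) ℤ)) = (H.det : ℝ) • 1 := by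
      ext i j
      simp only [zr, Matrix.map_apply, Matrix.smul_apply, Matrix.one_apply]
      split_ifs <;> simp
    rw [zr_mul, ← hA, Matrix.mul_assoc, ← zr_mul, mul_adjugate, e, Matrix.mul_smul, Matrix.mul_one]
  rcases Int.natAbs_eq H.det with h2 | h2
  · refine ⟨Z * H.adjugate, ?_⟩
    rw [← h1, h2, hH]; simp
  · refine ⟨-(Z * H.adjugate), ?_⟩
    have : zr (-(Z * H.adjugate)) = -zr (Z * H.adjugate) := by ext i j; simp [zr]
    rw [this, ← h1, h2, hH]; simp

lemma sep_card {ι : Type} (s : Finset ι) (f : ι → ℝ) (T δ : ℝ) (hT : 0 ≤ T) (hδ : 0 < δ)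
    (hf : ∀ a ∈ s, |f a| ≤ T) (hs : ∀ a ∈ s, ∀ b ∈ s, a ≠ b → δ ≤ |f a - f b|) :
    (s.card : ℝ) ≤ 2 * (T / δ) + 3 := by
  have h1 : s.card ≤ (Finset.Icc (-⌈T / δ⌉) ⌈T / δ⌉).card := by
    refine Finset.card_le_card_of_injOn (fun a => ⌊f a / δ⌋) ?_ ?_
    · intro a ha
      have := abs_le.1 (hf a ha)
      have h2 : f a / δ ≤ T / δ := by gcongr; exact this.2
      have h3 : -(T / δ) ≤ f a / δ := by rw [← neg_div]; gcongr; exact this.1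
      simp only [Finset.coe_Icc, Set.mem_Icc]
      constructor
      · rw [Int.le_floor]; push_cast; linarith [Int.le_ceil (T / δ)]
      · exact_mod_cast ((Int.floor_le _).trans (h2.trans (Int.le_ceil _)))
    · intro a ha b hb hab
      by_contra hne
      have h2 := hs a ha b hb hne
      have h3 : |f a / δ - f b / δ| < 1 := Int.abs_sub_lt_one_of_floor_eq_floor hab
      rw [← sub_div, abs_div, abs_of_pos hδ, div_lt_one hδ] at h3
      linarith
  rw [Int.card_Icc] at h1
  have h0 : 0 ≤ ⌈T / δ⌉ := Int.ceil_nonneg (by positivity)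
  have h2 : (s.card : ℝ) ≤ 2 * ⌈T / δ⌉ + 1 := by
    have : (s.card : ℤ) ≤ 2 * ⌈T / δ⌉ + 1 := by
      have : (s.card : ℤ) ≤ ((⌈T / δ⌉ + 1 - -⌈T / δ⌉).toNat : ℤ) := by exact_mod_cast h1
      rw [Int.toNat_of_nonneg (by omega)] at this
      omega
    exact_mod_cast this
  linarith [Int.ceil_lt_add_one (T / δ)]

/-- Different members of the family belong to well separated parameters. -/
lemma separation (hd : 1 ≤ d) (B : Matrix (Fin d) (Fin d) ℝ) (hB : B.det ≠ 0) (C T : ℝ)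
    (hC : 1 ≤ C) :
    ∃ c r0 : ℝ, 0 < c ∧ 1 ≤ r0 ∧ ∀ r ≥ r0, ∀ A ∈ Fam B C T r, ∀ A' ∈ Fam B C T r, A ≠ A' →
      ∀ t t' : ℝ, (∀ i j, |(A - t • B) i j| ≤ C * r ^ (-(3 / 2 : ℝ))) →
      (∀ i j, |(A' - t' • B) i j| ≤ C * r ^ (-(3 / 2 : ℝ))) →
      c ≤ (den A * den A' : ℝ) * |t - t'| ^ d := by
  -- the bound for the entries of `B`, and the neighbourhood of `B` of invertible matrices
  obtain ⟨b, hb1, hb⟩ : ∃ b : ℝ, 1 ≤ b ∧ ∀ i j, |B i j| ≤ b := by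
    refine ⟨1 + ∑ i, ∑ j, |B i j|, ?_, fun i j => ?_⟩
    · have : 0 ≤ ∑ i, ∑ j, |B i j| :=
        Finset.sum_nonneg fun _ _ => Finset.sum_nonneg fun _ _ => abs_nonneg _
      linarith
    · have := (Finset.single_le_sum (f := fun j => |B i j|) (fun _ _ => abs_nonneg _)
        (Finset.mem_univ j)).trans (Finset.single_le_sum (f := fun i => ∑ j, |B i j|)
        (fun _ _ => Finset.sum_nonneg fun _ _ => abs_nonneg _) (Finset.mem_univ i))
      exact this.trans (le_add_of_nonneg_left zero_le_one)
  obtain ⟨δ, hδ, hnb⟩ : ∃ δ : ℝ, 0 < δ ∧ ∀ E : Matrix (Fin d) (Fin d) ℝ, (∀ i j, |E i j| ≤ δ) →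
      (B + E).det ≠ 0 ∧ |(B + E).det| ≤ |B.det| + 1 := by
    have hcont : Continuous fun E : Fin d → Fin d → ℝ => (B + Matrix.of E).det := by fun_prop
    have h0 : (fun E : Fin d → Fin d → ℝ => (B + Matrix.of E).det) 0 = B.det := by
      simp
    have h1 : ∀ᶠ E in nhds (0 : Fin d → Fin d → ℝ), (B + Matrix.of E).det ≠ 0 :=
      hcont.continuousAt.eventually_ne (by simpa using hB)
    have h2 : ∀ᶠ E in nhds (0 : Fin d → Fin d → ℝ), |(B + Matrix.of E).det| < |B.det| + 1 := by
      refine (hcont.abs.continuousAt.tendsto).eventually_lt_const ?_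
      simp
    obtain ⟨ε, hε, hball⟩ := Metric.eventually_nhds_iff.1 (h1.and h2)
    refine ⟨ε / 2, by positivity, fun E hE => ?_⟩
    have := hball (y := fun i j => E i j) (by
      rw [dist_zero_right]
      refine lt_of_le_of_lt ?_ (half_lt_self hε)
      rw [pi_norm_le_iff_of_nonneg (by positivity)]
      intro i
      rw [pi_norm_le_iff_of_nonneg (by positivity)]
      intro j; exact hE i j)
    exact ⟨this.1, this.2.le⟩
  -- lower bound for the size of r
  obtain ⟨r0, hr0, hlarge⟩ : ∃ r0 : ℝ, 1 ≤ r0 ∧ ∀ r ≥ r0,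
      4 * C ^ 2 * b / δ + 4 * C ^ 2 ≤ r ^ (1 / 2 : ℝ) := by
    have := (tendsto_rpow_atTop (by norm_num : (0 : ℝ) < 1 / 2)).eventually_ge_atTop
      (4 * C ^ 2 * b / δ + 4 * C ^ 2)
    obtain ⟨r1, h1⟩ := eventually_atTop.1 this
    exact ⟨max 1 r1, le_max_left _ _, fun r hr => h1 r ((le_max_right _ _).trans hr)⟩
  refine ⟨1 / (|B.det| + 1), r0, by positivity, hr0, ?_⟩
  intro r hr A hA A' hA' hne t t' ht ht'
  have hr1 : 1 ≤ r := hr0.trans hr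
  have hrp : 0 < r := by linarith
  obtain ⟨-, hidx, hden, -⟩ := hA
  obtain ⟨hsymm', hidx', hden', -⟩ := hA'
  have hC0 : 0 < C := by linarith
  set q := den A with hq
  set q' := den A' with hq'
  have hq0 : (0 : ℝ) < q := by exact_mod_cast hidx.1
  have hq0' : (0 : ℝ) < q' := by exact_mod_cast hidx'.1
  set s := r ^ (1 / 2 : ℝ) with hs
  have hs0 : 0 < s := Real.rpow_pos_of_pos hrp _
  have hs2 : s ^ 2 = r := by
    rw [hs, ← Real.rpow_natCast, ← Real.rpow_mul hrp.le]
    norm_num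
  have h32 : r ^ (-(3 / 2 : ℝ)) = 1 / (r * s) := by
    have : r ^ (-(3 / 2 : ℝ)) = r ^ (-1 : ℝ) * r ^ (-(1 / 2) : ℝ) := by
      rw [← Real.rpow_add hrp]; norm_num
    rw [this, Real.rpow_neg hrp.le, Real.rpow_neg hrp.le, Real.rpow_one, ← hs]
    field_simp
  rw [h32] at ht ht'
  have hL := hlarge r hr
  have hqq : q * q' ≤ C * r := by
    nlinarith [sq_nonneg ((q : ℝ) - q')]
  have hdiff : ∀ i j, |(A - A') i j - (t - t') * B i j| ≤ 2 * C / (r * s) := by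
    intro i j
    have e : (A - A') i j - (t - t') * B i j = (A - t • B) i j - (A' - t' • B) i j := by
      simp only [Matrix.sub_apply, Matrix.smul_apply, smul_eq_mul]; ring
    rw [e]
    have h1 := ht i j
    have h2 := ht' i j
    have := abs_sub ((A - t • B) i j) ((A' - t' • B) i j)
    have e2 : 2 * C / (r * s) = C * (1 / (r * s)) + C * (1 / (r * s)) := by ring
    linarith
  obtain ⟨i, j, hij⟩ : ∃ i j, A i j ≠ A' i j := by
    by_contra hcon
    push Not at hcon
    exact hne (Matrix.ext hcon)
  have hentry : 1 ≤ (q * q' : ℝ) * |(A - A') i j| := by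
    obtain ⟨Z, hZ⟩ := hidx.int
    obtain ⟨Z', hZ'⟩ := hidx'.int
    have e1 : (q : ℝ) * A i j = Z i j := by
      have := congrFun (congrFun hZ i) j; simpa [zr] using this
    have e2 : (q' : ℝ) * A' i j = Z' i j := by
      have := congrFun (congrFun hZ' i) j; simpa [zr] using this
    have e3 : (q * q' : ℝ) * (A - A') i j = ((q' * Z i j - q * Z' i j : ℤ) : ℝ) := by
      push_cast; rw [← e1, ← e2, Matrix.sub_apply]; ring
    have hne0 : (q' * Z i j - q * Z' i j : ℤ) ≠ 0 := by
      intro h0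
      rw [h0] at e3
      have : (A - A') i j = 0 := by
        rcases mul_eq_zero.1 (e3.trans Int.cast_zero) with h | h
        · exact absurd h (by positivity)
        · exact h
      exact hij (sub_eq_zero.1 this)
    have h1 : (1 : ℝ) ≤ |((q' * Z i j - q * Z' i j : ℤ) : ℝ)| := by
      exact_mod_cast Int.one_le_abs hne0
    rwa [← e3, abs_mul, abs_of_pos (by positivity : (0 : ℝ) < q * q')] at h1
  have hpos1 : 0 < 4 * C ^ 2 * b / δ := by positivity
  have htt : 1 / (2 * C * b * r) ≤ |t - t'| := by
    have h1 : 1 / (C * r) ≤ |(A - A') i j| := by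
      rw [div_le_iff₀ (by positivity), mul_comm]
      exact hentry.trans (by gcongr)
    have h2 := hdiff i j
    have h3 : |(A - A') i j| ≤ |t - t'| * b + 2 * C / (r * s) := by
      have e : (A - A') i j = (t - t') * B i j + ((A - A') i j - (t - t') * B i j) := by ring
      calc |(A - A') i j| ≤ |(t - t') * B i j| + |(A - A') i j - (t - t') * B i j| := by
            conv_lhs => rw [e]
            exact abs_add_le _ _
        _ ≤ _ := by
            rw [abs_mul]
            have := hb i j
            gcongr
    have h4 : 2 * C / (r * s) ≤ 1 / (2 * C * r) := by
      rw [div_le_div_iff₀ (by positivity) (by positivity)]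
      have : 4 * C ^ 2 ≤ s := by linarith
      nlinarith
    have e5 : 1 / (C * r) = 1 / (2 * C * r) + 1 / (2 * C * r) := by field_simp; norm_num
    have h6 : 1 / (2 * C * r) ≤ |t - t'| * b := by linarith
    rw [div_le_iff₀ (by positivity)] at h6 ⊢
    linarith
  have htt0 : 0 < |t - t'| := lt_of_lt_of_le (by positivity) htt
  have htne : t - t' ≠ 0 := abs_pos.1 htt0
  set E : Matrix (Fin d) (Fin d) ℝ := (t - t')⁻¹ • (A - A') - B with hE
  have hEsmall : ∀ i j, |E i j| ≤ δ := by
    intro i j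
    have e : E i j = (t - t')⁻¹ * ((A - A') i j - (t - t') * B i j) := by
      rw [hE, Matrix.sub_apply, Matrix.smul_apply, smul_eq_mul]; field_simp
    rw [e, abs_mul, abs_inv, inv_mul_le_iff₀ htt0]
    refine (hdiff i j).trans ?_
    calc 2 * C / (r * s) ≤ 1 / (2 * C * b * r) * δ := by
          rw [div_mul_eq_mul_div, div_le_div_iff₀ (by positivity) (by positivity)]
          have : 4 * C ^ 2 * b ≤ s * δ := by
            have h1 : 4 * C ^ 2 * b / δ ≤ s := by nlinarith
            rwa [div_le_iff₀ hδ] at h1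
          nlinarith
      _ ≤ |t - t'| * δ := by gcongr
  obtain ⟨hdne, hdle⟩ := hnb E hEsmall
  have hAA : A - A' = (t - t') • (B + E) := by
    rw [hE, add_sub_cancel, smul_smul, mul_inv_cancel₀ htne, one_smul]
  have hdetAA : (A - A').det = (t - t') ^ d * (B + E).det := by
    rw [hAA, det_smul, Fintype.card_fin]
  obtain ⟨-, H, Z, hH, hAZ⟩ := hidx
  obtain ⟨-, H', Z', hH', hAZ'⟩ := hidx'
  have hX : (zr H')ᵀ * (A - A') * zr H = zr (H'ᵀ * Z - Z'ᵀ * H) := by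
    have e1 : zr (H'ᵀ * Z - Z'ᵀ * H) = (zr H')ᵀ * zr Z - (zr Z')ᵀ * zr H := by
      have : zr (H'ᵀ * Z - Z'ᵀ * H) = zr (H'ᵀ * Z) - zr (Z'ᵀ * H) := by ext i j; simp [zr]
      rw [this, zr_mul, zr_mul]; rfl
    rw [e1, ← hAZ, ← hAZ', transpose_mul, hsymm'.eq, Matrix.mul_sub, Matrix.sub_mul]
    simp only [Matrix.mul_assoc]
  have hdetX : (H'.det : ℝ) * (A - A').det * H.det = ((H'ᵀ * Z - Z'ᵀ * H).det : ℤ) := by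
    rw [← det_zr (H'ᵀ * Z - Z'ᵀ * H), ← hX, det_mul, det_mul, det_transpose, det_zr, det_zr]
  have habsH : |(H.det : ℝ)| = q := by rw [← hH, Nat.cast_natAbs, Int.cast_abs]
  have habsH' : |(H'.det : ℝ)| = q' := by rw [← hH', Nat.cast_natAbs, Int.cast_abs]
  have hXne : (H'ᵀ * Z - Z'ᵀ * H).det ≠ 0 := by
    intro h0
    rw [h0, Int.cast_zero] at hdetX
    have h1 : (H'.det : ℝ) ≠ 0 := abs_pos.1 (by rw [habsH']; exact hq0')
    have h2 : (H.det : ℝ) ≠ 0 := abs_pos.1 (by rw [habsH]; exact hq0)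
    rw [hdetAA] at hdetX
    exact mul_ne_zero (mul_ne_zero h1 (mul_ne_zero (pow_ne_zero _ htne) hdne)) h2 hdetX
  have hone : (1 : ℝ) ≤ |((H'ᵀ * Z - Z'ᵀ * H).det : ℝ)| := by exact_mod_cast Int.one_le_abs hXne
  rw [← hdetX, abs_mul, abs_mul, habsH, habsH', hdetAA, abs_mul, abs_pow] at hone
  rw [div_le_iff₀ (by positivity)]
  calc (1 : ℝ) ≤ q' * (|t - t'| ^ d * |(B + E).det|) * q := hone
    _ ≤ q' * (|t - t'| ^ d * (|B.det| + 1)) * q := by gcongr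
    _ = _ := by ring

/-- Members of the family with denominator at most `Y` number at most `C Y^{2/d}`. -/
lemma fam_count (hd : 1 ≤ d) (B : Matrix (Fin d) (Fin d) ℝ) (hB : B.det ≠ 0) (C T : ℝ)
    (hC : 1 ≤ C) (hT : 0 ≤ T) :
    ∃ C' r0 : ℝ, 0 ≤ C' ∧ 1 ≤ r0 ∧ ∀ r ≥ r0, ∀ Y : ℝ, 1 ≤ Y →
      ∀ s : Finset (Matrix (Fin d) (Fin d) ℝ),
      (∀ A ∈ s, A ∈ Fam B C T r ∧ (den A : ℝ) ≤ Y) → (s.card : ℝ) ≤ C' * Y ^ (2 / d : ℝ) := by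
  obtain ⟨c, r0, hc, hr0, hsep⟩ := separation hd B hB C T hC
  have hd0 : (0 : ℝ) < d := by exact_mod_cast hd
  refine ⟨2 * T * c ^ (-(1 / d : ℝ)) + 3, r0, by positivity, hr0, ?_⟩
  intro r hr Y hY s hs
  have hex : ∀ A : Matrix (Fin d) (Fin d) ℝ, ∃ t : ℝ, A ∈ Fam B C T r → |t| ≤ T ∧
      ∀ i j, |(A - t • B) i j| ≤ C * r ^ (-(3 / 2 : ℝ)) := by
    intro A
    by_cases hA : A ∈ Fam B C T r
    · obtain ⟨-, -, -, t, ht, h⟩ := id hA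
      exact ⟨t, fun _ => ⟨abs_le.2 ht, h⟩⟩
    · exact ⟨0, fun h => absurd h hA⟩
  choose f hf using hex
  have hY0 : 0 < Y := by linarith
  have hδ : 0 < (c / Y ^ 2) ^ (1 / d : ℝ) := by positivity
  have := sep_card s f T ((c / Y ^ 2) ^ (1 / d : ℝ)) hT hδ
    (fun A hA => (hf A (hs A hA).1).1) (by
      intro A hA A' hA' hne
      have h1 := hsep r hr A (hs A hA).1 A' (hs A' hA').1 hne (f A) (f A')
        (hf A (hs A hA).1).2 (hf A' (hs A' hA').1).2
      have h2 : c / Y ^ 2 ≤ |f A - f A'| ^ d := by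
        rw [div_le_iff₀ (by positivity)]
        refine h1.trans ?_
        have a1 := (hs A hA).2
        have a2 := (hs A' hA').2
        calc (den A * den A' : ℝ) * |f A - f A'| ^ d ≤ (Y * Y) * |f A - f A'| ^ d := by gcongr
          _ = _ := by ring
      calc (c / Y ^ 2) ^ (1 / d : ℝ) ≤ (|f A - f A'| ^ d) ^ (1 / d : ℝ) := by gcongr
        _ = |f A - f A'| := by
          rw [← Real.rpow_natCast, ← Real.rpow_mul (abs_nonneg _), mul_one_div_cancel hd0.ne',
            Real.rpow_one])
  refine this.trans ?_
  have e : T / (c / Y ^ 2) ^ (1 / d : ℝ) = T * c ^ (-(1 / d : ℝ)) * Y ^ (2 / d : ℝ) := by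
    rw [Real.div_rpow hc.le (by positivity), ← Real.rpow_natCast, ← Real.rpow_mul hY0.le,
      Real.rpow_neg hc.le]
    have : ((2 : ℕ) : ℝ) * (1 / d) = 2 / d := by push_cast; ring
    rw [this]
    field_simp
  have h1 : 1 ≤ Y ^ (2 / d : ℝ) := Real.one_le_rpow hY (by positivity)
  rw [e]
  nlinarith

end LPR

/-! ### Large denominators and irrationality -/

namespace LPR
open Matrix MeasureTheory Filter
open scoped ENNReal

variable {d : ℕ}

/-- At a fixed large scale all denominators in the family are bounded, so the count applies. -/
lemma fam_finite (hd : 1 ≤ d) (B : Matrix (Fin d) (Fin d) ℝ) (hB : B.det ≠ 0) (C T : ℝ)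
    (hC : 1 ≤ C) (hT : 0 ≤ T) : ∃ r0 : ℝ, 1 ≤ r0 ∧ ∀ r ≥ r0, (Fam B C T r).Finite := by
  obtain ⟨C', r0, hC', hr0, h⟩ := fam_count hd B hB C T hC hT
  refine ⟨r0, hr0, fun r hr => ?_⟩
  have hr1 : 1 ≤ r := hr0.trans hr
  by_contra hinf
  obtain ⟨n, hn⟩ := exists_nat_gt (C' * (C * r) ^ (2 / d : ℝ))
  obtain ⟨s, hs, hcard⟩ := Set.Infinite.exists_subset_card_eq hinf n
  have := h r hr (C * r) (one_le_mul_of_one_le_of_one_le hC hr1) s (fun A hA => by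
    have hA' := hs hA
    refine ⟨hA', ?_⟩
    obtain ⟨-, h1, h2, -⟩ := hA'
    have : (1 : ℝ) ≤ den A := by exact_mod_cast h1.1
    nlinarith)
  rw [hcard] at this
  linarith

/-- Dyadic summation of `fam_count`. It uses `2 / d - 1 / 2 ≤ -1 / 10`, that is `d ≥ 5`. -/
lemma fam_tail (hd : 5 ≤ d) (B : Matrix (Fin d) (Fin d) ℝ) (hB : B.det ≠ 0) (C T : ℝ)
    (hC : 1 ≤ C) (hT : 0 ≤ T) :
    ∃ C' r0 : ℝ, 0 ≤ C' ∧ 1 ≤ r0 ∧ ∀ r ≥ r0, ∀ k0 : ℕ,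
      ∀ s : Finset (Matrix (Fin d) (Fin d) ℝ),
      (∀ A ∈ s, A ∈ Fam B C T r ∧ 2 ^ k0 ≤ den A) →
      ∑ A ∈ s, (den A : ℝ) ^ (-(1 / 2 : ℝ)) ≤ C' * ((2 : ℝ) ^ (-(1 / 10 : ℝ))) ^ k0 := by
  classical
  obtain ⟨C', r0, hC', hr0, h⟩ := fam_count (by omega) B hB C T hC hT
  set x : ℝ := (2 : ℝ) ^ (-(1 / 10 : ℝ)) with hx
  have hx0 : 0 < x := by positivity
  have hx1 : x < 1 := Real.rpow_lt_one_of_one_lt_of_neg (by norm_num) (by norm_num)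
  refine ⟨C' * 2 * (1 / (1 - x)), r0, ?_, hr0, ?_⟩
  · have : 0 < 1 - x := by linarith
    positivity
  intro r hr k0 s hs
  have hd5 : (5 : ℝ) ≤ d := by exact_mod_cast hd
  obtain ⟨n, hn⟩ : ∃ n, ∀ A ∈ s, Nat.log 2 (den A) < n := by
    refine ⟨s.sup (fun A => Nat.log 2 (den A)) + 1, fun A hA => Nat.lt_succ_of_le ?_⟩
    exact Finset.le_sup (f := fun A => Nat.log 2 (den A)) hA
  have hpos : ∀ A ∈ s, den A ≠ 0 := fun A hA => by
    have := (hs A hA).2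
    have h2 : 0 < 2 ^ k0 := by positivity
    omega
  rw [← Finset.sum_fiberwise_of_maps_to (s := s) (t := Finset.Ico k0 n)
    (g := fun A => Nat.log 2 (den A)) (fun A hA => by
      rw [Finset.mem_Ico]
      exact ⟨(Nat.le_log_iff_pow_le (by norm_num) (hpos A hA)).2 (hs A hA).2, hn A hA⟩)]
  calc _ ≤ ∑ k ∈ Finset.Ico k0 n, C' * 2 * x ^ k := by
        refine Finset.sum_le_sum fun k _ => ?_
        set sk := s.filter fun A => Nat.log 2 (den A) = k with hsk
        have hk : ∀ A ∈ sk, (2 : ℝ) ^ k ≤ den A ∧ (den A : ℝ) ≤ 2 ^ (k + 1) := by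
          intro A hA
          rw [hsk, Finset.mem_filter] at hA
          have h1 := Nat.pow_log_le_self 2 (hpos A hA.1)
          have h2 := (Nat.lt_pow_succ_log_self (b := 2) (by norm_num) (den A)).le
          rw [hA.2] at h1 h2
          exact ⟨by exact_mod_cast h1, by exact_mod_cast h2⟩
        have h1 := h r hr (2 ^ (k + 1)) (one_le_pow₀ (by norm_num)) sk (fun A hA =>
          ⟨(hs A (Finset.mem_filter.1 hA).1).1, (hk A hA).2⟩)
        calc ∑ A ∈ sk, (den A : ℝ) ^ (-(1 / 2 : ℝ)) ≤ ∑ _A ∈ sk, ((2 : ℝ) ^ k) ^ (-(1 / 2 : ℝ)) := by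
              refine Finset.sum_le_sum fun A hA => ?_
              exact Real.rpow_le_rpow_of_nonpos (by positivity) (hk A hA).1 (by norm_num)
          _ = sk.card * ((2 : ℝ) ^ k) ^ (-(1 / 2 : ℝ)) := by rw [Finset.sum_const, nsmul_eq_mul]
          _ ≤ C' * ((2 : ℝ) ^ (k + 1)) ^ (2 / d : ℝ) * ((2 : ℝ) ^ k) ^ (-(1 / 2 : ℝ)) := by gcongr
          _ ≤ C' * ((2 : ℝ) ^ (k + 1)) ^ (2 / 5 : ℝ) * ((2 : ℝ) ^ k) ^ (-(1 / 2 : ℝ)) := by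
              have : (1 : ℝ) ≤ 2 ^ (k + 1) := one_le_pow₀ (by norm_num)
              gcongr
          _ ≤ C' * 2 * x ^ k := by
              have e1 : ((2 : ℝ) ^ (k + 1)) ^ (2 / 5 : ℝ) =
                  (2 : ℝ) ^ (2 / 5 : ℝ) * (2 : ℝ) ^ ((k : ℝ) * (2 / 5)) := by
                rw [← Real.rpow_natCast, ← Real.rpow_mul (by norm_num),
                  ← Real.rpow_add (by norm_num)]
                congr 1; push_cast; ring
              have e2 : ((2 : ℝ) ^ k) ^ (-(1 / 2 : ℝ)) = (2 : ℝ) ^ (-((k : ℝ) * (1 / 2))) := by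
                rw [← Real.rpow_natCast, ← Real.rpow_mul (by norm_num)]
                congr 1; ring
              have e3 : x ^ k = (2 : ℝ) ^ ((k : ℝ) * (2 / 5)) * (2 : ℝ) ^ (-((k : ℝ) * (1 / 2))) := by
                rw [hx, ← Real.rpow_natCast, ← Real.rpow_mul (by norm_num),
                  ← Real.rpow_add (by norm_num)]
                congr 1; ring
              have e4 : (2 : ℝ) ^ (2 / 5 : ℝ) ≤ 2 := by
                calc (2 : ℝ) ^ (2 / 5 : ℝ) ≤ (2 : ℝ) ^ (1 : ℝ) :=
                      Real.rpow_le_rpow_of_exponent_le (by norm_num) (by norm_num)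
                  _ = 2 := Real.rpow_one _
              rw [e1, e2, e3]
              calc _ = C' * (2 : ℝ) ^ (2 / 5 : ℝ) *
                    ((2 : ℝ) ^ ((k : ℝ) * (2 / 5)) * (2 : ℝ) ^ (-((k : ℝ) * (1 / 2)))) := by ring
                _ ≤ _ := by gcongr
    _ = C' * 2 * ∑ k ∈ Finset.Ico k0 n, x ^ k := by rw [Finset.mul_sum]
    _ ≤ C' * 2 * (x ^ k0 / (1 - x)) := by
        gcongr
        exact geom_sum_Ico_le_of_lt_one hx0.le hx1
    _ = _ := by ring

/-- For an irrational form, the only member of the family of small denominator is `0` once the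
scale is large. -/
lemma fam_irr (Q : Matrix (Fin d) (Fin d) ℝ) (hQ : ¬ IsRationalMat Q) (C T : ℝ)
    (hC : 0 ≤ C) (hT : 0 ≤ T) (Y : ℕ) : ∃ r0 : ℝ, 1 ≤ r0 ∧ ∀ r ≥ r0,
    ∀ A ∈ Fam (Real.pi⁻¹ • Q) C T r, den A ≤ Y → A = 0 := by
  set B : Matrix (Fin d) (Fin d) ℝ := Real.pi⁻¹ • Q with hB
  obtain ⟨b, hb0, hb⟩ : ∃ b : ℝ, 0 ≤ b ∧ ∀ i j, |B i j| ≤ b := by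
    refine ⟨∑ i, ∑ j, |B i j|,
      Finset.sum_nonneg fun _ _ => Finset.sum_nonneg fun _ _ => abs_nonneg _, fun i j => ?_⟩
    exact (Finset.single_le_sum (f := fun j => |B i j|) (fun _ _ => abs_nonneg _)
        (Finset.mem_univ j)).trans (Finset.single_le_sum (f := fun i => ∑ j, |B i j|)
        (fun _ _ => Finset.sum_nonneg fun _ _ => abs_nonneg _) (Finset.mem_univ i))
  set m : ℕ := ⌈Y * (T * b + C)⌉₊ with hm
  set I : Set (ℕ × (Fin d → Fin d → ℤ)) := Set.Icc 1 Y ×ˢ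
    (Set.Icc (fun _ _ => -(m : ℤ)) (fun _ _ => (m : ℤ))) ∩ {p | p.2 ≠ 0} with hI
  have hIfin : I.Finite := ((Set.finite_Icc _ _).prod (Set.finite_Icc _ _)).inter_of_left _
  have hev : ∀ᶠ r : ℝ in atTop, ∀ p ∈ I, ∀ t ∈ Set.Icc (-T) T,
      ∃ i j, C * r ^ (-(3 / 2 : ℝ)) < |(p.2 i j : ℝ) / p.1 - t * B i j| := by
    rw [eventually_all_finite hIfin]
    rintro ⟨q, Z⟩ ⟨⟨hq, -⟩, hZ⟩
    have hq1 : 1 ≤ q := hq.1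
    have hq0 : (0 : ℝ) < q := by exact_mod_cast hq1
    set g : ℝ → ℝ := fun t => ∑ i, ∑ j, |(Z i j : ℝ) / q - t * B i j| with hg
    have hgc : Continuous g := by
      simp only [hg]; fun_prop
    obtain ⟨t0, -, ht0⟩ := (isCompact_Icc (a := -T) (b := T)).exists_isMinOn
      ⟨0, by simp [hT]⟩ hgc.continuousOn
    have hgpos : 0 < g t0 := by
      have h0 : 0 ≤ g t0 :=
        Finset.sum_nonneg fun _ _ => Finset.sum_nonneg fun _ _ => abs_nonneg _
      rcases h0.lt_or_eq with h | h
      · exact h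
      exfalso
      have hz : ∀ i j, (Z i j : ℝ) / q = t0 * B i j := by
        intro i j
        have h1 := (Finset.sum_eq_zero_iff_of_nonneg (fun i _ =>
          Finset.sum_nonneg fun _ _ => abs_nonneg _)).1 h.symm i (Finset.mem_univ i)
        have h2 := (Finset.sum_eq_zero_iff_of_nonneg (fun j _ => abs_nonneg _)).1 h1 j
          (Finset.mem_univ j)
        exact sub_eq_zero.1 (abs_eq_zero.1 h2)
      by_cases ht : t0 = 0
      · apply hZ
        ext i j
        have := hz i j
        rw [ht, zero_mul, div_eq_zero_iff] at this
        rcases this with h | h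
        · exact_mod_cast h
        · exact absurd h hq0.ne'
      · apply hQ
        refine ⟨q * t0 * Real.pi⁻¹, by positivity, fun i j => ⟨Z i j, ?_⟩⟩
        have := hz i j
        rw [div_eq_iff hq0.ne'] at this
        rw [this, hB, Matrix.smul_apply, smul_eq_mul]; ring
    have hlim : Tendsto (fun r : ℝ => ((d : ℝ) * d + 1) * (C * r ^ (-(3 / 2 : ℝ)))) atTop
        (nhds (((d : ℝ) * d + 1) * (C * 0))) :=
      ((tendsto_rpow_neg_atTop (by norm_num)).const_mul C).const_mul _
    rw [mul_zero, mul_zero] at hlim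
    filter_upwards [hlim.eventually_lt_const hgpos, eventually_gt_atTop 0] with r hr hr0 t ht
    by_contra hcon
    push Not at hcon
    have h1 : g t0 ≤ g t := ht0 ht
    have h2 : g t ≤ ∑ _i : Fin d, ∑ _j : Fin d, C * r ^ (-(3 / 2 : ℝ)) :=
      Finset.sum_le_sum fun i _ => Finset.sum_le_sum fun j _ => hcon i j
    simp only [Finset.sum_const, Finset.card_univ, Fintype.card_fin, nsmul_eq_mul] at h2
    have h3 : 0 ≤ C * r ^ (-(3 / 2 : ℝ)) := by positivity
    linarith
  obtain ⟨r0, hr0⟩ := eventually_atTop.1 hev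
  refine ⟨max 1 r0, le_max_left _ _, fun r hr A hA hAY => ?_⟩
  have hr1 : 1 ≤ r := (le_max_left _ _).trans hr
  obtain ⟨-, hidx, -, t, ht, hAt⟩ := hA
  obtain ⟨Z, hZ⟩ := hidx.int
  have hq1 : 1 ≤ den A := hidx.1
  have hq0 : (0 : ℝ) < den A := by exact_mod_cast hq1
  have hZA : ∀ i j, (den A : ℝ) * A i j = Z i j := fun i j => by
    have := congrFun (congrFun hZ i) j; simpa [zr] using this
  have hrp : r ^ (-(3 / 2 : ℝ)) ≤ 1 := Real.rpow_le_one_of_one_le_of_nonpos hr1 (by norm_num)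
  by_contra hA0
  have hmem : ((den A, fun i j => Z i j) : ℕ × (Fin d → Fin d → ℤ)) ∈ I := by
    refine ⟨⟨⟨hq1, hAY⟩, ?_⟩, ?_⟩
    · have hbd : ∀ i j, |Z i j| ≤ (m : ℤ) := by
        intro i j
        have h1 : |A i j| ≤ T * b + C := by
          have e : A i j = t * B i j + (A - t • B) i j := by
            simp only [Matrix.sub_apply, Matrix.smul_apply, smul_eq_mul]; ring
          rw [e]
          refine (abs_add_le _ _).trans (add_le_add ?_ ?_)
          · rw [abs_mul]; exact mul_le_mul (abs_le.2 ht) (hb i j) (abs_nonneg _) hT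
          · exact (hAt i j).trans (mul_le_of_le_one_right hC hrp)
        have h2 : |(Z i j : ℝ)| ≤ Y * (T * b + C) := by
          rw [← hZA, abs_mul, abs_of_pos hq0]
          have : (den A : ℝ) ≤ Y := by exact_mod_cast hAY
          gcongr
        have h3 := h2.trans (Nat.le_ceil (Y * (T * b + C)))
        exact_mod_cast h3
      exact ⟨fun i j => (abs_le.1 (hbd i j)).1, fun i j => (abs_le.1 (hbd i j)).2⟩
    · intro h0
      apply hA0
      ext i j
      have h1 : Z i j = 0 := congrFun (congrFun h0 i) j
      have h2 := hZA i j
      rw [h1, Int.cast_zero] at h2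
      exact (mul_eq_zero.1 h2).resolve_left hq0.ne'
  obtain ⟨i, j, hij⟩ := hr0 r ((le_max_right _ _).trans hr) _ hmem t ht
  have h4 := hAt i j
  have e : (Z i j : ℝ) / den A - t * B i j = (A - t • B) i j := by
    rw [← hZA, Matrix.sub_apply, Matrix.smul_apply, smul_eq_mul]; field_simp
  simp only [e] at hij
  linarith

end LPR

/-! ### Mean value of the exponential sums -/

namespace LPR
open Matrix MeasureTheory Filter
open scoped ENNReal

variable {d : ℕ}

/-- At a parameter with many coincidences the exponential sum is bounded by the major arc term of
some member of the family. -/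
lemma major_bound (L : ℝ) (hL : 0 ≤ L) (c : ℝ) (hc : 0 < c) (hc1 : c ≤ 1)
    (hc2 : 2 * d * c ^ 2 < 1) :
    ∃ C : ℝ, 1 ≤ C ∧ ∀ ψ, IsBump ψ L → ∀ Q : Matrix (Fin d) (Fin d) ℝ, Q.IsSymm →
      ∀ (M : Fin d → ℝ) (r t T : ℝ), C < r → t ∈ Set.Icc (-T) T →
      r ^ (2 * d) ≤ ((Hs Q c r t).card : ℝ) ^ 2 * r →
      ∃ A ∈ Fam (Real.pi⁻¹ • Q) C T r, ‖Ssum Q M ψ r t‖ ≤ C * r ^ d * (den A : ℝ) ^ (-(1 / 2 : ℝ)) *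
        dfun (r ^ 2 • (A - t • (Real.pi⁻¹ • Q))) ^ (-(1 / 4 : ℝ)) := by
  obtain ⟨C0, hC0, hweyl⟩ := weyl d L c hL hc hc1
  obtain ⟨C1, hC1, hmajor⟩ := major d
  obtain ⟨C5, hC5, hentry⟩ := entry_le_dfun (d := d)
  obtain ⟨C6, hC6, hone⟩ := one_le_dfun (d := d)
  have hprod : 1 ≤ C1 * C5 * C6 * (1 + C0 ^ 2) := by
    have := one_le_mul_of_one_le_of_one_le (one_le_mul_of_one_le_of_one_le hC1 hC5) hC6
    exact one_le_mul_of_one_le_of_one_le this (by nlinarith)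
  have hle1 : C1 ≤ C1 * C5 * C6 * (1 + C0 ^ 2) := by
    have h : 1 ≤ C5 * C6 * (1 + C0 ^ 2) := one_le_mul_of_one_le_of_one_le
      (one_le_mul_of_one_le_of_one_le hC5 hC6) (by nlinarith)
    nlinarith
  have hle16 : C1 * C6 ≤ C1 * C5 * C6 * (1 + C0 ^ 2) := by
    have h : 1 ≤ C5 * (1 + C0 ^ 2) := one_le_mul_of_one_le_of_one_le hC5 (by nlinarith)
    have h2 : 0 < C1 * C6 := by positivity
    nlinarith
  have hle15 : C1 * C5 ≤ C1 * C5 * C6 * (1 + C0 ^ 2) := by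
    have h : 1 ≤ C6 * (1 + C0 ^ 2) := one_le_mul_of_one_le_of_one_le hC6 (by nlinarith)
    have h2 : 0 < C1 * C5 := by positivity
    nlinarith
  have hle10 : C0 ^ 2 * C1 ≤ C1 * C5 * C6 * (1 + C0 ^ 2) := by
    have h : 1 ≤ C5 * C6 := one_le_mul_of_one_le_of_one_le hC5 hC6
    have h2 : 0 ≤ C1 * (1 + C0 ^ 2) := by positivity
    nlinarith
  set C := C1 * C5 * C6 * (1 + C0 ^ 2) with hC
  refine ⟨C, hprod, fun ψ hψ Q hQ M r t T hCr ht hN => ?_⟩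
  have hr1 : 1 ≤ r := by linarith
  have hr0 : 0 < r := by linarith
  have hw := hweyl ψ hψ Q hQ M r t hr1
  set N : ℝ := ((Hs Q c r t).card : ℝ) with hNdef
  have hN2 : 0 < N ^ 2 := by
    have : 0 < r ^ (2 * d) := by positivity
    by_contra h
    nlinarith
  obtain ⟨A, H, Z, hA, hH, hAZ, hbound⟩ := hmajor Q hQ c r t hc hc1 hc2 hr1 (by
    have h1 : 0 < r ^ (2 * d) := by positivity
    calc C1 * r ^ (2 * d) < r * r ^ (2 * d) := by gcongr; linarith
      _ ≤ r * (N ^ 2 * r) := by gcongr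
      _ = (N * r) ^ 2 := by ring)
  rw [← hNdef] at hbound
  set B : Matrix (Fin d) (Fin d) ℝ := Real.pi⁻¹ • Q with hB
  set D := dfun (r ^ 2 • (A - t • B)) with hD
  have hD1 := hone (r ^ 2 • (A - t • B))
  rw [← hD] at hD1
  have hDpos : 0 < D := by
    by_contra h
    push Not at h
    nlinarith
  obtain ⟨hidx, hden⟩ := HasIndex.den_spec (A := A) (q := H.det.natAbs)
    ⟨Int.natAbs_pos.2 hH, H, Z, rfl, hAZ⟩
  have hden' : (den A : ℝ) ^ 2 ≤ (H.det : ℝ) ^ 2 := by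
    have : (den A : ℝ) ≤ |(H.det : ℝ)| := by
      have : (den A : ℝ) ≤ (H.det.natAbs : ℝ) := by exact_mod_cast hden
      rwa [Nat.cast_natAbs, Int.cast_abs] at this
    rw [← sq_abs (H.det : ℝ)]
    gcongr
  have hq1 : (1 : ℝ) ≤ den A := by exact_mod_cast hidx.1
  have hmain : N ^ 2 * (den A : ℝ) ^ 2 * D ≤ C1 * r ^ (2 * d) :=
    le_trans (by gcongr) hbound
  have hmain2 : (den A : ℝ) ^ 2 * D ≤ C1 * r := by
    have : N ^ 2 * ((den A : ℝ) ^ 2 * D) ≤ N ^ 2 * (C1 * r) := by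
      calc _ = N ^ 2 * (den A : ℝ) ^ 2 * D := by ring
        _ ≤ C1 * r ^ (2 * d) := hmain
        _ ≤ C1 * (N ^ 2 * r) := by gcongr
        _ = _ := by ring
    exact le_of_mul_le_mul_left this hN2
  refine ⟨A, ⟨hA, hidx, ?_, t, ht, ?_⟩, ?_⟩
  · calc (den A : ℝ) ^ 2 ≤ (den A : ℝ) ^ 2 * (C6 * D) := le_mul_of_one_le_right (by positivity) hD1
      _ = C6 * ((den A : ℝ) ^ 2 * D) := by ring
      _ ≤ C6 * (C1 * r) := by gcongr
      _ = (C1 * C6) * r := by ring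
      _ ≤ C * r := by gcongr
  · intro i j
    have h1 := hentry (r ^ 2 • (A - t • B)) i j
    rw [← hD, Matrix.smul_apply, smul_eq_mul] at h1
    have h2 : D ≤ C1 * r := by
      refine le_trans ?_ hmain2
      exact le_mul_of_one_le_left hDpos.le (one_le_pow₀ hq1)
    have h3 : (r ^ 2 * (A - t • B) i j) ^ 2 ≤ (C1 * C5) ^ 2 * r := by
      have h4 : 1 ≤ C1 * C5 := one_le_mul_of_one_le_of_one_le hC1 hC5
      calc _ ≤ C5 * (C1 * r) := h1.trans (by gcongr)
        _ = (C1 * C5) * 1 * r := by ring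
        _ ≤ (C1 * C5) * (C1 * C5) * r := by gcongr
        _ = _ := by ring
    have h4 : r ^ 2 * |(A - t • B) i j| ≤ (C1 * C5) * r ^ (1 / 2 : ℝ) := by
      refine le_of_pow_le_pow_left₀ (n := 2) (by norm_num) (by positivity) ?_
      rw [mul_pow, sq_abs, ← mul_pow]
      refine h3.trans (le_of_eq ?_)
      rw [mul_pow (C1 * C5) (r ^ (1 / 2 : ℝ)), ← Real.rpow_natCast (r ^ (1 / 2 : ℝ)), ← Real.rpow_mul hr0.le]
      norm_num
    have h5 : r ^ (-(3 / 2 : ℝ)) = r ^ (1 / 2 : ℝ) / r ^ 2 := by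
      rw [← Real.rpow_natCast, ← Real.rpow_sub hr0]; norm_num
    rw [h5, ← mul_div_assoc, le_div_iff₀ (by positivity), mul_comm]
    exact h4.trans (by gcongr)
  · refine le_of_pow_le_pow_left₀ (n := 4) (by norm_num) (by positivity) ?_
    have e1 : ((den A : ℝ) ^ (-(1 / 2 : ℝ))) ^ 4 = ((den A : ℝ) ^ 2)⁻¹ := by
      rw [← Real.rpow_natCast, ← Real.rpow_mul (by positivity), ← Real.rpow_natCast,
        ← Real.rpow_neg (by positivity)]
      norm_num
    have e2 : (D ^ (-(1 / 4 : ℝ))) ^ 4 = D⁻¹ := by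
      rw [← Real.rpow_natCast, ← Real.rpow_mul hDpos.le, ← Real.rpow_neg_one]
      norm_num
    rw [mul_pow, mul_pow, mul_pow, e1, e2]
    calc ‖Ssum Q M ψ r t‖ ^ 4 = (‖Ssum Q M ψ r t‖ ^ 2) ^ 2 := by ring
      _ ≤ (C0 * r ^ d * N) ^ 2 := by gcongr
      _ = C0 ^ 2 * (r ^ d) ^ 2 * N ^ 2 := by ring
      _ ≤ C0 ^ 2 * (r ^ d) ^ 2 * (C1 * r ^ (2 * d) / ((den A : ℝ) ^ 2 * D)) := by
          gcongr
          rw [le_div_iff₀ (by positivity), ← mul_assoc]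
          exact hmain
      _ = (C0 ^ 2 * C1) * (r ^ d) ^ 4 * ((den A : ℝ) ^ 2)⁻¹ * D⁻¹ := by
          rw [mul_comm 2 d, pow_mul]; field_simp
      _ ≤ C ^ 4 * (r ^ d) ^ 4 * ((den A : ℝ) ^ 2)⁻¹ * D⁻¹ := by
          have : C0 ^ 2 * C1 ≤ C ^ 4 := hle10.trans (le_self_pow₀ hprod (by norm_num))
          gcongr

/-- The exponential sums are negligible in mean away from `|t| ≤ K/r²`. -/
theorem S_tail (hd : 5 ≤ d) (Q : Matrix (Fin d) (Fin d) ℝ) (hQ : Q.IsSymm) (hdet : IsUnit Q.det)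
    (hirr : ¬ IsRationalMat Q) (L : ℝ) (ψ : ℝ → ℝ) (hψ : IsBump ψ L) (M : Fin d → ℝ) (T : ℝ)
    (hT : 0 ≤ T) :
    ∃ C : ℝ, 0 ≤ C ∧ ∀ K : ℝ, 1 ≤ K → ∀ η : ℝ, 0 < η → ∃ r0 : ℝ, 1 ≤ r0 ∧ ∀ r ≥ r0,
      ∫⁻ t in Set.Icc (-T) T ∩ {t : ℝ | K / r ^ 2 ≤ |t|}, ENNReal.ofReal ‖Ssum Q M ψ r t‖ ≤
        ENNReal.ofReal ((C * K ^ (1 - (d : ℝ) / 2) + η) * (r ^ d / r ^ 2)) := by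
  classical
  have hL := hψ.L_nonneg
  have hd5 : (5 : ℝ) ≤ d := by exact_mod_cast hd
  set c : ℝ := 1 / (2 * d) with hc
  have hc0 : 0 < c := by positivity
  have hc1 : c ≤ 1 := by rw [hc, div_le_one (by positivity)]; linarith
  have hc2 : 2 * d * c ^ 2 < 1 := by
    have : 2 * d * c ^ 2 = c := by rw [hc]; field_simp
    rw [this, hc, div_lt_one (by positivity)]; linarith
  set B : Matrix (Fin d) (Fin d) ℝ := Real.pi⁻¹ • Q with hB
  have hBdet : B.det ≠ 0 := by
    rw [hB, det_smul]
    exact mul_ne_zero (pow_ne_zero _ (inv_ne_zero Real.pi_ne_zero)) hdet.ne_zero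
  obtain ⟨C0, hC0, hweyl⟩ := weyl d L c hL hc0 hc1
  obtain ⟨C, hC1, hmaj⟩ := major_bound (d := d) L hL c hc0 hc1 hc2
  obtain ⟨C2, f, hC2, hfm, hf1, hf2⟩ := minor (d := d) (by omega) (9 / 40) (by norm_num)
    (by linarith) Q hdet c hc0 hc1 T (1 / 80) (by norm_num)
  obtain ⟨C3, hC3, hI3⟩ := dfun_integral (by omega) B hBdet
  obtain ⟨C4, hC4, hI4⟩ := dfun_integral_zero (by omega) B hBdet
  obtain ⟨rF, hrF, hfin⟩ := fam_finite (by omega) B hBdet C T hC1 hT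
  obtain ⟨C5, rT, hC5, hrT, htail⟩ := fam_tail hd B hBdet C T hC1 hT
  set x : ℝ := (2 : ℝ) ^ (-(1 / 10 : ℝ)) with hx
  have hx0 : 0 < x := by positivity
  have hx1 : x < 1 := Real.rpow_lt_one_of_one_lt_of_neg (by norm_num) (by norm_num)
  refine ⟨C * C4, by positivity, fun K hK η hη => ?_⟩
  obtain ⟨k0, hk0⟩ : ∃ k0 : ℕ, C * C3 * C5 * x ^ k0 ≤ η / 2 := by
    have h1 := (tendsto_pow_atTop_nhds_zero_of_lt_one hx0.le hx1).const_mul (C * C3 * C5)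
    rw [mul_zero] at h1
    exact (h1.eventually_le_const (by positivity : 0 < η / 2)).exists
  obtain ⟨rI, hrI, hirr'⟩ := fam_irr Q hirr C T (by linarith) hT (2 ^ k0)
  obtain ⟨rM, hrM⟩ : ∃ rM : ℝ, ∀ r ≥ rM, Real.sqrt C0 * C2 * r ^ (-(1 / 80 : ℝ)) ≤ η / 2 := by
    have h1 := (tendsto_rpow_neg_atTop (by norm_num : (0 : ℝ) < 1 / 80)).const_mul
      (Real.sqrt C0 * C2)
    rw [mul_zero] at h1
    exact eventually_atTop.1 (h1.eventually_le_const (by positivity : 0 < η / 2))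
  refine ⟨max 1 (max (C + 1) (max rF (max rT (max rI rM)))), le_max_left _ _, fun r hr => ?_⟩
  simp only [ge_iff_le, max_le_iff] at hr
  obtain ⟨hr1, hrC, hr2, hr3, hr4, hr5⟩ := hr
  have hr0 : 0 < r := by linarith
  set S := (hfin r hr2).toFinset with hS
  have hSmem : ∀ A, A ∈ S ↔ A ∈ Fam B C T r := fun A => Set.Finite.mem_toFinset _
  set dom : Set ℝ := Set.Icc (-T) T ∩ {t : ℝ | K / r ^ 2 ≤ |t|} with hdom
  set e0 : ℝ := (d : ℝ) / 2 + ((d : ℝ) - 1 / 2) / 20 with he0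
  set g : Matrix (Fin d) (Fin d) ℝ → ℝ → ℝ≥0∞ := fun A t =>
    ENNReal.ofReal (dfun (r ^ 2 • (A - t • B)) ^ (-(1 / 4 : ℝ))) with hg
  have hgm : ∀ A, Measurable (g A) := fun A =>
    ((continuous_dfun r A B).measurable.pow_const _).ennreal_ofReal
  have hdomm : MeasurableSet dom :=
    measurableSet_Icc.inter (measurableSet_le measurable_const (by fun_prop))
  have hpt : ∀ t ∈ dom, ENNReal.ofReal ‖Ssum Q M ψ r t‖ ≤
      ENNReal.ofReal (Real.sqrt C0 * r ^ e0) * f r t +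
      ∑ A ∈ S, ENNReal.ofReal (C * r ^ d * (den A : ℝ) ^ (-(1 / 2 : ℝ))) * g A t := by
    intro t ht
    by_cases hN : r ^ (2 * d) ≤ ((Hs Q c r t).card : ℝ) ^ 2 * r
    · obtain ⟨A, hA, hle⟩ := hmaj ψ hψ Q hQ M r t T (by linarith) ht.1 hN
      refine le_trans ?_ le_add_self
      refine le_trans ?_ (Finset.single_le_sum
        (f := fun A => ENNReal.ofReal (C * r ^ d * (den A : ℝ) ^ (-(1 / 2 : ℝ))) * g A t)
        (fun _ _ => by positivity) ((hSmem A).2 hA))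
      simp only [hg]
      rw [← ENNReal.ofReal_mul (by positivity)]
      exact ENNReal.ofReal_le_ofReal hle
    · push Not at hN
      refine le_trans ?_ le_self_add
      have hw := hweyl ψ hψ Q hQ M r t hr1
      have hf := hf1 r hr1 t
      set N : ℝ := ((Hs Q c r t).card : ℝ) with hNdef
      have hN0 : 0 ≤ N := Nat.cast_nonneg _
      have h1 : N ^ 2 ≤ r ^ (2 * (d : ℝ) - 1) := by
        have : r ^ (2 * (d : ℝ) - 1) = r ^ (2 * d) / r := by
          rw [Real.rpow_sub hr0, Real.rpow_one, ← Real.rpow_natCast]; push_cast; rfl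
        rw [this, le_div_iff₀ hr0]; exact hN.le
      have h2 : N ^ (1 / 20 : ℝ) ≤ r ^ (((d : ℝ) - 1 / 2) / 20) := by
        calc N ^ (1 / 20 : ℝ) = (N ^ 2) ^ (1 / 40 : ℝ) := by
              rw [← Real.rpow_natCast, ← Real.rpow_mul hN0]; norm_num
          _ ≤ (r ^ (2 * (d : ℝ) - 1)) ^ (1 / 40 : ℝ) := by gcongr
          _ = _ := by rw [← Real.rpow_mul hr0.le]; congr 1; ring
      have h3 : ‖Ssum Q M ψ r t‖ ≤ Real.sqrt C0 * r ^ e0 * N ^ (2 * (9 / 40) : ℝ) := by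
        calc ‖Ssum Q M ψ r t‖ ≤ Real.sqrt (C0 * r ^ d * N) := Real.le_sqrt_of_sq_le hw
          _ = Real.sqrt C0 * r ^ ((d : ℝ) / 2) * N ^ (1 / 2 : ℝ) := by
              rw [Real.sqrt_mul (by positivity), Real.sqrt_mul hC0, Real.sqrt_eq_rpow N,
                Real.sqrt_eq_rpow (r ^ d), ← Real.rpow_natCast, ← Real.rpow_mul hr0.le]
              congr 3; ring
          _ = Real.sqrt C0 * r ^ ((d : ℝ) / 2) * (N ^ (1 / 20 : ℝ) * N ^ (2 * (9 / 40) : ℝ)) := by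
              rw [← Real.rpow_add_of_nonneg hN0 (by norm_num) (by norm_num)]; norm_num
          _ ≤ Real.sqrt C0 * r ^ ((d : ℝ) / 2) *
              (r ^ (((d : ℝ) - 1 / 2) / 20) * N ^ (2 * (9 / 40) : ℝ)) := by gcongr
          _ = _ := by rw [he0, Real.rpow_add hr0]; ring
      calc _ ≤ ENNReal.ofReal (Real.sqrt C0 * r ^ e0 * N ^ (2 * (9 / 40) : ℝ)) :=
            ENNReal.ofReal_le_ofReal h3
        _ = ENNReal.ofReal (Real.sqrt C0 * r ^ e0) * ENNReal.ofReal (N ^ (2 * (9 / 40) : ℝ)) :=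
            ENNReal.ofReal_mul (by positivity)
        _ ≤ _ := by gcongr
  have hgA : ∀ A ∈ S.erase 0, ∫⁻ t in dom, g A t ≤ ENNReal.ofReal (C3 * (r ^ 2)⁻¹) := fun A _ =>
    (setLIntegral_le_lintegral _ _).trans (hI3 A r hr1)
  have hg0 : ∫⁻ t in dom, g 0 t ≤ ENNReal.ofReal (C4 * K ^ (1 - (d : ℝ) / 2) * (r ^ 2)⁻¹) :=
    (lintegral_mono_set Set.inter_subset_right).trans (hI4 r K hr1 hK)
  have hmin : ∫⁻ t in dom, f r t ≤ ENNReal.ofReal (C2 * r ^ (2 * d * (9 / 40) - 2 + 1 / 80 : ℝ)) :=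
    (lintegral_mono_set Set.inter_subset_left).trans (hf2 r hr1)
  have hsum : ∑ A ∈ S.erase 0, (den A : ℝ) ^ (-(1 / 2 : ℝ)) ≤ C5 * x ^ k0 := by
    refine htail r hr3 k0 _ fun A hA => ?_
    rw [Finset.mem_erase] at hA
    refine ⟨(hSmem A).1 hA.2, ?_⟩
    by_contra hlt
    exact hA.1 (hirr' r hr4 A ((hSmem A).1 hA.2) (by omega))
  have hden0 : ((den (0 : Matrix (Fin d) (Fin d) ℝ) : ℕ) : ℝ) ^ (-(1 / 2 : ℝ)) ≤ 1 := by
    have h1 : HasIndex (0 : Matrix (Fin d) (Fin d) ℝ) 1 := by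
      refine ⟨one_pos, 1, 0, by simp, ?_⟩
      ext i j; simp [zr]
    have h2 : (1 : ℝ) ≤ den (0 : Matrix (Fin d) (Fin d) ℝ) := by exact_mod_cast h1.den_spec.1.1
    exact Real.rpow_le_one_of_one_le_of_nonpos h2 (by norm_num)
  calc ∫⁻ t in dom, ENNReal.ofReal ‖Ssum Q M ψ r t‖
      ≤ ∫⁻ t in dom, (ENNReal.ofReal (Real.sqrt C0 * r ^ e0) * f r t +
      ∑ A ∈ S, ENNReal.ofReal (C * r ^ d * (den A : ℝ) ^ (-(1 / 2 : ℝ))) * g A t) :=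
        setLIntegral_mono' hdomm hpt
    _ = ENNReal.ofReal (Real.sqrt C0 * r ^ e0) * (∫⁻ t in dom, f r t) +
        ∑ A ∈ S, ENNReal.ofReal (C * r ^ d * (den A : ℝ) ^ (-(1 / 2 : ℝ))) *
          ∫⁻ t in dom, g A t := by
        rw [lintegral_add_left ((hfm r).const_mul _), lintegral_const_mul _ (hfm r),
          lintegral_finsetSum _ fun A _ => (hgm A).const_mul _]
        have e : ∀ A, ∫⁻ t in dom, ENNReal.ofReal (C * r ^ d * (den A : ℝ) ^ (-(1 / 2 : ℝ))) * g A t =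
            ENNReal.ofReal (C * r ^ d * (den A : ℝ) ^ (-(1 / 2 : ℝ))) * ∫⁻ t in dom, g A t :=
          fun A => lintegral_const_mul _ (hgm A)
        simp only [e]
    _ ≤ ENNReal.ofReal (Real.sqrt C0 * r ^ e0) *
          ENNReal.ofReal (C2 * r ^ (2 * d * (9 / 40) - 2 + 1 / 80 : ℝ)) +
        (ENNReal.ofReal (C * r ^ d * 1) *
            ENNReal.ofReal (C4 * K ^ (1 - (d : ℝ) / 2) * (r ^ 2)⁻¹) +
          ∑ A ∈ S.erase 0, ENNReal.ofReal (C * r ^ d * (den A : ℝ) ^ (-(1 / 2 : ℝ))) *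
            ENNReal.ofReal (C3 * (r ^ 2)⁻¹)) := by
        refine add_le_add (mul_le_mul' le_rfl hmin) ?_
        have hsub : S ⊆ insert 0 (S.erase 0) := by
          intro A hA
          rw [Finset.mem_insert, Finset.mem_erase]
          by_cases h : A = 0
          · exact Or.inl h
          · exact Or.inr ⟨h, hA⟩
        refine (Finset.sum_le_sum_of_subset hsub).trans ?_
        rw [Finset.sum_insert (Finset.notMem_erase _ _)]
        refine add_le_add ?_ (Finset.sum_le_sum fun A hA => ?_)
        · gcongr
        · gcongr
          exact hgA A hA
    _ = ENNReal.ofReal (Real.sqrt C0 * r ^ e0 * (C2 * r ^ (2 * d * (9 / 40) - 2 + 1 / 80 : ℝ)) +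
        (C * r ^ d * 1 * (C4 * K ^ (1 - (d : ℝ) / 2) * (r ^ 2)⁻¹) +
          ∑ A ∈ S.erase 0, C * r ^ d * (den A : ℝ) ^ (-(1 / 2 : ℝ)) * (C3 * (r ^ 2)⁻¹))) := by
        have hn : ∀ A ∈ S.erase 0,
            0 ≤ C * r ^ d * (den A : ℝ) ^ (-(1 / 2 : ℝ)) * (C3 * (r ^ 2)⁻¹) :=
          fun A _ => by positivity
        have e : ∀ A : Matrix (Fin d) (Fin d) ℝ, ENNReal.ofReal (C * r ^ d * (den A : ℝ) ^ (-(1 / 2 : ℝ))) *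
            ENNReal.ofReal (C3 * (r ^ 2)⁻¹) =
            ENNReal.ofReal (C * r ^ d * (den A : ℝ) ^ (-(1 / 2 : ℝ)) * (C3 * (r ^ 2)⁻¹)) :=
          fun A => (ENNReal.ofReal_mul (by positivity)).symm
        simp only [e]
        rw [ENNReal.ofReal_add (by positivity) (add_nonneg (by positivity)
          (Finset.sum_nonneg hn)), ENNReal.ofReal_add (by positivity) (Finset.sum_nonneg hn),
          ENNReal.ofReal_sum_of_nonneg hn,
          ← ENNReal.ofReal_mul (p := Real.sqrt C0 * r ^ e0) (by positivity),
          ← ENNReal.ofReal_mul (p := C * r ^ d * 1) (by positivity)]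
    _ ≤ _ := by
        refine ENNReal.ofReal_le_ofReal ?_
        have e1 : r ^ e0 * r ^ (2 * d * (9 / 40) - 2 + 1 / 80 : ℝ) =
            r ^ (-(1 / 80 : ℝ)) * (r ^ d / r ^ 2) := by
          rw [← Real.rpow_add hr0, ← Real.rpow_natCast, ← Real.rpow_natCast, ← Real.rpow_sub hr0,
            ← Real.rpow_add hr0]
          congr 1; rw [he0]; push_cast; ring
        have p : 0 ≤ r ^ d / r ^ 2 := by positivity
        have a1 : Real.sqrt C0 * r ^ e0 * (C2 * r ^ (2 * d * (9 / 40) - 2 + 1 / 80 : ℝ)) ≤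
            η / 2 * (r ^ d / r ^ 2) := by
          calc _ = Real.sqrt C0 * C2 * (r ^ e0 * r ^ (2 * d * (9 / 40) - 2 + 1 / 80 : ℝ)) := by ring
            _ = Real.sqrt C0 * C2 * r ^ (-(1 / 80 : ℝ)) * (r ^ d / r ^ 2) := by rw [e1]; ring
            _ ≤ _ := by gcongr; exact hrM r hr5
        have a2 : ∑ A ∈ S.erase 0, C * r ^ d * (den A : ℝ) ^ (-(1 / 2 : ℝ)) * (C3 * (r ^ 2)⁻¹) ≤
            η / 2 * (r ^ d / r ^ 2) := by
          calc _ = C * C3 * (∑ A ∈ S.erase 0, (den A : ℝ) ^ (-(1 / 2 : ℝ))) * (r ^ d / r ^ 2) := by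
                rw [Finset.mul_sum, Finset.sum_mul]
                exact Finset.sum_congr rfl fun A _ => by field_simp
            _ ≤ C * C3 * (C5 * x ^ k0) * (r ^ d / r ^ 2) := by gcongr
            _ = C * C3 * C5 * x ^ k0 * (r ^ d / r ^ 2) := by ring
            _ ≤ _ := by gcongr
        have a3 : C * r ^ d * 1 * (C4 * K ^ (1 - (d : ℝ) / 2) * (r ^ 2)⁻¹) =
            C * C4 * K ^ (1 - (d : ℝ) / 2) * (r ^ d / r ^ 2) := by field_simp
        rw [a3]
        linarith

end LPR

/-! ### The Fejér kernel -/

namespace LPR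
open Matrix MeasureTheory Filter
open scoped ENNReal

/-- The Fourier transform `∫₀¹ e^{iux} du` of the unit interval. -/
noncomputable def fA (x : ℝ) : ℂ := ∫ u in Set.Ioc (0 : ℝ) 1, Complex.exp (u * x * Complex.I)

/-- The Fejér kernel `|∫₀¹ e^{iux} du|²`. -/
noncomputable def fejer (x : ℝ) : ℝ := ‖fA x‖ ^ 2

theorem fejer_nonneg (x : ℝ) : 0 ≤ fejer x := sq_nonneg _

theorem fA_mul (x : ℝ) : fA x * (x * Complex.I) = Complex.exp (x * Complex.I) - 1 := by
  rcases eq_or_ne x 0 with rfl | hx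
  · simp
  have hc : (x : ℂ) * Complex.I ≠ 0 := mul_ne_zero (by exact_mod_cast hx) Complex.I_ne_zero
  have h := integral_exp_mul_complex (a := 0) (b := 1) hc
  rw [intervalIntegral.integral_of_le (by norm_num)] at h
  have h2 : fA x = ∫ u in Set.Ioc (0 : ℝ) 1, Complex.exp (x * Complex.I * u) := by
    rw [fA]; congr 1; ext u; congr 1; ring
  rw [h2, h, div_mul_cancel₀ _ hc]; simp

theorem fejer_mul (x : ℝ) : x ^ 2 * fejer x = 2 - 2 * Real.cos x := by
  have h : ‖fA x * (x * Complex.I)‖ ^ 2 = ‖Complex.exp (x * Complex.I) - 1‖ ^ 2 := by rw [fA_mul]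
  rw [norm_mul, norm_mul, Complex.norm_I, mul_one, mul_pow, Complex.norm_real, Real.norm_eq_abs,
    sq_abs] at h
  rw [fejer, mul_comm, h, Complex.sq_norm, Complex.normSq_apply, Complex.sub_re, Complex.sub_im,
    Complex.exp_ofReal_mul_I_re, Complex.exp_ofReal_mul_I_im, Complex.one_re, Complex.one_im]
  nlinarith [Real.sin_sq_add_cos_sq x]

theorem fejer_le_one (x : ℝ) : fejer x ≤ 1 := by
  have : ‖fA x‖ ≤ 1 := by
    have h := norm_setIntegral_le_of_norm_le_const (μ := volume) (s := Set.Ioc (0 : ℝ) 1)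
      (f := fun u : ℝ => Complex.exp (u * x * Complex.I)) (C := 1) (by simp) (fun u _ => by
        rw [← Complex.ofReal_mul, Complex.norm_exp_ofReal_mul_I])
    simpa [fA] using h
  exact pow_le_one₀ (norm_nonneg _) this

theorem fejer_le (x : ℝ) : fejer x ≤ 5 * (1 + x ^ 2)⁻¹ := by
  rw [← div_eq_mul_inv, le_div_iff₀ (by positivity)]
  nlinarith [fejer_mul x, fejer_le_one x, Real.neg_one_le_cos x]

theorem fejer_lower (x : ℝ) :
    (2 - 2 * Real.cos (1 / 2)) * (1 + x ^ 2)⁻¹ ≤ fejer x + fejer (x + 1) := by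
  rw [← div_eq_mul_inv, div_le_iff₀ (by positivity)]
  have h1 := fejer_mul x
  have h2 := fejer_mul (x + 1)
  have h3 : Real.cos x + Real.cos (x + 1) = 2 * Real.cos (x + 1 / 2) * Real.cos (1 / 2) := by
    rw [Real.cos_add_cos]
    rw [show (x + (x + 1)) / 2 = x + 1 / 2 by ring, show (x - (x + 1)) / 2 = -(1 / 2) by ring,
      Real.cos_neg]
  have h4 : 0 ≤ Real.cos (1 / 2) := Real.cos_nonneg_of_neg_pi_div_two_le_of_le
    (by linarith [Real.pi_gt_three]) (by linarith [Real.pi_gt_three])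
  have h5 : Real.cos (x + 1 / 2) * Real.cos (1 / 2) ≤ Real.cos (1 / 2) := by
    nlinarith [Real.cos_le_one (x + 1 / 2)]
  nlinarith [fejer_nonneg x, fejer_nonneg (x + 1),
    mul_nonneg (fejer_nonneg (x + 1)) (sq_nonneg (x - 1)), mul_nonneg (fejer_nonneg x) (sq_nonneg x)]

/-- Uniform measure on the unit square. -/
noncomputable def sqm : Measure (ℝ × ℝ) :=
  (volume.restrict (Set.Ioc (0 : ℝ) 1)).prod (volume.restrict (Set.Ioc (0 : ℝ) 1))

instance : IsFiniteMeasure sqm := by unfold sqm; infer_instance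

theorem fejer_eq (x : ℝ) :
    (fejer x : ℂ) = ∫ p, Complex.exp (((p.1 - p.2) * x : ℝ) * Complex.I) ∂sqm := by
  have h := integral_prod_mul (μ := volume.restrict (Set.Ioc (0 : ℝ) 1))
    (ν := volume.restrict (Set.Ioc (0 : ℝ) 1))
    (fun u : ℝ => Complex.exp (u * x * Complex.I)) (fun v : ℝ => Complex.exp (-(v * x * Complex.I)))
  have h2 : (∫ v in Set.Ioc (0 : ℝ) 1, Complex.exp (-(v * x * Complex.I))) =
      (starRingEnd ℂ) (fA x) := by
    rw [fA, ← integral_conj]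
    congr 1; ext v
    rw [← Complex.exp_conj]; simp
  rw [h2, ← fA, Complex.mul_conj, ← Complex.sq_norm] at h
  rw [fejer, ← h, sqm]
  congr 1; ext p
  rw [← Complex.exp_add]; congr 1; push_cast; ring

theorem fejer_continuous : Continuous fejer := by
  have : Continuous fun x => (fejer x : ℂ) := by
    simp_rw [fejer_eq]
    refine continuous_of_dominated (bound := fun _ => 1) (fun x => ?_) (fun x => ?_) ?_ ?_
    · exact Continuous.aestronglyMeasurable (by fun_prop)
    · exact Eventually.of_forall fun p => by rw [Complex.norm_exp_ofReal_mul_I]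
    · exact integrable_const _
    · exact Eventually.of_forall fun p => by fun_prop
  exact Complex.continuous_re.comp this

theorem fejer_integrable : Integrable fejer := by
  refine (integrable_inv_one_add_sq.const_mul 5).mono' fejer_continuous.aestronglyMeasurable ?_
  exact Eventually.of_forall fun x => by
    rw [Real.norm_eq_abs, abs_of_nonneg (fejer_nonneg x)]; exact fejer_le x

theorem fejer_int_pos : 0 < ∫ x, fejer x := by
  rw [integral_pos_iff_support_of_nonneg fejer_nonneg fejer_integrable]
  refine (fejer_continuous.isOpen_support).measure_pos _ ⟨0, ?_⟩
  simp [fejer, fA]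

theorem charFun_dist_continuous (μ ν : Measure ℝ) [IsFiniteMeasure μ] [IsFiniteMeasure ν] :
    Continuous fun t => ‖charFun μ t - charFun ν t‖ :=
  (continuous_charFun.sub continuous_charFun).norm

/-- The Fejér kernel is a positive combination of the characters of frequency `T (u - v)`,
`u, v ∈ [0, 1]`, so its mean only sees the characteristic function on `[-T, T]`. -/
theorem fejer_charFun (μ : Measure ℝ) [IsFiniteMeasure μ] (T y : ℝ) :
    ((∫ x, fejer (T * (x - y)) ∂μ : ℝ) : ℂ) =
      ∫ p, Complex.exp ((-(p.1 - p.2) * T * y : ℝ) * Complex.I) *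
        charFun μ ((p.1 - p.2) * T) ∂sqm := by
  rw [← integral_complex_ofReal]
  simp_rw [fejer_eq]
  rw [integral_integral_swap]
  · congr 1; ext p
    rw [charFun_apply_real, ← integral_const_mul]
    congr 1; ext x
    rw [← Complex.exp_add]; congr 1; push_cast; ring
  · refine Integrable.of_bound (C := 1) (Continuous.aestronglyMeasurable (by
      unfold Function.uncurry; fun_prop)) (Eventually.of_forall fun p => ?_)
    unfold Function.uncurry
    rw [Complex.norm_exp_ofReal_mul_I]

/-- Fejér means of two measures differ by at most the `L¹` distance of their characteristic functions
on the band `[-T, T]`. -/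
theorem fejer_dist (μ ν : Measure ℝ) [IsFiniteMeasure μ] [IsFiniteMeasure ν] (T y : ℝ)
    (hT : 0 < T) :
    |T * (∫ x, fejer (T * (x - y)) ∂μ) - T * ∫ x, fejer (T * (x - y)) ∂ν| ≤
      ∫ t in Set.Icc (-T) T, ‖charFun μ t - charFun ν t‖ := by
  set g : ℝ → ℝ := fun t => ‖charFun μ t - charFun ν t‖ with hg
  have gc : Continuous g := charFun_dist_continuous μ ν
  have gb : ∀ t, ‖g t‖ ≤ μ.real Set.univ + ν.real Set.univ := fun t => by
    rw [hg, norm_norm]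
    exact (norm_sub_le _ _).trans (add_le_add (norm_charFun_le _) (norm_charFun_le _))
  have cb : ∀ (μ : Measure ℝ) [IsFiniteMeasure μ], Integrable (fun p : ℝ × ℝ =>
      Complex.exp ((-(p.1 - p.2) * T * y : ℝ) * Complex.I) *
        charFun μ ((p.1 - p.2) * T)) sqm := fun μ _ => by
    refine Integrable.of_bound (C := μ.real Set.univ) (Continuous.aestronglyMeasurable ?_)
      (Eventually.of_forall fun p => ?_)
    · have : Continuous (charFun μ) := continuous_charFun
      fun_prop
    · rw [norm_mul, Complex.norm_exp_ofReal_mul_I, one_mul]; exact norm_charFun_le _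
  have e : |(∫ x, fejer (T * (x - y)) ∂μ) - ∫ x, fejer (T * (x - y)) ∂ν| ≤
      ∫ p, g ((p.1 - p.2) * T) ∂sqm := by
    rw [← Real.norm_eq_abs, ← Complex.norm_real, Complex.ofReal_sub, fejer_charFun, fejer_charFun,
      ← integral_sub (cb μ) (cb ν)]
    refine (norm_integral_le_integral_norm _).trans (le_of_eq ?_)
    congr 1; ext p
    rw [← mul_sub, norm_mul, Complex.norm_exp_ofReal_mul_I, one_mul]
  have gi : Integrable (fun p : ℝ × ℝ => g ((p.1 - p.2) * T)) sqm :=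
    Integrable.of_bound (C := μ.real Set.univ + ν.real Set.univ)
      (Continuous.aestronglyMeasurable (by fun_prop)) (Eventually.of_forall fun p => gb _)
  have e2 : ∫ p, g ((p.1 - p.2) * T) ∂sqm ≤ T⁻¹ * ∫ t in Set.Icc (-T) T, g t := by
    rw [sqm, integral_prod_symm _ gi]
    have hin : ∀ v ∈ Set.Ioc (0 : ℝ) 1, (∫ u in Set.Ioc (0 : ℝ) 1, g ((u - v) * T)) ≤
        T⁻¹ * ∫ t in Set.Icc (-T) T, g t := by
      intro v hv
      rw [← intervalIntegral.integral_of_le (by norm_num),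
        intervalIntegral.integral_comp_sub_right (fun u => g (u * T)) v,
        intervalIntegral.integral_comp_mul_right g hT.ne', smul_eq_mul,
        intervalIntegral.integral_of_le (by nlinarith)]
      refine mul_le_mul_of_nonneg_left ?_ (by positivity)
      refine setIntegral_mono_set (gc.continuousOn.integrableOn_compact isCompact_Icc)
        (Eventually.of_forall fun t => norm_nonneg _) (HasSubset.Subset.eventuallyLE ?_)
      intro t ht
      exact ⟨by nlinarith [ht.1, hv.1, hv.2], by nlinarith [ht.2, hv.1, hv.2]⟩
    calc _ ≤ ∫ v in Set.Ioc (0 : ℝ) 1, T⁻¹ * ∫ t in Set.Icc (-T) T, g t := by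
          refine setIntegral_mono_on ?_ (integrable_const _) measurableSet_Ioc hin
          exact gi.integral_prod_right
      _ = _ := by simp
  rw [← mul_sub, abs_mul, abs_of_pos hT]
  calc _ ≤ T * (T⁻¹ * ∫ t in Set.Icc (-T) T, g t) := by gcongr; exact e.trans e2
    _ = _ := by rw [← mul_assoc, mul_inv_cancel₀ hT.ne', one_mul]

/-- The indicator of `[α, β]` smoothed by the (unnormalised) Fejér kernel of band-width `T`. -/
noncomputable def smoothI (T α β x : ℝ) : ℝ := ∫ y in Set.Icc α β, T * fejer (T * (x - y))

/-- `fejer_dist` integrated over the interval `[α, β]`. -/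
theorem smoothI_dist (μ ν : Measure ℝ) [IsFiniteMeasure μ] [IsFiniteMeasure ν] (T α β : ℝ)
    (hT : 0 < T) (h : α ≤ β) :
    |(∫ x, smoothI T α β x ∂μ) - ∫ x, smoothI T α β x ∂ν| ≤
      (β - α) * ∫ t in Set.Icc (-T) T, ‖charFun μ t - charFun ν t‖ := by
  have fc := fejer_continuous
  have hi : ∀ (μ : Measure ℝ) [IsFiniteMeasure μ], Integrable (Function.uncurry fun x y : ℝ =>
      T * fejer (T * (x - y))) (μ.prod (volume.restrict (Set.Icc α β))) := fun μ _ => by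
    refine Integrable.of_bound (C := T) (Continuous.aestronglyMeasurable (by
      unfold Function.uncurry; fun_prop)) (Eventually.of_forall fun p => ?_)
    unfold Function.uncurry
    rw [Real.norm_eq_abs, abs_of_nonneg (mul_nonneg hT.le (fejer_nonneg _))]
    exact mul_le_of_le_one_right hT.le (fejer_le_one _)
  unfold smoothI
  have j := integral_sub (hi μ).integral_prod_right (hi ν).integral_prod_right
  simp only [Function.uncurry] at j
  rw [integral_integral_swap (hi μ), integral_integral_swap (hi ν), ← j, ← Real.norm_eq_abs]
  have := norm_setIntegral_le_of_norm_le_const (μ := volume) (s := Set.Icc α β)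
    (f := fun y => (∫ x, T * fejer (T * (x - y)) ∂μ) - ∫ x, T * fejer (T * (x - y)) ∂ν)
    (C := ∫ t in Set.Icc (-T) T, ‖charFun μ t - charFun ν t‖) (by simp) (fun y _ => by
      rw [integral_const_mul, integral_const_mul, Real.norm_eq_abs]
      exact fejer_dist μ ν T y hT)
  refine this.trans (le_of_eq ?_)
  rw [Real.volume_real_Icc_of_le h, mul_comm]

theorem fejer_comp_integral (T x : ℝ) (hT : 0 < T) :
    ∫ y, T * fejer (T * (x - y)) = ∫ z, fejer z := by
  rw [integral_const_mul, integral_sub_left_eq_self (fun y => fejer (T * y)) volume x,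
    Measure.integral_comp_mul_left, abs_of_pos (by positivity), smul_eq_mul, ← mul_assoc,
    mul_inv_cancel₀ hT.ne', one_mul]

theorem fejer_comp_integrable (T x : ℝ) (hT : 0 < T) :
    Integrable fun y => T * fejer (T * (x - y)) := by
  refine Integrable.const_mul ?_ T
  exact (fejer_integrable.comp_mul_left' hT.ne').comp_sub_left x

theorem smoothI_le (T α β x : ℝ) (hT : 0 < T) : smoothI T α β x ≤ ∫ z, fejer z := by
  rw [← fejer_comp_integral T x hT]
  exact setIntegral_le_integral (fejer_comp_integrable T x hT)
    (Eventually.of_forall fun y => mul_nonneg hT.le (fejer_nonneg _))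

theorem smoothI_nonneg (T α β x : ℝ) (hT : 0 < T) : 0 ≤ smoothI T α β x :=
  integral_nonneg fun y => mul_nonneg hT.le (fejer_nonneg _)

theorem fejer_tail (T z : ℝ) (hT : 0 < T) (hz : z ≠ 0) : T * fejer (T * z) ≤ 4 / T * (z ^ 2)⁻¹ := by
  have h := fejer_mul (T * z)
  have h1 := Real.neg_one_le_cos (T * z)
  have hz2 : 0 < z ^ 2 := by positivity
  rw [← div_eq_mul_inv, div_div, le_div_iff₀ (by positivity)]
  nlinarith

/-- Outside the interval, at distance at least `δ`. -/
theorem smoothI_out (T α β x D : ℝ) (hT : 0 < T) (h : α ≤ β) (hD : 0 < D)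
    (hx : ∀ y ∈ Set.Icc α β, D ≤ |x - y|) :
    smoothI T α β x ≤ (β - α) * (4 / T * (D ^ 2)⁻¹) := by
  have := norm_setIntegral_le_of_norm_le_const (μ := volume) (s := Set.Icc α β)
    (f := fun y => T * fejer (T * (x - y))) (C := 4 / T * (D ^ 2)⁻¹) (by simp) (fun y hy => by
      rw [Real.norm_eq_abs, abs_of_nonneg (mul_nonneg hT.le (fejer_nonneg _))]
      have h1 := hx y hy
      have h0 : x - y ≠ 0 := abs_pos.1 (hD.trans_le h1)
      refine (fejer_tail T _ hT h0).trans ?_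
      have : D ^ 2 ≤ (x - y) ^ 2 := by rw [← sq_abs (x - y)]; gcongr
      gcongr)
  rw [Real.volume_real_Icc_of_le h, mul_comm] at this
  exact (le_abs_self _).trans this

/-- Deep inside the interval the smoothed indicator is nearly the full mass. -/
theorem smoothI_in (δ : ℝ) (hδ : 0 < δ) (η : ℝ) (hη : 0 < η) : ∃ T0, 0 < T0 ∧ ∀ T ≥ T0, ∀ α β x,
    α + δ ≤ x → x ≤ β - δ → (∫ z, fejer z) - η ≤ smoothI T α β x := by
  have ht : Tendsto (fun n : ℝ => ∫ z in (-n)..n, fejer z) atTop (nhds (∫ z, fejer z)) :=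
    intervalIntegral_tendsto_integral fejer_integrable tendsto_neg_atTop_atBot tendsto_id
  have h1 := (ht.eventually (lt_mem_nhds (sub_lt_self _ hη))).and (eventually_gt_atTop 0)
  obtain ⟨n0, hn⟩ := eventually_atTop.1 h1
  refine ⟨max 1 (n0 / δ), by positivity, fun T hT α β x hx1 hx2 => ?_⟩
  have hT0 : 0 < T := lt_of_lt_of_le (by positivity) hT
  have hTn : n0 ≤ T * δ := by
    rw [← div_le_iff₀ hδ]; exact (le_max_right _ _).trans hT
  have h2 := (hn _ hTn).1
  refine h2.le.trans ?_
  have e : ∫ z in (-(T * δ))..(T * δ), fejer z = ∫ y in Set.Icc (x - δ) (x + δ),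
      T * fejer (T * (x - y)) := by
    rw [integral_Icc_eq_integral_Ioc, ← intervalIntegral.integral_of_le (by linarith),
      intervalIntegral.integral_comp_sub_left (fun y => T * fejer (T * y)),
      intervalIntegral.integral_const_mul, intervalIntegral.mul_integral_comp_mul_left]
    congr 1 <;> ring
  rw [e, smoothI]
  refine setIntegral_mono_set (fejer_comp_integrable T x hT0).integrableOn
    (Eventually.of_forall fun y => mul_nonneg hT0.le (fejer_nonneg _))
    (HasSubset.Subset.eventuallyLE (Set.Icc_subset_Icc (by linarith) (by linarith)))

end LPR

/-! ### The smoothing inequality -/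

namespace LPR
open Matrix MeasureTheory Filter
open scoped ENNReal

theorem smoothI_integrable (μ : Measure ℝ) [IsFiniteMeasure μ] (T α β : ℝ) (hT : 0 < T) :
    Integrable (smoothI T α β) μ := by
  have fc := fejer_continuous
  have hi : Integrable (Function.uncurry fun x y : ℝ =>
      T * fejer (T * (x - y))) (μ.prod (volume.restrict (Set.Icc α β))) := by
    refine Integrable.of_bound (C := T) (Continuous.aestronglyMeasurable (by
      unfold Function.uncurry; fun_prop)) (Eventually.of_forall fun p => ?_)
    unfold Function.uncurry
    rw [Real.norm_eq_abs, abs_of_nonneg (mul_nonneg hT.le (fejer_nonneg _))]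
    exact mul_le_of_le_one_right hT.le (fejer_le_one _)
  exact hi.integral_prod_left

theorem smoothI_split (T α β γ x : ℝ) (hT : 0 < T) (h1 : α ≤ β) (h2 : β ≤ γ) :
    smoothI T α γ x = smoothI T α β x + smoothI T β γ x := by
  unfold smoothI
  have hc : Continuous fun y => T * fejer (T * (x - y)) := by
    have := fejer_continuous; fun_prop
  rw [integral_Icc_eq_integral_Ioc, integral_Icc_eq_integral_Ioc, integral_Icc_eq_integral_Ioc,
    ← intervalIntegral.integral_of_le h1, ← intervalIntegral.integral_of_le h2,
    ← intervalIntegral.integral_of_le (h1.trans h2),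
    intervalIntegral.integral_add_adjacent_intervals (hc.intervalIntegrable _ _)
      (hc.intervalIntegrable _ _)]

/-- Everywhere positive band-limited function, used to absorb errors. -/
noncomputable def posK (x : ℝ) : ℝ := fejer x + fejer (x + 1)

theorem posK_continuous : Continuous posK := by
  have := fejer_continuous; unfold posK; fun_prop

theorem posK_nonneg (x : ℝ) : 0 ≤ posK x := add_nonneg (fejer_nonneg _) (fejer_nonneg _)

theorem fejer_shift_integrable (μ : Measure ℝ) [IsFiniteMeasure μ] (y : ℝ) :
    Integrable (fun x => fejer (1 * (x - y))) μ := by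
  refine Integrable.of_bound (C := 1) (Continuous.aestronglyMeasurable (by
    have := fejer_continuous; fun_prop)) (Eventually.of_forall fun p => ?_)
  rw [Real.norm_eq_abs, abs_of_nonneg (fejer_nonneg _)]; exact fejer_le_one _

theorem posK_integral (μ : Measure ℝ) [IsFiniteMeasure μ] : Integrable posK μ ∧ ∫ x, posK x ∂μ =
    (∫ x, fejer (1 * (x - 0)) ∂μ) + ∫ x, fejer (1 * (x - (-1))) ∂μ := by
  have h1 := fejer_shift_integrable μ 0
  have h2 := fejer_shift_integrable μ (-1)
  have e : posK = fun x => fejer (1 * (x - 0)) + fejer (1 * (x - (-1))) := by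
    ext x; simp [posK]
  rw [e]
  exact ⟨h1.add h2, integral_add h1 h2⟩

theorem posK_dist (μ ν : Measure ℝ) [IsFiniteMeasure μ] [IsFiniteMeasure ν] (T : ℝ) (hT : 1 ≤ T) :
    |(∫ x, posK x ∂μ) - ∫ x, posK x ∂ν| ≤
      2 * ∫ t in Set.Icc (-T) T, ‖charFun μ t - charFun ν t‖ := by
  rw [(posK_integral μ).2, (posK_integral ν).2]
  have h1 := fejer_dist μ ν 1 0 one_pos
  have h2 := fejer_dist μ ν 1 (-1) one_pos
  have h3 : ∫ t in Set.Icc (-1 : ℝ) 1, ‖charFun μ t - charFun ν t‖ ≤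
      ∫ t in Set.Icc (-T) T, ‖charFun μ t - charFun ν t‖ :=
    setIntegral_mono_set ((charFun_dist_continuous μ ν).continuousOn.integrableOn_compact
      isCompact_Icc) (Eventually.of_forall fun t => norm_nonneg _)
      (HasSubset.Subset.eventuallyLE (Set.Icc_subset_Icc (by linarith) (by linarith)))
  rw [one_mul, one_mul] at h1 h2
  rw [abs_le] at *
  constructor <;> linarith [h1.1, h1.2, h2.1, h2.2]

set_option maxHeartbeats 800000 in
/-- Smoothing inequality of Esseen type on an interval. -/
theorem esseen (a b ε : ℝ) (hab : a < b) (hε : 0 < ε) : ∃ T C : ℝ, 0 < T ∧ 0 ≤ C ∧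
    ∀ (μ ν : Measure ℝ) [IsFiniteMeasure μ] [IsFiniteMeasure ν],
      |μ.real (Set.Icc a b) - ν.real (Set.Icc a b)| ≤
        ε * (∫ t in Set.Icc (-T) T, ‖charFun ν t‖) +
        C * ∫ t in Set.Icc (-T) T, ‖charFun μ t - charFun ν t‖ := by
  obtain ⟨Z, hZ⟩ : ∃ Z, Z = ∫ z, fejer z := ⟨_, rfl⟩
  have Z0 : 0 < Z := hZ ▸ fejer_int_pos
  obtain ⟨c0, hc0⟩ : ∃ c : ℝ, c = 2 - 2 * Real.cos (1 / 2) := ⟨_, rfl⟩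
  have c00 : 0 < c0 := by
    have := Real.cos_lt_cos_of_nonneg_of_le_pi (x := 0) (y := 1 / 2) le_rfl
      (by linarith [Real.pi_gt_three]) (by norm_num)
    rw [Real.cos_zero] at this; linarith
  have pl : ∀ x, c0 * (1 + x ^ 2)⁻¹ ≤ posK x := fun x => hc0 ▸ fejer_lower x
  obtain ⟨κ, hκ⟩ : ∃ κ, κ = ε / 8 := ⟨_, rfl⟩
  have κ0 : 0 < κ := by rw [hκ]; positivity
  obtain ⟨δ, δ0, hδ1, hδ2⟩ : ∃ δ, 0 < δ ∧ δ ≤ (b - a) / 2 ∧ δ ≤ Z * ε / 8 :=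
    ⟨min ((b - a) / 2) (Z * ε / 8), lt_min (by linarith) (by positivity), min_le_left _ _,
      min_le_right _ _⟩
  obtain ⟨m, hm⟩ : ∃ m : ℝ, m = a ^ 2 + b ^ 2 := ⟨_, rfl⟩
  have m0 : 0 ≤ m := by rw [hm]; positivity
  have hmx : ∀ x ∈ Set.Icc a b, x ^ 2 ≤ m := fun x hx => by
    rw [hm]
    rcases le_total 0 x with h | h
    · nlinarith [hx.1, hx.2, sq_nonneg a]
    · nlinarith [hx.1, hx.2, sq_nonneg b]
  obtain ⟨T0, hT0, hin⟩ := smoothI_in δ δ0 (Z * κ * (c0 * (1 + m)⁻¹)) (by positivity)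
  obtain ⟨C3, hC3⟩ : ∃ C : ℝ, C = (1 + 2 * ((a + δ) ^ 2 + (b - δ) ^ 2)) / δ ^ 2 + 2 := ⟨_, rfl⟩
  have C30 : 0 < C3 := by rw [hC3]; positivity
  obtain ⟨T, hTT0, hT1, hTC⟩ : ∃ T : ℝ, T0 ≤ T ∧ 1 ≤ T ∧
      (b - a) * 4 * C3 / (Z * κ * c0) ≤ T :=
    ⟨max T0 (max 1 ((b - a) * 4 * C3 / (Z * κ * c0))), le_max_left _ _,
      (le_max_left _ _).trans (le_max_right _ _), (le_max_right _ _).trans (le_max_right _ _)⟩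
  have T0' : 0 < T := by linarith
  set Gp : ℝ → ℝ := fun x => Z⁻¹ * smoothI T (a - δ) (b + δ) x + κ * posK x with hGp
  set Gm : ℝ → ℝ := fun x => Z⁻¹ * smoothI T (a + δ) (b - δ) x - κ * posK x with hGm
  have up : ∀ x, Set.indicator (Set.Icc a b) 1 x ≤ Gp x := by
    intro x
    have h0 : 0 ≤ Gp x := add_nonneg (mul_nonneg (by positivity) (smoothI_nonneg _ _ _ _ T0'))
      (mul_nonneg κ0.le (posK_nonneg x))
    by_cases hx : x ∈ Set.Icc a b
    · rw [Set.indicator_of_mem hx]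
      have h1 := hin T hTT0 (a - δ) (b + δ) x (by linarith [hx.1]) (by linarith [hx.2])
      rw [← hZ] at h1
      have h2 : c0 * (1 + m)⁻¹ ≤ posK x := le_trans (by have := hmx x hx; gcongr) (pl x)
      have h3 : Z⁻¹ * (Z - Z * κ * (c0 * (1 + m)⁻¹)) ≤ Z⁻¹ * smoothI T (a - δ) (b + δ) x :=
        mul_le_mul_of_nonneg_left h1 (by positivity)
      have h4 : Z⁻¹ * (Z - Z * κ * (c0 * (1 + m)⁻¹)) = 1 - κ * (c0 * (1 + m)⁻¹) := by
        field_simp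
      have h5 := mul_le_mul_of_nonneg_left h2 κ0.le
      simp only [hGp, Pi.one_apply]; linarith
    · rw [Set.indicator_of_notMem hx]; exact h0
  have far : ∀ x D : ℝ, δ ≤ D → (x = a + δ - D ∨ x = b - δ + D) →
      smoothI T (a + δ) (b - δ) x ≤ Z * (κ * posK x) := by
    intro x D hD hx
    have D0 : 0 < D := δ0.trans_le hD
    have h1 := smoothI_out T (a + δ) (b - δ) x D T0' (by linarith) D0 (by
      intro y hy
      rcases hx with h | h
      · rw [abs_sub_comm]; exact le_trans (by linarith [hy.1]) (le_abs_self _)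
      · exact le_trans (by linarith [hy.2]) (le_abs_self _))
    have h2 : 1 + x ^ 2 ≤ C3 * D ^ 2 := by
      have e1 : 1 + 2 * ((a + δ) ^ 2 + (b - δ) ^ 2) ≤
          (1 + 2 * ((a + δ) ^ 2 + (b - δ) ^ 2)) / δ ^ 2 * D ^ 2 := by
        rw [div_mul_eq_mul_div, le_div_iff₀ (by positivity)]; gcongr
      rw [hC3, add_mul]
      rcases hx with h | h
      · rw [h]; nlinarith [sq_nonneg (a + δ + D), sq_nonneg (b - δ)]
      · rw [h]; nlinarith [sq_nonneg (b - δ - D), sq_nonneg (a + δ)]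
    have h3 : (b - a) * 4 * C3 ≤ T * (Z * κ * c0) := by
      rwa [div_le_iff₀ (by positivity)] at hTC
    have h4 : (b - a) * (4 / T * (D ^ 2)⁻¹) ≤ Z * (κ * (c0 * (1 + x ^ 2)⁻¹)) := by
      have e2 : (b - a) * (4 / T * (D ^ 2)⁻¹) = (b - a) * 4 / (T * D ^ 2) := by field_simp
      have e3 : Z * (κ * (c0 * (1 + x ^ 2)⁻¹)) = Z * κ * c0 / (1 + x ^ 2) := by field_simp
      rw [e2, e3, div_le_div_iff₀ (by positivity) (by positivity)]
      calc (b - a) * 4 * (1 + x ^ 2) ≤ (b - a) * 4 * (C3 * D ^ 2) := by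
            have : 0 ≤ b - a := by linarith
            gcongr
        _ = (b - a) * 4 * C3 * D ^ 2 := by ring
        _ ≤ T * (Z * κ * c0) * D ^ 2 := by gcongr
        _ = _ := by ring
    calc _ ≤ (b - δ - (a + δ)) * (4 / T * (D ^ 2)⁻¹) := h1
      _ ≤ (b - a) * (4 / T * (D ^ 2)⁻¹) := by gcongr <;> linarith
      _ ≤ _ := h4
      _ ≤ _ := by gcongr; exact pl x
  have dn : ∀ x, Gm x ≤ Set.indicator (Set.Icc a b) 1 x := by
    intro x
    by_cases hx : x ∈ Set.Icc a b
    · rw [Set.indicator_of_mem hx]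
      have h1 := smoothI_le T (a + δ) (b - δ) x T0'
      rw [← hZ] at h1
      have h2 : Z⁻¹ * smoothI T (a + δ) (b - δ) x ≤ Z⁻¹ * Z := by gcongr
      rw [inv_mul_cancel₀ Z0.ne'] at h2
      have := mul_nonneg κ0.le (posK_nonneg x)
      simp only [hGm, Pi.one_apply]; linarith
    · rw [Set.indicator_of_notMem hx]
      have h1 : smoothI T (a + δ) (b - δ) x ≤ Z * (κ * posK x) := by
        rcases lt_or_ge x a with h | h
        · exact far x (a + δ - x) (by linarith) (Or.inl (by ring))
        · have : b < x := by
            by_contra h'; exact hx ⟨h, not_lt.1 h'⟩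
          exact far x (x - (b - δ)) (by linarith) (Or.inr (by ring))
      have h2 : Z⁻¹ * smoothI T (a + δ) (b - δ) x ≤ Z⁻¹ * (Z * (κ * posK x)) := by gcongr
      rw [inv_mul_cancel_left₀ Z0.ne'] at h2
      simp only [hGm]; linarith
  have ip : ∀ (μ : Measure ℝ) [IsFiniteMeasure μ], Integrable Gp μ ∧ Integrable Gm μ := fun μ _ =>
    ⟨((smoothI_integrable μ T _ _ T0').const_mul _).add ((posK_integral μ).1.const_mul _),
      ((smoothI_integrable μ T _ _ T0').const_mul _).sub ((posK_integral μ).1.const_mul _)⟩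
  have ind : ∀ (μ : Measure ℝ) [IsFiniteMeasure μ],
      μ.real (Set.Icc a b) ≤ ∫ x, Gp x ∂μ ∧ ∫ x, Gm x ∂μ ≤ μ.real (Set.Icc a b) := fun μ _ => by
    have hi : Integrable (Set.indicator (Set.Icc a b) (1 : ℝ → ℝ)) μ :=
      (integrable_const (1 : ℝ)).indicator measurableSet_Icc
    have e : ∫ x, Set.indicator (Set.Icc a b) (1 : ℝ → ℝ) x ∂μ = μ.real (Set.Icc a b) :=
      integral_indicator_one measurableSet_Icc
    rw [← e]
    exact ⟨integral_mono hi (ip μ).1 up, integral_mono (ip μ).2 hi dn⟩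
  have ep : ∀ (μ : Measure ℝ) [IsFiniteMeasure μ], ∫ x, Gp x ∂μ =
      Z⁻¹ * (∫ x, smoothI T (a - δ) (b + δ) x ∂μ) + κ * ∫ x, posK x ∂μ := fun μ _ => by
    rw [hGp, integral_add ((smoothI_integrable μ T _ _ T0').const_mul _)
      ((posK_integral μ).1.const_mul _), integral_const_mul, integral_const_mul]
  have em : ∀ (μ : Measure ℝ) [IsFiniteMeasure μ], ∫ x, Gm x ∂μ =
      Z⁻¹ * (∫ x, smoothI T (a + δ) (b - δ) x ∂μ) - κ * ∫ x, posK x ∂μ := fun μ _ => by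
    rw [hGm, integral_sub ((smoothI_integrable μ T _ _ T0').const_mul _)
      ((posK_integral μ).1.const_mul _), integral_const_mul, integral_const_mul]
  have split : ∀ (μ : Measure ℝ) [IsFiniteMeasure μ], ∫ x, smoothI T (a - δ) (b + δ) x ∂μ =
      (∫ x, smoothI T (a - δ) (a + δ) x ∂μ) + ((∫ x, smoothI T (a + δ) (b - δ) x ∂μ) +
        ∫ x, smoothI T (b - δ) (b + δ) x ∂μ) := fun μ _ => by
    have i1 := smoothI_integrable μ T (a - δ) (a + δ) T0'
    have i2 := smoothI_integrable μ T (a + δ) (b - δ) T0'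
    have i3 := smoothI_integrable μ T (b - δ) (b + δ) T0'
    have i4 : Integrable (fun x => smoothI T (a + δ) (b - δ) x + smoothI T (b - δ) (b + δ) x) μ :=
      i2.add i3
    rw [← integral_add i2 i3, ← integral_add i1 i4]
    congr 1; ext x
    rw [smoothI_split T (a - δ) (a + δ) (b + δ) x T0' (by linarith) (by linarith),
      smoothI_split T (a + δ) (b - δ) (b + δ) x T0' (by linarith) (by linarith)]
  refine ⟨T, Z⁻¹ * (b - a + 2 * δ) + 2 * κ, T0', by
    have : 0 ≤ b - a := by linarith
    positivity, fun μ ν _ _ => ?_⟩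
  set X := ∫ t in Set.Icc (-T) T, ‖charFun ν t‖ with hX
  set Y := ∫ t in Set.Icc (-T) T, ‖charFun μ t - charFun ν t‖ with hY
  have X0 : 0 ≤ X := integral_nonneg fun _ => norm_nonneg _
  have Y0 : 0 ≤ Y := integral_nonneg fun _ => norm_nonneg _
  have s0 : ∀ α β, α ≤ β → ∫ x, smoothI T α β x ∂ν ≤ (β - α) * X := fun α β h => by
    have := smoothI_dist ν 0 T α β T0' h
    simp only [charFun_zero_measure, integral_zero_measure, sub_zero] at this
    exact (le_abs_self _).trans this
  have p0 : ∫ x, posK x ∂ν ≤ 2 * X := by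
    have := posK_dist ν 0 T hT1
    simp only [charFun_zero_measure, integral_zero_measure, sub_zero] at this
    exact (le_abs_self _).trans this
  have gap : ∫ x, Gp x ∂ν ≤ (∫ x, Gm x ∂ν) + ε * X := by
    rw [ep ν, em ν, split ν]
    have h1 := s0 (a - δ) (a + δ) (by linarith)
    have h2 := s0 (b - δ) (b + δ) (by linarith)
    have h3 : Z⁻¹ * ((∫ x, smoothI T (a - δ) (a + δ) x ∂ν) +
        ∫ x, smoothI T (b - δ) (b + δ) x ∂ν) ≤ Z⁻¹ * (4 * (Z * ε / 8) * X) := by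
      gcongr
      have : δ * X ≤ Z * ε / 8 * X := by gcongr
      nlinarith
    have h4 : Z⁻¹ * (4 * (Z * ε / 8) * X) = ε / 2 * X := by field_simp; ring
    have h5 := mul_le_mul_of_nonneg_left p0 κ0.le
    rw [hκ] at h5 ⊢
    linear_combination h3 + h4 + 2 * h5
  have dp := smoothI_dist μ ν T (a - δ) (b + δ) T0' (by linarith)
  have dm := smoothI_dist μ ν T (a + δ) (b - δ) T0' (by linarith)
  have dk := posK_dist μ ν T hT1
  rw [← hY] at dp dm dk
  rw [abs_le] at dp dm dk
  have zi : 0 < Z⁻¹ := by positivity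
  have gp : ∫ x, Gp x ∂μ ≤ (∫ x, Gp x ∂ν) + (Z⁻¹ * (b - a + 2 * δ) + 2 * κ) * Y := by
    rw [ep, ep]
    have h1 := mul_le_mul_of_nonneg_left dp.2 zi.le
    have h2 := mul_le_mul_of_nonneg_left dk.2 κ0.le
    linear_combination h1 + h2
  have gm : (∫ x, Gm x ∂ν) ≤ (∫ x, Gm x ∂μ) + (Z⁻¹ * (b - a + 2 * δ) + 2 * κ) * Y := by
    rw [em, em]
    have h1 := mul_le_mul_of_nonneg_left dm.1 zi.le
    have h2 := mul_le_mul_of_nonneg_left dk.2 κ0.le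
    have h3 : 0 ≤ Z⁻¹ * δ * Y := by positivity
    linear_combination h1 + h2 + 4 * h3
  rw [abs_le]
  constructor <;> linarith [(ind μ).1, (ind μ).2, (ind ν).1, (ind ν).2]

end LPR

/-! ### Comparison of exponential sums with integrals -/

namespace LPR
open Matrix MeasureTheory Filter
open scoped ENNReal

variable {d : ℕ}

/-- The weight `w(x/r)`, `w(x) = ∏ ψ(x_i)`. -/
noncomputable def wt (ψ : ℝ → ℝ) (r : ℝ) (x : Fin d → ℝ) : ℝ := ∏ i, ψ (x i / r)

/-- The integrand of the smooth analogue of `Ssum`. -/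
noncomputable def wf (Q : Matrix (Fin d) (Fin d) ℝ) (M : Fin d → ℝ) (ψ : ℝ → ℝ) (r t : ℝ)
    (x : Fin d → ℝ) : ℂ := (wt ψ r x : ℂ) * ex (t * quadForm Q (x - M))

/-- The integral analogue of `Ssum`. -/
noncomputable def Vint (Q : Matrix (Fin d) (Fin d) ℝ) (M : Fin d → ℝ) (ψ : ℝ → ℝ) (r t : ℝ) : ℂ :=
  ∫ x, wf Q M ψ r t x

theorem continuous_quadForm (Q : Matrix (Fin d) (Fin d) ℝ) : Continuous (quadForm Q) := by
  have : quadForm Q = fun x => Q *ᵥ x ⬝ᵥ x := rfl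
  rw [this]; fun_prop

theorem continuous_ex : Continuous ex := by unfold ex; fun_prop

theorem continuous_wt {ψ : ℝ → ℝ} {L : ℝ} (hψ : IsBump ψ L) (r : ℝ) :
    Continuous (wt (d := d) ψ r) := by
  have := hψ.continuous; unfold wt; fun_prop

theorem continuous_wf (Q : Matrix (Fin d) (Fin d) ℝ) (M : Fin d → ℝ) {ψ : ℝ → ℝ} {L : ℝ}
    (hψ : IsBump ψ L) (r t : ℝ) : Continuous (wf Q M ψ r t) := by
  have h1 := continuous_wt (d := d) hψ r
  have h2 := continuous_quadForm Q
  have h3 := continuous_ex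
  unfold wf; fun_prop

theorem wt_nonneg {ψ : ℝ → ℝ} {L : ℝ} (hψ : IsBump ψ L) (r : ℝ) (x : Fin d → ℝ) : 0 ≤ wt ψ r x :=
  Finset.prod_nonneg fun _ _ => hψ.nonneg _

theorem wt_le_one {ψ : ℝ → ℝ} {L : ℝ} (hψ : IsBump ψ L) (r : ℝ) (x : Fin d → ℝ) : wt ψ r x ≤ 1 :=
  Finset.prod_le_one (fun _ _ => hψ.nonneg _) fun _ _ => hψ.le_one _

theorem wt_supp {ψ : ℝ → ℝ} {L : ℝ} (hψ : IsBump ψ L) {r : ℝ} (hr : 0 < r) (x : Fin d → ℝ)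
    (h : ∃ i, 2 * r ≤ |x i|) : wt ψ r x = 0 := by
  obtain ⟨i, hi⟩ := h
  refine Finset.prod_eq_zero (Finset.mem_univ i) (hψ.supp _ ?_)
  rw [abs_div, abs_of_pos hr, le_div_iff₀ hr]; exact hi

theorem abs_prod_sub_prod {ι : Type} (s : Finset ι) (f g : ι → ℝ) (hf : ∀ i, 0 ≤ f i ∧ f i ≤ 1)
    (hg : ∀ i, 0 ≤ g i ∧ g i ≤ 1) :
    |∏ i ∈ s, f i - ∏ i ∈ s, g i| ≤ ∑ i ∈ s, |f i - g i| := by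
  classical
  induction s using Finset.induction_on with
  | empty => simp
  | insert a s ha ih =>
    rw [Finset.prod_insert ha, Finset.prod_insert ha, Finset.sum_insert ha]
    have h1 : |f a * (∏ i ∈ s, f i - ∏ i ∈ s, g i)| ≤ ∑ i ∈ s, |f i - g i| := by
      rw [abs_mul, abs_of_nonneg (hf a).1]
      exact (mul_le_of_le_one_left (abs_nonneg _) (hf a).2).trans ih
    have h2 : |(f a - g a) * ∏ i ∈ s, g i| ≤ |f a - g a| := by
      rw [abs_mul, abs_of_nonneg (Finset.prod_nonneg fun i _ => (hg i).1)]
      exact mul_le_of_le_one_right (abs_nonneg _) (Finset.prod_le_one (fun i _ => (hg i).1)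
        fun i _ => (hg i).2)
    have e : f a * ∏ i ∈ s, f i - g a * ∏ i ∈ s, g i =
        (f a - g a) * ∏ i ∈ s, g i + f a * (∏ i ∈ s, f i - ∏ i ∈ s, g i) := by ring
    rw [e]
    exact (abs_add_le _ _).trans (add_le_add h2 h1)

theorem ex_lip (x y : ℝ) : ‖ex x - ex y‖ ≤ |x - y| := by
  have e : ex x - ex y = ex y * (Complex.exp (Complex.I * ((x - y : ℝ) : ℂ)) - 1) := by
    rw [mul_sub, mul_one, mul_comm Complex.I]
    change _ = ex y * ex (x - y) - _
    rw [← ex_add]; congr 2; ring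
  rw [e, norm_mul, norm_ex, one_mul]
  exact Real.norm_exp_I_mul_ofReal_sub_one_le

theorem mulVec_bound (Q : Matrix (Fin d) (Fin d) ℝ) :
    ∃ q : ℝ, 0 ≤ q ∧ ∀ x : Fin d → ℝ, ‖Q *ᵥ x‖ ≤ q * ‖x‖ :=
  ⟨‖LinearMap.toContinuousLinearMap (Matrix.mulVecLin Q)‖, norm_nonneg _, fun x =>
    (LinearMap.toContinuousLinearMap (Matrix.mulVecLin Q)).le_opNorm x⟩

theorem dot_bound (x y : Fin d → ℝ) : |x ⬝ᵥ y| ≤ d * (‖x‖ * ‖y‖) := by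
  refine (Finset.abs_sum_le_sum_abs _ _).trans ?_
  calc ∑ i, |x i * y i| ≤ ∑ _i : Fin d, ‖x‖ * ‖y‖ := by
        refine Finset.sum_le_sum fun i _ => ?_
        rw [abs_mul]
        exact mul_le_mul (norm_le_pi_norm x i) (norm_le_pi_norm y i) (abs_nonneg _) (norm_nonneg _)
    _ = _ := by simp

/-- The half-open unit cell with integer corner `m`. -/
def cell (m : Fin d → ℤ) : Set (Fin d → ℝ) :=
  Set.univ.pi fun i => Set.Ico (m i : ℝ) (m i + 1)

theorem mem_cell {m : Fin d → ℤ} {x : Fin d → ℝ} : x ∈ cell m ↔ ∀ i, ⌊x i⌋ = m i := by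
  simp only [cell, Set.mem_pi, Set.mem_univ, true_imp_iff, Set.mem_Ico, Int.floor_eq_iff]

theorem measurable_cell (m : Fin d → ℤ) : MeasurableSet (cell m) :=
  MeasurableSet.univ_pi fun _ => measurableSet_Ico

theorem volume_cell (m : Fin d → ℤ) : volume (cell m) = 1 := by
  rw [cell, volume_pi_pi]; simp

theorem cell_norm {m : Fin d → ℤ} {x : Fin d → ℝ} (h : x ∈ cell m) : ‖x - intVec m‖ ≤ 1 := by
  rw [pi_norm_le_iff_of_nonneg zero_le_one]
  intro i
  have := h i (Set.mem_univ _)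
  rw [Real.norm_eq_abs, abs_le]
  simp only [Pi.sub_apply, intVec]
  constructor <;> linarith [this.1, this.2]

theorem box_card (r : ℝ) (hr : 1 ≤ r) : ((boxZ d ⌈2 * r⌉₊).card : ℝ) ≤ 7 ^ d * r ^ d := by
  rw [boxZ, Fintype.card_piFinset_const]
  push_cast
  rw [← mul_pow]
  refine pow_le_pow_left₀ (by positivity) ?_ _
  rw [Int.card_Icc]
  have h1 := Nat.ceil_lt_add_one (show 0 ≤ 2 * r by linarith)
  have h2 : (((⌈2 * r⌉₊ : ℤ) + 1 - -(⌈2 * r⌉₊ : ℤ)).toNat : ℝ) = 2 * (⌈2 * r⌉₊ : ℝ) + 1 := by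
    have : ((⌈2 * r⌉₊ : ℤ) + 1 - -(⌈2 * r⌉₊ : ℤ)).toNat = 2 * ⌈2 * r⌉₊ + 1 := by omega
    rw [this]; push_cast; ring
  rw [h2]; linarith

/-- A continuous function supported in `|x|_∞ ≤ 2r` is compared with its sum over the lattice. -/
theorem riemann_gen (f : (Fin d → ℝ) → ℂ) (hf : Continuous f) (r : ℝ) (hr : 1 ≤ r)
    (hs : ∀ x, (∃ i, 2 * r ≤ |x i|) → f x = 0) (E : ℝ)
    (hE : ∀ m ∈ boxZ d ⌈2 * r⌉₊, ∀ x ∈ cell m, ‖f x - f (intVec m)‖ ≤ E) :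
    ‖∑ m ∈ boxZ d ⌈2 * r⌉₊, f (intVec m) - ∫ x, f x‖ ≤ 7 ^ d * r ^ d * E := by
  have hE0 : 0 ≤ E := (norm_nonneg _).trans (hE 0 (mem_boxZ.2 (by simp)) 0 (by
    rw [mem_cell]; simp))
  have hcov : ∀ x, x ∉ (⋃ m ∈ boxZ d ⌈2 * r⌉₊, cell m) → f x = 0 := by
    intro x hx
    by_contra h
    have h1 : ∀ i, |x i| < 2 * r := fun i => by
      by_contra h2; exact h (hs x ⟨i, not_lt.1 h2⟩)
    refine hx (Set.mem_iUnion₂.2 ⟨fun i => ⌊x i⌋, mem_boxZ.2 fun i => ?_, mem_cell.2 fun i => rfl⟩)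
    have h2 := abs_lt.1 (h1 i)
    have h3 := Nat.le_ceil (2 * r)
    rw [abs_le]
    constructor
    · rw [Int.le_floor]; push_cast; linarith
    · have : (⌊x i⌋ : ℝ) ≤ (⌈2 * r⌉₊ : ℝ) := by linarith [Int.floor_le (x i)]
      exact_mod_cast this
  have hcell : ∀ m, IntegrableOn f (cell m) := fun m => by
    refine IntegrableOn.mono_set (t := Set.Icc (intVec m) (intVec m + 1))
      (hf.continuousOn.integrableOn_compact isCompact_Icc) fun x hx => ?_
    exact ⟨fun i => (hx i (Set.mem_univ _)).1, fun i => (hx i (Set.mem_univ _)).2.le⟩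
  have e : ∫ x, f x = ∑ m ∈ boxZ d ⌈2 * r⌉₊, ∫ x in cell m, f x := by
    rw [← integral_biUnion_finset _ (fun m _ => measurable_cell m) ?_ (fun m _ => hcell m)]
    · exact (setIntegral_eq_integral_of_forall_compl_eq_zero hcov).symm
    · intro m _ m' _ hne
      rw [Function.onFun, Set.disjoint_left]
      intro x h1 h2
      exact hne (funext fun i => (mem_cell.1 h1 i).symm.trans (mem_cell.1 h2 i))
  rw [e, ← Finset.sum_sub_distrib]
  refine (norm_sum_le _ _).trans ?_
  calc _ ≤ ∑ _m ∈ boxZ d ⌈2 * r⌉₊, E := by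
        refine Finset.sum_le_sum fun m hm => ?_
        have e1 : f (intVec m) = ∫ _x in cell m, f (intVec m) := by
          rw [setIntegral_const, Measure.real, volume_cell]; simp
        have i1 : IntegrableOn (fun _ => f (intVec m)) (cell m) :=
          integrableOn_const (by rw [volume_cell]; simp)
        rw [e1, ← integral_sub i1 (hcell m)]
        have := norm_setIntegral_le_of_norm_le_const (μ := volume) (s := cell m)
          (f := fun x => f (intVec m) - f x) (C := E) (by rw [volume_cell]; simp) (fun x hx => by
            rw [norm_sub_rev]; exact hE m hm x hx)
        rwa [Measure.real, volume_cell, ENNReal.toReal_one, mul_one] at this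
    _ = (boxZ d ⌈2 * r⌉₊).card * E := by simp
    _ ≤ _ := by gcongr; exact box_card r hr

/-- `Ssum` and `Vint` are close for small frequencies. -/
theorem riemann (Q : Matrix (Fin d) (Fin d) ℝ) (hQ : Q.IsSymm) (L A : ℝ) (hL : 0 ≤ L)
    (hA : 0 ≤ A) : ∃ C : ℝ, 0 ≤ C ∧ ∀ ψ, IsBump ψ L → ∀ (M : Fin d → ℝ) (r t : ℝ), 1 ≤ r →
      ‖M‖ ≤ A * r → ‖Ssum Q M ψ r t - Vint Q M ψ r t‖ ≤ C * r ^ d * (1 / r + |t| * r) := by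
  obtain ⟨q, hq0, hq⟩ := mulVec_bound Q
  refine ⟨7 ^ d * (d * L + (d * q * (2 * (3 + A) + 1))), by positivity,
    fun ψ hψ M r t hr hM => ?_⟩
  have hr0 : 0 < r := by linarith
  have h := riemann_gen (wf Q M ψ r t) (continuous_wf Q M hψ r t) r hr
    (fun x hx => by rw [wf, wt_supp hψ hr0 x hx]; simp)
    ((d * L + (d * q * (2 * (3 + A) + 1))) * (1 / r + |t| * r)) ?_
  · calc _ = ‖∑ m ∈ boxZ d ⌈2 * r⌉₊, wf Q M ψ r t (intVec m) - ∫ x, wf Q M ψ r t x‖ := rfl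
      _ ≤ _ := h
      _ = _ := by ring
  · intro m hm x hx
    have hx1 := cell_norm hx
    set e := x - intVec m with he
    have hmn : ‖intVec m‖ ≤ 3 * r := by
      rw [pi_norm_le_iff_of_nonneg (by positivity)]
      intro i
      rw [mem_boxZ] at hm
      have h1 : |(m i : ℝ)| ≤ (⌈2 * r⌉₊ : ℝ) := by exact_mod_cast hm i
      have h2 := Nat.ceil_lt_add_one (show 0 ≤ 2 * r by linarith)
      rw [Real.norm_eq_abs]; simp only [intVec]; linarith
    have hv : ‖intVec m - M‖ ≤ (3 + A) * r := (norm_sub_le _ _).trans (by linarith)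
    have hw : |wt ψ r x - wt ψ r (intVec m)| ≤ d * L * (1 / r) := by
      refine (abs_prod_sub_prod _ _ _ (fun i => ⟨hψ.nonneg _, hψ.le_one _⟩)
        fun i => ⟨hψ.nonneg _, hψ.le_one _⟩).trans ?_
      calc _ ≤ ∑ _i : Fin d, L * (1 / r) := by
            refine Finset.sum_le_sum fun i _ => (hψ.lip _ _).trans ?_
            have h1 : |x i - intVec m i| ≤ 1 := (norm_le_pi_norm e i).trans hx1
            rw [← sub_div, abs_div, abs_of_pos hr0]
            gcongr
        _ = _ := by simp; ring
    have hqd : |quadForm Q (x - M) - quadForm Q (intVec m - M)| ≤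
        d * q * (2 * (3 + A) + 1) * r := by
      have e1 : x - M = (intVec m - M) + e := by rw [he]; abel
      have e2 : quadForm Q e = Q *ᵥ e ⬝ᵥ e := rfl
      rw [e1, quadForm_add Q hQ, e2]
      have h1 := dot_bound (Q *ᵥ e) (intVec m - M)
      have h2 := dot_bound (Q *ᵥ e) e
      have h3 : ‖Q *ᵥ e‖ ≤ q := (hq e).trans (mul_le_of_le_one_right hq0 hx1)
      have h4 : |Q *ᵥ e ⬝ᵥ (intVec m - M)| ≤ d * (q * ((3 + A) * r)) := h1.trans (by gcongr)
      have h5 : |Q *ᵥ e ⬝ᵥ e| ≤ d * (q * 1) := h2.trans (by gcongr)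
      have h6 : (d : ℝ) * (q * 1) ≤ d * q * r := by
        rw [mul_one]; exact le_mul_of_one_le_right (by positivity) hr
      rw [abs_le] at *
      constructor <;> nlinarith [h4.1, h4.2, h5.1, h5.2]
    have e3 : wf Q M ψ r t x - wf Q M ψ r t (intVec m) =
        ((wt ψ r x - wt ψ r (intVec m) : ℝ) : ℂ) * ex (t * quadForm Q (x - M)) +
        (wt ψ r (intVec m) : ℂ) * (ex (t * quadForm Q (x - M)) -
          ex (t * quadForm Q (intVec m - M))) := by
      unfold wf; push_cast; ring
    rw [e3]
    refine (norm_add_le _ _).trans ?_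
    rw [norm_mul, norm_mul, norm_ex, mul_one, Complex.norm_real, Complex.norm_real,
      Real.norm_eq_abs, Real.norm_eq_abs, abs_of_nonneg (wt_nonneg hψ r _)]
    have h7 : wt ψ r (intVec m) * ‖ex (t * quadForm Q (x - M)) -
        ex (t * quadForm Q (intVec m - M))‖ ≤ |t| * (d * q * (2 * (3 + A) + 1) * r) := by
      refine (mul_le_of_le_one_left (norm_nonneg _) (wt_le_one hψ r _)).trans ?_
      refine (ex_lip _ _).trans ?_
      rw [← mul_sub, abs_mul]; gcongr
    have h8 : 0 ≤ d * L * (|t| * r) := by positivity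
    have h9 : 0 ≤ (d * q * (2 * (3 + A) + 1)) * (1 / r) := by positivity
    linear_combination hw + h7 + h8 + h9

end LPR

/-! ### Decay of the exponential integral -/

namespace LPR
open Matrix MeasureTheory Filter
open scoped ENNReal

variable {d : ℕ}

theorem card_boxZ (N : ℕ) : ((boxZ d N).card : ℝ) = (2 * N + 1) ^ d := by
  rw [boxZ, Fintype.card_piFinset_const]
  have h : (Finset.Icc (-(N : ℤ)) N).card = 2 * N + 1 := by rw [Int.card_Icc]; omega
  rw [h]; push_cast; rfl

/-- For small frequencies no wrap-around occurs and the phases determine `h`. -/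
theorem Hs_card_small (Q : Matrix (Fin d) (Fin d) ℝ) (hdet : IsUnit Q.det) :
    ∃ β γ : ℝ, 0 ≤ β ∧ 0 ≤ γ ∧ ∀ R s : ℝ, 1 ≤ R → s ≠ 0 → |s| * (β * R) < 1 / 2 →
      ((Hs Q 1 R s).card : ℝ) ≤ (2 * (γ / (R * |s|)) + 1) ^ d := by
  obtain ⟨β, hβ0, hβ⟩ := mulVec_bound (Real.pi⁻¹ • Q)
  obtain ⟨γ, hγ0, hγ⟩ := mulVec_bound ((Real.pi⁻¹ • Q)⁻¹)
  have hu : IsUnit (Real.pi⁻¹ • Q).det := by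
    rw [Matrix.det_smul]
    exact (IsUnit.mk0 _ (by positivity)).mul hdet
  refine ⟨β, γ, hβ0, hγ0, fun R s hR hs hsm => ?_⟩
  have hR0 : 0 < R := by linarith
  have hs0 : 0 < |s| := abs_pos.2 hs
  have hsub : Hs Q 1 R s ⊆ boxZ d ⌊γ / (R * |s|)⌋₊ := by
    intro h hh
    rw [mem_Hs] at hh
    have h1 : ‖intVec h‖ ≤ R := by
      rw [pi_norm_le_iff_of_nonneg hR0.le]
      intro i
      have := (hh i).1
      rw [one_mul] at this
      exact this
    have h2 : ∀ i, |((Real.pi⁻¹ • Q) *ᵥ intVec h) i| ≤ 1 / (R * |s|) := by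
      intro i
      have h3 : |((Real.pi⁻¹ • Q) *ᵥ intVec h) i| ≤ β * R :=
        (norm_le_pi_norm _ i).trans ((hβ _).trans (by gcongr))
      have h4 : |phase Q s h i| < 1 / 2 := by
        rw [phase, abs_mul]
        exact lt_of_le_of_lt (by gcongr) hsm
      have h5 : round (phase Q s h i) = 0 :=
        round_eq_zero_iff.2 ⟨(abs_lt.1 h4).1.le, (abs_lt.1 h4).2⟩
      have h6 := (hh i).2
      rw [sfr, h5, Int.cast_zero, sub_zero, phase, abs_mul] at h6
      rw [le_div_iff₀ (by positivity)]
      rw [le_div_iff₀ hR0] at h6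
      linarith
    have h7 : ‖intVec h‖ ≤ γ / (R * |s|) := by
      have e : intVec h = (Real.pi⁻¹ • Q)⁻¹ *ᵥ ((Real.pi⁻¹ • Q) *ᵥ intVec h) := by
        rw [mulVec_mulVec, nonsing_inv_mul _ hu, one_mulVec]
      rw [e]
      refine (hγ _).trans ?_
      rw [div_eq_mul_one_div γ]
      refine mul_le_mul_of_nonneg_left ?_ hγ0
      rw [pi_norm_le_iff_of_nonneg (by positivity)]
      exact h2
    rw [mem_boxZ]
    intro i
    have h8 : |(h i : ℝ)| ≤ γ / (R * |s|) := (norm_le_pi_norm (intVec h) i).trans h7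
    have h9 : (((h i).natAbs : ℕ) : ℝ) ≤ γ / (R * |s|) := by
      rw [Nat.cast_natAbs]; push_cast; exact h8
    rw [Int.abs_eq_natAbs]
    exact_mod_cast Nat.le_floor h9
  calc ((Hs Q 1 R s).card : ℝ) ≤ (boxZ d ⌊γ / (R * |s|)⌋₊).card := by
        exact_mod_cast Finset.card_le_card hsub
    _ = (2 * ⌊γ / (R * |s|)⌋₊ + 1) ^ d := card_boxZ _
    _ ≤ _ := by
        gcongr
        exact Nat.floor_le (by positivity)

/-- Dilating space by `N` leaves the phase unchanged when `t` is replaced by `t / N²`. -/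
theorem Vint_scale (Q : Matrix (Fin d) (Fin d) ℝ) (M : Fin d → ℝ) (ψ : ℝ → ℝ) (r t N : ℝ)
    (hN : 0 < N) : ‖Vint Q (N • M) ψ (r * N) (t / N ^ 2)‖ = N ^ d * ‖Vint Q M ψ r t‖ := by
  have e : ∀ x : Fin d → ℝ, wf Q (N • M) ψ (r * N) (t / N ^ 2) (N • x) = wf Q M ψ r t x := by
    intro x
    have h1 : wt ψ (r * N) (N • x) = wt ψ r x := by
      unfold wt
      refine Finset.prod_congr rfl fun i _ => ?_
      rw [Pi.smul_apply, smul_eq_mul, mul_comm r, mul_div_mul_left _ _ hN.ne']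
    have h2 : quadForm Q (N • x - N • M) = N ^ 2 * quadForm Q (x - M) := by
      have e : ∀ y, quadForm Q y = Q *ᵥ y ⬝ᵥ y := fun y => rfl
      rw [← smul_sub, e, e, mulVec_smul, smul_dotProduct, dotProduct_smul, smul_eq_mul, smul_eq_mul]
      ring
    unfold wf
    rw [h1, h2]
    congr 2
    field_simp
  have h := Measure.integral_comp_smul (volume : Measure (Fin d → ℝ))
    (wf Q (N • M) ψ (r * N) (t / N ^ 2)) N
  simp_rw [e] at h
  rw [Vint, Vint, h, norm_smul, Module.finrank_fin_fun, Real.norm_eq_abs, abs_abs,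
    abs_of_pos (by positivity), ← mul_assoc, mul_inv_cancel₀ (by positivity), one_mul]

/-- The decay is inherited from Weyl's inequality: after dilation by `N` the integral is the limit of
exponential sums as `N → ∞`, at frequencies `t / N²` so small that no phase wraps around
an integer. -/
theorem Vint_decay (Q : Matrix (Fin d) (Fin d) ℝ) (hQ : Q.IsSymm) (hdet : IsUnit Q.det) (L : ℝ)
    (hL : 0 ≤ L) : ∃ C : ℝ, 0 ≤ C ∧ ∀ ψ, IsBump ψ L → ∀ (M : Fin d → ℝ) (r t : ℝ), 1 ≤ r → t ≠ 0 →
      ‖Vint Q M ψ r t‖ ≤ C * |t| ^ (-((d : ℝ) / 2)) := by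
  obtain ⟨C0, hC0, hw⟩ := weyl d L 1 hL one_pos le_rfl
  obtain ⟨β, γ, hβ, hγ, hcard⟩ := Hs_card_small Q hdet
  refine ⟨Real.sqrt (C0 * (2 * γ) ^ d), by positivity, fun ψ hψ M r t hr ht => ?_⟩
  obtain ⟨C1, hC1, hR⟩ := riemann Q hQ L ‖M‖ hL (norm_nonneg _)
  have hr0 : 0 < r := by linarith
  have ht0 : 0 < |t| := abs_pos.2 ht
  have key : ∀ᶠ N : ℝ in atTop, ‖Vint Q M ψ r t‖ ≤
      Real.sqrt (C0 * r ^ d * (2 * (γ / (r * |t|)) + N⁻¹) ^ d) +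
        C1 * r ^ d * (1 / r + |t| * r) * N⁻¹ := by
    have ev : ∀ᶠ N : ℝ in atTop, 2 * (|t| * (β * r)) < N := eventually_gt_atTop _
    filter_upwards [ev, eventually_ge_atTop 1] with N hN1 hN
    have hN0 : 0 < N := by linarith
    have hrN : 1 ≤ r * N := one_le_mul_of_one_le_of_one_le hr hN
    have h1 := hR ψ hψ (N • M) (r * N) (t / N ^ 2) hrN (by
      rw [norm_smul, Real.norm_eq_abs, abs_of_pos hN0, mul_comm]
      have : N ≤ r * N := le_mul_of_one_le_left hN0.le hr
      gcongr)
    have h2 := hw ψ hψ Q hQ (N • M) (r * N) (t / N ^ 2) hrN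
    have h3 := hcard (r * N) (t / N ^ 2) hrN (by positivity) (by
      rw [abs_div, abs_of_pos (show 0 < N ^ 2 by positivity), div_mul_eq_mul_div,
        div_lt_iff₀ (by positivity)]
      nlinarith)
    rw [abs_div, abs_of_pos (show 0 < N ^ 2 by positivity)] at h1 h3
    have h4 : ‖Vint Q (N • M) ψ (r * N) (t / N ^ 2)‖ ≤ ‖Ssum Q (N • M) ψ (r * N) (t / N ^ 2)‖ +
        C1 * (r * N) ^ d * (1 / (r * N) + |t| / N ^ 2 * (r * N)) := by
      have := norm_sub_norm_le (Vint Q (N • M) ψ (r * N) (t / N ^ 2))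
        (Ssum Q (N • M) ψ (r * N) (t / N ^ 2))
      rw [norm_sub_rev] at this
      linarith
    rw [Vint_scale Q M ψ r t N hN0] at h4
    have h5 : ‖Ssum Q (N • M) ψ (r * N) (t / N ^ 2)‖ ≤
        N ^ d * Real.sqrt (C0 * r ^ d * (2 * (γ / (r * |t|)) + N⁻¹) ^ d) := by
      refine le_of_pow_le_pow_left₀ (n := 2) (by norm_num) (by positivity) (h2.trans ?_)
      rw [mul_pow (N ^ d), Real.sq_sqrt (by positivity)]
      have e : 2 * (γ / (r * N * (|t| / N ^ 2))) + 1 = N * (2 * (γ / (r * |t|)) + N⁻¹) := by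
        field_simp
      rw [e] at h3
      calc _ ≤ C0 * (r * N) ^ d * (N * (2 * (γ / (r * |t|)) + N⁻¹)) ^ d := by gcongr
        _ = _ := by rw [mul_pow, mul_pow]; ring
    have e2 : C1 * (r * N) ^ d * (1 / (r * N) + |t| / N ^ 2 * (r * N)) =
        N ^ d * (C1 * r ^ d * (1 / r + |t| * r) * N⁻¹) := by
      rw [mul_pow]; field_simp
    rw [e2] at h4
    have h6 := h4.trans (add_le_add h5 le_rfl)
    rw [← mul_add] at h6
    exact le_of_mul_le_mul_left h6 (by positivity)
  have lim : Tendsto (fun N : ℝ => Real.sqrt (C0 * r ^ d * (2 * (γ / (r * |t|)) + N⁻¹) ^ d) +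
        C1 * r ^ d * (1 / r + |t| * r) * N⁻¹) atTop
      (nhds (Real.sqrt (C0 * r ^ d * (2 * (γ / (r * |t|)) + 0) ^ d) +
        C1 * r ^ d * (1 / r + |t| * r) * 0)) := by
    have h := tendsto_inv_atTop_zero (𝕜 := ℝ)
    refine Tendsto.add ?_ (h.const_mul _)
    exact ((((h.const_add _).pow d).const_mul _)).sqrt
  have fin := ge_of_tendsto lim key
  refine fin.trans (le_of_eq ?_)
  rw [mul_zero, add_zero, add_zero]
  have e : C0 * r ^ d * (2 * (γ / (r * |t|))) ^ d = C0 * (2 * γ) ^ d * (|t| ^ d)⁻¹ := by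
    rw [← mul_div_assoc, div_pow, mul_pow r]; field_simp
  rw [e, Real.sqrt_mul (by positivity)]
  congr 1
  rw [Real.sqrt_eq_rpow, ← Real.rpow_natCast, ← Real.rpow_neg ht0.le, ← Real.rpow_mul ht0.le]
  congr 1; ring

theorem Vint_trivial (Q : Matrix (Fin d) (Fin d) ℝ) (L : ℝ) (ψ : ℝ → ℝ) (hψ : IsBump ψ L)
    (M : Fin d → ℝ) (r t : ℝ) (hr : 1 ≤ r) : ‖Vint Q M ψ r t‖ ≤ 4 ^ d * r ^ d := by
  have hr0 : 0 < r := by linarith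
  set s : Set (Fin d → ℝ) := Set.Icc (fun _ => -(2 * r)) (fun _ => 2 * r) with hs
  have e : Vint Q M ψ r t = ∫ x in s, wf Q M ψ r t x := by
    refine (setIntegral_eq_integral_of_forall_compl_eq_zero fun x hx => ?_).symm
    rw [wf, wt_supp hψ hr0 x, Complex.ofReal_zero, zero_mul]
    by_contra h
    push Not at h
    exact hx ⟨fun i => (abs_lt.1 (h i)).1.le, fun i => (abs_lt.1 (h i)).2.le⟩
  have hv : volume.real s = (4 * r) ^ d := by
    rw [Measure.real, hs, Real.volume_Icc_pi_toReal (fun i => by simp only []; linarith)]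
    simp only [Finset.prod_const, Finset.card_univ, Fintype.card_fin]
    congr 1; ring
  rw [e]
  have := norm_setIntegral_le_of_norm_le_const (μ := volume) (s := s)
    (f := wf Q M ψ r t) (C := 1) isCompact_Icc.measure_lt_top (fun x _ => by
      rw [wf, norm_mul, norm_ex, mul_one, Complex.norm_real, Real.norm_eq_abs,
        abs_of_nonneg (wt_nonneg hψ r _)]
      exact wt_le_one hψ r _)
  rw [hv, one_mul, mul_pow] at this
  exact this

end LPR

/-! ### Mean value of the difference of sum and integral -/

namespace LPR
open Matrix MeasureTheory Filter
open scoped ENNReal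

variable {d : ℕ}

theorem rpow_scale (r K : ℝ) (hr : 0 < r) (hK : 0 < K) :
    (K / r ^ 2) ^ (1 - (d : ℝ) / 2) = K ^ (1 - (d : ℝ) / 2) * (r ^ d / r ^ 2) := by
  rw [Real.div_rpow hK.le (by positivity), div_eq_mul_inv]
  congr 1
  rw [← Real.rpow_natCast r 2, ← Real.rpow_mul hr.le, ← Real.rpow_neg hr.le, ← Real.rpow_natCast r d,
    ← Real.rpow_sub hr]
  congr 1; push_cast; ring

/-- The `L¹` norm of `Vint` is `O(r^{d-2})`, and its tail beyond `K / r²` is smaller by the factor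
`K^{1 - d/2}`. -/
theorem V_l1 (hd : 5 ≤ d) (Q : Matrix (Fin d) (Fin d) ℝ) (hQ : Q.IsSymm) (hdet : IsUnit Q.det)
    (L : ℝ) (ψ : ℝ → ℝ) (hψ : IsBump ψ L) (M : Fin d → ℝ) : ∃ C : ℝ, 0 ≤ C ∧
      (∀ r : ℝ, 1 ≤ r → ∫⁻ t, ENNReal.ofReal ‖Vint Q M ψ r t‖ ≤ ENNReal.ofReal (C * (r ^ d / r ^ 2))) ∧
      ∀ K r : ℝ, 1 ≤ K → 1 ≤ r → ∫⁻ t in {t : ℝ | K / r ^ 2 ≤ |t|}, ENNReal.ofReal ‖Vint Q M ψ r t‖ ≤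
        ENNReal.ofReal (C * K ^ (1 - (d : ℝ) / 2) * (r ^ d / r ^ 2)) := by
  obtain ⟨C1, hC1, hdec⟩ := Vint_decay Q hQ hdet L hψ.L_nonneg
  have hd1 : (1 : ℝ) < (d : ℝ) / 2 := by
    have : (5 : ℝ) ≤ d := by exact_mod_cast hd
    linarith
  set B : ℝ := 2 + 2 / ((d : ℝ) / 2 - 1) with hB
  have hB0 : 0 ≤ B := by
    have : 0 < (d : ℝ) / 2 - 1 := by linarith
    positivity
  have main : ∀ (s : Set ℝ) (C2 y : ℝ), 0 ≤ C2 → 0 < y → MeasurableSet s →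
      ∀ r : ℝ, (∀ t ∈ s, ‖Vint Q M ψ r t‖ ≤ C2 * (max |t - 0| y) ^ (-((d : ℝ) / 2))) →
      ∫⁻ t in s, ENNReal.ofReal ‖Vint Q M ψ r t‖ ≤
        ENNReal.ofReal (C2 * B * y ^ (1 - (d : ℝ) / 2)) := by
    intro s C2 y hC2 hy hs r h
    calc _ ≤ ∫⁻ t in s, ENNReal.ofReal C2 *
          ENNReal.ofReal ((max |t - 0| y) ^ (-((d : ℝ) / 2))) := by
          refine setLIntegral_mono' hs fun t ht => ?_
          rw [← ENNReal.ofReal_mul hC2]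
          exact ENNReal.ofReal_le_ofReal (h t ht)
      _ ≤ ∫⁻ t, ENNReal.ofReal C2 *
          ENNReal.ofReal ((max |t - 0| y) ^ (-((d : ℝ) / 2))) := setLIntegral_le_lintegral _ _
      _ = ENNReal.ofReal C2 * ∫⁻ t, ENNReal.ofReal ((max |t - 0| y) ^ (-((d : ℝ) / 2))) :=
          lintegral_const_mul' _ _ ENNReal.ofReal_ne_top
      _ ≤ ENNReal.ofReal C2 * ENNReal.ofReal (B * y ^ (1 - (d : ℝ) / 2)) := by
          gcongr; exact lintegral_max_rpow _ y 0 hd1 hy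
      _ = _ := by rw [← ENNReal.ofReal_mul hC2, mul_assoc]
  refine ⟨(C1 + 4 ^ d) * B, by positivity, fun r hr => ?_, fun K r hK hr => ?_⟩
  · have hr0 : 0 < r := by linarith
    have h := main Set.univ (C1 + 4 ^ d) (1 / r ^ 2) (by positivity) (by positivity)
      MeasurableSet.univ r (fun t _ => ?_)
    · rw [rpow_scale r 1 hr0 one_pos, Real.one_rpow, one_mul, setLIntegral_univ] at h
      exact h
    · rw [sub_zero]
      rcases le_or_gt |t| (1 / r ^ 2) with h | h
      · rw [max_eq_right h]
        have e : (1 / r ^ 2) ^ (-((d : ℝ) / 2)) = r ^ d := by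
          rw [one_div, ← Real.rpow_natCast r 2, ← Real.rpow_neg hr0.le, ← Real.rpow_mul hr0.le,
            ← Real.rpow_natCast r d]
          congr 1; push_cast; ring
        rw [e]
        refine (Vint_trivial Q L ψ hψ M r t hr).trans ?_
        gcongr; linarith
      · rw [max_eq_left h.le]
        have ht : t ≠ 0 := by
          rintro rfl
          rw [abs_zero] at h
          exact absurd h (not_lt.2 (by positivity))
        refine (hdec ψ hψ M r t hr ht).trans ?_
        have : (0 : ℝ) ≤ 4 ^ d := by positivity
        gcongr; linarith
  · have hr0 : 0 < r := by linarith
    have h := main {t : ℝ | K / r ^ 2 ≤ |t|} (C1 + 4 ^ d) (K / r ^ 2) (by positivity)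
      (by positivity) (measurableSet_le measurable_const measurable_norm) r (fun t ht => ?_)
    · rw [rpow_scale r K hr0 (by linarith), ← mul_assoc] at h
      exact h
    · have ht' : K / r ^ 2 ≤ |t| := ht
      rw [sub_zero, max_eq_left ht']
      have ht0 : t ≠ 0 := abs_pos.1 (lt_of_lt_of_le (by positivity) ht')
      refine (hdec ψ hψ M r t hr ht0).trans ?_
      have : (0 : ℝ) ≤ 4 ^ d := by positivity
      gcongr; linarith

theorem continuous_Ssum (Q : Matrix (Fin d) (Fin d) ℝ) (M : Fin d → ℝ) (ψ : ℝ → ℝ) (r : ℝ) :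
    Continuous (Ssum Q M ψ r) := by
  have := continuous_ex
  unfold Ssum
  fun_prop

/-- The smooth exponential sum and its integral are close in mean on every bounded interval. -/
theorem SV_l1 (hd : 5 ≤ d) (Q : Matrix (Fin d) (Fin d) ℝ) (hQ : Q.IsSymm) (hdet : IsUnit Q.det)
    (hirr : ¬ IsRationalMat Q) (L : ℝ) (ψ : ℝ → ℝ) (hψ : IsBump ψ L) (M : Fin d → ℝ) (T : ℝ)
    (hT : 0 ≤ T) (η : ℝ) (hη : 0 < η) : ∃ r0 : ℝ, 1 ≤ r0 ∧ ∀ r ≥ r0,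
      ∫⁻ t in Set.Icc (-T) T, ENNReal.ofReal ‖Ssum Q M ψ r t - Vint Q M ψ r t‖ ≤
        ENNReal.ofReal (η * (r ^ d / r ^ 2)) := by
  obtain ⟨C1, hC1, hS⟩ := S_tail hd Q hQ hdet hirr L ψ hψ M T hT
  obtain ⟨C2, hC2, -, hV⟩ := V_l1 hd Q hQ hdet L ψ hψ M
  obtain ⟨C3, hC3, hR⟩ := riemann Q hQ L ‖M‖ hψ.L_nonneg (norm_nonneg _)
  have hd1 : (0 : ℝ) < (d : ℝ) / 2 - 1 := by
    have : (5 : ℝ) ≤ d := by exact_mod_cast hd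
    linarith
  obtain ⟨K, hK1, hK⟩ : ∃ K : ℝ, 1 ≤ K ∧ (C1 + C2) * K ^ (1 - (d : ℝ) / 2) < η / 4 := by
    have h := (tendsto_rpow_neg_atTop hd1).const_mul (C1 + C2)
    rw [mul_zero] at h
    obtain ⟨K, h1, h2⟩ := ((h.eventually (gt_mem_nhds (show 0 < η / 4 by positivity))).and
      (eventually_ge_atTop 1)).exists
    exact ⟨K, h2, by rwa [neg_sub] at h1⟩
  obtain ⟨r1, hr1, hS2⟩ := hS K hK1 (η / 4) (by positivity)
  refine ⟨max r1 (4 * (2 * K * (C3 * (1 + K))) / η), le_max_of_le_left hr1, fun r hr => ?_⟩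
  have hrr1 : r1 ≤ r := (le_max_left _ _).trans hr
  have hr' : 1 ≤ r := hr1.trans hrr1
  have hr0 : 0 < r := by linarith
  have hrM : 2 * K * (C3 * (1 + K)) ≤ η / 4 * r := by
    have := (le_max_right _ _).trans hr
    rw [div_le_iff₀ hη] at this
    linarith
  set U : Set ℝ := {t : ℝ | K / r ^ 2 ≤ |t|} with hU
  have hUm : MeasurableSet U := measurableSet_le measurable_const measurable_norm
  have hp : 0 ≤ r ^ d / r ^ 2 := by positivity
  have hsub : Set.Icc (-T) T ⊆ Set.Icc (-(K / r ^ 2)) (K / r ^ 2) ∪ (Set.Icc (-T) T ∩ U) := by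
    intro t ht
    rcases le_or_gt (K / r ^ 2) |t| with h | h
    · exact Or.inr ⟨ht, h⟩
    · exact Or.inl ⟨(abs_lt.1 h).1.le, (abs_lt.1 h).2.le⟩
  have small : ∫⁻ t in Set.Icc (-(K / r ^ 2)) (K / r ^ 2),
      ENNReal.ofReal ‖Ssum Q M ψ r t - Vint Q M ψ r t‖ ≤
      ENNReal.ofReal (η / 4 * (r ^ d / r ^ 2)) := by
    calc _ ≤ ∫⁻ _t in Set.Icc (-(K / r ^ 2)) (K / r ^ 2),
          ENNReal.ofReal (C3 * r ^ d * ((1 + K) / r)) := by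
          refine setLIntegral_mono' measurableSet_Icc fun t ht => ENNReal.ofReal_le_ofReal ?_
          refine (hR ψ hψ M r t hr' (le_mul_of_one_le_right (norm_nonneg _) hr')).trans ?_
          have h1 : |t| ≤ K / r ^ 2 := abs_le.2 ht
          have h2 : 1 / r + |t| * r ≤ (1 + K) / r := by
            calc _ ≤ 1 / r + K / r ^ 2 * r := by gcongr
              _ = _ := by field_simp
          gcongr
      _ = ENNReal.ofReal (C3 * r ^ d * ((1 + K) / r) * (2 * (K / r ^ 2))) := by
          rw [setLIntegral_const, Real.volume_Icc, ← ENNReal.ofReal_mul (by positivity)]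
          congr 2; ring
      _ ≤ _ := by
          refine ENNReal.ofReal_le_ofReal ?_
          calc _ = 2 * K * (C3 * (1 + K)) / r * (r ^ d / r ^ 2) := by field_simp
            _ ≤ η / 4 * (r ^ d / r ^ 2) := by
              refine mul_le_mul_of_nonneg_right ?_ hp
              rw [div_le_iff₀ hr0]; exact hrM
  have big : ∫⁻ t in Set.Icc (-T) T ∩ U, ENNReal.ofReal ‖Ssum Q M ψ r t - Vint Q M ψ r t‖ ≤
      ENNReal.ofReal ((C1 * K ^ (1 - (d : ℝ) / 2) + η / 4) * (r ^ d / r ^ 2)) +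
        ENNReal.ofReal (C2 * K ^ (1 - (d : ℝ) / 2) * (r ^ d / r ^ 2)) := by
    calc _ ≤ ∫⁻ t in Set.Icc (-T) T ∩ U, (ENNReal.ofReal ‖Ssum Q M ψ r t‖ +
          ENNReal.ofReal ‖Vint Q M ψ r t‖) := by
          refine lintegral_mono fun t => ?_
          rw [← ENNReal.ofReal_add (norm_nonneg _) (norm_nonneg _)]
          exact ENNReal.ofReal_le_ofReal (norm_sub_le _ _)
      _ = (∫⁻ t in Set.Icc (-T) T ∩ U, ENNReal.ofReal ‖Ssum Q M ψ r t‖) +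
          ∫⁻ t in Set.Icc (-T) T ∩ U, ENNReal.ofReal ‖Vint Q M ψ r t‖ := by
          refine lintegral_add_left ?_ _
          have := continuous_Ssum Q M ψ r
          exact (this.norm).measurable.ennreal_ofReal
      _ ≤ _ := by
          refine add_le_add (hS2 r hrr1) ((lintegral_mono_set Set.inter_subset_right).trans
            (hV K r hK1 hr'))
  calc _ ≤ _ := lintegral_mono_set hsub
    _ ≤ _ := lintegral_union_le _ _ _
    _ ≤ _ := add_le_add small big
    _ = ENNReal.ofReal ((η / 2 + (C1 + C2) * K ^ (1 - (d : ℝ) / 2)) * (r ^ d / r ^ 2)) := by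
        have : (0 : ℝ) ≤ K ^ (1 - (d : ℝ) / 2) := by positivity
        rw [← ENNReal.ofReal_add (by positivity) (by positivity),
          ← ENNReal.ofReal_add (by positivity) (by positivity)]
        congr 1; ring
    _ ≤ _ := by
        refine ENNReal.ofReal_le_ofReal ?_
        gcongr
        linarith

end LPR

/-! ### Smoothly weighted lattice point counts -/

namespace LPR
open Matrix MeasureTheory Filter
open scoped ENNReal

variable {d : ℕ}

theorem wt_integrable {ψ : ℝ → ℝ} {L : ℝ} (hψ : IsBump ψ L) {r : ℝ} (hr : 0 < r) :
    Integrable (wt (d := d) ψ r) := by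
  refine (continuous_wt hψ r).integrable_of_hasCompactSupport
    (HasCompactSupport.intro (K := Set.Icc (fun _ => -(2 * r)) (fun _ => 2 * r)) isCompact_Icc
      fun x hx => wt_supp hψ hr x ?_)
  by_contra h
  push Not at h
  exact hx ⟨fun i => (abs_lt.1 (h i)).1.le, fun i => (abs_lt.1 (h i)).2.le⟩

/-- The weighted distribution of the values `Q[m - M]` on lattice points. -/
noncomputable def muM (Q : Matrix (Fin d) (Fin d) ℝ) (M : Fin d → ℝ) (ψ : ℝ → ℝ) (r : ℝ) :
    Measure ℝ :=
  ∑ m ∈ boxZ d ⌈2 * r⌉₊, ENNReal.ofReal (wt ψ r (intVec m)) •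
    Measure.dirac (quadForm Q (intVec m - M))

/-- The weighted distribution of the values `Q[x - M]` under Lebesgue measure. -/
noncomputable def nuM (Q : Matrix (Fin d) (Fin d) ℝ) (M : Fin d → ℝ) (ψ : ℝ → ℝ) (r : ℝ) :
    Measure ℝ :=
  Measure.map (fun x => quadForm Q (x - M))
    ((volume : Measure (Fin d → ℝ)).withDensity fun x => ENNReal.ofReal (wt ψ r x))

instance muM_finite (Q : Matrix (Fin d) (Fin d) ℝ) (M : Fin d → ℝ) (ψ : ℝ → ℝ) (r : ℝ) :
    IsFiniteMeasure (muM Q M ψ r) := by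
  refine ⟨?_⟩
  unfold muM
  rw [Measure.finsetSum_apply]
  refine ENNReal.sum_lt_top.2 fun m _ => ?_
  simp

theorem nuM_finite (Q : Matrix (Fin d) (Fin d) ℝ) (M : Fin d → ℝ) {ψ : ℝ → ℝ} {L : ℝ}
    (hψ : IsBump ψ L) {r : ℝ} (hr : 0 < r) : IsFiniteMeasure (nuM Q M ψ r) := by
  have : IsFiniteMeasure ((volume : Measure (Fin d → ℝ)).withDensity
      fun x => ENNReal.ofReal (wt ψ r x)) := by
    refine isFiniteMeasure_withDensity ?_
    rw [← ofReal_integral_eq_lintegral_ofReal (wt_integrable hψ hr)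
      (Eventually.of_forall fun x => wt_nonneg hψ r x)]
    exact ENNReal.ofReal_ne_top
  unfold nuM; infer_instance

theorem muM_integral {E : Type} [NormedAddCommGroup E] [NormedSpace ℝ E] [CompleteSpace E]
    (Q : Matrix (Fin d) (Fin d) ℝ) (M : Fin d → ℝ) {ψ : ℝ → ℝ} {L : ℝ}
    (hψ : IsBump ψ L) (r : ℝ) (f : ℝ → E) (hf : StronglyMeasurable f) :
    ∫ y, f y ∂(muM Q M ψ r) = ∑ m ∈ boxZ d ⌈2 * r⌉₊, wt ψ r (intVec m) •
      f (quadForm Q (intVec m - M)) := by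
  unfold muM
  rw [integral_finset_sum_measure]
  · refine Finset.sum_congr rfl fun m _ => ?_
    rw [integral_smul_measure, integral_dirac' _ _ hf, ENNReal.toReal_ofReal (wt_nonneg hψ r _)]
  · intro m _
    refine Integrable.smul_measure ?_ ENNReal.ofReal_ne_top
    exact (integrable_dirac' hf (by simp))

theorem nuM_integral {E : Type} [NormedAddCommGroup E] [NormedSpace ℝ E]
    (Q : Matrix (Fin d) (Fin d) ℝ) (M : Fin d → ℝ) {ψ : ℝ → ℝ} {L : ℝ}
    (hψ : IsBump ψ L) (r : ℝ) (f : ℝ → E) (hf : StronglyMeasurable f) :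
    ∫ y, f y ∂(nuM Q M ψ r) = ∫ x, wt ψ r x • f (quadForm Q (x - M)) := by
  have hq : Measurable fun x : Fin d → ℝ => quadForm Q (x - M) := by
    have := continuous_quadForm Q
    exact (this.comp (continuous_id.sub continuous_const)).measurable
  unfold nuM
  rw [integral_map hq.aemeasurable hf.aestronglyMeasurable,
    integral_withDensity_eq_integral_toReal_smul
      (continuous_wt hψ r).measurable.ennreal_ofReal (by simp)]
  congr 1; ext x
  rw [ENNReal.toReal_ofReal (wt_nonneg hψ r _)]

theorem charFun_muM (Q : Matrix (Fin d) (Fin d) ℝ) (M : Fin d → ℝ) {ψ : ℝ → ℝ} {L : ℝ}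
    (hψ : IsBump ψ L) (r t : ℝ) : charFun (muM Q M ψ r) t = Ssum Q M ψ r t := by
  rw [charFun_apply_real, muM_integral Q M hψ r _ (by
    exact Continuous.stronglyMeasurable (by fun_prop)), Ssum]
  refine Finset.sum_congr rfl fun m _ => ?_
  rw [Complex.real_smul, ex, Complex.ofReal_mul]; rfl

theorem charFun_nuM (Q : Matrix (Fin d) (Fin d) ℝ) (M : Fin d → ℝ) {ψ : ℝ → ℝ} {L : ℝ}
    (hψ : IsBump ψ L) (r t : ℝ) : charFun (nuM Q M ψ r) t = Vint Q M ψ r t := by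
  rw [charFun_apply_real, nuM_integral Q M hψ r _ (by
    exact Continuous.stronglyMeasurable (by fun_prop)), Vint]
  congr 1; ext x
  rw [Complex.real_smul, wf, ex, Complex.ofReal_mul]

/-- The smoothed region count on the lattice. -/
noncomputable def cntW (Q : Matrix (Fin d) (Fin d) ℝ) (a b : ℝ) (M : Fin d → ℝ) (ψ : ℝ → ℝ)
    (r : ℝ) : ℝ :=
  ∑ m ∈ boxZ d ⌈2 * r⌉₊, wt ψ r (intVec m) *
    Set.indicator (Set.Icc a b) 1 (quadForm Q (intVec m - M))

/-- The smoothed volume of the region. -/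
noncomputable def volW (Q : Matrix (Fin d) (Fin d) ℝ) (a b : ℝ) (M : Fin d → ℝ) (ψ : ℝ → ℝ)
    (r : ℝ) : ℝ :=
  ∫ x, wt ψ r x * Set.indicator (Set.Icc a b) 1 (quadForm Q (x - M))

theorem setIntegral_le_of_lintegral {f : ℝ → ℝ} (hf : Continuous f) (h0 : ∀ t, 0 ≤ f t)
    (s : Set ℝ) (X : ℝ) (hX : 0 ≤ X)
    (h : ∫⁻ t in s, ENNReal.ofReal (f t) ≤ ENNReal.ofReal X) : ∫ t in s, f t ≤ X := by
  rw [integral_eq_lintegral_of_nonneg_ae (Eventually.of_forall h0) hf.aestronglyMeasurable]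
  exact ENNReal.toReal_le_of_le_ofReal hX h

/-- The smoothed lattice point count agrees with the smoothed volume up to `o(r^{d-2})`. -/
theorem smooth_count (hd : 5 ≤ d) (Q : Matrix (Fin d) (Fin d) ℝ) (hQ : Q.IsSymm)
    (hdet : IsUnit Q.det) (hirr : ¬ IsRationalMat Q) (L : ℝ) (ψ : ℝ → ℝ) (hψ : IsBump ψ L)
    (M : Fin d → ℝ) (a b : ℝ) (hab : a < b) (η : ℝ) (hη : 0 < η) : ∃ r0 : ℝ, 1 ≤ r0 ∧ ∀ r ≥ r0,
      |cntW Q a b M ψ r - volW Q a b M ψ r| ≤ η * (r ^ d / r ^ 2) := by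
  obtain ⟨C1, hC1, hV, -⟩ := V_l1 hd Q hQ hdet L ψ hψ M
  obtain ⟨T, C2, hT, hC2, hE⟩ := esseen a b (η / (2 * (C1 + 1))) hab (by positivity)
  obtain ⟨r0, hr0, hSV⟩ := SV_l1 hd Q hQ hdet hirr L ψ hψ M T hT.le (η / (2 * (C2 + 1)))
    (by positivity)
  refine ⟨r0, hr0, fun r hr => ?_⟩
  have hr1 : 1 ≤ r := hr0.trans hr
  have hrp : 0 < r := by linarith
  have := nuM_finite Q M hψ hrp
  have h := hE (muM Q M ψ r) (nuM Q M ψ r)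
  have hm : StronglyMeasurable (Set.indicator (Set.Icc a b) (1 : ℝ → ℝ)) :=
    stronglyMeasurable_const.indicator measurableSet_Icc
  rw [← integral_indicator_one measurableSet_Icc, ← integral_indicator_one measurableSet_Icc,
    muM_integral Q M hψ r _ hm, nuM_integral Q M hψ r _ hm] at h
  have c1 : Continuous fun t => ‖charFun (nuM Q M ψ r) t‖ := continuous_charFun.norm
  have c2 := charFun_dist_continuous (muM Q M ψ r) (nuM Q M ψ r)
  have hp : 0 ≤ r ^ d / r ^ 2 := by positivity
  have b1 : ∫ t in Set.Icc (-T) T, ‖charFun (nuM Q M ψ r) t‖ ≤ C1 * (r ^ d / r ^ 2) := by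
    refine setIntegral_le_of_lintegral c1 (fun _ => norm_nonneg _) _ _ (by positivity) ?_
    simp_rw [charFun_nuM Q M hψ]
    exact (setLIntegral_le_lintegral _ _).trans (hV r hr1)
  have b2 : ∫ t in Set.Icc (-T) T, ‖charFun (muM Q M ψ r) t - charFun (nuM Q M ψ r) t‖ ≤
      η / (2 * (C2 + 1)) * (r ^ d / r ^ 2) := by
    refine setIntegral_le_of_lintegral c2 (fun _ => norm_nonneg _) _ _ (by positivity) ?_
    simp_rw [charFun_nuM Q M hψ, charFun_muM Q M hψ]
    exact hSV r hr
  refine h.trans ?_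
  have e1 : η / (2 * (C1 + 1)) * (C1 * (r ^ d / r ^ 2)) ≤ η / 2 * (r ^ d / r ^ 2) := by
    rw [← mul_assoc]
    refine mul_le_mul_of_nonneg_right ?_ hp
    rw [div_mul_eq_mul_div, div_le_div_iff₀ (by positivity) (by norm_num)]
    nlinarith
  have e2 : C2 * (η / (2 * (C2 + 1)) * (r ^ d / r ^ 2)) ≤ η / 2 * (r ^ d / r ^ 2) := by
    rw [← mul_assoc]
    refine mul_le_mul_of_nonneg_right ?_ hp
    rw [← mul_div_assoc, div_le_div_iff₀ (by positivity) (by norm_num)]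
    nlinarith
  calc _ ≤ η / (2 * (C1 + 1)) * (C1 * (r ^ d / r ^ 2)) +
        C2 * (η / (2 * (C2 + 1)) * (r ^ d / r ^ 2)) := by gcongr
    _ ≤ η / 2 * (r ^ d / r ^ 2) + η / 2 * (r ^ d / r ^ 2) := add_le_add e1 e2
    _ = _ := by ring

end LPR

/-! ### Volumes of ellipsoid shells -/

namespace LPR
open Matrix MeasureTheory Filter
open scoped ENNReal Pointwise

theorem quadForm_smul {k : ℕ} (P : Matrix (Fin k) (Fin k) ℝ) (t : ℝ) (x : Fin k → ℝ) :
    quadForm P (t • x) = t ^ 2 * quadForm P x := by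
  change P *ᵥ (t • x) ⬝ᵥ (t • x) = t ^ 2 * (P *ᵥ x ⬝ᵥ x)
  rw [mulVec_smul, smul_dotProduct, dotProduct_smul, smul_eq_mul, smul_eq_mul]; ring

theorem posDef_bounds {k : ℕ} (hk : 1 ≤ k) (P : Matrix (Fin k) (Fin k) ℝ) (hP : P.PosDef) :
    ∃ c C : ℝ, 0 < c ∧ c ≤ C ∧ ∀ x, c * ‖x‖ ^ 2 ≤ quadForm P x ∧ quadForm P x ≤ C * ‖x‖ ^ 2 := by
  have : Nonempty (Fin k) := ⟨⟨0, hk⟩⟩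
  have hpos : ∀ x : Fin k → ℝ, x ≠ 0 → 0 < quadForm P x := fun x hx => by
    have := hP.dotProduct_mulVec_pos hx
    rw [star_trivial, dotProduct_comm] at this
    exact this
  have hcpt : IsCompact (Metric.sphere (0 : Fin k → ℝ) 1) := isCompact_sphere _ _
  have hne : (Metric.sphere (0 : Fin k → ℝ) 1).Nonempty := NormedSpace.sphere_nonempty.2 zero_le_one
  obtain ⟨y, hy, hmin⟩ := hcpt.exists_isMinOn hne (continuous_quadForm P).continuousOn
  obtain ⟨z, hz, hmax⟩ := hcpt.exists_isMaxOn hne (continuous_quadForm P).continuousOn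
  have hy0 : y ≠ 0 := by
    rintro rfl; simp at hy
  refine ⟨quadForm P y, quadForm P z, hpos y hy0, hmin hz, fun x => ?_⟩
  rcases eq_or_ne x 0 with rfl | hx
  · have : quadForm P (0 : Fin k → ℝ) = 0 := by simp [quadForm]
    simp [this]
  · have hn : 0 < ‖x‖ := norm_pos_iff.2 hx
    have hs : (‖x‖⁻¹ • x) ∈ Metric.sphere (0 : Fin k → ℝ) 1 := by
      simp [norm_smul, hn.ne']
    have e : quadForm P x = quadForm P (‖x‖⁻¹ • x) * ‖x‖ ^ 2 := by
      rw [quadForm_smul]; field_simp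
    rw [e]
    exact ⟨mul_le_mul_of_nonneg_right (hmin hs) (by positivity),
      mul_le_mul_of_nonneg_right (hmax hs) (by positivity)⟩

/-- The volume of the unit ball of the form `P`. -/
noncomputable def ellVol {k : ℕ} (P : Matrix (Fin k) (Fin k) ℝ) : ℝ :=
  volume.real {x : Fin k → ℝ | quadForm P x ≤ 1}

theorem ell_bdd {k : ℕ} (hk : 1 ≤ k) (P : Matrix (Fin k) (Fin k) ℝ) (hP : P.PosDef) (s : ℝ) :
    Bornology.IsBounded {x : Fin k → ℝ | quadForm P x ≤ s} := by
  obtain ⟨c, C, hc, -, h⟩ := posDef_bounds hk P hP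
  refine (Metric.isBounded_closedBall (x := (0 : Fin k → ℝ)) (r := √(s / c))).subset fun x hx => ?_
  rw [mem_closedBall_zero_iff]
  refine Real.le_sqrt_of_sq_le ?_
  rw [le_div_iff₀ hc, mul_comm]
  exact (h x).1.trans hx

theorem ellVol_pos {k : ℕ} (hk : 1 ≤ k) (P : Matrix (Fin k) (Fin k) ℝ) (hP : P.PosDef) :
    0 < ellVol P := by
  have h1 : volume {x : Fin k → ℝ | quadForm P x ≤ 1} ≠ ⊤ := (ell_bdd hk P hP 1).measure_lt_top.ne
  refine ENNReal.toReal_pos ?_ h1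
  have ho : IsOpen {x : Fin k → ℝ | quadForm P x < 1} :=
    isOpen_lt (continuous_quadForm P) continuous_const
  have := ho.measure_pos volume ⟨0, by simp [quadForm]⟩
  exact (this.trans_le (measure_mono fun x (hx : quadForm P x < 1) => hx.le)).ne'

theorem volume_ell {k : ℕ} (P : Matrix (Fin k) (Fin k) ℝ) {R : ℝ}
    (hR : 0 < R) (N : Fin k → ℝ) :
    volume.real {x : Fin k → ℝ | quadForm P (x - N) ≤ R ^ 2} = R ^ k * ellVol P := by
  have e : {x : Fin k → ℝ | quadForm P (x - N) ≤ R ^ 2} =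
      (fun x => x + N) '' (R • {x : Fin k → ℝ | quadForm P x ≤ 1}) := by
    ext x
    constructor
    · intro (hx : quadForm P (x - N) ≤ R ^ 2)
      refine ⟨x - N, ⟨R⁻¹ • (x - N), ?_, ?_⟩, by simp⟩
      · change _ ≤ _ at hx
        change quadForm P (R⁻¹ • (x - N)) ≤ 1
        rw [quadForm_smul, inv_pow, inv_mul_le_iff₀ (by positivity), mul_one]; exact hx
      · simp [smul_smul, hR.ne']
    · rintro ⟨_, ⟨y, hy, rfl⟩, rfl⟩
      change quadForm P (R • y + N - N) ≤ _
      rw [add_sub_cancel_right, quadForm_smul]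
      exact mul_le_of_le_one_right (by positivity) hy
  rw [e, ellVol, Measure.real, Measure.real, Set.image_add_right, measure_preimage_add_right,
    Measure.addHaar_smul, Module.finrank_fin_fun, ENNReal.toReal_mul, abs_of_pos (by positivity),
    ENNReal.toReal_ofReal (by positivity)]

theorem ell_ne_top {k : ℕ} (hk : 1 ≤ k) (P : Matrix (Fin k) (Fin k) ℝ) (hP : P.PosDef) (s : ℝ)
    (N : Fin k → ℝ) : volume {x : Fin k → ℝ | quadForm P (x - N) ≤ s} ≠ ⊤ := by
  have e : {x : Fin k → ℝ | quadForm P (x - N) ≤ s} =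
      (fun x => x - N) ⁻¹' {x : Fin k → ℝ | quadForm P x ≤ s} := rfl
  simp_rw [e, sub_eq_add_neg]
  rw [measure_preimage_add_right]
  exact (ell_bdd hk P hP s).measure_lt_top.ne

theorem volume_shell {k : ℕ} (hk : 1 ≤ k) (P : Matrix (Fin k) (Fin k) ℝ) (hP : P.PosDef) {R S : ℝ}
    (hR : 0 < R) (hS : R ≤ S) (N : Fin k → ℝ) :
    volume.real {x : Fin k → ℝ | R ^ 2 < quadForm P (x - N) ∧ quadForm P (x - N) ≤ S ^ 2} =
      (S ^ k - R ^ k) * ellVol P := by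
  have e : {x : Fin k → ℝ | R ^ 2 < quadForm P (x - N) ∧ quadForm P (x - N) ≤ S ^ 2} =
      {x | quadForm P (x - N) ≤ S ^ 2} \ {x | quadForm P (x - N) ≤ R ^ 2} := by
    ext x
    simp only [Set.mem_ofPred_eq, Set.mem_sdiff, not_le]; tauto
  have hcont : Continuous fun x : Fin k → ℝ => quadForm P (x - N) :=
    (continuous_quadForm P).comp (by fun_prop)
  have hfin := ell_ne_top hk P hP (S ^ 2) N
  have hsub : {x : Fin k → ℝ | quadForm P (x - N) ≤ R ^ 2} ⊆ {x | quadForm P (x - N) ≤ S ^ 2} :=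
    fun x (hx : quadForm P (x - N) ≤ R ^ 2) => hx.trans (pow_le_pow_left₀ hR.le hS 2)
  rw [e, measureReal_sdiff hsub (isClosed_le hcont continuous_const).measurableSet
      hfin,
    volume_ell P hR, volume_ell P (hR.trans_le hS)]
  ring

theorem pow_diff_bounds {k : ℕ} (hk : 1 ≤ k) {R S : ℝ} (hR : 0 < R) (hS : R ≤ S) :
    S ^ k * ((S ^ 2 - R ^ 2) / (2 * S ^ 2)) ≤ S ^ k - R ^ k ∧
      S ^ k - R ^ k ≤ k * (S ^ k * ((S ^ 2 - R ^ 2) / S ^ 2)) := by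
  have hSp : 0 < S := hR.trans_le hS
  obtain ⟨q, rfl⟩ : ∃ q, R = q * S := ⟨R / S, by field_simp⟩
  have hq0 : 0 < q := pos_of_mul_pos_left hR hSp.le
  have hq1 : q ≤ 1 := by
    by_contra h; push Not at h
    have := mul_lt_mul_of_pos_right h hSp; linarith
  have h1 : q ^ k ≤ q := pow_le_of_le_one hq0.le hq1 (by omega)
  have h2 : 1 + (k : ℝ) * (q - 1) ≤ q ^ k := by
    have := one_add_mul_le_pow (a := q - 1) (by linarith) k
    simpa using this
  have e1 : (S ^ 2 - (q * S) ^ 2) / (2 * S ^ 2) = (1 - q ^ 2) / 2 := by field_simp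
  have e2 : (S ^ 2 - (q * S) ^ 2) / S ^ 2 = 1 - q ^ 2 := by field_simp
  have hk0 : (0 : ℝ) ≤ k := Nat.cast_nonneg k
  have hSk : 0 ≤ S ^ k := by positivity
  rw [e1, e2, mul_pow, show S ^ k - q ^ k * S ^ k = S ^ k * (1 - q ^ k) by ring,
    show (k : ℝ) * (S ^ k * (1 - q ^ 2)) = S ^ k * (k * (1 - q ^ 2)) by ring]
  have h3 : (1 - q ^ 2) / 2 ≤ 1 - q := by nlinarith
  have h4 : (k : ℝ) * (1 - q) ≤ k * (1 - q ^ 2) := mul_le_mul_of_nonneg_left (by nlinarith) hk0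
  exact ⟨mul_le_mul_of_nonneg_left (by linarith) hSk, mul_le_mul_of_nonneg_left (by linarith) hSk⟩

/-- A shell of bounded width of an ellipsoid of size comparable to `r` in dimension `k` has volume
comparable to `r ^ (k - 2)`; the quotient keeps the exponent meaningful for `k = 1`. -/
theorem shell_bounds {k : ℕ} (hk : 1 ≤ k) (P : Matrix (Fin k) (Fin k) ℝ) (hP : P.PosDef)
    (c1 C1 a b : ℝ) (hc1 : 0 < c1) (hC1 : c1 ≤ C1) (hab : a < b) :
    ∃ c C r0 : ℝ, 0 < c ∧ 0 ≤ C ∧ 1 ≤ r0 ∧ ∀ r ≥ r0, ∀ ρ, c1 * r ^ 2 ≤ ρ → ρ ≤ C1 * r ^ 2 →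
      ∀ N : Fin k → ℝ,
      ENNReal.ofReal (c * (r ^ k / r ^ 2)) ≤
        volume {y : Fin k → ℝ | ρ - b ≤ quadForm P (y - N) ∧ quadForm P (y - N) ≤ ρ - a} ∧
      volume {y : Fin k → ℝ | ρ - b ≤ quadForm P (y - N) ∧ quadForm P (y - N) ≤ ρ - a} ≤
        ENNReal.ofReal (C * (r ^ k / r ^ 2)) := by
  have hv := ellVol_pos hk P hP
  set v := ellVol P
  set B := |a| + |b| + 1 with hB
  have hBp : 0 < B := by positivity
  have hC1p : 0 < C1 := hc1.trans_le hC1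
  refine ⟨v * (√(c1 / 2)) ^ k * ((b - a) / (2 * (C1 + c1))),
    v * (k * (√(C1 + c1) ^ k * (2 * B / c1))), max 1 (2 * B / c1), ?_, by positivity,
    le_max_left _ _, ?_⟩
  · have := sub_pos.2 hab; positivity
  intro r hr ρ h1 h2 N
  have hr1 : 1 ≤ r := (le_max_left _ _).trans hr
  have hrp : 0 < r := by linarith
  have hBr : 2 * B ≤ c1 * r ^ 2 := by
    have h3 : 2 * B / c1 ≤ r := (le_max_right _ _).trans hr
    rw [div_le_iff₀ hc1] at h3
    nlinarith [mul_le_mul_of_nonneg_left hr1 (mul_nonneg hc1.le hrp.le)]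
  have ha := abs_le.1 (le_refl |a|)
  have hb := abs_le.1 (le_refl |b|)
  have ha0 := abs_nonneg a
  have hb0 := abs_nonneg b
  have key : ∀ R2 S2 : ℝ, 0 < R2 → R2 ≤ S2 →
      volume {y : Fin k → ℝ | R2 < quadForm P (y - N) ∧ quadForm P (y - N) ≤ S2} =
        ENNReal.ofReal ((√S2 ^ k - √R2 ^ k) * v) := by
    intro R2 S2 hR hS
    have h3 := volume_shell hk P hP (Real.sqrt_pos.2 hR) (Real.sqrt_le_sqrt hS) N
    rw [Real.sq_sqrt hR.le, Real.sq_sqrt (hR.le.trans hS)] at h3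
    rw [← h3, ofReal_measureReal (measure_ne_top_of_subset (fun x hx => hx.2)
      (ell_ne_top hk P hP S2 N))]
  have pd : ∀ R2 S2 : ℝ, 0 < R2 → R2 ≤ S2 → _ := fun R2 S2 hR hS =>
    pow_diff_bounds hk (Real.sqrt_pos.2 hR) (Real.sqrt_le_sqrt hS)
  constructor
  · have hR : 0 < ρ - b := by linarith
    have hS : ρ - b ≤ ρ - a := by linarith
    refine le_trans ?_ (measure_mono (show {y : Fin k → ℝ | ρ - b < quadForm P (y - N) ∧
      quadForm P (y - N) ≤ ρ - a} ⊆ _ from fun y hy => ⟨hy.1.le, hy.2⟩))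
    rw [key _ _ hR hS]
    refine ENNReal.ofReal_le_ofReal ?_
    have h3 := (pd _ _ hR hS).1
    rw [Real.sq_sqrt hR.le, Real.sq_sqrt (hR.le.trans hS),
      show ρ - a - (ρ - b) = b - a by ring] at h3
    have h4 : √(c1 / 2) * r ≤ √(ρ - a) := by
      refine Real.le_sqrt_of_sq_le ?_
      rw [mul_pow, Real.sq_sqrt (by positivity)]; linarith
    have h5 : (√(c1 / 2) * r) ^ k * ((b - a) / (2 * ((C1 + c1) * r ^ 2))) ≤
        √(ρ - a) ^ k * ((b - a) / (2 * (ρ - a))) := by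
      refine mul_le_mul (pow_le_pow_left₀ (by positivity) h4 _) ?_ ?_ (by positivity)
      · refine div_le_div_of_nonneg_left (by linarith) (by linarith) ?_
        linarith
      · exact div_nonneg (by linarith) (by positivity)
    refine le_trans (le_of_eq ?_) (mul_le_mul_of_nonneg_right (h5.trans h3) hv.le)
    rw [mul_pow]; field_simp
  · have hR : 0 < ρ - B := by linarith
    have hS : ρ - B ≤ ρ + B := by linarith
    refine (measure_mono (show _ ⊆ {y : Fin k → ℝ | ρ - B < quadForm P (y - N) ∧
      quadForm P (y - N) ≤ ρ + B} from fun y hy => ⟨?_, ?_⟩)).trans ?_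
    · have := hy.1; linarith
    · have := hy.2; linarith
    rw [key _ _ hR hS]
    refine ENNReal.ofReal_le_ofReal ?_
    have h3 := (pd _ _ hR hS).2
    rw [Real.sq_sqrt hR.le, Real.sq_sqrt (hR.le.trans hS),
      show ρ + B - (ρ - B) = 2 * B by ring] at h3
    have h4 : √(ρ + B) ≤ √(C1 + c1) * r := by
      refine Real.sqrt_le_iff.2 ⟨by positivity, ?_⟩
      rw [mul_pow, Real.sq_sqrt (by positivity)]; linarith
    have h5 : √(ρ + B) ^ k * (2 * B / (ρ + B)) ≤
        (√(C1 + c1) * r) ^ k * (2 * B / (c1 * r ^ 2)) := by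
      refine mul_le_mul (pow_le_pow_left₀ (Real.sqrt_nonneg _) h4 _) ?_ ?_ (by positivity)
      · exact div_le_div_of_nonneg_left (by positivity) (by positivity) (by linarith)
      · exact div_nonneg (by positivity) (by linarith)
    refine (mul_le_mul_of_nonneg_right (h3.trans (mul_le_mul_of_nonneg_left h5
      (Nat.cast_nonneg k))) hv.le).trans (le_of_eq ?_)
    rw [mul_pow]; field_simp

end LPR

/-! ### Volumes of hyperbolic shells in product coordinates -/

namespace LPR
open Matrix MeasureTheory Filter
open scoped ENNReal

theorem prod_slice_le {k l : ℕ} (A : Set ((Fin k → ℝ) × (Fin l → ℝ))) (hA : MeasurableSet A)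
    (X : Set (Fin k → ℝ)) (hX : MeasurableSet X) (c : ℝ≥0∞)
    (h1 : ∀ p ∈ A, p.1 ∈ X) (h2 : ∀ x ∈ X, volume {y | (x, y) ∈ A} ≤ c) :
    volume A ≤ c * volume X := by
  rw [Measure.volume_eq_prod, Measure.prod_apply hA, ← lintegral_indicator_const hX]
  refine lintegral_mono fun x => ?_
  by_cases hx : x ∈ X
  · rw [Set.indicator_of_mem hx]; exact h2 x hx
  · rw [Set.indicator_of_notMem hx]
    have : Prod.mk x ⁻¹' A = ∅ := by
      ext y; simp only [Set.mem_preimage, Set.mem_empty_iff_false, iff_false]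
      exact fun h => hx (h1 _ h)
    rw [this]; simp

theorem prod_slice_ge {k l : ℕ} (A : Set ((Fin k → ℝ) × (Fin l → ℝ))) (hA : MeasurableSet A)
    (X : Set (Fin k → ℝ)) (hX : MeasurableSet X) (c : ℝ≥0∞)
    (h2 : ∀ x ∈ X, c ≤ volume {y | (x, y) ∈ A}) :
    c * volume X ≤ volume A := by
  rw [Measure.volume_eq_prod, Measure.prod_apply hA, ← lintegral_indicator_const hX]
  refine lintegral_mono fun x => ?_
  by_cases hx : x ∈ X
  · rw [Set.indicator_of_mem hx]; exact h2 x hx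
  · rw [Set.indicator_of_notMem hx]; exact bot_le

theorem closed_region {k l : ℕ} (P : Matrix (Fin k) (Fin k) ℝ) (P' : Matrix (Fin l) (Fin l) ℝ)
    (a b : ℝ) (M : Fin k → ℝ) (N : Fin l → ℝ) :
    IsClosed {p : (Fin k → ℝ) × (Fin l → ℝ) | a ≤ quadForm P (p.1 - M) - quadForm P' (p.2 - N) ∧
      quadForm P (p.1 - M) - quadForm P' (p.2 - N) ≤ b} := by
  have h1 := continuous_quadForm P
  have h2 := continuous_quadForm P'
  rw [Set.ofPred_and]
  refine IsClosed.inter (isClosed_le ?_ ?_) (isClosed_le ?_ ?_) <;> fun_prop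

/-- The slab `|x i| ∈ [(1 - ε) r, (1 + ε) r]` of the cube of side `4 r`. -/
def slab {k : ℕ} (i : Fin k) (r ε : ℝ) : Set (Fin k → ℝ) :=
  {x | ((1 - ε) * r ≤ |x i| ∧ |x i| ≤ (1 + ε) * r) ∧ ‖x‖ ≤ 2 * r}

theorem slab_closed {k : ℕ} (i : Fin k) (r ε : ℝ) : IsClosed (slab i r ε) := by
  unfold slab
  rw [Set.ofPred_and, Set.ofPred_and]
  refine IsClosed.inter (IsClosed.inter (isClosed_le ?_ ?_) (isClosed_le ?_ ?_))
    (isClosed_le ?_ ?_) <;> fun_prop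

theorem volume_slab {k : ℕ} (i : Fin k) {r ε : ℝ} (hr : 0 < r) (hε : 0 ≤ ε) :
    volume (slab i r ε) ≤ ENNReal.ofReal (ε * (4 * r) ^ k) := by
  classical
  have hsub : slab i r ε ⊆ Set.univ.pi (Function.update (fun _ => Set.Icc (-(2 * r)) (2 * r)) i
      (Set.Icc ((1 - ε) * r) ((1 + ε) * r) ∪ Set.Icc (-((1 + ε) * r)) (-((1 - ε) * r)))) := by
    rintro x ⟨⟨h1, h2⟩, h3⟩ j -
    rcases eq_or_ne j i with rfl | hj
    · rw [Function.update_self]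
      rcases abs_cases (x j) with ⟨h, -⟩ | ⟨h, -⟩
      · left; rw [h] at h1 h2; exact ⟨h1, h2⟩
      · right; rw [h] at h1 h2; constructor <;> linarith
    · rw [Function.update_of_ne hj]
      exact abs_le.1 ((norm_le_pi_norm x j).trans h3)
  refine (measure_mono hsub).trans ?_
  rw [volume_pi_pi, ← Finset.mul_prod_erase _ _ (Finset.mem_univ i), Function.update_self]
  have h1 : ∏ j ∈ Finset.univ.erase i, volume (Function.update (fun _ => Set.Icc (-(2 * r)) (2 * r))
      i (Set.Icc ((1 - ε) * r) ((1 + ε) * r) ∪ Set.Icc (-((1 + ε) * r)) (-((1 - ε) * r))) j) =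
      ENNReal.ofReal ((4 * r) ^ (k - 1)) := by
    rw [Finset.prod_congr rfl (g := fun _ => ENNReal.ofReal (4 * r))]
    · rw [Finset.prod_const, Finset.card_erase_of_mem (Finset.mem_univ i), Finset.card_univ,
        Fintype.card_fin, ENNReal.ofReal_pow (by positivity)]
    · intro j hj
      rw [Function.update_of_ne (Finset.ne_of_mem_erase hj), Real.volume_Icc]
      congr 1; ring
  have h2 : volume (Set.Icc ((1 - ε) * r) ((1 + ε) * r) ∪ Set.Icc (-((1 + ε) * r))
      (-((1 - ε) * r))) ≤ ENNReal.ofReal (ε * (4 * r)) := by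
    refine (measure_union_le _ _).trans ?_
    rw [Real.volume_Icc, Real.volume_Icc, ← ENNReal.ofReal_add (by nlinarith) (by nlinarith)]
    exact ENNReal.ofReal_le_ofReal (le_of_eq (by ring))
  rw [h1]
  refine (mul_le_mul_left h2 _).trans ?_
  rw [← ENNReal.ofReal_mul (by positivity)]
  refine ENNReal.ofReal_le_ofReal (le_of_eq ?_)
  have hk : k - 1 + 1 = k := by have := i.pos; omega
  conv_rhs => rw [← hk, pow_succ]
  ring

/-- The shell intersected with a thin slab: for fixed first variable in the slab, the second variable
runs over an ellipsoid shell of volume `O(r^{l-2})`. The slab bounds one of the first variables. -/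
theorem annulus_upper {k l : ℕ} (hk : 1 ≤ k) (hl : 1 ≤ l) (P : Matrix (Fin k) (Fin k) ℝ)
    (hP : P.PosDef) (P' : Matrix (Fin l) (Fin l) ℝ) (hP' : P'.PosDef) (a b : ℝ) (hab : a < b)
    (M : Fin k → ℝ) (N : Fin l → ℝ) :
    ∃ C r0 : ℝ, 0 ≤ C ∧ 1 ≤ r0 ∧ ∀ r ≥ r0, ∀ ε, 0 ≤ ε → ε ≤ 1 / 2 →
      volume {p : (Fin k → ℝ) × (Fin l → ℝ) | (∃ i, p.1 ∈ slab i r ε) ∧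
        (a ≤ quadForm P (p.1 - M) - quadForm P' (p.2 - N) ∧
          quadForm P (p.1 - M) - quadForm P' (p.2 - N) ≤ b)} ≤
      ENNReal.ofReal (C * ε * (r ^ (k + l) / r ^ 2)) := by
  obtain ⟨c, C, hc, hcC, hPb⟩ := posDef_bounds hk P hP
  obtain ⟨_, C2, r1, _, hC2, hr1, hsh⟩ := shell_bounds hl P' hP' (c / 16) (9 * C) a b
    (by positivity) (by linarith) hab
  refine ⟨k * (C2 * 4 ^ k), max r1 (4 * ‖M‖), by positivity, hr1.trans (le_max_left _ _), ?_⟩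
  intro r hr ε hε hε2
  have hr1' : r1 ≤ r := (le_max_left _ _).trans hr
  have hrM : 4 * ‖M‖ ≤ r := (le_max_right _ _).trans hr
  have hrp : 0 < r := by linarith
  have e : {p : (Fin k → ℝ) × (Fin l → ℝ) | (∃ i, p.1 ∈ slab i r ε) ∧
        (a ≤ quadForm P (p.1 - M) - quadForm P' (p.2 - N) ∧
          quadForm P (p.1 - M) - quadForm P' (p.2 - N) ≤ b)} =
      ⋃ i, (Prod.fst ⁻¹' slab i r ε) ∩
        {p | a ≤ quadForm P (p.1 - M) - quadForm P' (p.2 - N) ∧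
          quadForm P (p.1 - M) - quadForm P' (p.2 - N) ≤ b} := by
    ext p; simp
  rw [e]
  refine (measure_iUnion_fintype_le _ _).trans ?_
  have hi : ∀ i : Fin k, volume ((Prod.fst ⁻¹' slab i r ε) ∩
        {p : (Fin k → ℝ) × (Fin l → ℝ) | a ≤ quadForm P (p.1 - M) - quadForm P' (p.2 - N) ∧
          quadForm P (p.1 - M) - quadForm P' (p.2 - N) ≤ b}) ≤
      ENNReal.ofReal (C2 * (r ^ l / r ^ 2) * (ε * (4 * r) ^ k)) := by
    intro i
    rw [ENNReal.ofReal_mul (by positivity)]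
    refine (prod_slice_le _ (((slab_closed i r ε).preimage continuous_fst).inter
      (closed_region P P' a b M N)).measurableSet (slab i r ε) (slab_closed i r ε).measurableSet
      (ENNReal.ofReal (C2 * (r ^ l / r ^ 2))) (fun p hp => hp.1) ?_).trans
      (mul_le_mul_right (volume_slab i hrp hε) _)
    intro x hx
    have hxl : r / 4 ≤ ‖x - M‖ := by
      have h1 := norm_le_pi_norm (x - M) i
      have h2 := norm_le_pi_norm M i
      rw [Real.norm_eq_abs] at h1 h2
      have h3 : |x i| ≤ |(x - M) i| + |M i| := by
        have := abs_add_le ((x - M) i) (M i)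
        simpa using this
      have h4 := hx.1.1
      nlinarith
    have hxu : ‖x - M‖ ≤ 3 * r := by
      have := norm_sub_le x M; linarith [hx.2]
    have hb := hPb (x - M)
    refine (measure_mono ?_).trans (hsh r hr1' (quadForm P (x - M)) ?_ ?_ N).2
    · rintro y ⟨-, h1, h2⟩
      dsimp only at h1 h2
      constructor <;> linarith
    · refine le_trans ?_ hb.1
      rw [show c / 16 * r ^ 2 = c * (r / 4) ^ 2 by ring]
      exact mul_le_mul_of_nonneg_left (pow_le_pow_left₀ (by positivity) hxl 2) hc.le
    · refine hb.2.trans ?_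
      rw [show 9 * C * r ^ 2 = C * (3 * r) ^ 2 by ring]
      exact mul_le_mul_of_nonneg_left (pow_le_pow_left₀ (by positivity) hxu 2) (hc.le.trans hcC)
  refine (Finset.sum_le_sum fun i _ => hi i).trans ?_
  rw [Finset.sum_const, Finset.card_univ, Fintype.card_fin, nsmul_eq_mul, ← ENNReal.ofReal_natCast,
    ← ENNReal.ofReal_mul (by positivity)]
  refine ENNReal.ofReal_le_ofReal (le_of_eq ?_)
  rw [mul_pow, pow_add]; ring

/-- The shell inside the cube has volume of order at least `r^{k+l-2}`: the slices over first variables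
of size about `κ r` are full ellipsoid shells. -/
theorem cube_lower {k l : ℕ} (hk : 1 ≤ k) (hl : 1 ≤ l) (P : Matrix (Fin k) (Fin k) ℝ)
    (hP : P.PosDef) (P' : Matrix (Fin l) (Fin l) ℝ) (hP' : P'.PosDef) (a b : ℝ) (hab : a < b)
    (M : Fin k → ℝ) (N : Fin l → ℝ) :
    ∃ c r0 : ℝ, 0 < c ∧ 1 ≤ r0 ∧ ∀ r ≥ r0, ENNReal.ofReal (c * (r ^ (k + l) / r ^ 2)) ≤
      volume {p : (Fin k → ℝ) × (Fin l → ℝ) | (‖p.1‖ ≤ r ∧ ‖p.2‖ ≤ r) ∧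
        (a ≤ quadForm P (p.1 - M) - quadForm P' (p.2 - N) ∧
          quadForm P (p.1 - M) - quadForm P' (p.2 - N) ≤ b)} := by
  obtain ⟨c, C, hc, hcC, hPb⟩ := posDef_bounds hk P hP
  obtain ⟨c', C', hc', hcC', hPb'⟩ := posDef_bounds hl P' hP'
  have hC : 0 < C := hc.trans_le hcC
  -- `κ` is so small that the shells over points of size at most `2 κ r` stay inside the cube.
  obtain ⟨κ, hκ0, hκ1, hκ2⟩ : ∃ κ : ℝ, 0 < κ ∧ κ ≤ 1 / 4 ∧ C * (4 * κ) ≤ c' / 8 := by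
    refine ⟨min (1 / 4) (c' / (32 * C)), lt_min (by norm_num) (by positivity), min_le_left _ _, ?_⟩
    have := min_le_right (1 / 4) (c' / (32 * C))
    rw [le_div_iff₀ (by positivity)] at this
    linarith
  obtain ⟨c2, _, r1, hc2, _, hr1, hsh⟩ := shell_bounds hl P' hP' (c * κ ^ 2) (C * (4 * κ ^ 2)) a b
    (by positivity) (by nlinarith [sq_pos_of_pos hκ0, mul_le_mul_of_nonneg_right hcC (sq_nonneg κ)]) hab
  refine ⟨c2 * κ ^ k, max r1 (max (2 * ‖M‖) (max (2 * ‖N‖) (8 * |a| / c'))), by positivity,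
    hr1.trans (le_max_left _ _), ?_⟩
  intro r hr
  have hr1' : r1 ≤ r := (le_max_left _ _).trans hr
  have hr2 := (le_max_right _ _).trans hr
  have hrM : 2 * ‖M‖ ≤ r := (le_max_left _ _).trans hr2
  have hr3 := (le_max_right _ _).trans hr2
  have hrN : 2 * ‖N‖ ≤ r := (le_max_left _ _).trans hr3
  have hra : 8 * |a| / c' ≤ r := (le_max_right _ _).trans hr3
  rw [div_le_iff₀ hc'] at hra
  have hrone : 1 ≤ r := hr1.trans hr1'
  have hrp : 0 < r := by linarith
  set X : Set (Fin k → ℝ) := Set.Icc (fun i => M i + κ * r) (fun i => M i + 2 * κ * r) with hX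
  have hXv : volume X = ENNReal.ofReal ((κ * r) ^ k) := by
    rw [hX, Real.volume_Icc_pi, Finset.prod_congr rfl (g := fun _ => ENNReal.ofReal (κ * r))]
    · rw [Finset.prod_const, Finset.card_univ, Fintype.card_fin, ENNReal.ofReal_pow (by positivity)]
    · intro i _; congr 1; ring
  have e : c2 * κ ^ k * (r ^ (k + l) / r ^ 2) = c2 * (r ^ l / r ^ 2) * (κ * r) ^ k := by
    rw [mul_pow, pow_add]; ring
  rw [e, ENNReal.ofReal_mul (by positivity), ← hXv]
  refine prod_slice_ge _ ?_ X (measurableSet_Icc) _ ?_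
  · rw [Set.ofPred_and, Set.ofPred_and]
    refine ((IsClosed.inter (isClosed_le ?_ ?_) (isClosed_le ?_ ?_)).inter
      (closed_region P P' a b M N)).measurableSet <;> fun_prop
  intro x hx
  have hb := hPb (x - M)
  have hi : ∀ i, κ * r ≤ (x - M) i ∧ (x - M) i ≤ 2 * κ * r := fun i => by
    have h1 := hx.1 i
    have h2 := hx.2 i
    dsimp only at h1 h2
    simp only [Pi.sub_apply]
    constructor <;> linarith
  have hκr : 0 < κ * r := by positivity
  have hxl : κ * r ≤ ‖x - M‖ :=
    ((hi ⟨0, hk⟩).1.trans (le_abs_self _)).trans (norm_le_pi_norm (x - M) ⟨0, hk⟩)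
  have hxu : ‖x - M‖ ≤ 2 * κ * r := by
    rw [pi_norm_le_iff_of_nonneg (by positivity)]
    intro i
    rw [Real.norm_eq_abs, abs_of_nonneg (hκr.le.trans (hi i).1)]
    exact (hi i).2
  have hρu : quadForm P (x - M) ≤ C * (4 * κ ^ 2) * r ^ 2 := by
    refine hb.2.trans ?_
    rw [show C * (4 * κ ^ 2) * r ^ 2 = C * (2 * κ * r) ^ 2 by ring]
    exact mul_le_mul_of_nonneg_left (pow_le_pow_left₀ (norm_nonneg _) hxu 2) hC.le
  refine (hsh r hr1' (quadForm P (x - M)) ?_ hρu N).1.trans (measure_mono ?_)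
  · refine le_trans ?_ hb.1
    rw [show c * κ ^ 2 * r ^ 2 = c * (κ * r) ^ 2 by ring]
    exact mul_le_mul_of_nonneg_left (pow_le_pow_left₀ hκr.le hxl 2) hc.le
  · rintro y ⟨h1, h2⟩
    refine ⟨⟨?_, ?_⟩, ?_, ?_⟩
    · have h3 := norm_sub_norm_le x M
      dsimp only
      nlinarith
    · have h3 := norm_sub_norm_le y N
      have h4 : ‖y - N‖ ≤ r / 2 := by
        refine le_of_pow_le_pow_left₀ (n := 2) (by norm_num) (by positivity) ?_
        have h5 := (hPb' (y - N)).1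
        have h6 := neg_abs_le a
        have h7 : C * (4 * κ ^ 2) * r ^ 2 ≤ c' / 8 * r ^ 2 := by
          refine mul_le_mul_of_nonneg_right ?_ (by positivity)
          nlinarith
        have h8 : |a| ≤ c' / 8 * r ^ 2 := by nlinarith [mul_pos hc' hrp]
        have h9 : c' * ‖y - N‖ ^ 2 ≤ c' * (r / 2) ^ 2 := by nlinarith
        exact le_of_mul_le_mul_left h9 hc'
      dsimp only
      linarith
    · dsimp only; linarith
    · dsimp only; linarith

end LPR

/-! ### The volume of the region -/

namespace LPR
open Matrix MeasureTheory Filter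
open scoped ENNReal

/-- Splitting the coordinates into the first `k` and the last `l` ones. -/
def splitEquiv (k l : ℕ) : (Fin (k + l) → ℝ) ≃ᵐ (Fin k → ℝ) × (Fin l → ℝ) :=
  (MeasurableEquiv.piCongrLeft (fun _ : Fin (k + l) => ℝ) finSumFinEquiv).symm.trans
    (MeasurableEquiv.sumPiEquivProdPi fun _ : Fin k ⊕ Fin l => ℝ)

theorem splitEquiv_mp (k l : ℕ) : MeasurePreserving (splitEquiv k l) :=
  (volume_measurePreserving_piCongrLeft (fun _ : Fin (k + l) => ℝ) finSumFinEquiv).symm.trans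
    (volume_measurePreserving_sumPiEquivProdPi fun _ : Fin k ⊕ Fin l => ℝ)

theorem splitEquiv_fst {k l : ℕ} (x : Fin (k + l) → ℝ) (i : Fin k) :
    (splitEquiv k l x).1 i = x (finSumFinEquiv (Sum.inl i)) := rfl

theorem splitEquiv_snd {k l : ℕ} (x : Fin (k + l) → ℝ) (i : Fin l) :
    (splitEquiv k l x).2 i = x (finSumFinEquiv (Sum.inr i)) := rfl

theorem quadForm_block {k l : ℕ} (P : Matrix (Fin k) (Fin k) ℝ) (P' : Matrix (Fin l) (Fin l) ℝ)
    (x y : Fin (k + l) → ℝ) :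
    quadForm ((Matrix.fromBlocks P 0 0 (-P')).submatrix (finSumFinEquiv (m := k) (n := l)).symm
      (finSumFinEquiv (m := k) (n := l)).symm) (x - y) =
      quadForm P ((splitEquiv k l x).1 - (splitEquiv k l y).1) -
        quadForm P' ((splitEquiv k l x).2 - (splitEquiv k l y).2) := by
  have e1 : ∀ z : Fin k → ℝ, quadForm P z = ∑ i, ∑ j, P i j * z j * z i := fun z => by
    simp [quadForm, mulVec, dotProduct, Finset.sum_mul]
  have e2 : ∀ z : Fin l → ℝ, quadForm P' z = ∑ i, ∑ j, P' i j * z j * z i := fun z => by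
    simp [quadForm, mulVec, dotProduct, Finset.sum_mul]
  rw [e1, e2]
  simp only [quadForm, mulVec, dotProduct, Finset.sum_mul]
  rw [← finSumFinEquiv.sum_comp]
  simp_rw [← (finSumFinEquiv (m := k) (n := l)).sum_comp (fun j => _ * _ * _)]
  simp only [Fintype.sum_sum_type, submatrix_apply, Equiv.symm_apply_apply, fromBlocks_apply₁₁,
    fromBlocks_apply₁₂, fromBlocks_apply₂₁, fromBlocks_apply₂₂, Pi.sub_apply, splitEquiv_fst,
    splitEquiv_snd, Matrix.zero_apply, Matrix.neg_apply, zero_mul, neg_mul, Finset.sum_const_zero,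
    add_zero, zero_add, Finset.sum_neg_distrib]
  ring

theorem norm_split {k l : ℕ} (x : Fin (k + l) → ℝ) {r : ℝ} (hr : 0 ≤ r) :
    ‖x‖ ≤ r ↔ ‖(splitEquiv k l x).1‖ ≤ r ∧ ‖(splitEquiv k l x).2‖ ≤ r := by
  rw [pi_norm_le_iff_of_nonneg hr, pi_norm_le_iff_of_nonneg hr, pi_norm_le_iff_of_nonneg hr,
    ← finSumFinEquiv.forall_congr_right]
  exact Sum.forall

/-- The hyperbolic shell fills the cube to the expected order, and not more than a proportion
`O(ε)` of this lies within relative distance `ε` of the boundary of the cube. -/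
theorem volume_bounds {d : ℕ} (Q : Matrix (Fin d) (Fin d) ℝ) (hblock : IsBlockType Q) (a b : ℝ)
    (hab : a < b) (M : Fin d → ℝ) :
    ∃ c C r0 : ℝ, 0 < c ∧ 0 ≤ C ∧ 1 ≤ r0 ∧ ∀ r ≥ r0,
      ENNReal.ofReal (c * (r ^ d / r ^ 2)) ≤ volume (Hset Q a b M r) ∧
      ∀ ε, 0 ≤ ε → ε ≤ 1 / 2 → volume {x : Fin d → ℝ | ((1 - ε) * r ≤ ‖x‖ ∧ ‖x‖ ≤ (1 + ε) * r) ∧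
        (a ≤ quadForm Q (x - M) ∧ quadForm Q (x - M) ≤ b)} ≤
        ENNReal.ofReal (C * ε * (r ^ d / r ^ 2)) := by
  obtain ⟨k, l, h, P, P', hk, hl, hP, hP', hQ⟩ := hblock
  subst h
  replace hQ : Q = (Matrix.fromBlocks P 0 0 (-P')).submatrix (finSumFinEquiv (m := k) (n := l)).symm
      (finSumFinEquiv (m := k) (n := l)).symm := hQ
  obtain ⟨c, r1, hc, hr1, h1⟩ := cube_lower hk hl P hP P' hP' a b hab
    (splitEquiv k l M).1 (splitEquiv k l M).2
  obtain ⟨C2, r2, hC2, hr2, h2⟩ := annulus_upper hk hl P hP P' hP' a b hab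
    (splitEquiv k l M).1 (splitEquiv k l M).2
  obtain ⟨C3, r3, hC3, hr3, h3⟩ := annulus_upper hl hk P' hP' P hP (-b) (-a) (by linarith)
    (splitEquiv k l M).2 (splitEquiv k l M).1
  refine ⟨c, C2 + C3, max r1 (max r2 r3), hc, by positivity, hr1.trans (le_max_left _ _),
    fun r hr => ⟨?_, fun ε hε hε2 => ?_⟩⟩
  · have hr1' : r1 ≤ r := (le_max_left _ _).trans hr
    refine (h1 r hr1').trans (le_of_eq ?_)
    rw [← (splitEquiv_mp k l).measure_preimage_equiv]
    congr 1
    ext x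
    change _ ↔ _ ∧ _
    rw [norm_split x (by linarith : 0 ≤ r), hQ, quadForm_block]
    exact and_comm
  · have hr' := (le_max_right _ _).trans hr
    have hr2' : r2 ≤ r := (le_max_left _ _).trans hr'
    have hr3' : r3 ≤ r := (le_max_right _ _).trans hr'
    have hrp : 0 < r := by linarith
    have h2 := h2 r hr2' ε hε hε2
    have h3 := h3 r hr3' ε hε hε2
    have hswap : MeasurePreserving (MeasurableEquiv.prodComm :
        (Fin k → ℝ) × (Fin l → ℝ) ≃ᵐ (Fin l → ℝ) × (Fin k → ℝ)) := Measure.measurePreserving_swap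
    rw [← (splitEquiv_mp k l).measure_preimage_equiv] at h2
    rw [← ((splitEquiv_mp k l).trans hswap).measure_preimage_equiv] at h3
    refine (measure_mono ?_).trans ((measure_union_le _ _).trans ((add_le_add h2 h3).trans ?_))
    · rintro x ⟨⟨h4, h5⟩, h6⟩
      rw [hQ, quadForm_block] at h6
      have h7 : ‖x‖ ≤ 2 * r := h5.trans (by nlinarith)
      have h8 := (norm_split x (by linarith : 0 ≤ 2 * r)).1 h7
      obtain ⟨i, hi⟩ : ∃ i, ‖x‖ ≤ ‖x i‖ := by
        have : Nonempty (Fin (k + l)) := ⟨⟨0, by omega⟩⟩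
        obtain ⟨i, hi⟩ := Finite.exists_max fun i => ‖x i‖
        exact ⟨i, (pi_norm_le_iff_of_nonneg (norm_nonneg _)).2 hi⟩
      have hi2 := (norm_le_pi_norm x i).trans h5
      have hi1 := h4.trans hi
      obtain ⟨j, rfl⟩ := finSumFinEquiv.surjective i
      rcases j with j | j
      · exact Or.inl ⟨⟨j, ⟨hi1, hi2⟩, h8.1⟩, h6⟩
      · refine Or.inr ⟨⟨j, ⟨hi1, hi2⟩, h8.2⟩, ?_⟩
        have h9 := h6.1
        have h10 := h6.2
        change -b ≤ quadForm P' ((splitEquiv k l x).2 - _) - quadForm P ((splitEquiv k l x).1 - _) ∧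
          quadForm P' ((splitEquiv k l x).2 - _) - quadForm P ((splitEquiv k l x).1 - _) ≤ -a
        constructor <;> linarith
    · rw [← ENNReal.ofReal_add (by positivity) (by positivity)]
      refine ENNReal.ofReal_le_ofReal (le_of_eq ?_)
      rw [add_comm l k]; ring

end LPR

/-! ### Cut-offs -/

namespace LPR
open Matrix MeasureTheory Filter
open scoped ENNReal

/-- Smooth cut-offs equal to `1` on `|x| ≤ s` and to `0` on `|x| ≥ t`. -/
theorem exists_bump (s t : ℝ) (hs : 0 < s) (hst : s < t) (ht : t ≤ 2) :
    ∃ (ψ : ℝ → ℝ) (L : ℝ), IsBump ψ L ∧ (∀ x, |x| ≤ s → ψ x = 1) ∧ ∀ x, t ≤ |x| → ψ x = 0 := by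
  let f : ContDiffBump (0 : ℝ) := ⟨s, t, hs, hst⟩
  have hf : ContDiff ℝ 2 f := f.contDiff
  have hd : Differentiable ℝ f := hf.differentiable (by norm_num)
  obtain ⟨K1, hK1⟩ := hf.lipschitzWith_of_hasCompactSupport f.hasCompactSupport (by norm_num)
  have hf' : ContDiff ℝ 1 (deriv f) := by
    have : ContDiff ℝ (1 + 1) f := by norm_num; exact hf
    exact (contDiff_succ_iff_deriv.1 this).2.2
  obtain ⟨K2, hK2⟩ := hf'.lipschitzWith_of_hasCompactSupport f.hasCompactSupport.deriv (by norm_num)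
  have h0 : ∀ x : ℝ, t ≤ |x| → f x = 0 := fun x hx => f.zero_of_le_dist (by simpa using hx)
  refine ⟨f, max K1 K2, ⟨fun x => f.nonneg, fun x => f.le_one, fun x hx => h0 x (ht.trans hx),
    fun x y => ?_, fun x u => ?_⟩, fun x hx => f.one_of_mem_closedBall (by simpa using hx), h0⟩
  · have := hK1.dist_le_mul x y
    rw [Real.dist_eq, Real.dist_eq] at this
    exact this.trans (mul_le_mul_of_nonneg_right (le_max_left _ _) (abs_nonneg _))
  -- the second difference is a first difference of `y ↦ f (y + u) - f y`
  · have hg : ∀ y, HasDerivAt (fun y => f (y + u) - f y) (deriv f (y + u) - deriv f y) y := fun y =>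
      ((hd (y + u)).hasDerivAt.comp_add_const y u).sub (hd y).hasDerivAt
    have hb : ∀ y, ‖deriv f (y + u) - deriv f y‖ ≤ K2 * |u| := fun y => by
      have := hK2.dist_le_mul (y + u) y
      rw [dist_eq_norm, Real.dist_eq, add_sub_cancel_left] at this
      exact this
    have := convex_univ.norm_image_sub_le_of_norm_hasDerivWithin_le
      (fun y _ => (hg y).hasDerivWithinAt) (fun y _ => hb y) (Set.mem_univ (x - u)) (Set.mem_univ x)
    rw [sub_add_cancel, sub_sub_cancel, Real.norm_eq_abs, Real.norm_eq_abs, mul_assoc,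
      abs_mul_abs_self, ← sq] at this
    rw [show f (x + u) - 2 * f x + f (x - u) = f (x + u) - f x - (f x - f (x - u)) by ring]
    exact this.trans (mul_le_mul_of_nonneg_right (le_max_right _ _) (sq_nonneg u))

end LPR

/-! ### Comparison of sharp and smooth counts -/

namespace LPR
open Matrix MeasureTheory Filter
open scoped ENNReal

variable {d : ℕ}

theorem wt_eq_one {ψ : ℝ → ℝ} {s r : ℝ} (hr : 0 < r) (h : ∀ x, |x| ≤ s → ψ x = 1)
    (x : Fin d → ℝ) (hx : ‖x‖ ≤ s * r) : wt ψ r x = 1 := by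
  refine Finset.prod_eq_one fun i _ => h _ ?_
  rw [abs_div, abs_of_pos hr, div_le_iff₀ hr]
  exact (norm_le_pi_norm x i).trans hx

theorem wt_eq_zero (hd : 1 ≤ d) {ψ : ℝ → ℝ} {t r : ℝ} (hr : 0 < r)
    (h : ∀ x, t ≤ |x| → ψ x = 0) (x : Fin d → ℝ) (hx : t * r ≤ ‖x‖) : wt ψ r x = 0 := by
  have : Nonempty (Fin d) := ⟨⟨0, hd⟩⟩
  obtain ⟨i, hi⟩ := Finite.exists_max fun i => ‖x i‖
  refine Finset.prod_eq_zero (Finset.mem_univ i) (h _ ?_)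
  rw [abs_div, abs_of_pos hr, le_div_iff₀ hr]
  exact hx.trans ((pi_norm_le_iff_of_nonneg (norm_nonneg _)).2 hi)

/-- The indicator function of the shell `{x : Q[x - M] ∈ [a, b]}`. -/
noncomputable def shellInd (Q : Matrix (Fin d) (Fin d) ℝ) (a b : ℝ) (M : Fin d → ℝ)
    (x : Fin d → ℝ) : ℝ := Set.indicator (Set.Icc a b) 1 (quadForm Q (x - M))

theorem shellInd_bounds (Q : Matrix (Fin d) (Fin d) ℝ) (a b : ℝ) (M x : Fin d → ℝ) :
    0 ≤ shellInd Q a b M x ∧ shellInd Q a b M x ≤ 1 := by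
  unfold shellInd
  by_cases h : quadForm Q (x - M) ∈ Set.Icc a b
  · rw [Set.indicator_of_mem h]; simp
  · rw [Set.indicator_of_notMem h]; simp

theorem shellInd_measurable (Q : Matrix (Fin d) (Fin d) ℝ) (a b : ℝ) (M : Fin d → ℝ) :
    Measurable (shellInd Q a b M) := by
  have h1 : Measurable (Set.indicator (Set.Icc a b) (1 : ℝ → ℝ)) :=
    measurable_one.indicator measurableSet_Icc
  exact h1.comp ((continuous_quadForm Q).comp (by fun_prop : Continuous fun x => x - M)).measurable

theorem wt_shell_integrable (Q : Matrix (Fin d) (Fin d) ℝ) (a b : ℝ) (M : Fin d → ℝ) {ψ : ℝ → ℝ}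
    {L : ℝ} (hψ : IsBump ψ L) {r : ℝ} (hr : 0 < r) :
    Integrable fun x => wt ψ r x * shellInd Q a b M x := by
  refine (wt_integrable hψ hr).mono' ((continuous_wt hψ r).measurable.mul
    (shellInd_measurable Q a b M)).aestronglyMeasurable (Eventually.of_forall fun x => ?_)
  have h1 := wt_nonneg hψ r x
  have h2 := shellInd_bounds Q a b M x
  rw [Real.norm_eq_abs, abs_of_nonneg (mul_nonneg h1 h2.1)]
  exact mul_le_of_le_one_right h1 h2.2

theorem Hset_closed (Q : Matrix (Fin d) (Fin d) ℝ) (a b : ℝ) (M : Fin d → ℝ) (r : ℝ) :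
    IsClosed (Hset Q a b M r) := by
  have h1 := continuous_quadForm Q
  unfold Hset
  rw [Set.ofPred_and, Set.ofPred_and]
  refine IsClosed.inter (IsClosed.inter (isClosed_le ?_ ?_) (isClosed_le ?_ ?_))
    (isClosed_le ?_ ?_) <;> fun_prop

theorem Hset_ne_top (Q : Matrix (Fin d) (Fin d) ℝ) (a b : ℝ) (M : Fin d → ℝ) (r : ℝ) :
    volume (Hset Q a b M r) ≠ ⊤ := by
  have h : Hset Q a b M r ⊆ Metric.closedBall 0 r := fun x hx =>
    mem_closedBall_zero_iff.2 hx.2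
  exact measure_ne_top_of_subset h measure_closedBall_lt_top.ne

/-- The indicator of `H_{r,M}` lies between the weights cut off inside and outside the cube. -/
theorem Hset_indicator_le (hd : 1 ≤ d) (Q : Matrix (Fin d) (Fin d) ℝ) (a b : ℝ) (M : Fin d → ℝ)
    {ψ φ : ℝ → ℝ} {L K : ℝ} (hψ : IsBump ψ L) (hφ : IsBump φ K) {r : ℝ} (hr : 0 < r)
    (h0 : ∀ x, 1 ≤ |x| → ψ x = 0) (h1 : ∀ x, |x| ≤ 1 → φ x = 1) (x : Fin d → ℝ) :
    wt ψ r x * shellInd Q a b M x ≤ (Hset Q a b M r).indicator 1 x ∧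
      (Hset Q a b M r).indicator 1 x ≤ wt φ r x * shellInd Q a b M x := by
  classical
  have hb := shellInd_bounds Q a b M x
  by_cases hx : ‖x‖ ≤ r
  · have e : (Hset Q a b M r).indicator (1 : (Fin d → ℝ) → ℝ) x = shellInd Q a b M x := by
      unfold shellInd
      simp only [Set.indicator_apply]
      exact if_congr (and_iff_left hx) rfl rfl
    rw [e, wt_eq_one hr h1 x (by simpa using hx), one_mul]
    exact ⟨mul_le_of_le_one_left hb.1 (wt_le_one hψ r x), le_rfl⟩
  · rw [Set.indicator_of_notMem fun h => hx h.2,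
      wt_eq_zero hd hr h0 x (by rw [one_mul]; exact (not_le.1 hx).le), zero_mul]
    exact ⟨le_rfl, mul_nonneg (wt_nonneg hφ r x) hb.1⟩

theorem latticeCount_eq (Q : Matrix (Fin d) (Fin d) ℝ) (a b : ℝ) (M : Fin d → ℝ) {r : ℝ}
    (hr : 0 < r) : (latticeCount (Hset Q a b M r) : ℝ) =
      ∑ m ∈ boxZ d ⌈2 * r⌉₊, (Hset Q a b M r).indicator 1 (intVec m) := by
  classical
  have hinj : Function.Injective (intVec (d := d)) := fun m n h => by
    funext i
    have := congrFun h i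
    simpa [intVec] using this
  have e : Hset Q a b M r ∩ Set.range intVec = intVec ''
      ((boxZ d ⌈2 * r⌉₊).filter fun m => intVec m ∈ Hset Q a b M r : Finset (Fin d → ℤ)) := by
    ext x
    constructor
    · rintro ⟨hx, m, rfl⟩
      refine ⟨m, ?_, rfl⟩
      rw [Finset.mem_coe, Finset.mem_filter, mem_boxZ]
      refine ⟨fun i => ?_, hx⟩
      have h1 := (norm_le_pi_norm (intVec m) i).trans hx.2
      rw [Real.norm_eq_abs] at h1
      have h2 : ((|m i| : ℤ) : ℝ) ≤ (⌈2 * r⌉₊ : ℝ) := by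
        rw [Int.cast_abs]
        exact h1.trans (le_trans (by linarith) (Nat.le_ceil _))
      exact_mod_cast h2
    · rintro ⟨m, hm, rfl⟩
      rw [Finset.mem_coe, Finset.mem_filter] at hm
      exact ⟨hm.2, m, rfl⟩
  rw [latticeCount, e, Set.ncard_image_of_injective _ hinj, Set.ncard_coe_finset,
    Finset.card_filter, Nat.cast_sum]
  refine Finset.sum_congr rfl fun m _ => ?_
  simp [Set.indicator_apply]

/-- Cut-offs that agree on `|x| ≤ 1 - ε` and vanish for `|x| ≥ 1 + ε` give smoothed volumes that
differ by at most the volume of the shell near the boundary of the cube. -/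
theorem volW_diff (hd : 1 ≤ d) (Q : Matrix (Fin d) (Fin d) ℝ) (a b : ℝ) (M : Fin d → ℝ)
    {ψ φ : ℝ → ℝ} {L K : ℝ} (hψ : IsBump ψ L) (hφ : IsBump φ K) {r ε : ℝ} (hr : 0 < r) (hε : 0 < ε)
    (hψ1 : ∀ x, |x| ≤ 1 - ε → ψ x = 1) (hψ0 : ∀ x, 1 ≤ |x| → ψ x = 0)
    (hφ1 : ∀ x, |x| ≤ 1 → φ x = 1) (hφ0 : ∀ x, 1 + ε ≤ |x| → φ x = 0) {B : ℝ} (hB : 0 ≤ B)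
    (hvol : volume {x : Fin d → ℝ | ((1 - ε) * r ≤ ‖x‖ ∧ ‖x‖ ≤ (1 + ε) * r) ∧
        (a ≤ quadForm Q (x - M) ∧ quadForm Q (x - M) ≤ b)} ≤ ENNReal.ofReal B) :
    volW Q a b M φ r - volW Q a b M ψ r ≤ B := by
  classical
  set A := {x : Fin d → ℝ | ((1 - ε) * r ≤ ‖x‖ ∧ ‖x‖ ≤ (1 + ε) * r) ∧
        (a ≤ quadForm Q (x - M) ∧ quadForm Q (x - M) ≤ b)} with hA
  have hAm : MeasurableSet A := by
    have h1 := continuous_quadForm Q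
    rw [hA, Set.ofPred_and, Set.ofPred_and, Set.ofPred_and]
    refine (IsClosed.inter (IsClosed.inter (isClosed_le ?_ ?_) (isClosed_le ?_ ?_))
      (IsClosed.inter (isClosed_le ?_ ?_) (isClosed_le ?_ ?_))).measurableSet <;> fun_prop
  have hi1 := wt_shell_integrable Q a b M hψ hr
  have hi2 := wt_shell_integrable Q a b M hφ hr
  have hfin : volume A ≠ ⊤ := (hvol.trans_lt ENNReal.ofReal_lt_top).ne
  change (∫ x, wt φ r x * shellInd Q a b M x) - (∫ x, wt ψ r x * shellInd Q a b M x) ≤ B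
  have e : (∫ x, wt φ r x * shellInd Q a b M x) - (∫ x, wt ψ r x * shellInd Q a b M x) ≤
      ∫ x, A.indicator 1 x := by
    rw [← integral_sub hi2 hi1]
    refine integral_mono (hi2.sub hi1) ((integrable_indicator_iff hAm).2
      (integrableOn_const hfin)) fun x => ?_
    have hb := shellInd_bounds Q a b M x
    have hnn : 0 ≤ A.indicator (1 : (Fin d → ℝ) → ℝ) x :=
      Set.indicator_nonneg (fun _ _ => zero_le_one) x
    dsimp only
    rw [← sub_mul]
    by_cases h1 : ‖x‖ ≤ (1 - ε) * r
    · rw [wt_eq_one hr hψ1 x h1, wt_eq_one hr hφ1 x (h1.trans (by nlinarith)), sub_self, zero_mul]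
      exact hnn
    by_cases h2 : (1 + ε) * r ≤ ‖x‖
    · rw [wt_eq_zero hd hr hφ0 x h2, wt_eq_zero hd hr hψ0 x (le_trans (by nlinarith) h2), sub_self,
        zero_mul]
      exact hnn
    push Not at h1 h2
    have e : A.indicator (1 : (Fin d → ℝ) → ℝ) x = shellInd Q a b M x := by
      unfold shellInd
      simp only [Set.indicator_apply]
      exact if_congr (and_iff_right ⟨h1.le, h2.le⟩) rfl rfl
    rw [e]
    refine mul_le_of_le_one_left hb.1 ?_
    linarith [wt_nonneg hψ r x, wt_le_one hφ r x]
  refine e.trans ?_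
  rw [integral_indicator_one hAm]
  exact ENNReal.toReal_le_of_le_ofReal hB hvol

end LPR

/-- For an irrational non-degenerate block-type form in dimension `d ≥ 5`,
`Δ(r,M) = o(1)`, i.e. `Δ(r,M) → 0` as `r → ∞`. -/
theorem deltaRel_tendsto_zero (d : ℕ) (hd : 5 ≤ d) (Q : Matrix (Fin d) (Fin d) ℝ)
    (hsym : Q.IsSymm) (hdet : IsUnit Q.det) (hblock : IsBlockType Q)
    (hirr : ¬ IsRationalMat Q) (a b : ℝ) (hab : a < b) (M : Fin d → ℝ) :
    Tendsto (fun r => DeltaRel Q a b M r) atTop (nhds 0) := by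
  obtain ⟨c, C, r0, hc, hC, hr0, hV⟩ := LPR.volume_bounds Q hblock a b hab M
  rw [Metric.tendsto_atTop]
  intro δ hδ
  obtain ⟨ε, hε, hε2, hεC⟩ : ∃ ε : ℝ, 0 < ε ∧ ε ≤ 1 / 2 ∧ C * ε ≤ δ * c / 4 := by
    refine ⟨min (1 / 2) (δ * c / (4 * (C + 1))), lt_min (by norm_num) (by positivity),
      min_le_left _ _, ?_⟩
    have h1 := min_le_right (1 / 2) (δ * c / (4 * (C + 1)))
    have h0 : 0 ≤ min (1 / 2) (δ * c / (4 * (C + 1))) := le_min (by norm_num) (by positivity)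
    rw [le_div_iff₀ (by positivity)] at h1
    linarith
  obtain ⟨ψ, L, hψ, hψ1, hψ0⟩ := LPR.exists_bump (1 - ε) 1 (by linarith) (by linarith) one_le_two
  obtain ⟨φ, K, hφ, hφ1, hφ0⟩ := LPR.exists_bump 1 (1 + ε) one_pos (by linarith) (by linarith)
  obtain ⟨r1, hr1, hS1⟩ := LPR.smooth_count hd Q hsym hdet hirr L ψ hψ M a b hab (δ * c / 4)
    (by positivity)
  obtain ⟨r2, hr2, hS2⟩ := LPR.smooth_count hd Q hsym hdet hirr K φ hφ M a b hab (δ * c / 4)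
    (by positivity)
  refine ⟨max r0 (max r1 r2), fun r hr => ?_⟩
  have hrr0 : r0 ≤ r := (le_max_left _ _).trans hr
  have hr' := (le_max_right _ _).trans hr
  have hrp : 0 < r := by linarith
  have hd1 : 1 ≤ d := by omega
  have h1 := abs_le.1 (hS1 r ((le_max_left _ _).trans hr'))
  have h2 := abs_le.1 (hS2 r ((le_max_right _ _).trans hr'))
  obtain ⟨hlow, hann⟩ := hV r hrr0
  have hX : 0 < r ^ d / r ^ 2 := by positivity
  set X := r ^ d / r ^ 2
  have h3 := LPR.volW_diff hd1 Q a b M hψ hφ hrp hε hψ1 hψ0 hφ1 hφ0 (by positivity)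
    (hann ε hε.le hε2)
  have hpt := LPR.Hset_indicator_le hd1 Q a b M hψ hφ hrp hψ0 hφ1
  have hHm := (LPR.Hset_closed Q a b M r).measurableSet
  have hHt := LPR.Hset_ne_top Q a b M r
  have hcnt : LPR.cntW Q a b M ψ r ≤ latticeCount (Hset Q a b M r) ∧
      (latticeCount (Hset Q a b M r) : ℝ) ≤ LPR.cntW Q a b M φ r := by
    rw [LPR.latticeCount_eq Q a b M hrp]
    exact ⟨Finset.sum_le_sum fun m _ => (hpt _).1, Finset.sum_le_sum fun m _ => (hpt _).2⟩
  have hHi : Integrable ((Hset Q a b M r).indicator (1 : (Fin d → ℝ) → ℝ)) :=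
    (integrable_indicator_iff hHm).2 (integrableOn_const hHt)
  have hvol : LPR.volW Q a b M ψ r ≤ (volume (Hset Q a b M r)).toReal ∧
      (volume (Hset Q a b M r)).toReal ≤ LPR.volW Q a b M φ r := by
    change _ ≤ volume.real _ ∧ volume.real _ ≤ _
    rw [← integral_indicator_one hHm]
    exact ⟨integral_mono (LPR.wt_shell_integrable Q a b M hψ hrp) hHi fun x => (hpt x).1,
      integral_mono hHi (LPR.wt_shell_integrable Q a b M hφ hrp) fun x => (hpt x).2⟩
  have hlow' : c * X ≤ (volume (Hset Q a b M r)).toReal :=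
    (ENNReal.ofReal_le_iff_le_toReal hHt).1 hlow
  rw [Real.dist_eq, sub_zero, DeltaRel, abs_abs, abs_div]
  set v := (volume (Hset Q a b M r)).toReal
  have hv : 0 < v := lt_of_lt_of_le (by positivity) hlow'
  rw [abs_of_pos hv, div_lt_iff₀ hv]
  have h4 : C * ε * X ≤ δ * c / 4 * X := mul_le_mul_of_nonneg_right hεC hX.le
  have h5 : δ * (c * X) ≤ δ * v := mul_le_mul_of_nonneg_left hlow' hδ.le
  have h6 : 0 < δ * (c * X) := by positivity
  rw [abs_lt]
  constructor <;> linarith [hcnt.1, hcnt.2, hvol.1, hvol.2, h1.1, h1.2, h2.1, h2.2]
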